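/- Let r ∈ {1,2,…,∞}. There is a residual subset 𝓔^r_* of 𝓔^r containing 𝓔^ω such that for each T ∈ 𝓔^r_* there is an open and dense subset 𝓓^r(T) of 𝓒^r such that for each f ∈ 𝓓^r(T), the pair (f, T) is uniquely maximized by a periodic measure. -/

import Mathlib

/-!
Every expanding map has the stated property, so `𝓔^r_*` is taken to be all of `𝓔^r`; what has to be
shown is that, for a fixed expanding `T`, the functions whose unique maximizing measure is periodic
*and stays so under small `C¹` perturbations* are `C^r` dense. `dense_of_perturb` reduces this to
finding, for every `f`, every order `N` and every `ε`, a smooth function whose derivatives up to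
order `N` are at most `ε` and whose addition to `f` produces such a robust periodic maximizer.

The basic tool is a Lipschitz calibrated sub-action together with the compact invariant set on which
the sub-action inequality is an equality (`exists_isCal`). By `locking`, subtracting a small penalty
that vanishes on a periodic orbit turns this orbit into the robust unique maximizer, provided the
orbit is nearly maximizing compared with the separation of its points.

For `r = 1` (`perturb_one`), a counting argument finds in the calibrated set short pseudo-periodic
loops whose points are well separated relative to the closing error (`exists_lockable`), and a
`C¹`-small penalty suffices to lock the orbit that shadows such a loop.

For `r ≥ 2` (`Lift.perturb_two`) a penalty that is small in `C^N` is much weaker, and a periodic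
orbit is created inside the calibrated set itself, by three successive perturbations.
* `exists_confine` forces the calibrated sets of all nearby functions into an invariant set of
  arbitrarily small entropy. Such a set avoids the endpoints of a partition into intervals, which
  yields a continuous coding (`Letters`).
* `Lift.exists_transverse` makes the derivatives of the backward Birkhoff sums along different
  inverse branches transverse to each other over this small set. For two left special words whose
  branches are close, calibration and transversality determine the order of these branches, which
  forces the words to be comparable; so a calibrated set has boundedly many classes of pairwise
  comparable left special words (`Letters.exists_cls`).
* In a system with boundedly many left special words and no periodic itinerary, one of boundedly
  many scales carries two loops of linear length with different word statistics at a much lower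
  scale (`GoodCls.exists_loops`). Both loops have nearly maximal Birkhoff average, hence nearly equal
  ones. `Letters.exists_generic` chooses the parameters of a perturbation outside finitely many
  slabs (`exists_avoid`) so as to exclude this coincidence; thus the calibrated set contains a
  periodic orbit (`Letters.exists_periodic`).

A last perturbation penalizing the distance to this orbit makes it the robust unique maximizer
(`IsCal.exists_lock`).
-/


open MeasureTheory Topology Filter Set
open scoped UniformConvergence

noncomputable section

/-- The circle `ℝ/ℤ`. -/
abbrev Circle1 : Type := AddCircle (1 : ℝ)

/-- The canonical representative in `[0,1)` of a point of `ℝ/ℤ`. -/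
noncomputable def rep (z : Circle1) : ℝ := (AddCircle.equivIco 1 0 z : ℝ)

/-- The circle map induced by a lift `F : ℝ → ℝ`. -/
noncomputable def cmap (F : ℝ → ℝ) : Circle1 → Circle1 := fun z => ((F (rep z) : ℝ) : Circle1)

/-- The data determining the `C^r` topology: all derivatives of order `≤ r`, viewed in the
space of functions `ℝ → ℝ` with the uniform-convergence topology. -/
noncomputable def crSeq (r : ℕ∞) (f : ℝ → ℝ) : ℕ → (ℝ →ᵤ ℝ) :=
  fun k => UniformFun.ofFun (if (k : ℕ∞) ≤ r then iteratedDeriv k f else 0)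

/-- The space `𝓒^r` of `C^r` functions `ℝ/ℤ → ℝ`. -/
def CrFun (r : ℕ∞) : Type := {f : Circle1 → ℝ // ContDiff ℝ r fun x : ℝ => f ↑x}

/-- The `C^r` topology on `𝓒^r`. -/
noncomputable instance (r : ℕ∞) : TopologicalSpace (CrFun r) :=
  TopologicalSpace.induced (fun f : CrFun r => crSeq r fun x : ℝ => f.1 ↑x) inferInstance

/-- `F : ℝ → ℝ` is a lift of a `C^r` expanding circle map: it is `C^r`, sends `x+1` to
`F x + d` for a fixed integer `d`, and `|(Fⁿ)'| ≥ C λⁿ` for some `C > 0`, `λ > 1`. -/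
def ExpandingLift (r : ℕ∞) (F : ℝ → ℝ) : Prop :=
  ContDiff ℝ r F ∧ (∃ d : ℤ, ∀ x : ℝ, F (x + 1) = F x + d) ∧
    ∃ C > (0 : ℝ), ∃ l > (1 : ℝ), ∀ n : ℕ, 1 ≤ n → ∀ x : ℝ, C * l ^ n ≤ |deriv (F^[n]) x|

/-- The space `𝓔^r` of (lifts of) `C^r` expanding circle maps, with the `C^r` topology. -/
def ExpMap (r : ℕ∞) : Type := {F : ℝ → ℝ // ExpandingLift r F}

noncomputable instance (r : ℕ∞) : TopologicalSpace (ExpMap r) :=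
  TopologicalSpace.induced (fun F : ExpMap r => crSeq r F.1) inferInstance

/-- `μ` is a `T`-invariant Borel probability measure. -/
def InvProb (T : Circle1 → Circle1) (μ : Measure Circle1) : Prop :=
  IsProbabilityMeasure μ ∧ μ.map T = μ

/-- `β(f,T)`, the maximal ergodic average. -/
noncomputable def beta (f : Circle1 → ℝ) (T : Circle1 → Circle1) : ℝ :=
  sSup ((fun μ : Measure Circle1 => ∫ x, f x ∂μ) '' {μ | InvProb T μ})

/-- `μ` is a maximizing measure for `(f,T)`. -/
def IsMaximizing (f : Circle1 → ℝ) (T : Circle1 → Circle1) (μ : Measure Circle1) : Prop :=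
  InvProb T μ ∧ ∫ x, f x ∂μ = beta f T

/-- `μ` is a periodic measure: an invariant measure supported on a periodic orbit. -/
def IsPeriodicMeasure (T : Circle1 → Circle1) (μ : Measure Circle1) : Prop :=
  InvProb T μ ∧ ∃ x : Circle1, ∃ n : ℕ, 0 < n ∧ T^[n] x = x ∧
    μ (Set.range fun k : ℕ => T^[k] x) = 1

/-- `(f,T)` is uniquely maximized by a periodic measure. -/
def UniqMaxPeriodic (f : Circle1 → ℝ) (T : Circle1 → Circle1) : Prop :=
  ∃ μ : Measure Circle1, IsMaximizing f T μ ∧ IsPeriodicMeasure T μ ∧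
    ∀ ν : Measure Circle1, IsMaximizing f T ν → ν = μ

/-- A (continuous) sub-action for `(f,T)`. -/
def IsSubaction (f : Circle1 → ℝ) (T : Circle1 → Circle1) (g : Circle1 → ℝ) : Prop :=
  Continuous g ∧ ∀ x, g x + f x ≤ g (T x) + beta f T

/-- A calibrated sub-action for `(f,T)`. -/
def IsCalibrated (f : Circle1 → ℝ) (T : Circle1 → Circle1) (g : Circle1 → ℝ) : Prop :=
  IsSubaction f T g ∧ ∀ x, ∃ y, T y = x ∧ g y + f y = g x + beta f T

/-- `G_{f,T}`: the set of Lipschitz calibrated sub-actions of `(f,T)`. -/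
def Gset (f : Circle1 → ℝ) (T : Circle1 → Circle1) : Set (Circle1 → ℝ) :=
  {g | (∃ K : NNReal, LipschitzWith K g) ∧ IsCalibrated f T g}

/-- The set `E_{f,T,g}`. -/
def Eset (f : Circle1 → ℝ) (T : Circle1 → Circle1) (g : Circle1 → ℝ) : Set Circle1 :=
  {x | g x + f x = g (T x) + beta f T}

/-- The set `Λ*_{f,T,g}`. -/
def LambdaStar (f : Circle1 → ℝ) (T : Circle1 → Circle1) (g : Circle1 → ℝ) : Set Circle1 :=
  {x | ∀ n : ℕ, T^[n] x ∈ Eset f T g}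

/-- The set `Λ_{f,T,g}`. -/
def Lambda (f : Circle1 → ℝ) (T : Circle1 → Circle1) (g : Circle1 → ℝ) : Set Circle1 :=
  ⋂ n : ℕ, T^[n] '' LambdaStar f T g

/-- The set `K(f,T)`. -/
def Kset (f : Circle1 → ℝ) (T : Circle1 → Circle1) : Set Circle1 :=
  ⋃ g ∈ Gset f T, Lambda f T g

/-- The `(f,T)`-non-wandering set `Ω(f,T)`. -/
def OmegaSet (f : Circle1 → ℝ) (T : Circle1 → Circle1) : Set Circle1 :=
  {x | ∀ ε > (0 : ℝ), ∃ n : ℕ, 1 ≤ n ∧ ∃ z : Circle1, T^[n] z = x ∧ dist z x < ε ∧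
    |∑ i ∈ Finset.range n, (f (T^[i] z) - beta f T)| < ε}

/-- `A` is a periodic orbit of `T`. -/
def IsPeriodicOrbit (T : Circle1 → Circle1) (A : Set Circle1) : Prop :=
  ∃ x : Circle1, (∃ n : ℕ, 0 < n ∧ T^[n] x = x) ∧ A = Set.range fun k : ℕ => T^[k] x

/-- `A` is a `T`-minimal set: a nonempty compact invariant set with no proper nonempty
compact invariant subset. -/
def IsMinimalSet (T : Circle1 → Circle1) (A : Set Circle1) : Prop :=
  A.Nonempty ∧ IsCompact A ∧ T '' A ⊆ A ∧
    ∀ B ⊆ A, B.Nonempty → IsCompact B → T '' B ⊆ B → B = A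

/-- The space of `C^r` families of functions on the circle with `q` parameters,
i.e. maps `(t,x) ↦ f_t(x)` that are jointly `C^r` (the circle variable via a lift). -/
def FamFun (r : ℕ∞) (q : ℕ) : Type :=
  {G : ((Fin q → ℝ) × ℝ) → ℝ // ContDiff ℝ r G ∧ ∀ t x, G (t, x + 1) = G (t, x)}

noncomputable def famSeq (r : ℕ∞) (q : ℕ) (G : ((Fin q → ℝ) × ℝ) → ℝ) :
    (k : ℕ) → (((Fin q → ℝ) × ℝ) →ᵤ (((Fin q → ℝ) × ℝ) [×k]→L[ℝ] ℝ)) :=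
  fun k => UniformFun.ofFun (if (k : ℕ∞) ≤ r then iteratedFDeriv ℝ k G else 0)

/-- The `C^r` topology on the space of `C^r` families. -/
noncomputable instance (r : ℕ∞) (q : ℕ) : TopologicalSpace (FamFun r q) :=
  TopologicalSpace.induced (fun G : FamFun r q => famSeq r q G.1) inferInstance

/-- The member `f_t : ℝ/ℤ → ℝ` of a family, at the parameter `t`. -/
noncomputable def famMem {r : ℕ∞} {q : ℕ} (G : FamFun r q) (t : Fin q → ℝ) : Circle1 → ℝ :=
  fun z => G.1 (t, rep z)

/-- The product `m_∞` over `ℕ` of Lebesgue measure on `[0,1]`, realised as the pushforward of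
the Haar probability measure of the compact group `(ℝ/ℤ)^ℕ` under the coordinatewise choice of
representatives in `[0,1)`. -/
noncomputable def mInfty : Measure (ℕ → ℝ) :=
  Measure.map (fun (t : ℕ → Circle1) (n : ℕ) => rep (t n))
    (MeasureTheory.Measure.addHaarMeasure (⊤ : TopologicalSpace.PositiveCompacts (ℕ → Circle1)))

/-- `S` is an `N`-dimensionally shy subset of a normed real vector space `V`. -/
def NDimShy {V : Type*} [NormedAddCommGroup V] [NormedSpace ℝ V] (N : ℕ) (S : Set V) : Prop :=
  ∃ φ : Fin N → V, ∀ f : V,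
    volume {t : Fin N → ℝ | (∀ i, t i ∈ Set.Icc (0 : ℝ) 1) ∧ f + ∑ i, t i • φ i ∈ S} = 0

/-- `S` is a finite dimensionally shy subset of a normed real vector space `V`. -/
def FinDimShy {V : Type*} [NormedAddCommGroup V] [NormedSpace ℝ V] (S : Set V) : Prop :=
  ∃ N : ℕ, 0 < N ∧ NDimShy N S

/-- `S` is a shy subset of `V`: there are a compactly supported Borel probability measure `μ`
on `V` and a Borel set `S̃ ⊇ S` all of whose translates are `μ`-null. -/
def IsShy {V : Type*} [NormedAddCommGroup V] [NormedSpace ℝ V] (S : Set V) : Prop :=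
  letI : MeasurableSpace V := borel V
  ∃ μ : Measure V, μ Set.univ = 1 ∧ (∃ K : Set V, IsCompact K ∧ μ K = 1) ∧
    ∃ St : Set V, MeasurableSet St ∧ S ⊆ St ∧
      ∀ v : V, μ ((fun x => x + v) ⁻¹' St) = 0

/-- `S` is a prevalent subset of `V`. -/
def IsPrevalent {V : Type*} [NormedAddCommGroup V] [NormedSpace ℝ V] (S : Set V) : Prop :=
  IsShy Sᶜ

/-- `F` is the (normalized) lift of an orientation-preserving real analytic expanding circle
map of degree `d` fixing `π(0)`. -/
def AnalyticExpandingLift (F : ℝ → ℝ) (d : ℕ) : Prop :=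
  (∀ x : ℝ, AnalyticAt ℝ F x) ∧ (∀ x : ℝ, F (x + 1) = F x + d) ∧ StrictMono F ∧ F 0 = 0 ∧
    2 ≤ d ∧ ∃ C > (0 : ℝ), ∃ l > (1 : ℝ), ∀ n : ℕ, 1 ≤ n → ∀ x : ℝ, C * l ^ n ≤ |deriv (F^[n]) x|

/-- The inverse branches `τ_{i,n} = τ_{i_n} ∘ ⋯ ∘ τ_{i_1}`, where `τ = F⁻¹` and
`τ_i(x) = τ(x+i)`; the word `i` is indexed from `0`, so `i 0` is the first letter `i_1`. -/
noncomputable def tauIter (F : ℝ → ℝ) {d : ℕ} (i : ℕ → Fin d) : ℕ → ℝ → ℝ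
  | 0, x => x
  | n + 1, x => Function.invFun F (tauIter F i n x + ((i n : ℕ) : ℝ))

/-- The function `h^f_i` associated to an infinite word `i`. -/
noncomputable def hSum (F : ℝ → ℝ) {d : ℕ} (i : ℕ → Fin d) (f : Circle1 → ℝ) : ℝ → ℝ :=
  fun x => ∑' n : ℕ,
    (f ((tauIter F i (n + 1) x : ℝ) : Circle1) - f ((tauIter F i (n + 1) 0 : ℝ) : Circle1))

/-- The function `h^f_i` associated to a finite word of length `m` (the first `m` letters
of `i`). -/
noncomputable def hSumFin (F : ℝ → ℝ) {d : ℕ} (i : ℕ → Fin d) (m : ℕ) (f : Circle1 → ℝ) :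
    ℝ → ℝ :=
  fun x => ∑ n ∈ Finset.range m,
    (f ((tauIter F i (n + 1) x : ℝ) : Circle1) - f ((tauIter F i (n + 1) 0 : ℝ) : Circle1))

/-- `i ∈ CL(x,K)`: all backward images of `x` along the word `i` lie over `K`. -/
def WordIn (F : ℝ → ℝ) {d : ℕ} (i : ℕ → Fin d) (x : ℝ) (K : Set Circle1) : Prop :=
  ∀ n : ℕ, 1 ≤ n → ((tauIter F i n x : ℝ) : Circle1) ∈ K

/-- `x` (a real, lying over `K`) is an `f`-supercritical value of `K`. -/
def IsSupercriticalValue (F : ℝ → ℝ) (d : ℕ) (f : Circle1 → ℝ) (K : Set Circle1) (x : ℝ) :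
    Prop :=
  ((x : ℝ) : Circle1) ∈ K ∧ ∃ i j : ℕ → Fin d, WordIn F i x K ∧ WordIn F j x K ∧ i 0 ≠ j 0 ∧
    deriv (hSum F i f) x = deriv (hSum F j f) x

/-- `x` is a critical value of `T|K`. -/
def IsCriticalValue (T : Circle1 → Circle1) (K : Set Circle1) (x : Circle1) : Prop :=
  x ∈ K ∧ ∃ y z, y ∈ K ∧ z ∈ K ∧ y ≠ z ∧ T y = x ∧ T z = x

/-- A critical value `x` of `T|K` is regular: on each side of `x` there is a continuous
inverse branch of `T` selecting the unique preimage in `K`. -/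
def IsRegularCriticalValue (T : Circle1 → Circle1) (K : Set Circle1) (x : Circle1) : Prop :=
  ∃ U : Set Circle1, U ∈ 𝓝 x ∧ IsConnected U ∧
    ∀ b ∈ U \ {x}, ∃ s : Circle1 → Circle1,
      ContinuousOn s (connectedComponentIn (U \ {x}) b) ∧
      (∀ y ∈ connectedComponentIn (U \ {x}) b, T (s y) = y) ∧
      (∀ y ∈ K ∩ connectedComponentIn (U \ {x}) b, T ⁻¹' {y} ∩ K = {s y})

/-- `T|K` is Sturmian-like: every critical value is regular. -/
def SturmianLike (T : Circle1 → Circle1) (K : Set Circle1) : Prop :=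
  ∀ x, IsCriticalValue T K x → IsRegularCriticalValue T K x

/-- `f : ℝ/ℤ → ℝ` is a trigonometric polynomial. -/
def IsTrigPoly (f : Circle1 → ℝ) : Prop :=
  ∃ m : ℕ, ∃ a b : ℕ → ℝ, ∀ x : ℝ,
    f ↑x = a 0 + ∑ k ∈ Finset.range m,
      (a (k + 1) * Real.cos (2 * Real.pi * (k + 1) * x) +
        b (k + 1) * Real.sin (2 * Real.pi * (k + 1) * x))

end

/-! ### Uniformly expanding systems and calibrated sub-actions -/

/-- A real-valued function is `K`-Lipschitz. -/
def Lip {X : Type*} [PseudoMetricSpace X] (K : ℝ) (f : X → ℝ) : Prop :=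
  ∀ x y, |f x - f y| ≤ K * dist x y

/-- The metric consequences of uniform expansion that the combinatorial part of the argument
uses: `T` is `Λ`-Lipschitz; orbits that stay `δ`-close for `n` steps started `κ τ ^ n`-close;
inverse branches exist globally and contract; periodic pseudo-orbits are shadowed by periodic
orbits, with total error controlled by the total jump. -/
structure ExpSys {X : Type*} [MetricSpace X] (T : X → X) (Λ τ κ δ : ℝ) : Prop where
  hΛ : 1 ≤ Λ
  hτ0 : 0 < τ
  hτ1 : τ < 1
  hκ : 1 ≤ κ
  hδ : 0 < δ
  lip : ∀ x y, dist (T x) (T y) ≤ Λ * dist x y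
  bowen : ∀ (n : ℕ) (x y : X), (∀ i ≤ n, dist (T^[i] x) (T^[i] y) ≤ δ) →
    dist x y ≤ κ * τ ^ n * dist (T^[n] x) (T^[n] y)
  transport : ∀ (n : ℕ) (y x' : X), ∃ y', T^[n] y' = x' ∧
    ∀ i ≤ n, dist (T^[i] y') (T^[i] y) ≤ κ * τ ^ (n - i) * dist x' (T^[n] y)
  closing : ∀ (n : ℕ) (x : ℕ → X), 1 ≤ n → x n = x 0 → ∃ p, T^[n] p = p ∧
    ∑ i ∈ Finset.range n, dist (T^[i] p) (x i) ≤
      κ * ∑ i ∈ Finset.range n, dist (T (x i)) (x (i + 1))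

/-- `g` is an `L`-Lipschitz sub-action of `f` with constant `β`. -/
structure SubAct {X : Type*} [MetricSpace X] (T : X → X) (f g : X → ℝ) (β L : ℝ) : Prop where
  lip : Lip L g
  sub : ∀ x, g x + f x - β ≤ g (T x)

/-- `M` is a nonempty set with `T M = M` on which the sub-action inequality is an equality. -/
structure IsCal {X : Type*} (T : X → X) (f g : X → ℝ) (β : ℝ) (M : Set X) : Prop where
  ne : M.Nonempty
  maps : ∀ x ∈ M, T x ∈ M
  back : ∀ x ∈ M, ∃ y ∈ M, T y = x
  eq : ∀ x ∈ M, g (T x) = g x + f x - β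

section Basic
variable {X : Type*} [MetricSpace X]

lemma Lip.continuous {K : ℝ} {f : X → ℝ} (h : Lip K f) : Continuous f := by
  have hl : LipschitzWith (Real.toNNReal K) f := by
    refine LipschitzWith.of_dist_le_mul fun x y => ?_
    rw [Real.dist_eq]
    exact (h x y).trans (mul_le_mul_of_nonneg_right (Real.le_coe_toNNReal K) dist_nonneg)
  exact hl.continuous

lemma Lip.mono {K K' : ℝ} {f : X → ℝ} (h : Lip K f) (hK : K ≤ K') : Lip K' f := fun x y =>
  (h x y).trans (mul_le_mul_of_nonneg_right hK dist_nonneg)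

lemma Lip.comp {K Λ : ℝ} (hK : 0 ≤ K) {f : X → ℝ} (h : Lip K f) {T : X → X}
    (hT : ∀ x y, dist (T x) (T y) ≤ Λ * dist x y) : Lip (K * Λ) (fun x => f (T x)) := fun x y =>
  (h _ _).trans (by rw [mul_assoc]; exact mul_le_mul_of_nonneg_left (hT x y) hK)

lemma Lip.add {K K' : ℝ} {f g : X → ℝ} (h : Lip K f) (h' : Lip K' g) :
    Lip (K + K') (fun x => f x + g x) := fun x y => by
  have h1 := h x y
  have h2 := h' x y
  calc |f x + g x - (f y + g y)| = |(f x - f y) + (g x - g y)| := by ring_nf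
    _ ≤ |f x - f y| + |g x - g y| := abs_add_le _ _
    _ ≤ _ := by linarith

lemma Lip.neg {K : ℝ} {f : X → ℝ} (h : Lip K f) : Lip K (fun x => - f x) := fun x y => by
  have h1 := h x y
  rwa [← abs_neg, neg_sub, show -f y - -f x = f x - f y by ring]

lemma Lip.sub {K K' : ℝ} {f g : X → ℝ} (h : Lip K f) (h' : Lip K' g) :
    Lip (K + K') (fun x => f x - g x) := by
  simpa [sub_eq_add_neg] using h.add h'.neg

lemma Lip.bdd [CompactSpace X] {K : ℝ} {f : X → ℝ} (h : Lip K f) : ∃ C, 0 ≤ C ∧ ∀ x, |f x| ≤ C := by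
  obtain ⟨C, hC⟩ := isCompact_univ.exists_bound_of_continuousOn h.continuous.continuousOn
  exact ⟨max C 0, le_max_right _ _, fun x => (hC x (mem_univ x)).trans (le_max_left _ _)⟩

namespace ExpSys
variable {T : X → X} {Λ τ κ δ : ℝ}

lemma cont (E : ExpSys T Λ τ κ δ) : Continuous T := by
  have hl : LipschitzWith (Real.toNNReal Λ) T := LipschitzWith.of_dist_le_mul fun x y =>
    (E.lip x y).trans (mul_le_mul_of_nonneg_right (Real.le_coe_toNNReal Λ) dist_nonneg)
  exact hl.continuous

lemma lip_iter (E : ExpSys T Λ τ κ δ) (n : ℕ) (x y : X) : dist (T^[n] x)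
    (T^[n] y) ≤ Λ ^ n * dist x y := by
  induction n with
  | zero => simp
  | succ n ih =>
    rw [Function.iterate_succ_apply', Function.iterate_succ_apply']
    refine (E.lip _ _).trans ?_
    rw [pow_succ, mul_comm (Λ ^ n), mul_assoc]
    exact mul_le_mul_of_nonneg_left ih (by linarith [E.hΛ])

lemma geom_le (E : ExpSys T Λ τ κ δ) (n : ℕ) : ∑ i ∈ Finset.range n, τ ^ i ≤ 1 / (1 - τ) := by
  have h1 := E.hτ1
  have h0 := E.hτ0
  rw [geom_sum_eq h1.ne, le_div_iff₀ (by linarith)]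
  have : (τ ^ n - 1) / (τ - 1) * (1 - τ) = 1 - τ ^ n := by
    have := sub_ne_zero.2 h1.ne
    field_simp
    ring
  rw [this]; have := pow_pos h0 n; linarith

lemma geom_le' (E : ExpSys T Λ τ κ δ) (n : ℕ) :
    ∑ i ∈ Finset.range n, τ ^ (n - i) ≤ 1 / (1 - τ) := by
  have h1 := E.hτ1
  have h0 := E.hτ0
  refine le_trans ?_ (E.geom_le n)
  rw [← Finset.sum_range_reflect (fun i => τ ^ i)]
  refine Finset.sum_le_sum fun i hi => ?_
  have := Finset.mem_range.1 hi
  exact pow_le_pow_of_le_one h0.le h1.le (by omega)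

lemma one_sub_pos (E : ExpSys T Λ τ κ δ) : 0 < 1 - τ := by linarith [E.hτ1]

lemma κpos (E : ExpSys T Λ τ κ δ) : 0 < κ := by linarith [E.hκ]

lemma surj_iter (E : ExpSys T Λ τ κ δ) (n : ℕ) (x : X) : ∃ y, T^[n] y = x := by
  obtain ⟨y, hy, -⟩ := E.transport n x x
  exact ⟨y, hy⟩

/-- Birkhoff sums along orbits whose distance decays backwards in time. -/
lemma birkhoff_close (E : ExpSys T Λ τ κ δ) {K : ℝ} (hK : 0 ≤ K) {f : X → ℝ} (hf : Lip K f) {n : ℕ}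
    {y y' : X} {D : ℝ}
    (h : ∀ i < n, dist (T^[i] y') (T^[i] y) ≤ κ * τ ^ (n - i) * D) (hD : 0 ≤ D) :
    |birkhoffSum T f n y' - birkhoffSum T f n y| ≤ K * κ / (1 - τ) * D := by
  have hκ := E.κpos
  unfold birkhoffSum
  rw [← Finset.sum_sub_distrib]
  calc _ ≤ ∑ i ∈ Finset.range n, |f (T^[i] y') - f (T^[i] y)| := Finset.abs_sum_le_sum_abs _ _
    _ ≤ ∑ i ∈ Finset.range n, (K * κ * D) * τ ^ (n - i) := by
        refine Finset.sum_le_sum fun i hi => (hf _ _).trans ?_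
        have := mul_le_mul_of_nonneg_left (h i (Finset.mem_range.1 hi)) hK
        linarith
    _ = (K * κ * D) * ∑ i ∈ Finset.range n, τ ^ (n - i) := by rw [Finset.mul_sum]
    _ ≤ (K * κ * D) * (1 / (1 - τ)) := mul_le_mul_of_nonneg_left (E.geom_le' n) (by positivity)
    _ = _ := by ring

end ExpSys
end Basic

section SubActions
variable {X : Type*} {T : X → X} {Λ τ κ δ : ℝ}

/-- The Lax–Oleinik iterate `x ↦ sup {S_n f y | Tⁿ y = x}`. -/
noncomputable def laxO (T : X → X) (f : X → ℝ) (n : ℕ) (x : X) : ℝ :=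
  sSup (birkhoffSum T f n '' {y | T^[n] y = x})

lemma birkhoff_abs_le {f : X → ℝ} {C : ℝ} (hC : ∀ x, |f x| ≤ C) (n : ℕ) (y : X) :
    |birkhoffSum T f n y| ≤ n * C := by
  unfold birkhoffSum
  refine (Finset.abs_sum_le_sum_abs _ _).trans ((Finset.sum_le_sum fun i _ => hC _).trans ?_)
  simp

lemma le_laxO {f : X → ℝ} {C : ℝ} (hC : ∀ x, |f x| ≤ C) {n : ℕ} {x y : X} (h : T^[n] y = x) :
    birkhoffSum T f n y ≤ laxO T f n x := by
  refine le_csSup ⟨n * C, ?_⟩ ⟨y, h, rfl⟩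
  rintro _ ⟨z, -, rfl⟩
  exact (abs_le.1 (birkhoff_abs_le hC n z)).2

variable [MetricSpace X]

lemma laxO_le (E : ExpSys T Λ τ κ δ) {f : X → ℝ} {n : ℕ} {x : X} {c : ℝ}
    (h : ∀ y, T^[n] y = x → birkhoffSum T f n y ≤ c) : laxO T f n x ≤ c := by
  obtain ⟨y, hy⟩ := E.surj_iter n x
  refine csSup_le ⟨_, ⟨y, hy, rfl⟩⟩ ?_
  rintro _ ⟨z, hz, rfl⟩
  exact h z hz

variable [CompactSpace X]

lemma laxO_lip (E : ExpSys T Λ τ κ δ) {f : X → ℝ} {K : ℝ} (hK : 0 ≤ K) (hf : Lip K f)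
    (n : ℕ) (x x' : X) : laxO T f n x ≤ laxO T f n x' + K * κ / (1 - τ) * dist x x' := by
  obtain ⟨C, -, hC⟩ := hf.bdd
  refine laxO_le E fun y hy => ?_
  obtain ⟨y', hy', hc⟩ := E.transport n y x'
  have h1 := E.birkhoff_close hK hf (fun i hi => hc i hi.le) dist_nonneg
  have h2 := le_laxO hC hy'
  have h3 := (abs_le.1 h1).1
  rw [hy, dist_comm x' x] at h3
  linarith

variable [Nonempty X]

/-- There is a constant `β` such that the Lax–Oleinik iterates stay at bounded distance from
`n β` (Fekete's lemma applied to the maxima from above and from below). -/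
lemma exists_beta (E : ExpSys T Λ τ κ δ) {f : X → ℝ} {K : ℝ} (hK : 0 ≤ K) (hf : Lip K f) :
    ∃ β D : ℝ, ∀ n x, |laxO T f n x - n * β| ≤ D := by
  obtain ⟨C, hC0, hC⟩ := hf.bdd
  set L := K * κ / (1 - τ) with hL
  have hL0 : 0 ≤ L := div_nonneg (mul_nonneg hK E.κpos.le) E.one_sub_pos.le
  set D := L * Metric.diam (univ : Set X) with hD
  have hosc : ∀ n x x', laxO T f n x ≤ laxO T f n x' + D := fun n x x' =>
    (laxO_lip E hK hf n x x').trans (by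
      have := Metric.dist_le_diam_of_mem (isCompact_univ (X := X)).isBounded (mem_univ x) (mem_univ x')
      have := mul_le_mul_of_nonneg_left this hL0
      linarith)
  have hAbs : ∀ n x, |laxO T f n x| ≤ n * C := fun n x => by
    rw [abs_le]
    obtain ⟨y, hy⟩ := E.surj_iter n x
    exact ⟨(abs_le.1 (birkhoff_abs_le hC n y)).1.trans (le_laxO hC hy),
      laxO_le E fun y _ => (abs_le.1 (birkhoff_abs_le hC n y)).2⟩
  set a : ℕ → ℝ := fun n => ⨆ x, laxO T f n x with ha
  have hbd : ∀ n, BddAbove (range fun x => laxO T f n x) := fun n =>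
    ⟨n * C, by rintro _ ⟨x, rfl⟩; exact (abs_le.1 (hAbs n x)).2⟩
  have hle : ∀ n x, laxO T f n x ≤ a n := fun n x => le_ciSup (hbd n) x
  have hge : ∀ n x, a n ≤ laxO T f n x + D := fun n x => ciSup_le fun x' => hosc n x' x
  have hsplit : ∀ m n y, birkhoffSum T f (m + n) y = birkhoffSum T f m y + birkhoffSum T f n (T^[m] y) :=
    fun m n y => birkhoffSum_add T f m n y
  have hsub : Subadditive a := by
    intro m n
    refine ciSup_le fun x => laxO_le E fun y hy => ?_
    rw [hsplit]
    refine add_le_add ((le_laxO hC rfl).trans (hle m _)) ((le_laxO hC (x := x) ?_).trans (hle n _))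
    rw [← Function.iterate_add_apply, add_comm n m, hy]
  have hsub' : Subadditive (fun n => D - a n) := by
    intro m n
    have : a n ≤ a (m + n) - a m + D := by
      refine ciSup_le fun x => laxO_le E fun z hz => ?_
      have h1 := hge m z
      have h2 : laxO T f m z ≤ a (m + n) - birkhoffSum T f n z := by
        refine laxO_le E fun y hy => ?_
        have h3 := hle (m + n) x
        have h4 : birkhoffSum T f (m + n) y ≤ laxO T f (m + n) x := by
          refine le_laxO hC ?_
          rw [add_comm, Function.iterate_add_apply, hy, hz]
        rw [hsplit, hy] at h4
        linarith
      linarith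
    show D - a (m + n) ≤ D - a m + (D - a n)
    linarith
  have haAbs : ∀ n, |a n| ≤ n * C := fun n => by
    obtain ⟨x⟩ := ‹Nonempty X›
    rw [abs_le]
    exact ⟨(abs_le.1 (hAbs n x)).1.trans (hle n x), ciSup_le fun x => (abs_le.1 (hAbs n x)).2⟩
  have hD0 : 0 ≤ D := mul_nonneg hL0 Metric.diam_nonneg
  have hbb : ∀ n : ℕ, |a n / n| ≤ C := fun n => by
    rcases Nat.eq_zero_or_pos n with rfl | hn
    · simpa using hC0
    · have : (0 : ℝ) < n := by exact_mod_cast hn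
      rw [abs_div, abs_of_pos this, div_le_iff₀ this, mul_comm]; exact haAbs n
  have hb1 : BddBelow (range fun n : ℕ => a n / n) :=
    ⟨-C, by rintro _ ⟨n, rfl⟩; exact (abs_le.1 (hbb n)).1⟩
  have hb2 : BddBelow (range fun n : ℕ => (D - a n) / n) :=
    ⟨-C, by
      rintro _ ⟨n, rfl⟩
      have h1 := (abs_le.1 (hbb n)).2
      have h2 : 0 ≤ D / n := by positivity
      have h3 : (D - a n) / n = D / n - a n / n := sub_div _ _ _
      show -C ≤ (D - a n) / n
      linarith⟩
  have ht1 := hsub.tendsto_lim hb1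
  have ht2 := hsub'.tendsto_lim hb2
  have hlim : hsub'.lim = - hsub.lim := by
    refine tendsto_nhds_unique ht2 ?_
    have : Tendsto (fun n : ℕ => D / (n : ℝ) - a n / n) atTop (𝓝 (0 - hsub.lim)) :=
      (tendsto_const_div_atTop_nhds_zero_nat D).sub ht1
    simpa [sub_div] using this
  refine ⟨hsub.lim, D, fun n x => ?_⟩
  rcases Nat.eq_zero_or_pos n with rfl | hn
  · have := hAbs 0 x
    simp only [Nat.cast_zero, zero_mul] at this ⊢
    simpa using this.trans hD0
  · have hn' : (0 : ℝ) < n := by exact_mod_cast hn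
    have h1 := hsub.lim_le_div hb1 hn.ne'
    have h2 := hsub'.lim_le_div hb2 hn.ne'
    rw [le_div_iff₀ hn'] at h1 h2
    rw [hlim] at h2
    have h3 := hle n x
    have h4 := hge n x
    rw [abs_le]
    constructor <;> linarith

/-- Existence of a Lipschitz calibrated sub-action. -/
theorem exists_cal (E : ExpSys T Λ τ κ δ) {f : X → ℝ} {K : ℝ} (hK : 0 ≤ K) (hf : Lip K f) :
    ∃ g β, SubAct T f g β (K * κ / (1 - τ)) ∧ ∀ x, ∃ y, T y = x ∧ g x = g y + f y - β := by
  obtain ⟨C, hC0, hC⟩ := hf.bdd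
  obtain ⟨β, D, hβ⟩ := exists_beta E hK hf
  set L := K * κ / (1 - τ) with hL
  set B : ℕ → X → ℝ := fun n x => laxO T f n x - n * β with hB
  set h : ℕ → X → ℝ := fun m x => ⨆ n, B (m + n) x with hh
  set g : X → ℝ := fun x => ⨅ m, h m x with hg
  have hbdB : ∀ m x, BddAbove (range fun n => B (m + n) x) := fun m x =>
    ⟨D, by rintro _ ⟨n, rfl⟩; exact (abs_le.1 (hβ _ x)).2⟩
  have hBh : ∀ m n x, B (m + n) x ≤ h m x := fun m n x => le_ciSup (hbdB m x) n
  have hbdh : ∀ x, BddBelow (range fun m => h m x) := fun x =>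
    ⟨-D, by rintro _ ⟨m, rfl⟩; exact (abs_le.1 (hβ _ x)).1.trans (hBh m 0 x)⟩
  have hgh : ∀ m x, g x ≤ h m x := fun m x => ciInf_le (hbdh x) m
  have hanti : ∀ m m' x, m ≤ m' → h m' x ≤ h m x := fun m m' x hm => ciSup_le fun n => by
    have := hBh m (m' - m + n) x
    rwa [show m + (m' - m + n) = m' + n by omega] at this
  have hlip1 : ∀ m x x', h m x ≤ h m x' + L * dist x x' := fun m x x' => ciSup_le fun n => by
    have h1 := laxO_lip E hK hf (m + n) x x'
    have h2 := hBh m n x'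
    simp only [hB] at h2 ⊢
    linarith
  have hlip2 : ∀ x x', g x ≤ g x' + L * dist x x' := fun x x' => by
    have : g x - L * dist x x' ≤ g x' := le_ciInf fun m => by
      have h1 := hgh m x
      have h2 := hlip1 m x x'
      linarith
    linarith
  have hglip : Lip L g := fun x x' => by
    have h1 := hlip2 x x'
    have h2 := hlip2 x' x
    rw [dist_comm x' x] at h2
    rw [abs_le]; constructor <;> linarith
  have hhlip : ∀ m, Lip L (h m) := fun m x x' => by
    have h1 := hlip1 m x x'
    have h2 := hlip1 m x' x
    rw [dist_comm x' x] at h2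
    rw [abs_le]; constructor <;> linarith
  have hsub : ∀ x, g x + f x - β ≤ g (T x) := by
    intro x
    refine le_ciInf fun m => ?_
    have h1 : h m x ≤ h m (T x) - f x + β := by
      refine ciSup_le fun n => ?_
      have h3 : laxO T f (m + n) x ≤ laxO T f (m + n + 1) (T x) - f x := by
        refine laxO_le E fun y hy => ?_
        have := le_laxO hC (n := m + n + 1) (y := y) (x := T x)
          (by rw [Function.iterate_succ_apply', hy])
        rw [birkhoffSum_succ, hy] at this
        linarith
      have h4 := hBh m (n + 1) (T x)
      simp only [hB] at h4 ⊢
      rw [← add_assoc] at h4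
      push_cast at h4 ⊢
      linarith
    have h2 := hgh m x
    linarith
  refine ⟨g, β, ⟨hglip, hsub⟩, fun x => ?_⟩
  · have key : ∀ m : ℕ, ∃ y, T y = x ∧ h (m + 1) x - 1 / ((m : ℝ) + 1) ≤ h m y + f y - β := by
      intro m
      have hε : 0 < 1 / ((m : ℝ) + 1) := Nat.one_div_pos_of_nat
      obtain ⟨n, hn⟩ := exists_lt_of_lt_ciSup
        (show h (m + 1) x - (1 / ((m : ℝ) + 1)) / 2 < ⨆ n, B (m + 1 + n) x by
          show h (m + 1) x - _ < h (m + 1) x; linarith)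
      have hz : ∃ z, T^[m + 1 + n] z = x ∧
          laxO T f (m + 1 + n) x - (1 / ((m : ℝ) + 1)) / 2 < birkhoffSum T f (m + 1 + n) z := by
        by_contra hcon
        push Not at hcon
        have := laxO_le E hcon
        linarith
      obtain ⟨z, hz1, hz2⟩ := hz
      rw [show m + 1 + n = m + n + 1 by ring] at hz1 hz2 hn
      refine ⟨T^[m + n] z, by rw [← Function.iterate_succ_apply' T (m + n) z, hz1], ?_⟩
      rw [birkhoffSum_succ] at hz2
      have h5 := le_laxO hC (T := T) (n := m + n) (y := z) rfl
      have h6 := hBh m n (T^[m + n] z)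
      simp only [hB] at hn h6
      push_cast at hn h6
      linarith
    choose y hy1 hy2 using key
    obtain ⟨z, -, φ, hφ, hlim⟩ := isCompact_univ.tendsto_subseq (fun n => mem_univ (y n))
    have hTz : T z = x := by
      have h1 := (E.cont.tendsto z).comp hlim
      have h2 : (T ∘ (y ∘ φ)) = fun _ => x := by funext n; exact hy1 _
      rw [h2] at h1
      exact tendsto_nhds_unique tendsto_const_nhds h1 |>.symm
    refine ⟨z, hTz, le_antisymm ?_ ?_⟩
    · have : g x - f z + β ≤ g z := le_ciInf fun m => by
        have ht : Tendsto (fun k => h m (y (φ k)) + f (y (φ k)) - β + 1 / ((φ k : ℝ) + 1)) atTop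
            (𝓝 (h m z + f z - β + 0)) := by
          refine Tendsto.add (Tendsto.sub (Tendsto.add ?_ ?_) tendsto_const_nhds) ?_
          · exact ((hhlip m).continuous.tendsto z).comp hlim
          · exact (hf.continuous.tendsto z).comp hlim
          · exact tendsto_one_div_add_atTop_nhds_zero_nat.comp hφ.tendsto_atTop
        have : g x ≤ h m z + f z - β + 0 := by
          refine ge_of_tendsto ht ?_
          filter_upwards [hφ.tendsto_atTop.eventually (eventually_ge_atTop m)] with k hk
          have h1 := hy2 (φ k)
          have h2 := hgh (φ k + 1) x
          have h3 := hanti m (φ k) (y (φ k)) hk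
          linarith
        linarith
      linarith
    · have := hsub z
      rwa [hTz] at this

/-- Accumulation points of a calibrated backward orbit form a set as in `IsCal`. -/
theorem exists_isCal (E : ExpSys T Λ τ κ δ) {f : X → ℝ} {K : ℝ} (hK : 0 ≤ K) (hf : Lip K f) :
    ∃ g β M, SubAct T f g β (K * κ / (1 - τ)) ∧ IsCal T f g β M := by
  obtain ⟨g, β, hs, hc⟩ := exists_cal E hK hf
  choose p hp1 hp2 using hc
  obtain ⟨x0⟩ := ‹Nonempty X›
  set y : ℕ → X := fun n => p^[n] x0 with hy
  have hTy : ∀ n, T (y (n + 1)) = y n := fun n => by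
    simp only [hy, Function.iterate_succ_apply', hp1]
  have heq : ∀ n, g (T (y (n + 1))) = g (y (n + 1)) + f (y (n + 1)) - β := fun n => by
    rw [hTy]; simp only [hy, Function.iterate_succ_apply']; exact hp2 _
  have hclosed : IsClosed {x | g (T x) = g x + f x - β} :=
    isClosed_eq (hs.lip.continuous.comp E.cont)
      ((hs.lip.continuous.add hf.continuous).sub continuous_const)
  have hshift : Tendsto (fun n : ℕ => n + 1) atTop atTop := tendsto_add_atTop_nat 1
  refine ⟨g, β, {x | ∃ U : Ultrafilter ℕ, (U : Filter ℕ) ≤ atTop ∧ Tendsto y U (𝓝 x)}, hs,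
    ?_, ?_, ?_, ?_⟩
  · obtain ⟨x, -, hx⟩ := isCompact_univ.ultrafilter_le_nhds
      ((Ultrafilter.of (atTop : Filter ℕ)).map y) (by simp)
    exact ⟨x, Ultrafilter.of atTop, Ultrafilter.of_le _, hx⟩
  · rintro x ⟨U, hU, hx⟩
    refine ⟨U.map (fun n => n - 1), ?_, ?_⟩
    · exact (tendsto_sub_atTop_nat 1).mono_left hU
    · have h1 : Tendsto (T ∘ y) U (𝓝 (T x)) := (E.cont.tendsto x).comp hx
      rw [Ultrafilter.coe_map, tendsto_map'_iff]
      refine h1.congr' ?_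
      filter_upwards [hU (eventually_ge_atTop 1)] with n hn
      have := hTy (n - 1)
      rw [Nat.sub_add_cancel hn] at this
      exact this
  · rintro x ⟨U, hU, hx⟩
    obtain ⟨z, -, hz⟩ := isCompact_univ.ultrafilter_le_nhds
      ((U.map (fun n => n + 1)).map y) (by simp)
    refine ⟨z, ⟨U.map (fun n => n + 1), hshift.mono_left hU, hz⟩, ?_⟩
    have h1 : Tendsto (T ∘ y) (U.map (fun n => n + 1)) (𝓝 (T z)) := (E.cont.tendsto z).comp hz
    rw [Ultrafilter.coe_map, tendsto_map'_iff] at h1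
    have h2 : (T ∘ y) ∘ (fun n => n + 1) = y := by funext n; exact hTy n
    rw [h2] at h1
    exact tendsto_nhds_unique h1 hx
  · rintro x ⟨U, hU, hx⟩
    refine hclosed.mem_of_tendsto hx ?_
    filter_upwards [hU (eventually_ge_atTop 1)] with n hn
    have := heq (n - 1)
    rw [Nat.sub_add_cancel hn] at this
    exact this

end SubActions

/-! ### Short pseudo-periodic orbits in invariant sets -/

section Words
variable {X : Type*} {ι : Type*}

/-- The word of length `s` read off by the letter function `c` along the orbit of `x`. -/
def word (T : X → X) (c : X → ι) (s : ℕ) (x : X) : Fin s → ι := fun i => c (T^[i] x)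

lemma word_eq_iff {T : X → X} {c : X → ι} {s : ℕ} {x y : X} :
    word T c s x = word T c s y ↔ ∀ i < s, c (T^[i] x) = c (T^[i] y) := by
  constructor
  · intro h i hi
    exact congrFun h ⟨i, hi⟩
  · intro h
    funext i
    exact h i i.2

/-- The number of words of length `s` occurring in `M`. -/
noncomputable def nwords (T : X → X) (c : X → ι) (M : Set X) (s : ℕ) : ℕ :=
  (Set.image (word T c s) M).ncard

/-- Combinatorial core: if the graph of `s`-blocks has no cycle of length at most `p`, then an
itinerary of `p` blocks is determined by the set of blocks it visits. -/
lemma nwords_le_choose [Finite ι] {T : X → X} {c : X → ι} {M : Set X} (hM : ∀ x ∈ M, T x ∈ M)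
    {s p : ℕ} (hs : 1 ≤ s)
    (hno : ∀ (m : ℕ) (z : ℕ → X), 1 ≤ m → m ≤ p → (∀ i < m, z i ∈ M) →
      (∀ i, i + 1 < m → word T c s (T^[s] (z i)) = word T c s (z (i + 1))) →
      word T c s (T^[s] (z (m - 1))) ≠ word T c s (z 0)) :
    nwords T c M (p * s) ≤ (nwords T c M s).choose p := by
  classical
  have hMi : ∀ k, ∀ x ∈ M, T^[k] x ∈ M := fun k => by
    induction k with
    | zero => intro x hx; exact hx
    | succ k ih => intro x hx; rw [Function.iterate_succ_apply']; exact hM _ (ih x hx)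
  set b : X → Fin p → (Fin s → ι) := fun x i => word T c s (T^[s * i] x) with hb
  -- blocks along one orbit are distinct
  have hinj : ∀ x ∈ M, Function.Injective (b x) := by
    intro x hx
    have main : ∀ i j : Fin p, i < j → b x i ≠ b x j := by
      intro i j hij h
      have hij' : (i : ℕ) < j := hij
      refine hno (j - i) (fun k => T^[s * (i + k)] x) (by omega) (by omega)
        (fun k _ => hMi _ _ hx) (fun k _ => ?_) ?_
      · rw [← Function.iterate_add_apply]
        congr 2; ring
      · rw [← Function.iterate_add_apply]
        rw [show s + s * (i + (j - i - 1)) = s * j by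
          rw [add_comm, ← Nat.mul_succ]; congr 1; omega]
        simpa [hb] using h.symm
    intro i j h
    rcases lt_trichotomy i j with h1 | h1 | h1
    · exact absurd h (main _ _ h1)
    · exact h1
    · exact absurd h.symm (main _ _ h1)
  -- equal block sets force equal block sequences
  have hset : ∀ x ∈ M, ∀ y ∈ M, Set.range (b x) = Set.range (b y) → b x = b y := by
    intro x hx y hy h
    have hex : ∀ i, ∃ j, b y j = b x i := fun i => by
      have : b x i ∈ Set.range (b y) := h ▸ Set.mem_range_self i
      exact this
    choose σ hσ using hex
    have hσi : Function.Injective σ := fun i j hij => hinj x hx (by rw [← hσ, ← hσ, hij])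
    have hmono : StrictMono σ := by
      rcases p with _ | p
      · intro i; exact i.elim0
      refine Fin.strictMono_iff_lt_succ.2 fun i => ?_
      by_contra hlt
      have hlt' : (σ i.succ : ℕ) ≤ σ i.castSucc := by
        simpa using hlt
      have hne : (σ i.succ : ℕ) ≠ σ i.castSucc := fun hh => by
        have := hσi (Fin.ext hh)
        exact absurd this (by simp [Fin.ext_iff])
      have hlt2 : (σ i.succ : ℕ) < σ i.castSucc := lt_of_le_of_ne hlt' hne
      set d := (σ i.castSucc : ℕ) - σ i.succ with hd
      have hdp : d + 1 ≤ p + 1 := by have := (σ i.castSucc).2; omega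
      refine hno (d + 1) (fun k => if k < d then T^[s * (σ i.succ + k)] y else T^[s * i] x)
        (by omega) hdp (fun k _ => ?_) (fun k hk => ?_) ?_
      · split_ifs
        · exact hMi _ _ hy
        · exact hMi _ _ hx
      · have hk' : k < d := by omega
        rw [if_pos hk']
        rw [← Function.iterate_add_apply]
        by_cases hk2 : k + 1 < d
        · rw [if_pos hk2]; congr 2; ring
        · rw [if_neg hk2]
          rw [show s + s * ((σ i.succ : ℕ) + k) = s * (σ i.castSucc : ℕ) by
            rw [add_comm, ← Nat.mul_succ]; congr 1; omega]
          have := hσ i.castSucc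
          simpa [hb] using this
      · rw [if_neg (by omega), if_pos (by omega), ← Function.iterate_add_apply]
        have := hσ i.succ
        simp only [hb, Fin.val_succ] at this
        rw [add_zero, this]
        congr 2; ring
    have : σ = id := by
      refine (hmono.range_inj strictMono_id).1 ?_
      rw [Set.range_id, Set.range_eq_univ]
      exact Finite.surjective_of_injective hσi
    funext i
    rw [← hσ i, this]; rfl
  -- injection into the `p`-element subsets of the set of blocks
  have hW : (word T c s '' M).Finite := Set.toFinite _
  have hbm : ∀ x ∈ M, ∀ i, b x i ∈ word T c s '' M := fun x hx i => ⟨_, hMi _ _ hx, rfl⟩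
  have hlt : ∀ (i : Fin p) (j : Fin s), s * (i : ℕ) + j < p * s := fun i j => by
    have h1 := i.2
    have h2 := j.2
    calc s * (i : ℕ) + j < s * i + s := by omega
      _ = s * (i + 1) := by ring
      _ ≤ s * p := Nat.mul_le_mul_left _ h1
      _ = p * s := mul_comm _ _
  set blk : (Fin (p * s) → ι) → Fin p → (Fin s → ι) := fun w i j => w ⟨s * i + j, hlt i j⟩ with hblk
  have hbb : ∀ x, blk (word T c (p * s) x) = b x := fun x => by
    funext i j
    simp only [hblk, hb, word]
    rw [← Function.iterate_add_apply, add_comm]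
  have hblki : Function.Injective blk := by
    intro w w' h
    funext k
    have h0 : 0 < s := hs
    have hk1 : (k : ℕ) / s < p := Nat.div_lt_of_lt_mul (k.2.trans_eq (mul_comm _ _))
    have := congrFun (congrFun h ⟨k / s, hk1⟩) ⟨k % s, Nat.mod_lt _ h0⟩
    simpa [hblk, Nat.div_add_mod] using this
  have hcard : nwords T c M s = hW.toFinset.card := Set.ncard_eq_toFinset_card _ hW
  rw [hcard, ← Finset.card_powersetCard, ← Set.ncard_coe_finset]
  refine Set.ncard_le_ncard_of_injOn (fun w => Finset.univ.image (blk w)) ?_ ?_ (Finset.finite_toSet _)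
  · rintro _ ⟨x, hx, rfl⟩
    rw [Finset.mem_coe, Finset.mem_powersetCard]
    rw [hbb]
    refine ⟨fun w hw => ?_, ?_⟩
    · obtain ⟨i, -, rfl⟩ := Finset.mem_image.1 hw
      exact hW.mem_toFinset.2 (hbm x hx i)
    · rw [Finset.card_image_of_injective _ (hinj x hx)]; simp
  · rintro _ ⟨x, hx, rfl⟩ _ ⟨y, hy, rfl⟩ h
    apply hblki
    rw [hbb, hbb]
    apply hset x hx y hy
    have h' : (Finset.univ.image (blk (word T c (p * s) x)) : Finset _) =
      Finset.univ.image (blk (word T c (p * s) y)) := h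
    rw [hbb, hbb] at h'
    have := congrArg (fun A : Finset (Fin s → ι) => (A : Set (Fin s → ι))) h'
    simpa using this

lemma nwords_pos [Finite ι] {T : X → X} {c : X → ι} {M : Set X} (hne : M.Nonempty) (s : ℕ) :
    0 < nwords T c M s := by
  unfold nwords
  rw [Set.ncard_pos (Set.toFinite _)]
  exact hne.image _

lemma iter_mem {T : X → X} {M : Set X} (hM : ∀ x ∈ M, T x ∈ M) (k : ℕ) : ∀ x ∈ M, T^[k] x ∈ M := by
  induction k with
  | zero => intro x hx; exact hx
  | succ k ih => intro x hx; rw [Function.iterate_succ_apply']; exact hM _ (ih x hx)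

lemma nwords_add_le [Finite ι] {T : X → X} {c : X → ι} {M : Set X} (hM : ∀ x ∈ M, T x ∈ M)
    (s t : ℕ) : nwords T c M (s + t) ≤ nwords T c M s * nwords T c M t := by
  unfold nwords
  rw [← Set.ncard_prod]
  refine Set.ncard_le_ncard_of_injOn
    (fun w => (fun i => w (Fin.castAdd t i), fun i => w (Fin.natAdd s i))) ?_ ?_ (Set.toFinite _)
  · rintro _ ⟨x, hx, rfl⟩
    refine ⟨⟨x, hx, rfl⟩, ⟨T^[s] x, iter_mem hM s x hx, ?_⟩⟩
    funext i
    simp only [word, Fin.val_natAdd]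
    rw [← Function.iterate_add_apply, add_comm]
  · rintro w - w' - h
    simp only [Prod.mk.injEq] at h
    funext i
    refine Fin.addCases (fun j => congrFun h.1 j) (fun j => congrFun h.2 j) i

/-- In every invariant set the graph of `s`-blocks has a cycle of subexponential length. -/
theorem exists_block_cycle [Finite ι] {T : X → X} {c : X → ι} {M : Set X} (hne : M.Nonempty)
    (hM : ∀ x ∈ M, T x ∈ M) {η : ℝ} (hη : 0 < η) :
    ∀ᶠ s : ℕ in atTop, ∃ (m : ℕ) (z : ℕ → X), 1 ≤ m ∧ (m : ℝ) ≤ 4 * Real.exp (η * s) ∧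
      (∀ i < m, z i ∈ M) ∧
      (∀ i, i + 1 < m → word T c s (T^[s] (z i)) = word T c s (z (i + 1))) ∧
      word T c s (T^[s] (z (m - 1))) = word T c s (z 0) := by
  set V := nwords T c M with hV
  have hVpos : ∀ s, (0 : ℝ) < V s := fun s => by exact_mod_cast nwords_pos hne s
  have hV1 : ∀ s, (1 : ℝ) ≤ V s := fun s => by
    exact_mod_cast Nat.succ_le_of_lt (nwords_pos (T := T) (c := c) hne s)
  set u : ℕ → ℝ := fun s => Real.log (V s) with hu
  have hu0 : ∀ s, 0 ≤ u s := fun s => Real.log_nonneg (hV1 s)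
  have hsub : Subadditive u := fun s t => by
    have h1 : (V (s + t) : ℝ) ≤ V s * V t := by exact_mod_cast nwords_add_le hM s t
    calc u (s + t) ≤ Real.log (V s * V t) := Real.log_le_log (hVpos _) h1
      _ = u s + u t := Real.log_mul (hVpos s).ne' (hVpos t).ne'
  have hb : BddBelow (range fun n : ℕ => u n / n) :=
    ⟨0, by rintro _ ⟨n, rfl⟩; exact div_nonneg (hu0 n) (Nat.cast_nonneg n)⟩
  set h := hsub.lim with hh
  have hlim := (hsub.tendsto_lim hb).eventually (gt_mem_nhds (show h < h + η by linarith))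
  filter_upwards [hlim, eventually_ge_atTop 1] with s hs hs1
  have hs0 : (0 : ℝ) < s := by exact_mod_cast hs1
  rw [div_lt_iff₀ hs0] at hs
  set p := ⌈3 * Real.exp (η * s)⌉₊ with hp
  have hexp1 : 1 ≤ Real.exp (η * s) := Real.one_le_exp (by positivity)
  have hp3 : 3 * Real.exp (η * s) ≤ p := Nat.le_ceil _
  have hp4 : (p : ℝ) ≤ 4 * Real.exp (η * s) := by
    have := Nat.ceil_lt_add_one (show 0 ≤ 3 * Real.exp (η * s) by positivity)
    linarith
  have hp0 : (0 : ℝ) < p := by linarith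
  have hp0' : 0 < p := by exact_mod_cast hp0
  by_contra hcon
  push Not at hcon
  have hch := nwords_le_choose (c := c) hM hs1 (p := p) (fun m z hm1 hmp hz hzz => by
    refine hcon m z hm1 (le_trans ?_ hp4) hz hzz
    exact_mod_cast hmp)
  have h1 : (V (p * s) : ℝ) ≤ (V s : ℝ) ^ p / (p.factorial : ℝ) :=
    le_trans (by exact_mod_cast hch) (Nat.choose_le_pow_div p (V s))
  have h2 : h * (p * s) ≤ u (p * s) := by
    have := hsub.lim_le_div hb (n := p * s) (by positivity)
    rw [le_div_iff₀ (by push_cast; positivity)] at this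
    push_cast at this
    exact this
  have hfac : (0 : ℝ) < (p.factorial : ℝ) := by exact_mod_cast p.factorial_pos
  have h3 : u (p * s) ≤ p * u s - Real.log p.factorial := by
    calc u (p * s) ≤ Real.log ((V s : ℝ) ^ p / (p.factorial : ℝ)) := Real.log_le_log (hVpos _) h1
      _ = p * u s - Real.log p.factorial := by
        rw [Real.log_div (pow_ne_zero _ (hVpos s).ne') hfac.ne', Real.log_pow]
  have h4 : (p : ℝ) * Real.log p - p ≤ Real.log p.factorial := by
    have h5 : (p : ℝ) ^ p / p.factorial ≤ Real.exp p := Real.pow_div_factorial_le_exp _ hp0.le _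
    have h6 := Real.log_le_log (by positivity) h5
    rw [Real.log_div (by positivity) hfac.ne', Real.log_pow, Real.log_exp] at h6
    linarith
  have h7 : 1 + η * s < Real.log p := by
    rw [Real.lt_log_iff_exp_lt hp0, Real.exp_add]
    refine lt_of_lt_of_le ?_ hp3
    have := Real.exp_one_lt_d9
    exact mul_lt_mul_of_pos_right (by linarith) (Real.exp_pos _)
  have h8 : (p : ℝ) * Real.log p ≤ p * (1 + η * s) := by nlinarith
  have h9 := le_of_mul_le_mul_left h8 hp0
  linarith

end Words

/-- A periodic pseudo-orbit `x 0, …, x n = x 0` in `M` of total jump at most `ε`. -/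
structure Loop {X : Type*} [MetricSpace X] (T : X → X) (M : Set X) (n : ℕ) (x : ℕ → X) (ε : ℝ) :
    Prop where
  pos : 1 ≤ n
  per : x n = x 0
  mem : ∀ i, x i ∈ M
  jump : ∑ i ∈ Finset.range n, dist (T (x i)) (x (i + 1)) ≤ ε

section Loops
variable {X : Type*} [MetricSpace X] [CompactSpace X] {T : X → X} {Λ τ κ δ : ℝ}

lemma exists_letters {e : ℝ} (he : 0 < e) :
    ∃ (q : ℕ) (c : X → Fin q), ∀ x y, c x = c y → dist x y ≤ e := by
  obtain ⟨t, -, ht, hcov⟩ := (isCompact_univ (X := X)).finite_cover_balls (half_pos he)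
  have h1 : ∀ x : X, ∃ p : t, dist x (p : X) < e / 2 := fun x => by
    have := hcov (mem_univ x)
    simp only [mem_iUnion, Metric.mem_ball] at this
    obtain ⟨p, hp, hx⟩ := this
    exact ⟨⟨p, hp⟩, hx⟩
  choose r hr using h1
  have : Finite t := ht
  obtain ⟨n, ⟨eq⟩⟩ := Finite.exists_equiv_fin t
  refine ⟨n, fun x => eq (r x), fun x y hxy => ?_⟩
  have h2 := hr x
  have h3 := hr y
  rw [← eq.injective hxy] at h3
  have := dist_triangle_right x y (r x : X)
  linarith

/-- Invariant sets contain loops with tiny jump `exp (-t)` and length at most `exp (η t)`. -/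
theorem exists_loop (E : ExpSys T Λ τ κ δ) {M : Set X} (hne : M.Nonempty)
    (hM : ∀ x ∈ M, T x ∈ M) {η : ℝ} (hη : 0 < η) (t₀ : ℝ) :
    ∃ t ≥ t₀, ∃ (n : ℕ) (x : ℕ → X), Loop T M n x (Real.exp (-t)) ∧ (n : ℝ) ≤ Real.exp (η * t) := by
  obtain ⟨q, c, hc⟩ := exists_letters (X := X) E.hδ
  set b := -Real.log τ with hb
  have hb0 : 0 < b := by
    have := Real.log_neg E.hτ0 E.hτ1
    linarith
  set η' := min (b / 8) (η * b / 8) with hη'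
  have hη'0 : 0 < η' := lt_min (by positivity) (by positivity)
  have hτs : ∀ s : ℕ, τ ^ s = Real.exp (-(b * s)) := fun s => by
    rw [hb, neg_mul, neg_neg, mul_comm, Real.exp_nat_mul, Real.exp_log E.hτ0]
  have hlin : ∀ C d : ℝ, 0 < d → ∀ᶠ s : ℕ in atTop, C * s ≤ Real.exp (d * s) := fun C d hd => by
    have h1 : (fun s : ℝ => C * s) =o[atTop] fun s => Real.exp (d * s) := by
      have := (isLittleO_pow_exp_pos_mul_atTop 1 hd).const_mul_left C
      simpa using this
    have h2 := (h1.bound one_pos).and (eventually_ge_atTop 0)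
    filter_upwards [tendsto_natCast_atTop_atTop.eventually h2] with s hs
    have := hs.1
    rw [one_mul, Real.norm_eq_abs, Real.norm_eq_abs, abs_of_pos (Real.exp_pos _)] at this
    exact (le_abs_self _).trans this
  have h1 := hlin (4 * (κ * δ / τ)) (b / 8) (by positivity)
  have h2 := hlin 4 (η * b / 8) (by positivity)
  have h3 : ∀ᶠ s : ℕ in atTop, t₀ ≤ b / 2 * s :=
    (tendsto_natCast_atTop_atTop.const_mul_atTop (show 0 < b / 2 by positivity)).eventually_ge_atTop t₀
  obtain ⟨s, ⟨m, z, hm1, hm4, hz, hzz, hzl⟩, hs1, hs2, hs3, hs0⟩ :=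
    ((exists_block_cycle (c := c) hne hM hη'0).and (h1.and (h2.and (h3.and (eventually_ge_atTop 1))))).exists
  have hs0' : 0 < s := hs0
  refine ⟨b / 2 * s, hs3, m * s, fun k => T^[k % s] (z (k / s % m)), ⟨?_, ?_, ?_, ?_⟩, ?_⟩
  · exact Nat.mul_pos hm1 hs0
  · simp [Nat.mul_div_cancel _ hs0']
  · intro i
    exact iter_mem hM _ _ (hz _ (Nat.mod_lt _ hm1))
  · have hjump : ∀ k, dist (T (T^[k % s] (z (k / s % m)))) (T^[(k + 1) % s] (z ((k + 1) / s % m))) ≤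
        κ * δ / τ * τ ^ s := by
      intro k
      have hpos : 0 ≤ κ * δ / τ * τ ^ s := by
        have := E.κpos; have := E.hδ; have := E.hτ0; positivity
      rw [← Function.iterate_succ_apply' T]
      by_cases hk : k % s + 1 < s
      · have e1 : (k + 1) % s = k % s + 1 := by
          rw [Nat.add_mod, Nat.mod_eq_of_lt (show 1 < s by omega), Nat.mod_eq_of_lt hk]
        have e2 : (k + 1) / s = k / s := by
          rw [Nat.succ_div, if_neg, add_zero]
          intro hd
          have := Nat.mod_eq_zero_of_dvd hd
          omega
        rw [e1, e2, dist_self]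
        exact hpos
      · have e0 : k % s + 1 = s := by have := Nat.mod_lt k hs0'; omega
        have hd : s ∣ k + 1 := by
          refine ⟨k / s + 1, ?_⟩
          have := Nat.div_add_mod k s
          rw [Nat.mul_succ]; omega
        have e1 : (k + 1) % s = 0 := Nat.mod_eq_zero_of_dvd hd
        have e2 : (k + 1) / s = k / s + 1 := by rw [Nat.succ_div, if_pos hd]
        rw [e1, e2]
        rw [Nat.succ_eq_add_one, e0]
        have hw : word T c s (T^[s] (z (k / s % m))) = word T c s (z ((k / s + 1) % m)) := by
          have hlt := Nat.mod_lt (k / s) hm1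
          by_cases hk2 : k / s % m + 1 < m
          · have e3 : (k / s + 1) % m = k / s % m + 1 := by
              rw [Nat.add_mod, Nat.mod_eq_of_lt (show 1 < m by omega), Nat.mod_eq_of_lt hk2]
            rw [e3]
            exact hzz _ hk2
          · have e3 : k / s % m = m - 1 := by omega
            have e4 : (k / s + 1) % m = 0 := by
              apply Nat.mod_eq_zero_of_dvd
              refine ⟨k / s / m + 1, ?_⟩
              have := Nat.div_add_mod (k / s) m
              rw [Nat.mul_succ]; omega
            rw [e3, e4]
            exact hzl
        have hcl : ∀ i ≤ s - 1, dist (T^[i] (T^[s] (z (k / s % m)))) (T^[i] (z ((k / s + 1) % m))) ≤ δ :=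
          fun i hi => hc _ _ (word_eq_iff.1 hw i (by omega))
        refine (E.bowen (s - 1) _ _ hcl).trans ?_
        have h5 : τ ^ (s - 1) = τ ^ s / τ := by
          rw [eq_div_iff E.hτ0.ne', ← pow_succ, Nat.sub_add_cancel hs0]
        rw [h5]
        have h6 := hcl (s - 1) le_rfl
        have h7 : 0 ≤ κ * (τ ^ s / τ) := by
          have := E.κpos; have := E.hτ0; positivity
        refine (mul_le_mul_of_nonneg_left h6 h7).trans (le_of_eq ?_)
        ring
    refine (Finset.sum_le_sum fun i _ => hjump i).trans ?_
    rw [Finset.sum_const, Finset.card_range, nsmul_eq_mul]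
    push_cast
    have hκ := E.κpos; have hδ := E.hδ; have hτ := E.hτ0
    calc (m : ℝ) * s * (κ * δ / τ * τ ^ s)
        ≤ (4 * Real.exp (η' * s)) * s * (κ * δ / τ * τ ^ s) := by gcongr
      _ = (4 * (κ * δ / τ) * s) * (Real.exp (η' * s) * τ ^ s) := by ring
      _ ≤ Real.exp (b / 8 * s) * (Real.exp (b / 8 * s) * Real.exp (-(b * s))) := by
        rw [hτs]
        gcongr
        exact min_le_left _ _
      _ = Real.exp (-(3 * b / 4 * s)) := by rw [← Real.exp_add, ← Real.exp_add]; ring_nf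
      _ ≤ _ := by
        apply Real.exp_le_exp.2
        have : 0 ≤ b * s := by positivity
        linarith
  · push_cast
    calc (m : ℝ) * s ≤ (4 * Real.exp (η' * s)) * s := by gcongr
      _ = (4 * s) * Real.exp (η' * s) := by ring
      _ ≤ Real.exp (η * b / 8 * s) * Real.exp (η * b / 8 * s) := by
        gcongr
        exact min_le_right _ _
      _ = Real.exp (η * b / 4 * s) := by rw [← Real.exp_add]; ring_nf
      _ ≤ _ := by
        apply Real.exp_le_exp.2
        have : 0 ≤ η * b * s := by positivity
        linarith

end Loops

/-! ### Locking: a penalty away from a periodic orbit forces unique maximization -/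

section Locking
variable {X : Type*} {T : X → X} {Λ τ κ δ : ℝ}

lemma iter_mod {n : ℕ} {p : X} (hp : T^[n] p = p) (i : ℕ) : T^[i] p = T^[i % n] p :=
  (Function.IsPeriodicPt.iterate_mod_apply (f := T) (x := p) (n := n) hp i).symm

lemma birkhoff_period {n : ℕ} {p : X} (hp : T^[n] p = p) (f : X → ℝ) (i : ℕ) :
    birkhoffSum T f n (T^[i] p) = birkhoffSum T f n p := by
  induction i with
  | zero => rfl
  | succ i ih =>
    rw [← ih, Function.iterate_succ_apply']
    have h := birkhoffSum_apply_sub_birkhoffSum T f n (T^[i] p)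
    have h2 : T^[n] (T^[i] p) = T^[i] p := by
      rw [← Function.iterate_add_apply, add_comm, Function.iterate_add_apply, hp]
    rw [h2, sub_self, sub_eq_zero] at h
    exact h

lemma birkhoff_period_mul {n : ℕ} {p : X} (hp : T^[n] p = p) (f : X → ℝ) (i a r : ℕ) :
    birkhoffSum T f (n * a + r) (T^[i] p) =
      a * birkhoffSum T f n p + birkhoffSum T f r (T^[n * a + i] p) := by
  induction a generalizing i with
  | zero => simp
  | succ a ih =>
    rw [show n * (a + 1) + r = n + (n * a + r) by ring, birkhoffSum_add, birkhoff_period hp,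
      ← Function.iterate_add_apply, ih, show n * a + (n + i) = n * (a + 1) + i by ring]
    push_cast; ring

/-- The times at which the orbit is far from the periodic orbit cost a definite amount. -/
lemma penalty_bound {G : X → ℝ} {U : Set X} {k₀ : ℝ}
    (hblock : ∀ (m : ℕ) (x : X), (∀ k < m, T^[k] x ∈ U) → birkhoffSum T G m x ≤ k₀ / 4)
    (hbad : ∀ x ∉ U, G x ≤ -(3 * k₀ / 4)) (N : ℕ) :
    ∀ x, birkhoffSum T G N x ≤ k₀ / 4 - k₀ / 2 * birkhoffSum T (Uᶜ.indicator 1) N x := by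
  classical
  induction N using Nat.strong_induction_on with
  | _ N ih =>
  intro x
  by_cases hall : ∀ k < N, T^[k] x ∈ U
  · have h1 : birkhoffSum T (Uᶜ.indicator (1 : X → ℝ)) N x = 0 :=
      Finset.sum_eq_zero fun k hk => by
        have := hall k (Finset.mem_range.1 hk)
        simp [this]
    rw [h1]
    have := hblock N x hall
    linarith
  · push Not at hall
    have hspec := Nat.find_spec hall
    have hmin : ∀ k < Nat.find hall, T^[k] x ∈ U := fun k hk => by
      have h1 := Nat.find_min hall hk
      by_contra h2
      exact h1 ⟨hk.trans hspec.1, h2⟩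
    set m := Nat.find hall
    obtain ⟨r, hr⟩ := Nat.exists_eq_add_of_lt hspec.1
    have hN : N = m + (1 + r) := by omega
    rw [hN, birkhoffSum_add, birkhoffSum_add, birkhoffSum_add, birkhoffSum_add, birkhoffSum_one,
      birkhoffSum_one]
    have h1 := hblock m x hmin
    have h2 := hbad _ hspec.2
    have h3 := ih r (by omega) (T^[1] (T^[m] x))
    have h4 : birkhoffSum T (Uᶜ.indicator (1 : X → ℝ)) m x = 0 :=
      Finset.sum_eq_zero fun k hk => by
        have := hmin k (Finset.mem_range.1 hk)
        simp [this]
    have h5 : Uᶜ.indicator (1 : X → ℝ) (T^[m] x) = 1 := by simp [hspec.2]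
    rw [h4, h5]
    linarith

variable [MetricSpace X]

/-- An orbit piece that stays `θ`-close to a periodic orbit with gap at least `(1 + Λ) θ` follows
one point of that orbit. -/
lemma shadow (E : ExpSys T Λ τ κ δ) {n : ℕ} (hn : 1 ≤ n) {p : X} (hp : T^[n] p = p) {Δ θ : ℝ}
    (hgap : ∀ i < n, ∀ j < n, i ≠ j → Δ ≤ dist (T^[i] p) (T^[j] p)) (hθ : (1 + Λ) * θ ≤ Δ)
    {m : ℕ} {x : X} (hx : ∀ k < m, ∃ i, dist (T^[k] x) (T^[i] p) < θ) :
    ∃ i, ∀ k < m, dist (T^[k] x) (T^[k] (T^[i] p)) < θ := by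
  have hgap' : ∀ i j, dist (T^[i] p) (T^[j] p) < Δ → T^[i] p = T^[j] p := fun i j h => by
    rw [iter_mod hp i, iter_mod hp j] at h ⊢
    by_contra hne
    have : i % n ≠ j % n := fun h' => hne (by rw [h'])
    exact absurd (hgap _ (Nat.mod_lt _ hn) _ (Nat.mod_lt _ hn) this) (not_le.2 h)
  rcases Nat.eq_zero_or_pos m with rfl | hm
  · exact ⟨0, fun k hk => absurd hk (Nat.not_lt_zero k)⟩
  obtain ⟨i, hi⟩ := hx 0 hm
  refine ⟨i, fun k => ?_⟩
  induction k with
  | zero => intro _; exact hi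
  | succ k ih =>
    intro hk
    have h1 := ih (by omega)
    obtain ⟨j, hj⟩ := hx (k + 1) hk
    rw [← Function.iterate_add_apply] at h1 ⊢
    rw [Function.iterate_succ_apply'] at hj ⊢
    have h2 : dist (T^[j] p) (T^[k + 1 + i] p) < Δ := by
      have h3 := E.lip (T^[k] x) (T^[k + i] p)
      have h4 : Λ * dist (T^[k] x) (T^[k + i] p) ≤ Λ * θ :=
        mul_le_mul_of_nonneg_left h1.le (by linarith [E.hΛ])
      rw [show k + 1 + i = (k + i) + 1 by ring, Function.iterate_succ_apply']
      have h5 := dist_triangle_left (T^[j] p) (T (T^[k + i] p)) (T (T^[k] x))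
      nlinarith
    rw [hgap' _ _ h2] at hj
    exact hj

/-- Orbits that never leave the `θ`-neighbourhood of the periodic orbit belong to it. -/
lemma mem_orbit_of_near (E : ExpSys T Λ τ κ δ) {n : ℕ} (hn : 1 ≤ n) {p : X} (hp : T^[n] p = p)
    {Δ θ : ℝ} (hgap : ∀ i < n, ∀ j < n, i ≠ j → Δ ≤ dist (T^[i] p) (T^[j] p))
    (hθ : (1 + Λ) * θ ≤ Δ) (hθδ : θ ≤ δ) {x : X}
    (hx : ∀ k, ∃ i, dist (T^[k] x) (T^[i] p) < θ) : ∃ i, x = T^[i] p := by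
  have hfin : (Set.range fun i : ℕ => T^[i] p).Finite := by
    refine ((Finset.range n).finite_toSet.image fun i => T^[i] p).subset ?_
    rintro _ ⟨i, rfl⟩
    exact ⟨i % n, by simpa using Nat.mod_lt _ hn, (iter_mod hp i).symm⟩
  have hcl : x ∈ closure (Set.range fun i : ℕ => T^[i] p) := by
    rw [Metric.mem_closure_iff]
    intro ε hε
    have ht : Tendsto (fun m : ℕ => κ * τ ^ m * δ) atTop (𝓝 (κ * 0 * δ)) :=
      ((tendsto_pow_atTop_nhds_zero_of_lt_one E.hτ0.le E.hτ1).const_mul κ).mul_const δ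
    rw [mul_zero, zero_mul] at ht
    obtain ⟨m, hm⟩ := (ht.eventually (gt_mem_nhds hε)).exists
    obtain ⟨i, hi⟩ := shadow E hn hp hgap hθ (m := m + 1) (x := x) fun k _ => hx k
    refine ⟨_, ⟨i, rfl⟩, lt_of_le_of_lt (E.bowen m _ _ fun k hk => ?_) (lt_of_le_of_lt ?_ hm)⟩
    · exact (hi k (by omega)).le.trans hθδ
    · have := E.κpos
      have := E.hτ0
      exact mul_le_mul_of_nonneg_left ((hi m (by omega)).le.trans hθδ) (by positivity)
  rw [hfin.isClosed.closure_eq] at hcl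
  obtain ⟨i, hi⟩ := hcl
  exact ⟨i, hi.symm⟩

/-- Birkhoff sums of a nonpositive function `F` and of a small function `h` along an orbit piece
staying near a periodic orbit, compared with the means over the periodic orbit. The last `m'`
steps of the piece are treated by sign only; before them, closeness to the orbit is exponentially
small. -/
lemma block_bound (E : ExpSys T Λ τ κ δ) {n : ℕ} (hn : 1 ≤ n) {p : X} (hp : T^[n] p = p)
    {Δ θ : ℝ} (hgap : ∀ i < n, ∀ j < n, i ≠ j → Δ ≤ dist (T^[i] p) (T^[j] p))
    (hθ : (1 + Λ) * θ ≤ Δ) (hθδ : θ ≤ δ) (hθ0 : 0 < θ) {F h : X → ℝ} {K e A : ℝ} (hK : 0 ≤ K)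
    (hF : Lip K F) (hF0 : ∀ x, F x ≤ 0) (hA : birkhoffSum T F n p = -A) (he : 0 ≤ e)
    (hh : Lip e h) (hhe : ∀ x, |h x| ≤ e) (m' m : ℕ) {x : X}
    (hx : ∀ k < m, ∃ i, dist (T^[k] x) (T^[i] p) < θ) :
    birkhoffSum T F m x + m * (A / n) + birkhoffSum T h m x - m * (birkhoffSum T h n p / n) ≤
      A + m' * (A / n) + K * κ / (1 - τ) * (τ ^ m' * θ / τ) +
        e * (κ / (1 - τ) * (θ / τ) + 2 * n) := by
  obtain ⟨i, hi⟩ := shadow E hn hp hgap hθ hx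
  have hτ := E.hτ0
  have hκ := E.κpos
  have h1τ := E.one_sub_pos
  have hn0 : (0 : ℝ) < n := by exact_mod_cast hn
  have hFS : ∀ k y, birkhoffSum T F k y ≤ 0 := fun k y => Finset.sum_nonpos fun j _ => hF0 _
  have hA0 : 0 ≤ A := by have := hFS n p; linarith
  have hcl : ∀ k < m, dist (T^[k] x) (T^[k] (T^[i] p)) ≤ κ * τ ^ (m - k) * (θ / τ) := by
    intro k hk
    have h1 := E.bowen (m - 1 - k) (T^[k] x) (T^[k] (T^[i] p)) (fun j hj => by
      rw [← Function.iterate_add_apply, ← Function.iterate_add_apply]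
      exact (hi _ (by omega)).le.trans hθδ)
    rw [← Function.iterate_add_apply T (m - 1 - k) k x,
      ← Function.iterate_add_apply T (m - 1 - k) k (T^[i] p)] at h1
    have h2 := hi (m - 1 - k + k) (by omega)
    have h3 : 0 ≤ κ * τ ^ (m - 1 - k) := by positivity
    refine h1.trans ((mul_le_mul_of_nonneg_left h2.le h3).trans (le_of_eq ?_))
    rw [show m - k = (m - 1 - k) + 1 by omega, pow_succ]
    field_simp
  -- the small function
  have hhpart : birkhoffSum T h m x - m * (birkhoffSum T h n p / n) ≤
      e * (κ / (1 - τ) * (θ / τ) + 2 * n) := by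
    have h1 := (abs_le.1 (E.birkhoff_close he hh hcl (by positivity))).2
    have h2 : birkhoffSum T h m (T^[i] p) - m * (birkhoffSum T h n p / n) ≤ 2 * n * e := by
      have hm := Nat.div_add_mod m n
      set a := m / n
      set r := m % n with hr
      have hrn : r < n := Nat.mod_lt _ hn
      have hrn' : (r : ℝ) ≤ n := by exact_mod_cast hrn.le
      rw [← hm, birkhoff_period_mul hp]
      have h3 := (abs_le.1 (birkhoff_abs_le (T := T) hhe r (T^[n * a + i] p))).2
      have h4 := (abs_le.1 (birkhoff_abs_le (T := T) hhe n p)).1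
      push_cast
      have h5 : ((n : ℝ) * a + r) * (birkhoffSum T h n p / n) =
          a * birkhoffSum T h n p + r * (birkhoffSum T h n p / n) := by
        field_simp
      have h6 : -e ≤ birkhoffSum T h n p / n := by rw [le_div_iff₀ hn0]; linarith
      have h7 : -(n * e) ≤ r * (birkhoffSum T h n p / n) := by
        have h8 := mul_le_mul_of_nonneg_left h6 (Nat.cast_nonneg (α := ℝ) r)
        have h9 := mul_le_mul_of_nonneg_right hrn' he
        linarith
      have h9 := mul_le_mul_of_nonneg_right hrn' he
      rw [h5]
      linarith
    have e1 : e * κ / (1 - τ) * (θ / τ) = e * (κ / (1 - τ) * (θ / τ)) := by ring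
    rw [e1] at h1
    linarith
  -- the nonpositive function
  have hFpart : birkhoffSum T F m x + m * (A / n) ≤
      A + m' * (A / n) + K * κ / (1 - τ) * (τ ^ m' * θ / τ) := by
    have hAn : 0 ≤ A / n := by positivity
    have hpos : 0 ≤ K * κ / (1 - τ) * (τ ^ m' * θ / τ) := by positivity
    rcases le_total m m' with hm | hm
    · have h1 := hFS m x
      have h2 : (m : ℝ) * (A / n) ≤ m' * (A / n) :=
        mul_le_mul_of_nonneg_right (by exact_mod_cast hm) hAn
      linarith
    · obtain ⟨m1, rfl⟩ := Nat.exists_eq_add_of_le' hm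
      rw [birkhoffSum_add]
      have h1 := hFS m' (T^[m1] x)
      have hcl' : ∀ k < m1, dist (T^[k] x) (T^[k] (T^[i] p)) ≤
          κ * τ ^ (m1 - k) * (τ ^ m' * θ / τ) := fun k hk => by
        refine (hcl k (by omega)).trans (le_of_eq ?_)
        rw [show m1 + m' - k = (m1 - k) + m' by omega, pow_add]
        ring
      have h2 := (abs_le.1 (E.birkhoff_close hK hF hcl' (by positivity))).2
      have h3 : birkhoffSum T F m1 (T^[i] p) + m1 * (A / n) ≤ A := by
        have hm := Nat.div_add_mod m1 n
        set a := m1 / n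
        set r := m1 % n with hr
        have hrn : r < n := Nat.mod_lt _ hn
        have hrn' : (r : ℝ) ≤ n := by exact_mod_cast hrn.le
        rw [← hm, birkhoff_period_mul hp, hA]
        have h4 := hFS r (T^[n * a + i] p)
        push_cast
        have h5 : ((n : ℝ) * a + r) * (A / n) = a * A + r * (A / n) := by field_simp
        have h6 : (r : ℝ) * (A / n) ≤ n * (A / n) := mul_le_mul_of_nonneg_right hrn' hAn
        have h7 : (n : ℝ) * (A / n) = A := by field_simp
        rw [h5]
        linarith
      push_cast
      linarith
  linarith

end Locking

/-- Integrating a Birkhoff-sum penalty inequality gives unique maximization by the orbit. -/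
theorem uniqMax_of_penalty {T : Circle1 → Circle1} (hT : Continuous T) {f : Circle1 → ℝ}
    (hf : Continuous f) {n : ℕ} (hn : 1 ≤ n) {p : Circle1} (hp : T^[n] p = p) {U : Set Circle1}
    (hU : IsOpen U) {C k₁ : ℝ} (hk : 0 < k₁)
    (hpen : ∀ N x, birkhoffSum T f N x ≤
      N * (birkhoffSum T f n p / n) + C - k₁ * birkhoffSum T (Uᶜ.indicator 1) N x)
    (hO : ∀ x, (∀ k, T^[k] x ∈ U) → ∃ i, x = T^[i] p) : UniqMaxPeriodic f T := by
  set c := birkhoffSum T f n p / n with hc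
  have hn0 : (0 : ℝ) < n := by exact_mod_cast hn
  have hTm := hT.measurable
  have hInt : ∀ (ν : Measure Circle1) [IsProbabilityMeasure ν] (g : Circle1 → ℝ), Continuous g →
      Integrable g ν := fun ν _ g hg =>
    hg.integrable_of_hasCompactSupport (HasCompactSupport.of_compactSpace g)
  have hmap : ∀ ν : Measure Circle1, ν.map T = ν → ∀ k, ν.map T^[k] = ν := fun ν hν k => by
    induction k with
    | zero => simp
    | succ k ih =>
      rw [Function.iterate_succ', ← Measure.map_map hTm (hTm.iterate k), ih, hν]
  have hbir : ∀ ν : Measure Circle1, InvProb T ν → ∀ g : Circle1 → ℝ, Measurable g →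
      Integrable g ν → ∀ N, Integrable (birkhoffSum T g N) ν ∧
      ∫ x, birkhoffSum T g N x ∂ν = N * ∫ x, g x ∂ν := fun ν hν g hgm hg N => by
    have h1 : ∀ k, Integrable (fun x => g (T^[k] x)) ν := fun k => by
      have : Integrable g (ν.map T^[k]) := by rw [hmap ν hν.2 k]; exact hg
      exact this.comp_measurable (hTm.iterate k)
    refine ⟨integrable_finsetSum _ fun k _ => h1 k, ?_⟩
    unfold birkhoffSum
    rw [integral_finsetSum _ fun k _ => h1 k]
    have h2 : ∀ k, ∫ x, g (T^[k] x) ∂ν = ∫ x, g x ∂ν := fun k => by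
      conv_rhs => rw [← hmap ν hν.2 k]
      rw [integral_map (hTm.iterate k).aemeasurable hgm.aestronglyMeasurable]
    simp [h2]
  -- the periodic measure
  set μ : Measure Circle1 := (n : ENNReal)⁻¹ • ∑ i ∈ Finset.range n, Measure.dirac (T^[i] p) with hμ
  have hnE : (n : ENNReal)⁻¹ * n = 1 :=
    ENNReal.inv_mul_cancel (by exact_mod_cast (by omega : n ≠ 0)) (by simp)
  have hμO : ∀ A : Set Circle1, (∀ i, T^[i] p ∈ A) → MeasurableSet A → μ A = 1 := fun A hA hAm => by
    simp [hμ, Measure.finsetSum_apply, hA, hnE, hAm]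
  have hμprob : IsProbabilityMeasure μ := ⟨hμO _ (fun _ => mem_univ _) MeasurableSet.univ⟩
  have hμinv : InvProb T μ := by
    refine ⟨hμprob, ?_⟩
    ext A hA
    rw [Measure.map_apply hTm hA]
    simp only [hμ, Measure.smul_apply, Measure.finsetSum_apply, smul_eq_mul]
    congr 1
    simp_rw [Measure.dirac_apply' _ hA, Measure.dirac_apply' _ (hTm hA)]
    have h1 := Finset.sum_range_succ (fun i => A.indicator (1 : Circle1 → ENNReal) (T^[i] p)) n
    have h2 := Finset.sum_range_succ' (fun i => A.indicator (1 : Circle1 → ENNReal) (T^[i] p)) n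
    rw [h1] at h2
    have h3 : ∀ i, (T ⁻¹' A).indicator (1 : Circle1 → ENNReal) (T^[i] p) =
        A.indicator 1 (T^[i + 1] p) := fun i => by
      rw [Function.iterate_succ_apply']; rfl
    simp_rw [h3]
    rw [hp, Function.iterate_zero_apply] at h2
    have h4 : A.indicator (1 : Circle1 → ENNReal) p ≠ ⊤ := by
      by_cases hpA : p ∈ A <;> simp [hpA]
    exact ((ENNReal.add_left_inj h4).1 h2).symm
  have hμint : ∀ g : Circle1 → ℝ, Continuous g → ∫ x, g x ∂μ = birkhoffSum T g n p / n :=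
    fun g hg => by
      rw [hμ, integral_smul_measure, integral_finsetSum_measure]
      · simp [birkhoffSum, div_eq_inv_mul]
      · intro i _
        exact hInt _ g hg
  -- every invariant measure pays for the complement of `U`
  have hle : ∀ ν, InvProb T ν → ∫ x, f x ∂ν ≤ c - k₁ * ν.real Uᶜ := fun ν hν => by
    have := hν.1
    have hUi : Integrable (Uᶜ.indicator (1 : Circle1 → ℝ)) ν :=
      (integrable_const (1 : ℝ)).indicator hU.measurableSet.compl
    have hUm : Measurable (Uᶜ.indicator (1 : Circle1 → ℝ)) :=
      measurable_one.indicator hU.measurableSet.compl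
    have hUv : ∫ x, Uᶜ.indicator (1 : Circle1 → ℝ) x ∂ν = ν.real Uᶜ :=
      integral_indicator_one hU.measurableSet.compl
    have key : ∀ N : ℕ, N * ∫ x, f x ∂ν ≤ N * c + C - k₁ * (N * ν.real Uᶜ) := fun N => by
      obtain ⟨i1, e1⟩ := hbir ν hν f hf.measurable (hInt ν f hf) N
      obtain ⟨i2, e2⟩ := hbir ν hν _ hUm hUi N
      have h1 : ∫ x, birkhoffSum T f N x ∂ν ≤
          ∫ x, (N * c + C - k₁ * birkhoffSum T (Uᶜ.indicator 1) N x) ∂ν :=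
        integral_mono i1 ((integrable_const _).sub (i2.const_mul _)) fun x => hpen N x
      rw [e1, integral_sub (integrable_const _) (i2.const_mul _), integral_const_mul, e2, hUv] at h1
      simpa using h1
    by_contra hcon
    push Not at hcon
    obtain ⟨N, hN⟩ := exists_nat_gt (C / (∫ x, f x ∂ν - (c - k₁ * ν.real Uᶜ)))
    have h2 := key N
    rw [div_lt_iff₀ (by linarith)] at hN
    nlinarith
  have hbeta : beta f T = c := by
    refine IsGreatest.csSup_eq ⟨⟨μ, hμinv, hμint f hf⟩, ?_⟩
    rintro _ ⟨ν, hν, rfl⟩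
    have := hle ν hν
    have h2 : 0 ≤ k₁ * ν.real Uᶜ := by positivity
    show ∫ x, f x ∂ν ≤ c
    linarith
  refine ⟨μ, ⟨hμinv, by rw [hbeta]; exact hμint f hf⟩, ⟨hμinv, p, n, hn, hp, ?_⟩, fun ν hν => ?_⟩
  · refine hμO _ (fun i => ⟨i, rfl⟩) (Set.Countable.measurableSet (Set.countable_range _))
  · have hνp := hν.1.1
    have h1 := hle ν hν.1
    rw [hν.2, hbeta] at h1
    have h2 : ν.real Uᶜ = 0 := by
      have : 0 ≤ ν.real Uᶜ := measureReal_nonneg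
      nlinarith
    have h3 : ν Uᶜ = 0 := by
      rwa [measureReal_eq_zero_iff] at h2
    have h4 : ∀ᵐ x ∂ν, ∀ k, T^[k] x ∈ U := by
      rw [ae_all_iff]
      intro k
      have : ν (T^[k] ⁻¹' Uᶜ) = 0 := by
        rw [← Measure.map_apply (hTm.iterate k) hU.measurableSet.compl, hmap ν hν.1.2, h3]
      rw [ae_iff]
      exact this
    refine ext_of_forall_integral_eq_of_IsFiniteMeasure fun g => ?_
    rw [hμint g g.continuous]
    obtain ⟨-, e1⟩ := hbir ν hν.1 g g.continuous.measurable (hInt ν g g.continuous) n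
    have h5 : ∫ x, birkhoffSum T g n x ∂ν = ∫ _, birkhoffSum T g n p ∂ν := by
      refine integral_congr_ae ?_
      filter_upwards [h4] with x hx
      obtain ⟨i, rfl⟩ := hO x hx
      exact birkhoff_period hp g i
    rw [h5] at e1
    rw [eq_div_iff hn0.ne']
    simp only [integral_const, probReal_univ, smul_eq_mul, one_mul] at e1
    linarith

/-- **Locking lemma.** A penalty `φ` around a periodic orbit that is nearly maximizing, strong
compared with the defect `A` of the orbit, makes the orbit measure the unique maximizing measure,
robustly in the Lipschitz topology. -/
theorem locking {T : Circle1 → Circle1} {Λ τ κ δ : ℝ} (E : ExpSys T Λ τ κ δ) {f φ u : Circle1 → ℝ}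
    {β K L : ℝ} (hK : 0 ≤ K) (hL : 0 ≤ L) (hf : Lip K f) (hu : SubAct T f u β L) {n : ℕ}
    (hn : 1 ≤ n) {p : Circle1} (hp : T^[n] p = p) {Δ θ k₀ : ℝ}
    (hgap : ∀ i < n, ∀ j < n, i ≠ j → Δ ≤ dist (T^[i] p) (T^[j] p))
    (hθ : (1 + Λ) * θ ≤ Δ) (hθδ : θ ≤ δ) (hθ0 : 0 < θ) (hk₀ : 0 < k₀) (hφc : Continuous φ)
    (hφ0 : ∀ x, 0 ≤ φ x) (hφp : ∀ i, φ (T^[i] p) = 0)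
    (hφk : ∀ x, (∀ i, θ ≤ dist x (T^[i] p)) → k₀ ≤ φ x) {A : ℝ}
    (hA : n * β - birkhoffSum T f n p ≤ A) (m' : ℕ)
    (hsmall : A + m' * (A / n) + (K + L + L * Λ) * κ / (1 - τ) * (τ ^ m' * θ / τ) ≤ k₀ / 8) :
    ∃ e > 0, ∀ h : Circle1 → ℝ, (∀ x, |h x| ≤ e) → Lip e h →
      UniqMaxPeriodic (fun x => f x - φ x + h x) T := by
  have hn0 : (0 : ℝ) < n := by exact_mod_cast hn
  have hn1 : (1 : ℝ) ≤ n := by exact_mod_cast hn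
  have hτ := E.hτ0
  have hκ := E.κpos
  have h1τ := E.one_sub_pos
  have hΛ := E.hΛ
  set W := κ / (1 - τ) * (θ / τ) + 2 * n with hW
  have hW0 : 0 < W := by positivity
  have hW2 : 2 * (n : ℝ) ≤ W := by
    have : 0 ≤ κ / (1 - τ) * (θ / τ) := by positivity
    linarith
  refine ⟨k₀ / 8 / W, by positivity, fun h hh hhl => ?_⟩
  set e := k₀ / 8 / W with he
  have he0 : 0 < e := by positivity
  have heW : e * W = k₀ / 8 := by rw [he]; field_simp
  set F : Circle1 → ℝ := fun x => f x - β + u x - u (T x) with hF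
  have hF0 : ∀ x, F x ≤ 0 := fun x => by have := hu.sub x; simp only [hF]; linarith
  have hFl : Lip (K + L + L * Λ) F := by
    have h1 := (hf.add hu.lip).sub (hu.lip.comp hL E.lip)
    intro x y
    have := h1 x y
    simp only [hF]
    convert this using 2
    ring
  have htel : ∀ N x, birkhoffSum T F N x =
      birkhoffSum T f N x - N * β + u x - u (T^[N] x) := fun N x => by
    induction N with
    | zero => simp
    | succ N ih =>
      rw [birkhoffSum_succ, birkhoffSum_succ, ih, Function.iterate_succ_apply']
      simp only [hF]; push_cast; ring
  set A' := n * β - birkhoffSum T f n p with hA'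
  have hAF : birkhoffSum T F n p = -A' := by rw [htel, hp, hA']; ring
  have hA'0 : 0 ≤ A' := by
    have : birkhoffSum T F n p ≤ 0 := Finset.sum_nonpos fun j _ => hF0 _
    linarith
  set U : Set Circle1 := {x | ∃ i : ℕ, dist x (T^[i] p) < θ} with hUdef
  have hU : IsOpen U := by
    have : U = ⋃ i : ℕ, Metric.ball (T^[i] p) θ := by ext x; simp [hUdef]
    rw [this]; exact isOpen_iUnion fun i => Metric.isOpen_ball
  set mh := birkhoffSum T h n p / n with hmh
  have hmh1 : |mh| ≤ e := by
    rw [hmh, abs_div, abs_of_pos hn0, div_le_iff₀ hn0, mul_comm]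
    exact birkhoff_abs_le hh n p
  set G : Circle1 → ℝ := fun x => F x + A' / n + h x - mh - φ x with hG
  have hGsum : ∀ N x, birkhoffSum T G N x = birkhoffSum T F N x + N * (A' / n) +
      birkhoffSum T h N x - N * mh - birkhoffSum T φ N x := fun N x => by
    simp only [birkhoffSum, hG, Finset.sum_sub_distrib, Finset.sum_add_distrib, Finset.sum_const,
      Finset.card_range, nsmul_eq_mul]
  have hsmall' : A' + m' * (A' / n) + (K + L + L * Λ) * κ / (1 - τ) * (τ ^ m' * θ / τ) ≤ k₀ / 8 := by
    refine le_trans ?_ hsmall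
    gcongr
  have hAn : A' / n ≤ k₀ / 8 := by
    have h1 : A' / n ≤ A' := div_le_self hA'0 hn1
    have h2 : 0 ≤ (m' : ℝ) * (A' / n) := by positivity
    have h3 : 0 ≤ (K + L + L * Λ) * κ / (1 - τ) * (τ ^ m' * θ / τ) := by positivity
    linarith
  have hpen := penalty_bound (T := T) (G := G) (U := U) (k₀ := k₀) (fun m x hx => by
    have h1 := block_bound E hn hp hgap hθ hθδ hθ0 (by positivity) hFl hF0 hAF he0.le hhl hh m' m hx
    rw [hGsum]
    have h2 : 0 ≤ birkhoffSum T φ m x := Finset.sum_nonneg fun k _ => hφ0 _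
    linarith) (fun x hx => by
    have h1 : k₀ ≤ φ x := hφk x fun i => not_lt.1 fun hlt => hx ⟨i, hlt⟩
    have h2 := hF0 x
    have h3 := (abs_le.1 (hh x)).2
    have h4 := (abs_le.1 hmh1).1
    have h5 : 2 * e ≤ k₀ / 8 := by
      rw [← heW, mul_comm]
      exact mul_le_mul_of_nonneg_left (by linarith) he0.le
    simp only [hG]
    linarith)
  obtain ⟨Cu, hCu0, hCu⟩ := hu.lip.bdd
  have hφsum : birkhoffSum T φ n p = 0 := Finset.sum_eq_zero fun i _ => hφp i
  have hsum : ∀ N x, birkhoffSum T (fun x => f x - φ x + h x) N x =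
      birkhoffSum T f N x - birkhoffSum T φ N x + birkhoffSum T h N x := fun N x => by
    simp only [birkhoffSum, Finset.sum_sub_distrib, Finset.sum_add_distrib]
  refine uniqMax_of_penalty E.cont ((hf.continuous.sub hφc).add hhl.continuous) hn hp hU
    (C := k₀ / 4 + 2 * Cu) (k₁ := k₀ / 2) (by positivity) (fun N x => ?_)
    (fun x hx => mem_orbit_of_near E hn hp hgap hθ hθδ hx)
  have h1 := hpen N x
  rw [hGsum, htel] at h1
  rw [hsum, hsum, hφsum]
  have h2 : (birkhoffSum T f n p - 0 + birkhoffSum T h n p) / n = β - A' / n + mh := by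
    rw [hA', hmh]; field_simp; ring
  rw [h2]
  have h3 := (abs_le.1 (hCu (T^[N] x))).2
  have h4 := (abs_le.1 (hCu x)).1
  linarith

/-! ### Loops with well separated points -/

section Gap
variable {X : Type*} [MetricSpace X] {T : X → X} {Λ τ κ δ : ℝ} {M : Set X}

lemma sum_shift_periodic {g : ℕ → ℝ} {n : ℕ} (hg : ∀ k, g (k + n) = g k) (a : ℕ) :
    ∑ k ∈ Finset.range n, g (a + k) = ∑ k ∈ Finset.range n, g k := by
  induction a with
  | zero => simp
  | succ a ih =>
    rw [← ih]
    have h1 := Finset.sum_range_succ (fun k => g (a + k)) n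
    have h2 := Finset.sum_range_succ' (fun k => g (a + k)) n
    rw [h1, hg] at h2
    simp only [add_zero, add_left_inj] at h2
    rw [h2]
    exact Finset.sum_congr rfl fun k _ => by congr 1; ring

lemma loop_arc {n : ℕ} {x : ℕ → X} {ε ε' : ℝ} (hx : Loop T M n x ε) (hp : ∀ k, x (k + n) = x k)
    {a m : ℕ} (hm : 1 ≤ m) (hmn : m ≤ n) (hd : dist (x (a + m)) (x a) ≤ ε') :
    ∃ y, Loop T M m y (ε + ε') := by
  refine ⟨fun k => if k < m then x (a + k) else x a, hm, ?_, fun i => ?_, ?_⟩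
  · simp
  · split_ifs
    exacts [hx.mem _, hx.mem _]
  · have hper : ∀ k, dist (T (x (k + n))) (x (k + n + 1)) = dist (T (x k)) (x (k + 1)) := fun k => by
      rw [hp, show k + n + 1 = k + 1 + n by ring, hp]
    have h1 : ∑ k ∈ Finset.range m, dist (T (x (a + k))) (x (a + k + 1)) ≤ ε := by
      refine le_trans ?_ hx.jump
      rw [← sum_shift_periodic (g := fun k => dist (T (x k)) (x (k + 1))) hper a]
      exact Finset.sum_le_sum_of_subset_of_nonneg (Finset.range_mono hmn) fun _ _ _ => dist_nonneg
    obtain ⟨m, rfl⟩ : ∃ k, m = k + 1 := ⟨m - 1, by omega⟩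
    rw [Finset.sum_range_succ] at h1 ⊢
    have h2 : ∑ k ∈ Finset.range m, dist (T (if k < m + 1 then x (a + k) else x a))
        (if k + 1 < m + 1 then x (a + (k + 1)) else x a) =
        ∑ k ∈ Finset.range m, dist (T (x (a + k))) (x (a + k + 1)) :=
      Finset.sum_congr rfl fun k hk => by
        have := Finset.mem_range.1 hk
        rw [if_pos (by omega), if_pos (by omega)]; rfl
    rw [h2, if_pos (by omega), if_neg (by omega)]
    have h3 := dist_triangle (T (x (a + m))) (x (a + m + 1)) (x a)
    have h4 : dist (x (a + m + 1)) (x a) ≤ ε' := hd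
    linarith

/-- A loop with two close points splits into two loops, one of which is at most half as long. -/
lemma loop_split {n : ℕ} {x : ℕ → X} {ε ε' : ℝ} (hx : Loop T M n x ε) {i j : ℕ} (hij : i < j)
    (hj : j < n) (hd : dist (x i) (x j) ≤ ε') : ∃ m y, Loop T M m y (ε + ε') ∧ 2 * m ≤ n := by
  have hn := hx.pos
  set x' : ℕ → X := fun k => x (k % n) with hx'
  have hp : ∀ k, x' (k + n) = x' k := fun k => by simp [hx']
  have he : ∀ k ≤ n, x' k = x k := fun k hk => by
    rcases hk.lt_or_eq with h | h
    · simp [hx', Nat.mod_eq_of_lt h]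
    · simp [hx', h, hx.per]
  have hl : Loop T M n x' ε := ⟨hn, by simp [hx'], fun i => hx.mem _, by
    refine le_trans (le_of_eq ?_) hx.jump
    exact Finset.sum_congr rfl fun k hk => by
      have := Finset.mem_range.1 hk
      rw [he k (by omega), he (k + 1) (by omega)]⟩
  by_cases h : 2 * (j - i) ≤ n
  · obtain ⟨y, hy⟩ := loop_arc hl hp (a := i) (m := j - i) (ε' := ε') (by omega) (by omega)
      (by rw [show i + (j - i) = j by omega, he i (by omega), he j (by omega), dist_comm]; exact hd)
    exact ⟨_, y, hy, h⟩
  · obtain ⟨y, hy⟩ := loop_arc hl hp (a := j) (m := n - (j - i)) (ε' := ε') (by omega) (by omega)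
      (by rw [show j + (n - (j - i)) = i + n by omega, hp, he i (by omega), he j (by omega)]
          exact hd)
    exact ⟨_, y, hy, by omega⟩

lemma gapped_of_short {Q ε₁ : ℝ} (hQ : 1 ≤ Q) (k : ℕ) : ∀ (n : ℕ) (x : ℕ → X) (ε : ℝ),
    Loop T M n x ε → n < 2 ^ k → 0 < ε → (2 * Q) ^ k * ε ≤ ε₁ →
    ∃ n x ε, Loop T M n x ε ∧ 0 < ε ∧ ε ≤ ε₁ ∧ ∀ i < n, ∀ j < n, i ≠ j → Q * ε ≤ dist (x i) (x j) := by
  induction k with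
  | zero =>
    intro n x ε hx hn
    have := hx.pos
    simp at hn; omega
  | succ k ih =>
    intro n x ε hx hn hε hk
    by_cases hg : ∀ i < n, ∀ j < n, i ≠ j → Q * ε ≤ dist (x i) (x j)
    · refine ⟨n, x, ε, hx, hε, le_trans ?_ hk, hg⟩
      exact le_mul_of_one_le_left hε.le (one_le_pow₀ (by linarith))
    · push Not at hg
      obtain ⟨i, hi, j, hj, hij, hd⟩ := hg
      have key : ∃ m y, Loop T M m y (ε + Q * ε) ∧ 2 * m ≤ n := by
        rcases lt_or_gt_of_ne hij with h | h
        · exact loop_split hx h hj hd.le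
        · exact loop_split hx h hi (by rw [dist_comm]; exact hd.le)
      obtain ⟨m, y, hy, hm⟩ := key
      refine ih m y (2 * Q * ε) ⟨hy.pos, hy.per, hy.mem, hy.jump.trans (by nlinarith)⟩
        (by rw [pow_succ] at hn; omega) (by positivity) ?_
      rw [pow_succ] at hk
      linarith

lemma exists_gapped_loop [CompactSpace X] (E : ExpSys T Λ τ κ δ) (hne : M.Nonempty)
    (hM : ∀ x ∈ M, T x ∈ M) {Q ε₁ : ℝ} (hQ : 1 ≤ Q) (hε₁ : 0 < ε₁) :
    ∃ n x ε, Loop T M n x ε ∧ 0 < ε ∧ ε ≤ ε₁ ∧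
      ∀ i < n, ∀ j < n, i ≠ j → Q * ε ≤ dist (x i) (x j) := by
  have hl2 : 0 < Real.log 2 := Real.log_pos (by norm_num)
  have hlQ : 0 < Real.log (2 * Q) := Real.log_pos (by linarith)
  set η := Real.log 2 / (2 * Real.log (2 * Q)) with hη
  have hη0 : 0 < η := by positivity
  -- past this time `2 Q exp (-t / 2)` is below `ε₁`
  obtain ⟨t, ht, n, x, hx, hn⟩ := exists_loop E hne hM hη0 (max 0 (2 * Real.log (2 * Q / ε₁)))
  have ht0 : 0 ≤ t := (le_max_left _ _).trans ht
  have ht1 : 2 * Real.log (2 * Q / ε₁) ≤ t := (le_max_right _ _).trans ht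
  set k := ⌊η * t / Real.log 2⌋₊ with hk
  have hk1 : (k : ℝ) ≤ η * t / Real.log 2 := Nat.floor_le (by positivity)
  have hk2 : η * t / Real.log 2 < k + 1 := Nat.lt_floor_add_one _
  refine gapped_of_short hQ (k + 1) n x _ hx ?_ (Real.exp_pos _) ?_
  · have : (n : ℝ) < 2 ^ (k + 1) := by
      refine hn.trans_lt ?_
      rw [← Real.rpow_natCast, Real.rpow_def_of_pos (by norm_num)]
      refine Real.exp_lt_exp.2 ?_
      rw [div_lt_iff₀ hl2] at hk2
      push_cast; linarith
    exact_mod_cast this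
  · have h1 : (2 * Q) ^ k ≤ Real.exp (t / 2) := by
      rw [← Real.rpow_natCast, Real.rpow_def_of_pos (by linarith)]
      refine Real.exp_le_exp.2 ?_
      have : η * t / Real.log 2 = t / (2 * Real.log (2 * Q)) := by rw [hη]; field_simp
      rw [this, le_div_iff₀ (by positivity)] at hk1
      linarith
    have h2 : 2 * Q / ε₁ ≤ Real.exp (t / 2) := by
      rw [← Real.log_le_iff_le_exp (by positivity)]; linarith
    rw [div_le_iff₀ hε₁] at h2
    calc (2 * Q) ^ (k + 1) * Real.exp (-t) = (2 * Q) ^ k * (2 * Q) * Real.exp (-t) := by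
          rw [pow_succ]
      _ ≤ Real.exp (t / 2) * (Real.exp (t / 2) * ε₁) * Real.exp (-t) := by gcongr
      _ = Real.exp (t / 2 + t / 2 - t) * ε₁ := by
          rw [sub_eq_add_neg, Real.exp_add, Real.exp_add]; ring
      _ = ε₁ := by rw [show t / 2 + t / 2 - t = 0 by ring]; simp

/-- The periodic orbit obtained by closing a loop in a calibrated set is almost maximizing. -/
lemma closing_orbit (E : ExpSys T Λ τ κ δ) {f g : X → ℝ} {β K L ε : ℝ} (hK : 0 ≤ K) (hL : 0 ≤ L)
    (hf : Lip K f)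
    (hu : SubAct T f g β L) (hc : IsCal T f g β M) {n : ℕ} {x : ℕ → X} (hx : Loop T M n x ε) :
    ∃ p, T^[n] p = p ∧ (∀ i < n, dist (T^[i] p) (x i) ≤ κ * ε) ∧
      n * β - birkhoffSum T f n p ≤ (L + K * κ) * ε := by
  obtain ⟨p, hp, hs⟩ := E.closing n x hx.pos hx.per
  have hκ := E.κpos
  have hs' : ∑ i ∈ Finset.range n, dist (T^[i] p) (x i) ≤ κ * ε :=
    hs.trans (mul_le_mul_of_nonneg_left hx.jump hκ.le)
  refine ⟨p, hp, fun i hi => le_trans ?_ hs', ?_⟩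
  · exact Finset.single_le_sum (f := fun i => dist (T^[i] p) (x i)) (fun _ _ => dist_nonneg)
      (Finset.mem_range.2 hi)
  · have h1 : ∀ i, β - f (T^[i] p) ≤ (g (x i) - g (x (i + 1))) + L * dist (T (x i)) (x (i + 1)) +
        K * dist (T^[i] p) (x i) := fun i => by
      have h2 := hc.eq (x i) (hx.mem i)
      have h3 := (abs_le.1 (hf (T^[i] p) (x i))).1
      have h4 := (abs_le.1 (hu.lip (T (x i)) (x (i + 1)))).1
      linarith
    have h2 : ∑ i ∈ Finset.range n, (β - f (T^[i] p)) ≤ ∑ i ∈ Finset.range n,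
        ((g (x i) - g (x (i + 1))) + L * dist (T (x i)) (x (i + 1)) + K * dist (T^[i] p) (x i)) :=
      Finset.sum_le_sum fun i _ => h1 i
    rw [Finset.sum_add_distrib, Finset.sum_add_distrib, Finset.sum_range_sub', hx.per,
      ← Finset.mul_sum, ← Finset.mul_sum, Finset.sum_sub_distrib] at h2
    simp only [Finset.sum_const, Finset.card_range, nsmul_eq_mul, sub_self, zero_add] at h2
    have h3 := mul_le_mul_of_nonneg_left hs' hK
    have h4 := mul_le_mul_of_nonneg_left hx.jump hL
    unfold birkhoffSum
    linarith

end Gap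

/-- A periodic orbit, arbitrarily well separated relative to its defect, which becomes stably
uniquely maximizing after subtracting any penalty of relative size `ε₀`. -/
theorem exists_lockable {T : Circle1 → Circle1} {Λ τ κ δ : ℝ} (E : ExpSys T Λ τ κ δ)
    {f : Circle1 → ℝ} {K ε₀ : ℝ} (hK : 0 ≤ K) (hf : Lip K f) (hε₀ : 0 < ε₀) {θ₁ : ℝ}
    (hθ₁ : 0 < θ₁) :
    ∃ (p : Circle1) (n : ℕ) (θ : ℝ), 0 < θ ∧ θ ≤ θ₁ ∧ 1 ≤ n ∧ T^[n] p = p ∧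
      ∀ φ : Circle1 → ℝ, Continuous φ → (∀ x, 0 ≤ φ x) → (∀ i, φ (T^[i] p) = 0) →
        (∀ x, (∀ i, θ ≤ dist x (T^[i] p)) → ε₀ * θ ≤ φ x) →
        ∃ e > 0, ∀ h : Circle1 → ℝ, (∀ x, |h x| ≤ e) → Lip e h →
          UniqMaxPeriodic (fun x => f x - φ x + h x) T := by
  have hτ := E.hτ0
  have hκ := E.κpos
  have h1τ := E.one_sub_pos
  have hΛ := E.hΛ
  have hδ := E.hδ
  obtain ⟨g, β, M, hu, hc⟩ := exists_isCal E hK hf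
  set L := K * κ / (1 - τ) with hL
  have hL0 : 0 ≤ L := by positivity
  set A₀ := L + K * κ with hA₀
  have hA₀0 : 0 ≤ A₀ := by positivity
  set C := (K + L + L * Λ) * κ / (1 - τ) with hC
  have hC0 : 0 ≤ C := by positivity
  -- an exponential beats a linear function
  have hlim : Tendsto (fun m : ℕ => 8 * (A₀ * ((m : ℝ) * τ ^ m) + (A₀ + C / τ) * τ ^ m)) atTop
      (𝓝 (8 * (A₀ * 0 + (A₀ + C / τ) * 0))) :=
    (((tendsto_self_mul_const_pow_of_lt_one hτ.le E.hτ1).const_mul _).add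
      ((tendsto_pow_atTop_nhds_zero_of_lt_one hτ.le E.hτ1).const_mul _)).const_mul _
  obtain ⟨m', hm'⟩ := (hlim.eventually_lt_const (u := ε₀) (by simpa using hε₀)).exists
  set q := (τ ^ m')⁻¹ with hq
  have hq0 : 0 < q := by positivity
  have hqτ : τ ^ m' * q = 1 := mul_inv_cancel₀ (by positivity)
  have hq1 : 1 ≤ q := (one_le_inv₀ (by positivity)).2 (pow_le_one₀ hτ.le E.hτ1.le)
  set Q := (1 + Λ) * q + 2 * κ with hQ
  obtain ⟨n, x, ε, hx, hε, hεle, hgap⟩ := exists_gapped_loop E hc.ne hc.maps (Q := Q)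
    (ε₁ := min θ₁ δ / q) (by nlinarith) (by positivity)
  obtain ⟨p, hp, hpx, hA⟩ := closing_orbit E hK hL0 hf hu hc hx
  have hθ : q * ε ≤ min θ₁ δ := by
    rw [le_div_iff₀ hq0] at hεle; linarith
  refine ⟨p, n, q * ε, by positivity, hθ.trans (min_le_left _ _), hx.pos, hp,
    fun φ hφc hφ0 hφp hφk => ?_⟩
  have hn0 : (0 : ℝ) < n := by exact_mod_cast hx.pos
  have hn1 : (1 : ℝ) ≤ n := by exact_mod_cast hx.pos
  refine locking E hK hL0 hf hu hx.pos hp (Δ := (1 + Λ) * (q * ε)) (fun i hi j hj hij => ?_) le_rfl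
    (hθ.trans (min_le_right _ _)) (by positivity) (k₀ := ε₀ * (q * ε)) (by positivity) hφc hφ0 hφp
    hφk hA m' ?_
  · have h1 := hgap i hi j hj hij
    have h2 := hpx i hi
    have h3 := hpx j hj
    have h4 := dist_triangle4 (x i) (T^[i] p) (T^[j] p) (x j)
    rw [dist_comm (x i) (T^[i] p)] at h4
    have h5 : Q * ε = (1 + Λ) * (q * ε) + 2 * (κ * ε) := by rw [hQ]; ring
    linarith
  · have h1 : A₀ * ε / n ≤ A₀ * ε := div_le_self (by positivity) hn1
    have h2 : (m' : ℝ) * (A₀ * ε / n) ≤ m' * (A₀ * ε) := mul_le_mul_of_nonneg_left h1 (by positivity)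
    have h3 : τ ^ m' * (q * ε) / τ = ε / τ := by rw [← mul_assoc, hqτ, one_mul]
    rw [← hC, h3]
    have h4 : 8 * (A₀ * m' + (A₀ + C / τ)) ≤ ε₀ * q := by
      have := mul_le_mul_of_nonneg_right hm'.le hq0.le
      calc 8 * (A₀ * m' + (A₀ + C / τ)) = 8 * (A₀ * m' + (A₀ + C / τ)) * (τ ^ m' * q) := by
            rw [hqτ, mul_one]
        _ = _ := by ring
        _ ≤ _ := this
    have h5 := mul_le_mul_of_nonneg_right h4 hε.le
    have h6 : C * (ε / τ) = C / τ * ε := by ring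
    rw [h6]
    linarith

/-! ### Circle maps and their lifts -/

section Circle

lemma dist_coe_le (a b : ℝ) : dist (a : Circle1) (b : Circle1) ≤ |a - b| := by
  rw [dist_eq_norm, ← AddCircle.coe_sub, UnitAddCircle.norm_eq]
  simpa using round_le (a - b) 0

lemma dist_coe_eq {a b : ℝ} (h : |a - b| ≤ 1 / 2) : dist (a : Circle1) (b : Circle1) = |a - b| := by
  rw [dist_eq_norm, ← AddCircle.coe_sub]
  exact (AddCircle.norm_coe_eq_abs_iff _ one_ne_zero).2 (by simpa using h)

lemma exists_lift_near (a : ℝ) (z : Circle1) :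
    ∃ b : ℝ, (b : Circle1) = z ∧ |a - b| = dist (a : Circle1) z := by
  induction z using QuotientAddGroup.induction_on with
  | H b =>
    refine ⟨b + round (a - b), ?_, ?_⟩
    · simp
    · rw [dist_eq_norm, ← AddCircle.coe_sub, UnitAddCircle.norm_eq]
      congr 1; ring

lemma coe_eq_iff {a b : ℝ} : (a : Circle1) = (b : Circle1) ↔ ∃ k : ℤ, a = b + k := by
  rw [← sub_eq_zero, ← AddCircle.coe_sub, AddCircle.coe_eq_zero_iff]
  exact ⟨fun ⟨k, hk⟩ => ⟨k, by simp at hk; linarith⟩, fun ⟨k, hk⟩ => ⟨k, by simp [hk]⟩⟩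

lemma rep_coe (z : Circle1) : ((rep z : ℝ) : Circle1) = z := (AddCircle.equivIco 1 0).symm_apply_apply z

lemma exists_lift (z : Circle1) : ∃ a : ℝ, (a : Circle1) = z := ⟨_, rep_coe z⟩

lemma dist_circle_le_half (x y : Circle1) : dist x y ≤ 1 / 2 := by
  rw [dist_eq_norm]
  simpa using AddCircle.norm_le_half_period (p := (1 : ℝ)) (x := x - y) one_ne_zero

lemma periodic_bound {g : ℝ → ℝ} (hc : Continuous g) (hp : ∀ x, g (x + 1) = g x) :
    ∃ B, 1 ≤ B ∧ ∀ x, |g x| ≤ B := by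
  obtain ⟨B, hB⟩ := (isCompact_Icc (a := (0 : ℝ)) (b := 1)).exists_bound_of_continuousOn
    hc.continuousOn
  refine ⟨max 1 B, le_max_left _ _, fun x => ?_⟩
  obtain ⟨y, hy, hxy⟩ := Function.Periodic.exists_mem_Ico₀ (f := g) (c := 1) hp one_pos x
  rw [hxy]
  exact (hB y ⟨hy.1, hy.2.le⟩).trans (le_max_right _ _)

end Circle

/-- `F` is the lift of a `C¹` expanding circle map of degree `d`, with explicit constants. -/
structure Lift (F : ℝ → ℝ) (d : ℤ) (C l Λ : ℝ) : Prop where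
  hC : 0 < C
  hC1 : C ≤ 1
  hl : 1 < l
  hΛ : 1 ≤ Λ
  cd : ContDiff ℝ 1 F
  per : ∀ x, F (x + 1) = F x + d
  low : ∀ n x, C * l ^ n ≤ |deriv (F^[n]) x|
  up : ∀ x, |deriv F x| ≤ Λ

lemma ExpandingLift.lift {r : ℕ∞} (hr : 1 ≤ r) {F : ℝ → ℝ} (h : ExpandingLift r F) :
    ∃ d C l Λ, Lift F d C l Λ := by
  obtain ⟨hcd, ⟨d, hd⟩, C, hC, l, hl, hlow⟩ := h
  have hcd1 : ContDiff ℝ 1 F := hcd.of_le (by exact_mod_cast hr)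
  obtain ⟨Λ, hΛ, hup⟩ := periodic_bound (g := deriv F) (hcd1.continuous_deriv le_rfl) (fun x => by
    rw [← deriv_comp_add_const]
    simp_rw [hd]
    simp)
  refine ⟨d, min C 1, l, Λ, lt_min hC one_pos, min_le_right _ _, hl, hΛ, hcd1, hd, fun n x => ?_, hup⟩
  rcases Nat.eq_zero_or_pos n with rfl | hn
  · simp
  · exact (mul_le_mul_of_nonneg_right (min_le_left _ _) (by positivity)).trans (hlow n hn x)

namespace Lift
variable {F : ℝ → ℝ} {d : ℤ} {C l Λ : ℝ}

lemma l0 (H : Lift F d C l Λ) : 0 < l := one_pos.trans H.hl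

lemma Λ0 (H : Lift F d C l Λ) : 0 < Λ := one_pos.trans_le H.hΛ

lemma diff (H : Lift F d C l Λ) : Differentiable ℝ F := H.cd.differentiable one_ne_zero

lemma cd_iter (H : Lift F d C l Λ) (n : ℕ) : ContDiff ℝ 1 F^[n] := by
  induction n with
  | zero => exact contDiff_id
  | succ n ih => rw [Function.iterate_succ']; exact H.cd.comp ih

lemma diff_iter (H : Lift F d C l Λ) (n : ℕ) :
    Differentiable ℝ F^[n] := (H.cd_iter n).differentiable one_ne_zero

lemma per_int (H : Lift F d C l Λ) (x : ℝ) (k : ℤ) : F (x + k) = F x + d * k := by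
  have h : ∀ (k : ℕ) x, F (x + k) = F x + d * k := by
    intro k
    induction k with
    | zero => simp
    | succ k ih => intro x; push_cast; rw [← add_assoc, H.per, ih]; ring
  obtain ⟨m, rfl | rfl⟩ := k.eq_nat_or_neg
  · exact_mod_cast h m x
  · have := h m (x + ((-(m : ℤ) : ℤ) : ℝ))
    push_cast at this ⊢
    rw [add_assoc, neg_add_cancel, add_zero] at this
    linarith

lemma per_iter (H : Lift F d C l Λ) (n : ℕ) (x : ℝ) (k : ℤ) :
    F^[n] (x + k) = F^[n] x + d ^ n * k := by
  induction n with
  | zero => simp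
  | succ n ih =>
    rw [Function.iterate_succ_apply', ih, Function.iterate_succ_apply']
    have := H.per_int (F^[n] x) (d ^ n * k)
    push_cast at this
    rw [this]; ring

lemma cmap_coe (H : Lift F d C l Λ) (a : ℝ) : cmap F (a : Circle1) = (F a : Circle1) := by
  obtain ⟨k, hk⟩ := coe_eq_iff.1 (rep_coe (a : Circle1))
  unfold cmap
  rw [hk, H.per_int, coe_eq_iff]
  exact ⟨d * k, by push_cast; rfl⟩

lemma iter_coe (H : Lift F d C l Λ) (n : ℕ) (a : ℝ) :
    (cmap F)^[n] (a : Circle1) = (F^[n] a : Circle1) := by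
  induction n with
  | zero => rfl
  | succ n ih => rw [Function.iterate_succ_apply', ih, H.cmap_coe, Function.iterate_succ_apply']

lemma expand (H : Lift F d C l Λ) (n : ℕ) (a b : ℝ) :
    C * l ^ n * |a - b| ≤ |F^[n] a - F^[n] b| := by
  rcases lt_trichotomy a b with h | rfl | h
  · obtain ⟨c, -, hc⟩ := exists_deriv_eq_slope (F^[n]) h (H.diff_iter n).continuous.continuousOn
      (H.diff_iter n).differentiableOn
    rw [eq_div_iff (by linarith)] at hc
    rw [abs_sub_comm, abs_sub_comm (F^[n] a), ← hc, abs_mul]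
    exact mul_le_mul_of_nonneg_right (H.low n c) (abs_nonneg _)
  · simp
  · obtain ⟨c, -, hc⟩ := exists_deriv_eq_slope (F^[n]) h (H.diff_iter n).continuous.continuousOn
      (H.diff_iter n).differentiableOn
    rw [eq_div_iff (by linarith)] at hc
    rw [← hc, abs_mul]
    exact mul_le_mul_of_nonneg_right (H.low n c) (abs_nonneg _)

lemma contract (H : Lift F d C l Λ) (n : ℕ) (a b : ℝ) :
    |a - b| ≤ 1 / C * (1 / l) ^ n * |F^[n] a - F^[n] b| := by
  have h := H.expand n a b
  have := H.hC
  have := H.l0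
  rw [one_div, one_div, inv_pow, ← mul_inv, ← div_eq_inv_mul, le_div_iff₀ (by positivity)]
  linarith

lemma lip (H : Lift F d C l Λ) (a b : ℝ) : |F a - F b| ≤ Λ * |a - b| := by
  simpa [Real.norm_eq_abs] using Convex.norm_image_sub_le_of_norm_deriv_le (s := univ) (f := F)
    (fun x _ => H.diff x) (fun x _ => H.up x) convex_univ (mem_univ b) (mem_univ a)

lemma lip_iter (H : Lift F d C l Λ) (n : ℕ) (a b : ℝ) : |F^[n] a - F^[n] b| ≤ Λ ^ n * |a - b| := by
  induction n with
  | zero => simp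
  | succ n ih =>
    rw [Function.iterate_succ_apply', Function.iterate_succ_apply']
    have := H.Λ0
    calc _ ≤ Λ * |F^[n] a - F^[n] b| := H.lip _ _
      _ ≤ Λ * (Λ ^ n * |a - b|) := by gcongr
      _ = _ := by ring

lemma inj_iter (H : Lift F d C l Λ) (n : ℕ) : Function.Injective F^[n] := fun a b hab => by
  have h := H.expand n a b
  rw [hab, sub_self, abs_zero] at h
  have := H.hC
  have := H.l0
  have h2 : |a - b| ≤ 0 := le_of_mul_le_mul_left (a := C * l ^ n) (by simpa using h) (by positivity)
  linarith [abs_nonpos_iff.1 h2]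

lemma two_le_d (H : Lift F d C l Λ) : 2 ≤ |d| := by
  by_contra! hlt
  have h1 : |d| ≤ 1 := by omega
  have h1' : |(d : ℝ)| ≤ 1 := by exact_mod_cast h1
  have := H.hC
  obtain ⟨n, hn⟩ := pow_unbounded_of_one_lt (1 / C) H.hl
  rw [div_lt_iff₀ H.hC] at hn
  have h2 := H.expand n 1 0
  have h3 := H.per_iter n 0 1
  simp only [zero_add, Int.cast_one, mul_one] at h3
  rw [h3] at h2
  simp only [add_sub_cancel_left, sub_zero, abs_one, mul_one, abs_pow] at h2
  have h4 : |(d : ℝ)| ^ n ≤ 1 := pow_le_one₀ (abs_nonneg _) h1'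
  linarith

lemma one_lt_d_pow (H : Lift F d C l Λ) {n : ℕ} (hn : 1 ≤ n) : (1 : ℝ) < |(d : ℝ) ^ n| := by
  have h1 : (2 : ℝ) ≤ |(d : ℝ)| := by exact_mod_cast H.two_le_d
  rw [abs_pow]
  exact one_lt_pow₀ (by linarith) (by omega)

lemma surj_of_per {G : ℝ → ℝ} (hG : Continuous G) {D : ℝ} (hD : D ≠ 0)
    (hp : ∀ x (k : ℤ), G (x + k) = G x + D * k) : Function.Surjective G := fun y => by
  have h1 : ∃ k : ℤ, G 0 + D * k ≤ y := by
    rcases lt_or_gt_of_ne hD with h | h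
    · obtain ⟨k, hk⟩ := exists_int_gt ((y - G 0) / D)
      rw [div_lt_iff_of_neg h] at hk
      exact ⟨k, by linarith⟩
    · obtain ⟨k, hk⟩ := exists_int_lt ((y - G 0) / D)
      rw [lt_div_iff₀ h] at hk
      exact ⟨k, by linarith⟩
  have h2 : ∃ k : ℤ, y ≤ G 0 + D * k := by
    rcases lt_or_gt_of_ne hD with h | h
    · obtain ⟨k, hk⟩ := exists_int_lt ((y - G 0) / D)
      rw [lt_div_iff_of_neg h] at hk
      exact ⟨k, by linarith⟩
    · obtain ⟨k, hk⟩ := exists_int_gt ((y - G 0) / D)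
      rw [div_lt_iff₀ h] at hk
      exact ⟨k, by linarith⟩
  obtain ⟨k1, hk1⟩ := h1
  obtain ⟨k2, hk2⟩ := h2
  rw [← hp] at hk1 hk2
  exact mem_range_of_exists_le_of_exists_ge hG ⟨_, hk1⟩ ⟨_, hk2⟩

lemma surj_iter (H : Lift F d C l Λ) (n : ℕ) : Function.Surjective F^[n] := by
  have h : (d : ℝ) ≠ 0 := by
    intro h0
    have := H.one_lt_d_pow le_rfl
    rw [h0] at this
    norm_num at this
  exact surj_of_per (H.diff_iter n).continuous (pow_ne_zero n h) (H.per_iter n)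

lemma bowen (H : Lift F d C l Λ) {δ : ℝ} (hδ : Λ * δ ≤ 1 / 2) {n : ℕ} {a b : ℝ} (hab : |a - b| ≤ δ)
    (h : ∀ i ≤ n, dist ((cmap F)^[i] (a : Circle1)) ((cmap F)^[i] (b : Circle1)) ≤ δ) :
    ∀ i ≤ n, |F^[i] a - F^[i] b| = dist ((cmap F)^[i] (a : Circle1)) ((cmap F)^[i] (b : Circle1)) := by
  intro i
  induction i with
  | zero =>
    intro _
    have h1 := H.Λ0
    refine (dist_coe_eq (hab.trans ?_)).symm
    have : 0 ≤ δ := (abs_nonneg _).trans hab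
    have := H.hΛ
    nlinarith
  | succ i ih =>
    intro hi
    have h1 := ih (by omega)
    have h2 := h i (by omega)
    rw [H.iter_coe, H.iter_coe]
    refine (dist_coe_eq ?_).symm
    rw [Function.iterate_succ_apply', Function.iterate_succ_apply']
    refine (H.lip _ _).trans (le_trans ?_ hδ)
    rw [h1]
    exact mul_le_mul_of_nonneg_left h2 H.Λ0.le

/-- Closing pseudo-orbits on the line. An adapted distance, for which each step expands, turns the
comparison of a pseudo-orbit and a true orbit over one period into a geometric estimate. -/
lemma closing (H : Lift F d C l Λ) : ∃ κ : ℝ, 0 < κ ∧ ∀ (n : ℕ) (x : ℕ → ℝ)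
    (k : ℤ), 1 ≤ n → x n = x 0 + k →
    ∃ p, F^[n] p = p + k ∧ ∑ i ∈ Finset.range n, |F^[i] p - x i| ≤
      κ * ∑ i ∈ Finset.range n, |F (x i) - x (i + 1)| := by
  have hC := H.hC
  have hl := H.hl
  have hΛ := H.hΛ
  set l₁ := (1 + l) / 2 with hl₁
  have hl₁1 : 1 < l₁ := by rw [hl₁]; linarith
  have hl₁l : l₁ < l := by rw [hl₁]; linarith
  have hl₁0 : 0 < l₁ := by linarith
  obtain ⟨m, hm⟩ := pow_unbounded_of_one_lt (1 / C) ((one_lt_div hl₁0).2 hl₁l)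
  have hm' : l₁ ^ m ≤ C * l ^ m := by
    rw [div_pow, div_lt_div_iff₀ hC (by positivity)] at hm
    linarith
  set D : ℝ → ℝ → ℝ := fun x y => ∑ i ∈ Finset.range (m + 1), (1 / l₁) ^ i * |F^[i] x - F^[i] y|
    with hD
  have hD1 : ∀ x y, |x - y| ≤ D x y := fun x y => by
    simp only [hD]
    rw [Finset.sum_range_succ']
    simp only [Function.iterate_zero, id, pow_zero, one_mul]
    have : 0 ≤ ∑ i ∈ Finset.range m, (1 / l₁) ^ (i + 1) * |F^[i + 1] x - F^[i + 1] y| :=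
      Finset.sum_nonneg fun i _ => by positivity
    linarith
  have hDk : ∀ x y (k : ℤ), D (x + k) (y + k) = D x y := fun x y k => by
    simp only [hD, H.per_iter, add_sub_add_right_eq_sub]
  set C' := ∑ i ∈ Finset.range (m + 1), Λ ^ i with hC'
  have hC'0 : 0 < C' := Finset.sum_pos (fun i _ => by positivity) ⟨0, by simp⟩
  have hD2 : ∀ x y, D x y ≤ C' * |x - y| := fun x y => by
    simp only [hD, hC', Finset.sum_mul]
    refine Finset.sum_le_sum fun i _ => ?_
    have h1 : (1 / l₁) ^ i ≤ 1 := pow_le_one₀ (by positivity) ((div_le_one hl₁0).2 hl₁1.le)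
    exact (mul_le_of_le_one_left (abs_nonneg _) h1).trans (H.lip_iter i x y)
  have hDt : ∀ x y z, D x z ≤ D x y + D y z := fun x y z => by
    simp only [hD, ← Finset.sum_add_distrib, ← mul_add]
    refine Finset.sum_le_sum fun i _ => ?_
    gcongr
    exact abs_sub_le _ _ _
  have hDe : ∀ x y, l₁ * D x y ≤ D (F x) (F y) := fun x y => by
    simp only [hD, ← Function.iterate_succ_apply]
    rw [Finset.sum_range_succ', Finset.sum_range_succ, mul_add, Finset.mul_sum]
    refine add_le_add (Finset.sum_le_sum fun i _ => le_of_eq ?_) ?_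
    · rw [pow_succ]; field_simp
    · have h1 := H.expand (m + 1) x y
      simp only [Function.iterate_zero, id, pow_zero, one_mul]
      refine le_trans ?_ (mul_le_mul_of_nonneg_left h1 (by positivity))
      rw [← mul_assoc]
      refine mul_le_mul_of_nonneg_right ?_ (abs_nonneg _)
      have h2 : (1 / l₁) ^ m * l₁ ^ m = 1 := by rw [← mul_pow, one_div_mul_cancel hl₁0.ne', one_pow]
      calc l₁ = (1 / l₁) ^ m * (l₁ ^ m * l₁) := by rw [← mul_assoc, h2, one_mul]
        _ ≤ (1 / l₁) ^ m * (C * l ^ m * l) := by gcongr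
        _ = _ := by rw [pow_succ l, mul_assoc C]
  refine ⟨C' / (l₁ - 1), div_pos hC'0 (by linarith), fun n x k hn hx => ?_⟩
  obtain ⟨p, hp⟩ := surj_of_per (G := fun x => F^[n] x - x) (D := (d : ℝ) ^ n - 1)
    ((H.diff_iter n).continuous.sub continuous_id)
    (fun h0 => by
      have := H.one_lt_d_pow hn
      rw [sub_eq_zero] at h0
      rw [h0, abs_one] at this
      exact lt_irrefl _ this)
    (fun x k => by simp only [H.per_iter]; ring) k
  have hp' : F^[n] p = p + k := by simp only at hp; linarith
  refine ⟨p, hp', ?_⟩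
  have h1 : ∀ i, l₁ * D (F^[i] p) (x i) ≤ D (F^[i + 1] p) (x (i + 1)) + C' * |F (x i) - x (i + 1)| :=
    fun i => by
      refine (hDe _ _).trans ?_
      rw [← Function.iterate_succ_apply' F i p]
      have h2 := hDt (F^[i + 1] p) (x (i + 1)) (F (x i))
      have h3 := hD2 (x (i + 1)) (F (x i))
      rw [abs_sub_comm] at h3
      linarith
  have h2 := Finset.sum_le_sum fun i (_ : i ∈ Finset.range n) => h1 i
  rw [Finset.sum_add_distrib, ← Finset.mul_sum, ← Finset.mul_sum] at h2
  have h3 : ∑ i ∈ Finset.range n, D (F^[i + 1] p) (x (i + 1)) =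
      ∑ i ∈ Finset.range n, D (F^[i] p) (x i) := by
    have h4 := Finset.sum_range_succ (fun i => D (F^[i] p) (x i)) n
    have h5 := Finset.sum_range_succ' (fun i => D (F^[i] p) (x i)) n
    simp only [hp', hx, hDk, Function.iterate_zero, id] at h4 h5
    linarith
  have h4 : ∑ i ∈ Finset.range n, |F^[i] p - x i| ≤ ∑ i ∈ Finset.range n, D (F^[i] p) (x i) :=
    Finset.sum_le_sum fun i _ => hD1 _ _
  refine h4.trans ?_
  rw [div_mul_eq_mul_div, le_div_iff₀ (by linarith)]
  linarith

lemma expSys (H : Lift F d C l Λ) : ∃ κ δ, ExpSys (cmap F) Λ (1 / l) κ δ ∧ Λ * δ ≤ 1 / 2 := by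
  obtain ⟨κ, hκ, hcl⟩ := H.closing
  have hC := H.hC
  have hl := H.hl
  have hΛ := H.hΛ
  refine ⟨max (1 / C) κ, 1 / (2 * Λ), ⟨hΛ, by positivity, (div_lt_one H.l0).2 hl, ?_, by positivity,
    ?_, ?_, ?_, ?_⟩, by field_simp; norm_num⟩
  · exact le_max_of_le_left ((one_le_div hC).2 H.hC1)
  · intro x y
    obtain ⟨a, rfl⟩ := exists_lift x
    obtain ⟨b, rfl, hb⟩ := exists_lift_near a y
    rw [H.cmap_coe, H.cmap_coe, ← hb]
    exact (dist_coe_le _ _).trans (H.lip a b)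
  · intro n x y h
    obtain ⟨a, rfl⟩ := exists_lift x
    obtain ⟨b, rfl, hb⟩ := exists_lift_near a y
    have h0 := h 0 (by omega)
    have h1 := H.bowen (δ := 1 / (2 * Λ)) (by field_simp; norm_num) (hb.le.trans h0) h n le_rfl
    rw [← h1, ← hb]
    refine (H.contract n a b).trans ?_
    have := H.l0
    gcongr
    exact le_max_left _ _
  · intro n y x'
    obtain ⟨b, rfl⟩ := exists_lift y
    obtain ⟨a, rfl, ha⟩ := exists_lift_near (F^[n] b) x'
    obtain ⟨c, rfl⟩ := H.surj_iter n a
    refine ⟨c, H.iter_coe n c, fun i hi => ?_⟩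
    rw [H.iter_coe, H.iter_coe, H.iter_coe, dist_comm (F^[n] c : Circle1), ← ha]
    refine (dist_coe_le _ _).trans ((H.contract (n - i) _ _).trans ?_)
    rw [← Function.iterate_add_apply, ← Function.iterate_add_apply, Nat.sub_add_cancel hi,
      abs_sub_comm]
    have := H.l0
    gcongr
    exact le_max_left _ _
  · intro n x hn hx
    -- lift the pseudo-orbit step by step
    choose L hL1 hL2 using exists_lift_near
    obtain ⟨a₀, ha₀⟩ := exists_lift (x 0)
    set y : ℕ → ℝ := fun i => Nat.rec a₀ (fun i a => L (F a) (x (i + 1))) i with hy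
    have hyx : ∀ i, (y i : Circle1) = x i := by
      intro i
      cases i with
      | zero => exact ha₀
      | succ i => exact hL1 _ _
    have hys : ∀ i, |F (y i) - y (i + 1)| = dist (cmap F (x i)) (x (i + 1)) := fun i => by
      rw [← hyx i, H.cmap_coe]; exact hL2 _ _
    obtain ⟨k, hk⟩ := coe_eq_iff.1 ((hyx n).trans (hx.trans (hyx 0).symm))
    obtain ⟨p, hp, hs⟩ := hcl n y k hn hk
    refine ⟨p, ?_, ?_⟩
    · rw [H.iter_coe, hp, coe_eq_iff]; exact ⟨k, rfl⟩
    · simp only [hys] at hs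
      refine le_trans (Finset.sum_le_sum fun i _ => ?_) (hs.trans ?_)
      · rw [H.iter_coe, ← hyx i]; exact dist_coe_le _ _
      · exact mul_le_mul_of_nonneg_right (le_max_right _ _) (Finset.sum_nonneg fun _ _ => dist_nonneg)

end Lift

open scoped ContDiff Convolution

/-! ### Smooth periodic functions with controlled derivatives -/

/-- A smooth `1`-periodic function on the line. -/
structure Sm (ψ : ℝ → ℝ) : Prop where
  cd : ContDiff ℝ ∞ ψ
  per : ∀ x, ψ (x + 1) = ψ x

/-- The `C^N` norm of `ψ` is at most `ε`. -/
def NB (N : ℕ) (ε : ℝ) (ψ : ℝ → ℝ) : Prop := ∀ k ≤ N, ∀ x, |iteratedDeriv k ψ x| ≤ ε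

/-- The function on the circle induced by a periodic function on the line. -/
noncomputable def toC (ψ : ℝ → ℝ) : Circle1 → ℝ := fun z => ψ (rep z)

section SmBasic
variable {ψ φ : ℝ → ℝ} {N : ℕ} {ε ε' : ℝ}

lemma per_int_of_per {g : ℝ → ℝ} (hp : ∀ x, g (x + 1) = g x) (x : ℝ) (k : ℤ) : g (x + k) = g x := by
  have := Function.Periodic.int_mul (f := g) (c := 1) hp k x
  simpa using this

lemma toC_coe (hp : ∀ x, ψ (x + 1) = ψ x) (x : ℝ) : toC ψ (x : Circle1) = ψ x := by
  obtain ⟨k, hk⟩ := coe_eq_iff.1 (rep_coe (x : Circle1))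
  rw [toC, hk, per_int_of_per hp]

lemma Sm.at (h : Sm ψ) (n : ℕ) (x : ℝ) : ContDiffAt ℝ n ψ x :=
  (h.cd.of_le (by exact_mod_cast le_top)).contDiffAt

lemma Sm.add (h : Sm ψ) (h' : Sm φ) : Sm (fun x => ψ x + φ x) :=
  ⟨h.cd.add h'.cd, fun x => by rw [h.per, h'.per]⟩

lemma Sm.const_mul (h : Sm ψ) (c : ℝ) : Sm (fun x => c * ψ x) :=
  ⟨contDiff_const.mul h.cd, fun x => by rw [h.per]⟩

lemma Sm.mul (h : Sm ψ) (h' : Sm φ) : Sm (fun x => ψ x * φ x) :=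
  ⟨h.cd.mul h'.cd, fun x => by rw [h.per, h'.per]⟩

lemma Sm.one_sub (h : Sm ψ) : Sm (fun x => 1 - ψ x) :=
  ⟨contDiff_const.sub h.cd, fun x => by rw [h.per]⟩

lemma Sm.sum {ι : Type*} (s : Finset ι) {ψ : ι → ℝ → ℝ} (h : ∀ i ∈ s, Sm (ψ i)) :
    Sm (fun x => ∑ i ∈ s, ψ i x) :=
  ⟨ContDiff.sum fun i hi => (h i hi).cd, fun x => Finset.sum_congr rfl fun i hi => (h i hi).per x⟩

lemma Sm.zero : Sm (fun _ => 0) := ⟨contDiff_const, fun _ => rfl⟩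

lemma NB.mono (h : NB N ε ψ) (hε : ε ≤ ε') : NB N ε' ψ := fun k hk x => (h k hk x).trans hε

lemma NB.mono_left {N' : ℕ} (h : NB N ε ψ) (hN : N' ≤ N) : NB N' ε ψ := fun k hk x => h k (hk.trans hN) x

lemma NB.add (hs : Sm ψ) (hs' : Sm φ) (h : NB N ε ψ) (h' : NB N ε' φ) :
    NB N (ε + ε') (fun x => ψ x + φ x) := fun k hk x => by
  have : iteratedDeriv k (fun x => ψ x + φ x) x = iteratedDeriv k ψ x + iteratedDeriv k φ x :=
    iteratedDeriv_add (hs.at k x) (hs'.at k x)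
  rw [this]
  exact (abs_add_le _ _).trans (add_le_add (h k hk x) (h' k hk x))

lemma NB.const_mul (h : NB N ε ψ) (c : ℝ) : NB N (|c| * ε) (fun x => c * ψ x) := fun k hk x => by
  rw [iteratedDeriv_const_mul_field, abs_mul]
  exact mul_le_mul_of_nonneg_left (h k hk x) (abs_nonneg _)

lemma NB.sum {ι : Type*} (s : Finset ι) {ψ : ι → ℝ → ℝ} {ε : ι → ℝ} (hs : ∀ i ∈ s, Sm (ψ i))
    (h : ∀ i ∈ s, NB N (ε i) (ψ i)) : NB N (∑ i ∈ s, ε i) (fun x => ∑ i ∈ s, ψ i x) := fun k hk x => by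
  rw [iteratedDeriv_fun_sum fun i hi => (hs i hi).at k x]
  exact (Finset.abs_sum_le_sum_abs _ _).trans (Finset.sum_le_sum fun i hi => h i hi k hk x)

lemma NB.zero (hε : 0 ≤ ε) : NB N ε (fun _ => 0) := fun k _ x => by
  simpa using hε

lemma NB.abs_le (h : NB N ε ψ) (x : ℝ) : |ψ x| ≤ ε := by
  simpa using h 0 (Nat.zero_le _) x

lemma NB.abs_toC_le (h : NB N ε ψ) (z : Circle1) : |toC ψ z| ≤ ε := h.abs_le _

lemma NB.abs_deriv_le (h : NB N ε ψ) (hN : 1 ≤ N) (x : ℝ) : |deriv ψ x| ≤ ε := by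
  simpa using h 1 hN x

/-- A function on the circle whose lift has derivative bounded by `K` is `K`-Lipschitz. -/
lemma lip_of_deriv {f : Circle1 → ℝ} {K : ℝ} (hd : Differentiable ℝ fun x : ℝ => f x)
    (hK : ∀ x : ℝ, |deriv (fun x : ℝ => f x) x| ≤ K) : Lip K f := fun x y => by
  obtain ⟨a, rfl⟩ := exists_lift x
  obtain ⟨b, rfl, hb⟩ := exists_lift_near a y
  rw [← hb]
  simpa [Real.norm_eq_abs] using Convex.norm_image_sub_le_of_norm_deriv_le (s := univ)
    (f := fun x : ℝ => f x) (fun x _ => hd x) (fun x _ => hK x) convex_univ (mem_univ b) (mem_univ a)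

lemma Sm.diff (h : Sm ψ) : Differentiable ℝ ψ := h.cd.differentiable (by simp)

lemma Sm.toC_lift (h : Sm ψ) : (fun x : ℝ => toC ψ (x : Circle1)) = ψ := funext (toC_coe h.per)

lemma Sm.lip (h : Sm ψ) (hN : NB N ε ψ) (h1 : 1 ≤ N) : Lip ε (toC ψ) :=
  lip_of_deriv (by rw [h.toC_lift]; exact h.diff) (by rw [h.toC_lift]; exact hN.abs_deriv_le h1)

lemma periodic_deriv {g : ℝ → ℝ} (hp : ∀ x, g (x + 1) = g x) (x : ℝ) : deriv g (x + 1) = deriv g x := by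
  rw [← deriv_comp_add_const]
  simp_rw [hp]

lemma Sm.exists_NB (h : Sm ψ) (N : ℕ) : ∃ B, 1 ≤ B ∧ NB N B ψ := by
  have h1 : ∀ k x, iteratedDeriv k ψ (x + 1) = iteratedDeriv k ψ x := by
    intro k
    induction k with
    | zero => simpa using h.per
    | succ k ih => intro x; rw [iteratedDeriv_succ]; exact periodic_deriv ih x
  have h2 : ∀ k, ∃ B, 1 ≤ B ∧ ∀ x, |iteratedDeriv k ψ x| ≤ B := fun k =>
    periodic_bound (h.cd.continuous_iteratedDeriv k (by exact_mod_cast le_top)) (h1 k)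
  choose B hB1 hB using h2
  refine ⟨∑ k ∈ Finset.range (N + 1), B k, ?_, fun k hk x => (hB k x).trans ?_⟩
  · refine (hB1 0).trans (Finset.single_le_sum (f := B) (fun i _ => ?_) (by simp))
    linarith [hB1 i]
  · refine (Finset.single_le_sum (f := B) (fun i _ => ?_) (Finset.mem_range.2 (by omega)))
    linarith [hB1 i]

end SmBasic

section Bump

lemma iteratedDeriv_conv {u : ℝ → ℝ} (hu : LocallyIntegrable u volume) (k : ℕ) :
    ∀ {g : ℝ → ℝ}, ContDiff ℝ ∞ g → HasCompactSupport g →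
    iteratedDeriv k (u ⋆[ContinuousLinearMap.mul ℝ ℝ, volume] g) =
      u ⋆[ContinuousLinearMap.mul ℝ ℝ, volume] (iteratedDeriv k g) := by
  induction k with
  | zero => intro g _ _; simp
  | succ k ih =>
    intro g hg hc
    have h1 : deriv (u ⋆[ContinuousLinearMap.mul ℝ ℝ, volume] g) =
        u ⋆[ContinuousLinearMap.mul ℝ ℝ, volume] (deriv g) := by
      ext x
      exact (hc.hasDerivAt_convolution_right _ hu (hg.of_le (by exact_mod_cast le_top)) x).deriv
    rw [iteratedDeriv_succ', h1, ih, iteratedDeriv_succ']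
    · exact (contDiff_infty_iff_deriv.1 hg).2
    · exact hc.deriv

/-- Cut-off functions at scale `ρ` for an arbitrary set `A`, with derivatives controlled by `ρ`
only. -/
lemma exists_bump (N : ℕ) : ∃ B : ℝ, 1 ≤ B ∧ ∀ (A : Set Circle1) (ρ : ℝ), 0 < ρ → ρ ≤ 1 →
    ∃ ψ : ℝ → ℝ, Sm ψ ∧ (∀ x, 0 ≤ ψ x) ∧ (∀ x, ψ x ≤ 1) ∧ (∀ x : ℝ, (x : Circle1) ∈ A → ψ x = 1) ∧
      (∀ x : ℝ, (∀ a ∈ A, ρ ≤ dist (x : Circle1) a) → ψ x = 0) ∧ NB N (B / ρ ^ N) ψ ∧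
      NB N (B / ρ ^ N) (fun x => 1 - ψ x) := by
  let b : ContDiffBump (0 : ℝ) := ⟨1 / 2, 1, by norm_num, by norm_num⟩
  set η : ℝ → ℝ := b.normed volume with hη
  have hηc : ContDiff ℝ ∞ η := b.contDiff_normed
  set I : ℕ → ℝ := fun k => ∫ t, |iteratedDeriv k η t| with hI
  have hI0 : ∀ k, 0 ≤ I k := fun k => integral_nonneg fun t => abs_nonneg _
  set B := 1 + ∑ k ∈ Finset.range (N + 1), 2 ^ k * I k with hB
  have hBk : ∀ k ≤ N, 2 ^ k * I k ≤ B := fun k hk => by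
    have := Finset.single_le_sum (f := fun k => 2 ^ k * I k)
      (fun i _ => mul_nonneg (by positivity) (hI0 i)) (Finset.mem_range.2 (Nat.lt_succ_of_le hk))
    linarith
  have hB1 : 1 ≤ B := by
    have : 0 ≤ ∑ k ∈ Finset.range (N + 1), 2 ^ k * I k :=
      Finset.sum_nonneg fun i _ => mul_nonneg (by positivity) (hI0 i)
    linarith
  refine ⟨B, hB1, fun A ρ hρ hρ1 => ?_⟩
  set U : Set ℝ := {x | ∃ a ∈ A, dist (x : Circle1) a < ρ / 2} with hU
  have hUo : IsOpen U := by
    have : U = ⋃ a ∈ A, {x : ℝ | dist (x : Circle1) a < ρ / 2} := by ext; simp [hU]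
    rw [this]
    refine isOpen_biUnion fun a _ => isOpen_lt ?_ continuous_const
    exact (AddCircle.continuous_mk' 1).dist continuous_const
  set u : ℝ → ℝ := U.indicator 1 with hu
  have hu0 : ∀ x, 0 ≤ u x := fun x => indicator_nonneg (fun _ _ => zero_le_one) x
  have hu1 : ∀ x, u x ≤ 1 := fun x => indicator_le_self' (fun _ _ => zero_le_one) x
  have hum : Measurable u := measurable_one.indicator hUo.measurableSet
  have hup : ∀ x, u (x + 1) = u x := fun x => by
    have : x + 1 ∈ U ↔ x ∈ U := by
      have : ((x + 1 : ℝ) : Circle1) = x := coe_eq_iff.2 ⟨1, by simp⟩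
      simp only [hU, mem_ofPred_eq, this]
    by_cases hx : x ∈ U
    · simp [hu, hx, this.2 hx]
    · simp [hu, hx, mt this.1 hx]
  have hul : LocallyIntegrable u volume :=
    (locallyIntegrable_const (1 : ℝ)).indicator hUo.measurableSet
  set c := 2 / ρ with hc
  have hc0 : 0 < c := by positivity
  set g : ℝ → ℝ := fun t => c * η (c * t) with hg
  have hgc : ContDiff ℝ ∞ g := contDiff_const.mul (hηc.comp (contDiff_const.mul contDiff_id))
  have hgs : HasCompactSupport g :=
    (b.hasCompactSupport_normed.comp_homeomorph (Homeomorph.mulLeft₀ c hc0.ne')).mul_left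
  have hg0 : ∀ t, 0 ≤ g t := fun t => mul_nonneg hc0.le (b.nonneg_normed _)
  have hgz : ∀ t, ρ / 2 ≤ |t| → g t = 0 := fun t ht => by
    have : c * t ∉ Function.support η := by
      rw [hη, b.support_normed_eq, Metric.mem_ball, dist_zero_right, Real.norm_eq_abs, abs_mul,
        abs_of_pos hc0, not_lt]
      calc (1 : ℝ) = c * (ρ / 2) := by rw [hc]; field_simp
        _ ≤ _ := by gcongr
    simp only [hg, Function.notMem_support.1 this, mul_zero]
  have hgint : Integrable g := hgc.continuous.integrable_of_hasCompactSupport hgs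
  have hg1 : ∫ t, g t = 1 := by
    simp only [hg]
    rw [integral_const_mul, Measure.integral_comp_mul_left η c, b.integral_normed, abs_inv,
      abs_of_pos hc0]
    simp [hc0.ne']
  set ψ := u ⋆[ContinuousLinearMap.mul ℝ ℝ, volume] g with hψ
  have hψx : ∀ x, ψ x = ∫ t, u (x - t) * g t := fun x => convolution_mul_swap
  have hugi : ∀ x, Integrable fun t => u (x - t) * g t := fun x =>
    hgint.bdd_mul (c := 1) (hum.comp (measurable_const.sub measurable_id)).aestronglyMeasurable
      (Eventually.of_forall fun t => by
        rw [Real.norm_eq_abs, abs_of_nonneg (hu0 _)]; exact hu1 _)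
  have hψ0 : ∀ x, 0 ≤ ψ x := fun x => by
    rw [hψx]; exact integral_nonneg fun t => mul_nonneg (hu0 _) (hg0 _)
  have hψ1 : ∀ x, ψ x ≤ 1 := fun x => by
    rw [hψx, ← hg1]
    exact integral_mono (hugi x) hgint fun t => mul_le_of_le_one_left (hg0 t) (hu1 _)
  have hsm : Sm ψ := ⟨hgs.contDiff_convolution_right _ hul hgc, fun x => by
    rw [hψx, hψx]; congr 1; ext t; rw [show x + 1 - t = x - t + 1 by ring, hup]⟩
  have hder : ∀ k ≤ N, ∀ x, |iteratedDeriv k ψ x| ≤ B / ρ ^ N := fun k hk x => by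
    have h1 : ∀ t, iteratedDeriv k g t = c * (c ^ k * iteratedDeriv k η (c * t)) := fun t => by
      simp only [hg]
      rw [iteratedDeriv_const_mul_field,
        iteratedDeriv_comp_const_mul (hηc.of_le (by exact_mod_cast le_top))]
    have hgk : Continuous (iteratedDeriv k g) :=
      hgc.continuous_iteratedDeriv k (by exact_mod_cast le_top)
    have hgks : HasCompactSupport (iteratedDeriv k g) := by
      clear hk h1 hgk
      induction k with
      | zero => simpa using hgs
      | succ k ih => rw [iteratedDeriv_succ]; exact ih.deriv
    have hgki : Integrable (iteratedDeriv k g) := hgk.integrable_of_hasCompactSupport hgks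
    have h2 : ∫ t, |iteratedDeriv k g t| = c ^ k * I k := by
      simp only [h1, abs_mul, abs_pow, abs_of_pos hc0]
      rw [integral_const_mul, integral_const_mul,
        Measure.integral_comp_mul_left (fun t => |iteratedDeriv k η t|) c, abs_inv, abs_of_pos hc0,
        smul_eq_mul]
      field_simp
      rfl
    rw [hψ, iteratedDeriv_conv (g := g) hul k hgc hgs]
    rw [convolution_mul_swap]
    have h3 : |∫ t, u (x - t) * iteratedDeriv k g t| ≤ ∫ t, |iteratedDeriv k g t| := by
      refine (abs_integral_le_integral_abs).trans (integral_mono_of_nonneg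
        (Eventually.of_forall fun t => abs_nonneg _) hgki.abs (Eventually.of_forall fun t => ?_))
      simp only [abs_mul, abs_of_nonneg (hu0 _)]
      exact mul_le_of_le_one_left (abs_nonneg _) (hu1 _)
    refine h3.trans ?_
    rw [h2, hc, div_pow, div_mul_eq_mul_div]
    refine div_le_div₀ (by linarith) (hBk k hk) (by positivity) (pow_le_pow_of_le_one hρ.le hρ1 hk)
  refine ⟨ψ, hsm, hψ0, hψ1, fun x hx => ?_, fun x hx => ?_, hder, fun k hk x => ?_⟩
  · rw [hψx, ← hg1]
    congr 1; ext t
    by_cases ht : ρ / 2 ≤ |t|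
    · rw [hgz t ht, mul_zero]
    · have : x - t ∈ U := ⟨x, hx, by
        refine (dist_coe_le _ _).trans_lt ?_
        simpa [abs_neg] using not_le.1 ht⟩
      simp [hu, this]
  · rw [hψx, ← integral_zero ℝ ℝ]
    congr 1; ext t
    by_cases ht : ρ / 2 ≤ |t|
    · rw [hgz t ht, mul_zero]
    · have : x - t ∉ U := by
        rintro ⟨a, ha, hd⟩
        have h1 := hx a ha
        have h2 := dist_triangle (x : Circle1) ((x - t : ℝ) : Circle1) a
        have h3 := dist_coe_le x (x - t)
        rw [sub_sub_cancel] at h3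
        linarith [not_le.1 ht]
      simp [hu, this]
  · rcases Nat.eq_zero_or_pos k with rfl | hk0
    · rw [iteratedDeriv_zero, abs_of_nonneg (by linarith [hψ1 x])]
      have : 1 ≤ B / ρ ^ N := (one_le_div (by positivity)).2 ((pow_le_one₀ hρ.le hρ1).trans hB1)
      linarith [hψ0 x]
    · rw [iteratedDeriv_const_sub hk0, iteratedDeriv_neg, abs_neg]
      exact hder k hk x

end Bump

/-! ### The `C^r` topology -/

lemma crFun_proj_continuous (r : ℕ∞) (k : ℕ) :
    Continuous fun f : CrFun r => crSeq r (fun x : ℝ => f.1 ↑x) k := by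
  have h : Continuous fun f : CrFun r => crSeq r (fun x : ℝ => f.1 ↑x) := continuous_induced_dom
  exact (continuous_apply k).comp h

lemma crSeq_apply {r : ℕ∞} {k : ℕ} (hk : (k : ℕ∞) ≤ r) (f : ℝ → ℝ) :
    crSeq r f k = UniformFun.ofFun (iteratedDeriv k f) := by
  simp [crSeq, hk]

lemma crFun_ball_mem_nhds {r : ℕ∞} (f : CrFun r) {k : ℕ} (hk : (k : ℕ∞) ≤ r) {e : ℝ} (he : 0 < e) :
    ∀ᶠ f' in 𝓝 f, ∀ x : ℝ, |iteratedDeriv k (fun x : ℝ => f.1 ↑x) x -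
      iteratedDeriv k (fun x : ℝ => f'.1 ↑x) x| < e := by
  have h1 := (crFun_proj_continuous r k).tendsto f
  have h2 := (UniformFun.hasBasis_nhds ℝ ℝ (crSeq r (fun x : ℝ => f.1 ↑x) k)).mem_of_mem
    (Metric.dist_mem_uniformity he)
  filter_upwards [h1 h2] with f' hf' x
  have h3 := hf' x
  simp only [crSeq_apply hk] at h3
  exact h3

/-- It suffices to find, for each `f`, a small smooth perturbation which is stably (with respect to
perturbations small in the Lipschitz norm) uniquely maximized by a periodic measure. -/
lemma dense_of_perturb {r : ℕ∞} (hr : 1 ≤ r) {T : Circle1 → Circle1}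
    (h : ∀ f : CrFun r, ∀ N : ℕ, (N : ℕ∞) ≤ r → 1 ≤ N → ∀ ε > (0 : ℝ), ∃ ψ, Sm ψ ∧ NB N ε ψ ∧
      ∃ e > (0 : ℝ), ∀ h : Circle1 → ℝ, (∀ x, |h x| ≤ e) → Lip e h →
        UniqMaxPeriodic (fun x => f.1 x + toC ψ x + h x) T) :
    ∃ D : Set (CrFun r), IsOpen D ∧ Dense D ∧ ∀ f ∈ D, UniqMaxPeriodic f.1 T := by
  refine ⟨interior {f | UniqMaxPeriodic f.1 T}, isOpen_interior, fun f => ?_,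
    fun f hf => ?_⟩
  swap
  · have h2 : f ∈ {f : CrFun r | UniqMaxPeriodic f.1 T} := interior_subset hf
    exact h2
  -- the orders of differentiability controlled along an approximating sequence
  have hN : ∀ j : ℕ, ∃ N : ℕ, (N : ℕ∞) ≤ r ∧ 1 ≤ N ∧ ∀ k ≤ j, (k : ℕ∞) ≤ r → k ≤ N := by
    intro j
    by_cases ht : r = ⊤
    · subst ht
      exact ⟨j + 1, le_top, by omega, fun k hk _ => by omega⟩
    · obtain ⟨R, hR⟩ := ENat.ne_top_iff_exists.1 ht
      rw [← hR] at hr ⊢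
      exact ⟨R, le_rfl, by exact_mod_cast hr, fun k _ hk => by exact_mod_cast hk⟩
  choose N hNr hN1 hNk using hN
  choose ψ hψ hψN e he hu using fun j : ℕ => h f (N j) (hNr j) (hN1 j) (1 / ((j : ℝ) + 1)) (by positivity)
  have hcd : ∀ j, ContDiff ℝ r fun x : ℝ => f.1 x + toC (ψ j) x := fun j => by
    have h1 : (fun x : ℝ => f.1 x + toC (ψ j) x) = fun x : ℝ => f.1 x + ψ j x :=
      funext fun x => by rw [toC_coe (hψ j).per]
    rw [h1]
    exact f.2.add ((hψ j).cd.of_le (by exact_mod_cast le_top))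
  set g : ℕ → CrFun r := fun j => ⟨fun x => f.1 x + toC (ψ j) x, hcd j⟩ with hg
  have hgx : ∀ j, (fun x : ℝ => (g j).1 ↑x) = fun x : ℝ => f.1 x + ψ j x := fun j =>
    funext fun x => by simp only [hg]; rw [toC_coe (hψ j).per]
  refine mem_closure_of_tendsto (f := g) (b := atTop) ?_ (Eventually.of_forall fun j => ?_)
  · rw [nhds_induced, tendsto_comap_iff, tendsto_pi_nhds]
    intro k
    by_cases hk : (k : ℕ∞) ≤ r
    · simp only [Function.comp_def, crSeq_apply hk]
      rw [UniformFun.tendsto_iff_tendstoUniformly, Metric.tendstoUniformly_iff]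
      intro ε hε
      filter_upwards [eventually_ge_atTop k,
        (tendsto_one_div_add_atTop_nhds_zero_nat (𝕜 := ℝ)).eventually_lt_const hε] with j hj hjε x
      refine lt_of_le_of_lt ?_ hjε
      simp only [Function.comp_apply, UniformFun.toFun_ofFun]
      rw [hgx]
      have : iteratedDeriv k (fun x : ℝ => f.1 x + ψ j x) x =
          iteratedDeriv k (fun x : ℝ => f.1 ↑x) x + iteratedDeriv k (ψ j) x :=
        iteratedDeriv_add (f.2.of_le (by exact_mod_cast hk)).contDiffAt ((hψ j).at k x)
      rw [this, dist_comm, Real.dist_eq, add_sub_cancel_left]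
      exact hψN j k (hNk j k hj hk) x
    · simp only [Function.comp_def, crSeq, hk, if_false]
      exact tendsto_const_nhds
  · rw [mem_interior_iff_mem_nhds]
    filter_upwards [crFun_ball_mem_nhds (g j) (k := 0) (by simp) (he j),
      crFun_ball_mem_nhds (g j) (k := 1) (by simpa using hr) (he j)] with f' h0 h1
    have h2 := hu j (fun x => f'.1 x - (g j).1 x) (fun x => ?_) (lip_of_deriv ?_ fun x => ?_)
    · have : (fun x => f.1 x + toC (ψ j) x + (f'.1 x - (g j).1 x)) = f'.1 := by
        ext x; simp only [hg]; ring
      rw [this] at h2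
      exact h2
    · obtain ⟨a, rfl⟩ := exists_lift x
      rw [abs_sub_comm]
      simpa using (h0 a).le
    · have hd : ∀ f : CrFun r, Differentiable ℝ fun x : ℝ => f.1 ↑x := fun f =>
        f.2.differentiable (by
          have : (1 : WithTop ℕ∞) ≤ r := by exact_mod_cast hr
          exact (zero_lt_one.trans_le this).ne')
      exact (hd f').sub (hd (g j))
    · have hd : ∀ f : CrFun r, Differentiable ℝ fun x : ℝ => f.1 ↑x := fun f =>
        f.2.differentiable (by
          have : (1 : WithTop ℕ∞) ≤ r := by exact_mod_cast hr
          exact (zero_lt_one.trans_le this).ne')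
      have h3 := h1 x
      simp only [iteratedDeriv_one] at h3
      rw [deriv_fun_sub (hd f' x) (hd (g j) x), abs_sub_comm]
      exact h3.le

/-- The `C¹` case. -/
lemma perturb_one {T : Circle1 → Circle1} {Λ τ κ δ : ℝ} (E : ExpSys T Λ τ κ δ)
    {f : Circle1 → ℝ} {K : ℝ} (hK : 0 ≤ K) (hf : Lip K f) {ε : ℝ} (hε : 0 < ε) :
    ∃ ψ, Sm ψ ∧ NB 1 ε ψ ∧ ∃ e > (0 : ℝ), ∀ h : Circle1 → ℝ, (∀ x, |h x| ≤ e) → Lip e h →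
      UniqMaxPeriodic (fun x => f x + toC ψ x + h x) T := by
  obtain ⟨B, hB1, hB⟩ := exists_bump 1
  have hB0 : 0 < B := by linarith
  obtain ⟨p, n, θ, hθ0, hθ1, hn, hp, hlock⟩ := exists_lockable E hK hf (ε₀ := ε / B) (by positivity)
    one_pos
  obtain ⟨ψ, hs, h0, h1, hA, hA', -, hNB⟩ := hB (Set.range fun i : ℕ => T^[i] p) θ hθ0 hθ1
  have hφ1 : Continuous (toC fun x => ε / B * θ * (1 - ψ x)) :=
    ((hs.one_sub.const_mul _).lip (NB.const_mul hNB _) le_rfl).continuous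
  obtain ⟨e, he, hu⟩ := hlock (toC fun x => ε / B * θ * (1 - ψ x)) hφ1
    (fun x => mul_nonneg (by positivity) (by linarith [h1 (rep x)]))
    (fun i => by
      have := hA (rep (T^[i] p)) (by rw [rep_coe]; exact ⟨i, rfl⟩)
      simp [toC, this])
    (fun x hx => by
      have := hA' (rep x) (by rw [rep_coe]; rintro _ ⟨i, rfl⟩; exact hx i)
      simp [toC, this])
  refine ⟨fun x => -(ε / B * θ) * (1 - ψ x), hs.one_sub.const_mul _, ?_, e, he, fun h hh hl => ?_⟩
  · refine (hNB.const_mul (-(ε / B * θ))).mono (le_of_eq ?_)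
    rw [abs_neg, abs_of_pos (by positivity)]
    field_simp
  · convert hu h hh hl using 2 with x
    simp only [toC]; ring

/-! ### Confining the maximizing sets to a set of small entropy -/

/-- Every length-`n₁` piece of the orbit of `x` is `δ`-shadowed by a point of `S`. -/
def Cov {X : Type*} [MetricSpace X] (T : X → X) (S : Finset X) (n₁ : ℕ) (δ : ℝ) (x : X) : Prop :=
  ∀ m, ∃ p ∈ S, ∀ i < n₁, dist (T^[m + i] x) (T^[i] p) ≤ δ

/-- Codes over the alphabet `α ⊕ W` with few letters in `W`. The bound comes from giving each letter
of `W` the weight `1 / |W|`. -/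
lemma card_codes_le {α W : Type*} [Fintype α] [Fintype W] [Nonempty W] (J B : ℕ)
    (P : (Fin J → α ⊕ W) → Prop)
    (hP : ∀ σ, P σ → (Finset.univ.filter fun b => (σ b).isRight = true).card ≤ B) [DecidablePred P] :
    (Finset.univ.filter P).card ≤ Fintype.card W ^ B * (Fintype.card α + 1) ^ J := by
  classical
  have hw : (1 : ℝ) ≤ Fintype.card W := by exact_mod_cast Fintype.card_pos
  have hw0 : (0 : ℝ) < Fintype.card W := by linarith
  set wt : α ⊕ W → ℝ := fun a => if a.isRight then (Fintype.card W : ℝ)⁻¹ else 1 with hwt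
  have h1 : ∑ a, wt a = Fintype.card α + 1 := by
    rw [Fintype.sum_sum_type]
    simp [hwt, hw0.ne']
  have h2 : ∑ σ : Fin J → α ⊕ W, ∏ b, wt (σ b) = (Fintype.card α + 1 : ℝ) ^ J := by
    have := Finset.prod_univ_sum (fun _ : Fin J => (Finset.univ : Finset (α ⊕ W))) (fun _ a => wt a)
    simp only [h1, Finset.prod_const, Finset.card_univ, Fintype.card_fin,
      Fintype.piFinset_univ] at this
    exact this.symm
  have h3 : ∀ σ, P σ → (1 : ℝ) ≤ (Fintype.card W : ℝ) ^ B * ∏ b, wt (σ b) := fun σ hσ => by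
    have h4 : ∏ b, wt (σ b) = ((Fintype.card W : ℝ)⁻¹) ^
        (Finset.univ.filter fun b => (σ b).isRight = true).card := by
      simp only [hwt]
      rw [Finset.prod_ite]
      simp
    rw [h4, inv_pow, ← div_eq_mul_inv, le_div_iff₀ (by positivity), one_mul]
    exact pow_le_pow_right₀ hw (hP σ hσ)
  have h5 : ((Finset.univ.filter P).card : ℝ) ≤
      (Fintype.card W : ℝ) ^ B * (Fintype.card α + 1 : ℝ) ^ J := by
    rw [← h2, Finset.mul_sum, Finset.card_eq_sum_ones, Nat.cast_sum]
    calc ∑ σ ∈ Finset.univ.filter P, ((1 : ℕ) : ℝ)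
        ≤ ∑ σ ∈ Finset.univ.filter P, (Fintype.card W : ℝ) ^ B * ∏ b, wt (σ b) :=
          Finset.sum_le_sum fun σ hσ => by
            rw [Nat.cast_one]
            exact h3 σ (Finset.mem_filter.1 hσ).2
      _ ≤ _ := Finset.sum_le_sum_of_subset_of_nonneg (Finset.filter_subset _ _) fun σ _ _ => by
          refine mul_nonneg (by positivity) (Finset.prod_nonneg fun b _ => ?_)
          simp only [hwt]; split_ifs <;> positivity
  exact_mod_cast h5

section
variable {X : Type*} [MetricSpace X] {T : X → X} {Λ τ κ δ₀ : ℝ}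

/-- Orbit pieces of length `J * ℓ` that spend all but `B` times `ρ`-close to a fixed periodic orbit
are shadowed by few orbit pieces: a block of length `ℓ` that starts close to the orbit is
determined up to `δ` by a point of the orbit. -/
lemma exists_few_shadow (E : ExpSys T Λ τ κ δ₀) {p : X} {n : ℕ} (hn : 1 ≤ n) (hp : T^[n] p = p)
    {ρ δ : ℝ} {ℓ : ℕ} (hℓ : 1 ≤ ℓ) (hρ : Λ ^ ℓ * ρ ≤ δ / 2) {q : ℕ} (hq : 1 ≤ q) (c : X → Fin q)
    (hc : ∀ x y, c x = c y → dist x y ≤ δ) (J B : ℕ) :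
    ∃ S : Finset X, S.card ≤ (q ^ ℓ) ^ B * (n + 1) ^ J ∧
      ∀ x, {t : ℕ | t < J * ℓ ∧ ∀ j, ρ ≤ dist (T^[t] x) (T^[j] p)}.ncard ≤ B →
        ∃ y ∈ S, ∀ i < J * ℓ, dist (T^[i] x) (T^[i] y) ≤ δ := by
  classical
  have : NeZero q := ⟨by omega⟩
  set code : X → Fin J → Fin n ⊕ (Fin ℓ → Fin q) := fun x b =>
    if h : ∃ j : Fin n, dist (T^[b * ℓ] x) (T^[j] p) < ρ then Sum.inl h.choose
    else Sum.inr (word T c ℓ (T^[b * ℓ] x)) with hcode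
  have hclose : ∀ x y, code x = code y → ∀ i < J * ℓ, dist (T^[i] x) (T^[i] y) ≤ δ := by
    intro x y hxy i hi
    have hb : i / ℓ < J := (Nat.div_lt_iff_lt_mul (by omega)).2 hi
    have hxy := congrFun hxy ⟨i / ℓ, hb⟩
    have hr := Nat.mod_lt i (show 0 < ℓ by omega)
    have hsplit : ∀ z : X, T^[i] z = T^[i % ℓ] (T^[i / ℓ * ℓ] z) := fun z => by
      rw [← Function.iterate_add_apply T (i % ℓ) (i / ℓ * ℓ) z]
      congr 2
      rw [mul_comm]; exact (Nat.mod_add_div i ℓ).symm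
    rw [hsplit x, hsplit y]
    simp only [hcode] at hxy
    have hnear : ∀ (z : X) (j : ℕ), dist z (T^[j] p) < ρ →
        dist (T^[i % ℓ] z) (T^[i % ℓ] (T^[j] p)) ≤ δ / 2 := fun z j hz => by
      refine (E.lip_iter _ _ _).trans (le_trans ?_ hρ)
      exact mul_le_mul (pow_le_pow_right₀ E.hΛ hr.le) hz.le dist_nonneg
        (by have := E.hΛ; positivity)
    by_cases hx : ∃ j : Fin n, dist (T^[i / ℓ * ℓ] x) (T^[j] p) < ρ
    · by_cases hy : ∃ j : Fin n, dist (T^[i / ℓ * ℓ] y) (T^[j] p) < ρ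
      · rw [dif_pos hx, dif_pos hy] at hxy
        have h1 := hx.choose_spec
        have h2 := hy.choose_spec
        rw [← Sum.inl.inj hxy] at h2
        have h3 := hnear _ _ h1
        have h4 := hnear _ _ h2
        have := dist_triangle_right (T^[i % ℓ] (T^[i / ℓ * ℓ] x)) (T^[i % ℓ] (T^[i / ℓ * ℓ] y))
          (T^[i % ℓ] (T^[(hx.choose : ℕ)] p))
        linarith
      · rw [dif_pos hx, dif_neg hy] at hxy
        exact absurd hxy (by simp)
    · by_cases hy : ∃ j : Fin n, dist (T^[i / ℓ * ℓ] y) (T^[j] p) < ρ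
      · rw [dif_neg hx, dif_pos hy] at hxy
        exact absurd hxy (by simp)
      · rw [dif_neg hx, dif_neg hy] at hxy
        exact hc _ _ (congrFun (Sum.inr.inj hxy) ⟨i % ℓ, hr⟩)
  set good : X → Prop := fun x =>
    {t : ℕ | t < J * ℓ ∧ ∀ j, ρ ≤ dist (T^[t] x) (T^[j] p)}.ncard ≤ B with hgood
  set P : (Fin J → Fin n ⊕ (Fin ℓ → Fin q)) → Prop := fun σ => ∃ x, good x ∧ code x = σ with hP
  have hcard := card_codes_le (α := Fin n) (W := Fin ℓ → Fin q) J B P ?_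
  · have hch : ∀ σ : (Fin J → Fin n ⊕ (Fin ℓ → Fin q)), ∃ x, P σ → code x = σ := fun σ => by
      by_cases h : P σ
      · obtain ⟨x, -, hx⟩ := h
        exact ⟨x, fun _ => hx⟩
      · exact ⟨p, fun h' => absurd h' h⟩
    choose r hr using hch
    refine ⟨(Finset.univ.filter P).image r, Finset.card_image_le.trans ?_, fun x hx => ?_⟩
    · simpa using hcard
    · have hPx : P (code x) := ⟨x, hx, rfl⟩
      exact ⟨r (code x), Finset.mem_image_of_mem r (by simp [hPx]),
        hclose _ _ (hr _ hPx).symm⟩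
  · rintro _ ⟨x, hx, rfl⟩
    refine le_trans ?_ hx
    have hfin : {t : ℕ | t < J * ℓ ∧ ∀ j, ρ ≤ dist (T^[t] x) (T^[j] p)}.Finite :=
      (Set.finite_lt_nat (J * ℓ)).subset fun t ht => ht.1
    rw [← Set.ncard_coe_finset]
    refine Set.ncard_le_ncard_of_injOn (fun b : Fin J => (b : ℕ) * ℓ) ?_ ?_ hfin
    · intro b hb
      simp only [Finset.coe_filter, Finset.mem_univ, true_and, mem_ofPred_eq] at hb
      refine ⟨Nat.mul_lt_mul_of_pos_right b.2 (by omega), fun j => ?_⟩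
      by_contra hlt
      push Not at hlt
      have : ∃ j : Fin n, dist (T^[b * ℓ] x) (T^[j] p) < ρ :=
        ⟨⟨j % n, Nat.mod_lt _ (by omega)⟩, by rw [← iter_mod hp]; exact hlt⟩
      simp only [hcode] at hb
      rw [dif_pos this] at hb
      simp at hb
    · intro b _ b' _ h
      exact Fin.ext (Nat.eq_of_mul_eq_mul_right (by omega) h)

lemma SubAct.sum_le {f g : X → ℝ} {β L : ℝ} (h : SubAct T f g β L) (n : ℕ) (x : X) :
    birkhoffSum T f n x ≤ n * β + g (T^[n] x) - g x := by
  induction n with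
  | zero => simp
  | succ n ih =>
    rw [birkhoffSum_succ, Function.iterate_succ_apply']
    have := h.sub (T^[n] x)
    push_cast
    linarith

lemma IsCal.sum_eq {f g : X → ℝ} {β : ℝ} {M : Set X} (h : IsCal T f g β M) (n : ℕ) {x : X} (hx : x ∈ M) :
    birkhoffSum T f n x = n * β + g (T^[n] x) - g x := by
  induction n with
  | zero => simp
  | succ n ih =>
    rw [birkhoffSum_succ, Function.iterate_succ_apply']
    have := h.eq (T^[n] x) (iter_mem h.maps n x hx)
    push_cast
    linarith

end

set_option maxHeartbeats 1600000 in
/-- After a small perturbation of `f`, the calibrated sets of all functions close to it consist of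
points whose orbits are covered by few orbit pieces, at any prescribed exponential rate `η`. -/
theorem exists_confine {T : Circle1 → Circle1} {Λ τ κ δ₀ : ℝ} (E : ExpSys T Λ τ κ δ₀)
    {f : Circle1 → ℝ} {K L₁ ε η δ : ℝ} (hK : 0 ≤ K) (hf : Lip K f) (N : ℕ) (hL₁ : 0 ≤ L₁)
    (hε : 0 < ε) (hη : 0 < η) (hδ : 0 < δ) :
    ∃ ψ, Sm ψ ∧ NB N ε ψ ∧ ∃ δ' > (0 : ℝ), ∃ n₁ : ℕ, 1 ≤ n₁ ∧ ∃ S : Finset Circle1,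
      (S.card : ℝ) ≤ Real.exp (η * n₁) ∧
      ∀ (f'' g : Circle1 → ℝ) (β : ℝ) (M : Set Circle1), (∀ x, |f'' x - (f x + toC ψ x)| ≤ δ') →
        SubAct T f'' g β L₁ → IsCal T f'' g β M → ∀ x ∈ M, Cov T S n₁ δ x := by
  obtain ⟨B, hB1, hB⟩ := exists_bump N
  have hB0 : 0 < B := by linarith
  have hΛ := E.hΛ
  have hκ := E.κpos
  obtain ⟨u, β₀, M₀, hu, hM₀⟩ := exists_isCal E hK hf
  set L := K * κ / (1 - τ) with hL
  have hL0 : 0 ≤ L := div_nonneg (by positivity) E.one_sub_pos.le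
  obtain ⟨q, c, hc⟩ := exists_letters (X := Circle1) hδ
  have hq : 1 ≤ q := by have := (c 0).2; omega
  have hq1 : (1 : ℝ) ≤ q := by exact_mod_cast hq
  set N' : ℝ := N + 1 with hN'
  have hN'1 : 1 ≤ N' := by rw [hN']; linarith [(Nat.cast_nonneg N : (0 : ℝ) ≤ N)]
  have hN'0 : 0 < N' := by linarith
  set C₁ := L + K * κ + 1 with hC₁
  have hC₁0 : 0 < C₁ := by positivity
  set η₂ := η / (32 * N' * Λ) with hη₂
  have hη₂0 : 0 < η₂ := by positivity
  -- the requirements on the scale `t`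
  have hexp : ∀ a : ℝ, 0 < a → Tendsto (fun t : ℝ => Real.exp (-(a * t))) atTop (𝓝 0) := fun a ha =>
    Real.tendsto_exp_neg_atTop_nhds_zero.comp (tendsto_id.const_mul_atTop ha)
  have htexp : Tendsto (fun t : ℝ => 3 * C₁ * Real.log q * (t * Real.exp (-(1 / 2 * t)))) atTop (𝓝 0) := by
    have h1 := (Real.tendsto_pow_mul_exp_neg_atTop_nhds_zero 1).comp
      (tendsto_id.const_mul_atTop (show (0 : ℝ) < 1 / 2 by norm_num))
    have h2 := h1.const_mul (3 * C₁ * Real.log q * 2)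
    rw [mul_zero] at h2
    refine h2.congr fun t => ?_
    simp only [Function.comp_apply, id_eq, pow_one]
    ring
  obtain ⟨t₀, ht₀⟩ := (((hexp (1 / (2 * N')) (by positivity)).eventually_lt_const
    (u := min (ε / B) 1) (lt_min (by positivity) one_pos)).and <|
    ((hexp (1 / (4 * N')) (by positivity)).eventually_lt_const (u := δ / 2) (by positivity)).and <|
    (htexp.eventually_lt_const (u := η / 2) (by positivity)).and <|
    (eventually_ge_atTop (8 * N' * Λ)).and (eventually_ge_atTop (32 * N' * Λ / η))).exists_forall_of_atTop
  obtain ⟨t, ht, n, xs, hloop, hn⟩ := exists_loop E hM₀.ne hM₀.maps hη₂0 t₀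
  obtain ⟨hρε, hρδ, htz, ht1, ht2⟩ := ht₀ t ht
  obtain ⟨p, hp, -, hA⟩ := closing_orbit E hK hL0 hf hu hM₀ hloop
  have ht0 : 0 < t := lt_of_lt_of_le (by positivity) ht1
  set ρ := Real.exp (-(1 / (2 * N') * t)) with hρ
  have hρ0 : 0 < ρ := Real.exp_pos _
  have hρN : ρ ^ (N + 1) = Real.exp (-(1 / 2 * t)) := by
    rw [hρ, ← Real.exp_nat_mul]
    congr 1
    push_cast
    rw [← hN']
    field_simp
  set k₀ := ρ ^ (N + 1) with hk₀
  have hk₀0 : 0 < k₀ := by positivity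
  have hk₀2 : k₀ * k₀ = Real.exp (-t) := by
    rw [hρN, ← Real.exp_add]; congr 1; ring
  obtain ⟨χ, hs, h0, h1, hin, hout, -, hNB⟩ := hB (Set.range fun i : ℕ => T^[i] p) ρ hρ0
    (hρε.le.trans (min_le_right _ _))
  set φ : Circle1 → ℝ := fun x => k₀ * (1 - χ (rep x)) with hφ
  have hφ0 : ∀ x, 0 ≤ φ x := fun x => mul_nonneg hk₀0.le (by linarith [h1 (rep x)])
  have hφp : ∀ i, φ (T^[i] p) = 0 := fun i => by
    have := hin (rep (T^[i] p)) (by rw [rep_coe]; exact ⟨i, rfl⟩)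
    simp [hφ, this]
  have hφk : ∀ x, (∀ i, ρ ≤ dist x (T^[i] p)) → k₀ ≤ φ x := fun x hx => by
    have := hout (rep x) (by rw [rep_coe]; rintro _ ⟨i, rfl⟩; exact hx i)
    simp [hφ, this]
  -- block length
  set ℓ := ⌊t / (4 * N' * Λ)⌋₊ with hℓ
  have hℓle : (ℓ : ℝ) ≤ t / (4 * N' * Λ) := Nat.floor_le (by positivity)
  have hℓge : t / (8 * N' * Λ) ≤ ℓ := by
    have h2 := Nat.lt_floor_add_one (t / (4 * N' * Λ))
    rw [← hℓ] at h2
    have h3 : 1 ≤ t / (8 * N' * Λ) := (one_le_div (by positivity)).2 ht1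
    have h4 : t / (4 * N' * Λ) = t / (8 * N' * Λ) + t / (8 * N' * Λ) := by field_simp; norm_num
    linarith
  have hℓ1r : (1 : ℝ) ≤ ℓ := ((one_le_div (by positivity)).2 ht1).trans hℓge
  have hℓ1 : 1 ≤ ℓ := by exact_mod_cast hℓ1r
  have hℓt : (ℓ : ℝ) ≤ t := hℓle.trans (div_le_self ht0.le
    (one_le_mul_of_one_le_of_one_le (by linarith) hΛ))
  have hΛℓ : Λ ^ ℓ * ρ ≤ δ / 2 := by
    refine le_trans ?_ hρδ.le
    have h2 : Λ ≤ Real.exp Λ := by linarith [Real.add_one_le_exp Λ]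
    calc Λ ^ ℓ * ρ ≤ Real.exp Λ ^ ℓ * ρ := by gcongr
      _ = Real.exp (ℓ * Λ + -(1 / (2 * N') * t)) := by rw [← Real.exp_nat_mul, hρ, Real.exp_add]
      _ ≤ _ := by
        refine Real.exp_le_exp.2 ?_
        have h3 : (ℓ : ℝ) * Λ ≤ t / (4 * N') := by
          calc (ℓ : ℝ) * Λ ≤ t / (4 * N' * Λ) * Λ := by gcongr
            _ = _ := by field_simp
        have h4 : 1 / (2 * N') * t = t / (4 * N') + t / (4 * N') := by field_simp; norm_num
        have h5 : 1 / (4 * N') * t = t / (4 * N') := by field_simp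
        linarith
  set a := C₁ * Real.exp (-t) with ha
  have ha0 : 0 < a := by positivity
  set D := L + L₁ with hD
  have hD0 : 0 ≤ D := by positivity
  obtain ⟨J, hJ⟩ := exists_nat_gt (D / (C₁ * k₀ * k₀) + 1)
  have hDJ : D ≤ J * (C₁ * k₀ * k₀) := by
    have : D / (C₁ * k₀ * k₀) ≤ J := by linarith
    rwa [div_le_iff₀ (by positivity)] at this
  have hJ0 : 0 < J := by
    have : (0 : ℝ) < J := lt_of_le_of_lt (by positivity) hJ
    exact_mod_cast this
  set n₁ := J * ℓ with hn₁
  have hn₁1 : 1 ≤ n₁ := Nat.mul_pos hJ0 hℓ1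
  set ζ := 3 * C₁ * k₀ with hζ
  obtain ⟨S, hS, hcov⟩ := exists_few_shadow E hloop.pos hp hℓ1 hΛℓ hq c hc J ⌊ζ * n₁⌋₊
  refine ⟨fun x => -k₀ * (1 - χ x), hs.one_sub.const_mul _, ?_, a / 2, by positivity, n₁, hn₁1, S,
    ?_, ?_⟩
  · refine (hNB.const_mul (-k₀)).mono ?_
    have h2 : |-k₀| * (B / ρ ^ N) = ρ * B := by
      rw [abs_neg, abs_of_pos hk₀0, hk₀, pow_succ]
      field_simp
    have h3 := hρε.le.trans (min_le_left _ _)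
    rw [le_div_iff₀ hB0] at h3
    rw [h2]
    exact h3
  · -- the counting estimate
    have hSr : (S.card : ℝ) ≤ ((q : ℝ) ^ ℓ) ^ ⌊ζ * n₁⌋₊ * ((n : ℝ) + 1) ^ J := by exact_mod_cast hS
    refine hSr.trans ?_
    have hlq : 0 ≤ Real.log q := Real.log_nonneg hq1
    have e1 : ((q : ℝ) ^ ℓ) ^ ⌊ζ * n₁⌋₊ ≤ Real.exp (η / 2 * n₁) := by
      rw [← pow_mul, ← Real.exp_log (show (0 : ℝ) < q by linarith), ← Real.exp_nat_mul]
      refine Real.exp_le_exp.2 ?_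
      push_cast
      have h2 : (⌊ζ * n₁⌋₊ : ℝ) ≤ ζ * n₁ := Nat.floor_le (by positivity)
      calc (ℓ : ℝ) * ⌊ζ * n₁⌋₊ * Real.log q ≤ t * (ζ * n₁) * Real.log q := by gcongr
        _ = 3 * C₁ * Real.log q * (t * Real.exp (-(1 / 2 * t))) * n₁ := by rw [hζ, hρN]; ring
        _ ≤ η / 2 * n₁ := by gcongr
    have e2 : ((n : ℝ) + 1) ^ J ≤ Real.exp (η / 2 * n₁) := by
      have h2 : (n : ℝ) + 1 ≤ Real.exp (1 + η₂ * t) := by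
        have h3 : (1 : ℝ) ≤ Real.exp (η₂ * t) := Real.one_le_exp (by positivity)
        have h4 : (2 : ℝ) ≤ Real.exp 1 := by linarith [Real.add_one_le_exp (1 : ℝ)]
        rw [Real.exp_add]
        have h5 := mul_le_mul_of_nonneg_right h4 (Real.exp_pos (η₂ * t)).le
        linarith
      calc ((n : ℝ) + 1) ^ J ≤ Real.exp (1 + η₂ * t) ^ J := by gcongr
        _ = Real.exp (J * (1 + η₂ * t)) := by rw [← Real.exp_nat_mul]
        _ ≤ _ := by
          refine Real.exp_le_exp.2 ?_
          have h5 : 1 + η₂ * t ≤ η / 2 * ℓ := by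
            have h6 : η / 2 * (t / (8 * N' * Λ)) ≤ η / 2 * ℓ := by gcongr
            have h7 : η₂ * t = η / 4 * (t / (8 * N' * Λ)) := by rw [hη₂]; field_simp; norm_num
            have h8 : 1 ≤ η / 4 * (t / (8 * N' * Λ)) := by
              rw [div_le_iff₀ hη] at ht2
              rw [div_mul_div_comm, le_div_iff₀ (by positivity)]
              linarith
            linarith
          rw [hn₁]; push_cast
          calc (J : ℝ) * (1 + η₂ * t) ≤ J * (η / 2 * ℓ) := by gcongr
            _ = _ := by ring
    calc _ ≤ Real.exp (η / 2 * n₁) * Real.exp (η / 2 * n₁) := by gcongr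
      _ = Real.exp (η * n₁) := by rw [← Real.exp_add]; congr 1; ring
  · intro f'' g β M hf'' hg hM x hx m
    have hosc : ∀ (v : Circle1 → ℝ) (L' : ℝ), 0 ≤ L' → Lip L' v → ∀ y z, v y - v z ≤ L' :=
      fun v L' hL' hv y z => by
        have h2 := (le_abs_self _).trans (hv y z)
        have h3 := mul_le_mul_of_nonneg_left (dist_circle_le_half y z) hL'
        linarith
    have hf1 : ∀ y, f y - φ y - a / 2 ≤ f'' y ∧ f'' y ≤ f y - φ y + a / 2 := fun y => by
      have h2 := abs_le.1 (hf'' y)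
      have h3 : toC (fun x => -k₀ * (1 - χ x)) y = - φ y := by simp only [toC, hφ]; ring
      rw [h3] at h2
      exact ⟨by linarith [h2.1], by linarith [h2.2]⟩
    have hn0 : (1 : ℝ) ≤ n := by exact_mod_cast hloop.pos
    -- the periodic orbit bounds the new maximum from below
    have hβ : β₀ - a - a / 2 ≤ β := by
      have h2 := hg.sum_le n p
      rw [hp] at h2
      have h3 : birkhoffSum T f n p - n * (a / 2) ≤ birkhoffSum T f'' n p := by
        simp only [birkhoffSum]
        calc _ = ∑ k ∈ Finset.range n, (f (T^[k] p) - a / 2) := by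
              rw [Finset.sum_sub_distrib]; simp
          _ ≤ _ := Finset.sum_le_sum fun k _ => by have := (hf1 (T^[k] p)).1; rw [hφp] at this; linarith
      have h4 : n * β₀ - birkhoffSum T f n p ≤ a := hA.trans (by
        rw [ha, hC₁]; exact mul_le_mul_of_nonneg_right (by linarith) (Real.exp_pos _).le)
      have h5 : n * (β₀ - a - a / 2) ≤ n * β := by
        have h6 := le_mul_of_one_le_left ha0.le hn0
        linarith
      exact le_of_mul_le_mul_left h5 (by linarith)
    set y := T^[m] x with hy
    have hyM : y ∈ M := iter_mem hM.maps m x hx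
    have hbad : k₀ * ({t : ℕ | t < J * ℓ ∧ ∀ j, ρ ≤ dist (T^[t] y) (T^[j] p)}.ncard : ℝ) ≤
        birkhoffSum T φ n₁ y := by
      classical
      have h2 : {t : ℕ | t < J * ℓ ∧ ∀ j, ρ ≤ dist (T^[t] y) (T^[j] p)} =
          ((Finset.range n₁).filter fun t => ∀ j, ρ ≤ dist (T^[t] y) (T^[j] p) : Finset ℕ) := by
        ext t; simp [hn₁]
      rw [h2, Set.ncard_coe_finset, birkhoffSum, mul_comm, ← nsmul_eq_mul]
      refine (Finset.card_nsmul_le_sum _ _ k₀ fun t ht => hφk _ (Finset.mem_filter.1 ht).2).trans ?_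
      exact Finset.sum_le_sum_of_subset_of_nonneg (Finset.filter_subset _ _) fun t _ _ => hφ0 _
    have hsum : birkhoffSum T φ n₁ y ≤ n₁ * (2 * a) + D := by
      have h2 := hM.sum_eq n₁ hyM
      have h3 := hu.sum_le n₁ y
      have h4 : birkhoffSum T f'' n₁ y ≤ birkhoffSum T f n₁ y - birkhoffSum T φ n₁ y + n₁ * (a / 2) := by
        simp only [birkhoffSum]
        calc _ ≤ ∑ k ∈ Finset.range n₁, (f (T^[k] y) - φ (T^[k] y) + a / 2) :=
              Finset.sum_le_sum fun k _ => (hf1 _).2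
          _ = _ := by rw [Finset.sum_add_distrib, Finset.sum_sub_distrib]; simp
      have h5 := hosc g L₁ hL₁ hg.lip y (T^[n₁] y)
      have h6 := hosc u L hL0 hu.lip (T^[n₁] y) y
      have h7 : (n₁ : ℝ) * (β₀ - a - a / 2) ≤ n₁ * β := by gcongr
      linarith
    have ha2 : a = C₁ * k₀ * k₀ := by rw [ha, ← hk₀2]; ring
    have h8 : D ≤ n₁ * a := by
      rw [ha2]
      refine hDJ.trans ?_
      have : (J : ℝ) ≤ n₁ := by exact_mod_cast Nat.le_mul_of_pos_right J hℓ1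
      gcongr
    have h9 : k₀ * ({t : ℕ | t < J * ℓ ∧ ∀ j, ρ ≤ dist (T^[t] y) (T^[j] p)}.ncard : ℝ) ≤
        k₀ * (ζ * n₁) := by
      refine hbad.trans (hsum.trans ?_)
      have : k₀ * (ζ * n₁) = 3 * (n₁ * a) := by rw [ha2, hζ]; ring
      rw [this]; linarith
    obtain ⟨p', hp', hcl⟩ := hcov y (Nat.le_floor (le_of_mul_le_mul_left h9 hk₀0))
    refine ⟨p', hp', fun i hi => ?_⟩
    rw [add_comm, Function.iterate_add_apply T i m x]
    exact hcl i hi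

/-! ### Transversality functionals and bounded distortion -/

/-- For `φ = f'` this is `(S_n f)' / (F^n)'` at `y`: the derivative of the Birkhoff sum `S_n f`
along the inverse branch of `F^n` through `y`, evaluated at `F^n y`. -/
noncomputable def RR (F φ : ℝ → ℝ) (n : ℕ) (y : ℝ) : ℝ :=
  ∑ i ∈ Finset.range n, φ (F^[i] y) * (deriv F^[n - i] (F^[i] y))⁻¹

namespace Lift
variable {F : ℝ → ℝ} {d : ℤ} {C l Λ : ℝ}

lemma deriv_iter_add (H : Lift F d C l Λ) (j k : ℕ) (z : ℝ) :
    deriv F^[j + k] z = deriv F^[j] (F^[k] z) * deriv F^[k] z := by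
  rw [Function.iterate_add]
  exact deriv_comp z ((H.diff_iter j) _) ((H.diff_iter k) _)

lemma deriv_iter_ne (H : Lift F d C l Λ) (n : ℕ) (z : ℝ) : deriv F^[n] z ≠ 0 := by
  intro h
  have h1 := H.low n z
  have h2 : 0 < C * l ^ n := mul_pos H.hC (pow_pos H.l0 n)
  rw [h, abs_zero] at h1
  linarith

lemma deriv_iter_per (H : Lift F d C l Λ) (n : ℕ) (z : ℝ) (k : ℤ) :
    deriv F^[n] (z + k) = deriv F^[n] z := by
  rw [← deriv_comp_add_const]
  simp_rw [H.per_iter]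
  simp

lemma inv_deriv_le (H : Lift F d C l Λ) (n : ℕ) (z : ℝ) :
    |(deriv F^[n] z)⁻¹| ≤ C⁻¹ * (1 / l) ^ n := by
  have h1 := H.low n z
  have h2 : 0 < C * l ^ n := mul_pos H.hC (pow_pos H.l0 n)
  rw [abs_inv]
  refine (inv_anti₀ h2 h1).trans (le_of_eq ?_)
  rw [mul_inv, one_div, inv_pow]

lemma pow_tail (H : Lift F d C l Λ) (n : ℕ) :
    ∑ i ∈ Finset.range n, (1 / l) ^ (n - i) ≤ 1 / (1 - 1 / l) := by
  obtain ⟨κ, δ, E, -⟩ := H.expSys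
  exact E.geom_le' n

lemma one_sub_pos (H : Lift F d C l Λ) : 0 < 1 - 1 / l := by
  obtain ⟨κ, δ, E, -⟩ := H.expSys
  exact E.one_sub_pos

lemma RR_per (H : Lift F d C l Λ) {φ : ℝ → ℝ} (hφ : ∀ x, φ (x + 1) = φ x) (n : ℕ) (y : ℝ) (k : ℤ) :
    RR F φ n (y + k) = RR F φ n y := by
  unfold RR
  refine Finset.sum_congr rfl fun i _ => ?_
  have h : F^[i] (y + k) = F^[i] y + ((d ^ i * k : ℤ) : ℝ) := by rw [H.per_iter]; push_cast; rfl
  rw [h, per_int_of_per hφ, H.deriv_iter_per]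

lemma RR_abs_le (H : Lift F d C l Λ) {φ : ℝ → ℝ} {B : ℝ} (hB : ∀ x, |φ x| ≤ B) (n : ℕ) (y : ℝ) :
    |RR F φ n y| ≤ B * (C⁻¹ / (1 - 1 / l)) := by
  have hB0 : 0 ≤ B := (abs_nonneg _).trans (hB 0)
  have hC := inv_pos.2 H.hC
  calc |RR F φ n y| ≤ ∑ i ∈ Finset.range n, |φ (F^[i] y) * (deriv F^[n - i] (F^[i] y))⁻¹| :=
        Finset.abs_sum_le_sum_abs _ _
    _ ≤ ∑ i ∈ Finset.range n, B * C⁻¹ * (1 / l) ^ (n - i) := by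
        refine Finset.sum_le_sum fun i _ => ?_
        rw [abs_mul, mul_assoc]
        exact mul_le_mul (hB _) (H.inv_deriv_le _ _) (abs_nonneg _) hB0
    _ = B * C⁻¹ * ∑ i ∈ Finset.range n, (1 / l) ^ (n - i) := by rw [Finset.mul_sum]
    _ ≤ B * C⁻¹ * (1 / (1 - 1 / l)) := mul_le_mul_of_nonneg_left (H.pow_tail n) (by positivity)
    _ = _ := by ring

lemma RR_add_fun (φ ψ : ℝ → ℝ) (n : ℕ) (y : ℝ) :
    RR F (fun x => φ x + ψ x) n y = RR F φ n y + RR F ψ n y := by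
  simp only [RR, add_mul, Finset.sum_add_distrib]

lemma RR_smul (φ : ℝ → ℝ) (c : ℝ) (n : ℕ) (y : ℝ) :
    RR F (fun x => c * φ x) n y = c * RR F φ n y := by
  simp only [RR, Finset.mul_sum, mul_assoc]

lemma RR_sum {ι : Type*} (s : Finset ι) (φ : ι → ℝ → ℝ) (n : ℕ) (y : ℝ) :
    RR F (fun x => ∑ k ∈ s, φ k x) n y = ∑ k ∈ s, RR F (φ k) n y := by
  simp only [RR, Finset.sum_mul]
  rw [Finset.sum_comm]

lemma RR_split (H : Lift F d C l Λ) (φ : ℝ → ℝ) (m n : ℕ) (y : ℝ) :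
    RR F φ (m + n) y = RR F φ m y * (deriv F^[n] (F^[m] y))⁻¹ + RR F φ n (F^[m] y) := by
  unfold RR
  rw [Finset.sum_range_add]
  congr 1
  · rw [Finset.sum_mul]
    refine Finset.sum_congr rfl fun i hi => ?_
    have hi := Finset.mem_range.1 hi
    have h1 : m + n - i = n + (m - i) := by omega
    rw [h1, H.deriv_iter_add, ← Function.iterate_add_apply F (m - i) i, mul_inv,
      Nat.sub_add_cancel hi.le]
    ring
  · refine Finset.sum_congr rfl fun i _ => ?_
    rw [← Function.iterate_add_apply F i m, show m + n - (m + i) = n - i by omega, add_comm i m]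

/-- Replacing a long past by its last `N` steps changes the functional by `O(l^{-N})`. -/
lemma RR_trunc (H : Lift F d C l Λ) {φ : ℝ → ℝ} {B : ℝ} (hB : ∀ x, |φ x| ≤ B) (m n : ℕ) (y : ℝ) :
    |RR F φ (m + n) y - RR F φ n (F^[m] y)| ≤ B * (C⁻¹ / (1 - 1 / l)) * (C⁻¹ * (1 / l) ^ n) := by
  rw [H.RR_split, add_sub_cancel_right, abs_mul]
  exact mul_le_mul (H.RR_abs_le hB _ _) (H.inv_deriv_le _ _) (abs_nonneg _)
    ((abs_nonneg _).trans (H.RR_abs_le hB m y))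

/-- Bounded distortion of the inverse derivative, by telescoping the chain rule. -/
lemma inv_deriv_lip (H : Lift F d C l Λ) {Kh : ℝ} (hK0 : 0 ≤ Kh)
    (hh : ∀ x y, |(deriv F x)⁻¹ - (deriv F y)⁻¹| ≤ Kh * |x - y|) (k : ℕ) (z z' : ℝ) :
    |(deriv F^[k] z)⁻¹ - (deriv F^[k] z')⁻¹| ≤
      (C⁻¹ ^ 3 * Kh * l / (1 - 1 / l)) * (1 / l) ^ k * |F^[k] z - F^[k] z'| := by
  have hl := H.l0
  have hC := inv_pos.2 H.hC
  have hid : ∀ k, (deriv F^[k] z)⁻¹ - (deriv F^[k] z')⁻¹ = ∑ j ∈ Finset.range k,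
      (deriv F^[j] z)⁻¹ * ((deriv F (F^[j] z))⁻¹ - (deriv F (F^[j] z'))⁻¹) *
        (deriv F^[k - j - 1] (F^[j + 1] z'))⁻¹ := by
    intro k
    induction k with
    | zero => simp
    | succ k ih =>
      have hs : ∀ w, (deriv F^[k + 1] w)⁻¹ = (deriv F (F^[k] w))⁻¹ * (deriv F^[k] w)⁻¹ := fun w => by
        rw [add_comm, H.deriv_iter_add, mul_inv, Function.iterate_one]
      rw [hs, hs, Finset.sum_range_succ]
      have h2 : ∑ j ∈ Finset.range k, (deriv F^[j] z)⁻¹ *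
          ((deriv F (F^[j] z))⁻¹ - (deriv F (F^[j] z'))⁻¹) *
          (deriv F^[k + 1 - j - 1] (F^[j + 1] z'))⁻¹ =
          (deriv F (F^[k] z'))⁻¹ * ((deriv F^[k] z)⁻¹ - (deriv F^[k] z')⁻¹) := by
        rw [ih, Finset.mul_sum]
        refine Finset.sum_congr rfl fun j hj => ?_
        have hj := Finset.mem_range.1 hj
        have e1 : k + 1 - j - 1 = 1 + (k - j - 1) := by omega
        rw [e1, H.deriv_iter_add, mul_inv, Function.iterate_one,
          ← Function.iterate_add_apply F (k - j - 1) (j + 1), show k - j - 1 + (j + 1) = k by omega]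
        ring
      rw [h2]
      simp
      ring
  rw [hid]
  have hterm : ∀ j ∈ Finset.range k, |(deriv F^[j] z)⁻¹ *
      ((deriv F (F^[j] z))⁻¹ - (deriv F (F^[j] z'))⁻¹) * (deriv F^[k - j - 1] (F^[j + 1] z'))⁻¹| ≤
      (C⁻¹ ^ 3 * Kh * l * (1 / l) ^ k * |F^[k] z - F^[k] z'|) * (1 / l) ^ (k - j) := by
    intro j hj
    have hj := Finset.mem_range.1 hj
    have h3 : |(deriv F (F^[j] z))⁻¹ - (deriv F (F^[j] z'))⁻¹| ≤
        Kh * (C⁻¹ * (1 / l) ^ (k - j) * |F^[k] z - F^[k] z'|) := by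
      refine (hh _ _).trans (mul_le_mul_of_nonneg_left ?_ hK0)
      have := H.contract (k - j) (F^[j] z) (F^[j] z')
      rw [← Function.iterate_add_apply F (k - j) j, ← Function.iterate_add_apply F (k - j) j,
        Nat.sub_add_cancel hj.le] at this
      rwa [one_div C] at this
    rw [abs_mul, abs_mul]
    have h4 := mul_le_mul (mul_le_mul (H.inv_deriv_le j z) h3 (abs_nonneg _) (by positivity))
      (H.inv_deriv_le (k - j - 1) (F^[j + 1] z')) (abs_nonneg _) (by positivity)
    refine h4.trans (le_of_eq ?_)
    obtain ⟨i, rfl⟩ : ∃ i, k = j + i + 1 := ⟨k - j - 1, by omega⟩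
    rw [show j + i + 1 - j = i + 1 by omega, show i + 1 - 1 = i by omega]
    have hl1 : l * (1 / l) = 1 := by field_simp
    calc _ = C⁻¹ ^ 3 * Kh * (1 / l) ^ j * (1 / l) ^ i * |F^[j + i + 1] z - F^[j + i + 1] z'| *
          (1 / l) ^ (i + 1) := by ring
      _ = C⁻¹ ^ 3 * Kh * (l * (1 / l)) * (1 / l) ^ j * (1 / l) ^ i *
          |F^[j + i + 1] z - F^[j + i + 1] z'| * (1 / l) ^ (i + 1) := by rw [hl1]; ring
      _ = _ := by ring
  refine (Finset.abs_sum_le_sum_abs _ _).trans ((Finset.sum_le_sum hterm).trans ?_)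
  rw [← Finset.mul_sum]
  refine (mul_le_mul_of_nonneg_left (H.pow_tail k) (by positivity)).trans (le_of_eq ?_)
  ring

lemma RR_lip (H : Lift F d C l Λ) {Kh : ℝ} (hK0 : 0 ≤ Kh)
    (hh : ∀ x y, |(deriv F x)⁻¹ - (deriv F y)⁻¹| ≤ Kh * |x - y|) {B B' : ℝ}
    (hB0 : 0 ≤ B) (hB0' : 0 ≤ B') :
    ∃ D, 0 ≤ D ∧ ∀ φ : ℝ → ℝ, (∀ x, |φ x| ≤ B) → (∀ x y, |φ x - φ y| ≤ B' * |x - y|) →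
      ∀ n y y', |RR F φ n y - RR F φ n y'| ≤ D * |F^[n] y - F^[n] y'| := by
  have hl := H.l0
  have hC := inv_pos.2 H.hC
  have h1l := H.one_sub_pos
  set D₀ := C⁻¹ ^ 3 * Kh * l / (1 - 1 / l) with hD₀
  have hD0 : 0 ≤ D₀ := by positivity
  refine ⟨(B * D₀ + B' * C⁻¹ * C⁻¹) * (1 / (1 - 1 / l)), by positivity, fun φ hB hB' n y y' => ?_⟩
  unfold RR
  rw [← Finset.sum_sub_distrib]
  have hterm : ∀ i ∈ Finset.range n, |φ (F^[i] y) * (deriv F^[n - i] (F^[i] y))⁻¹ -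
      φ (F^[i] y') * (deriv F^[n - i] (F^[i] y'))⁻¹| ≤
      ((B * D₀ + B' * C⁻¹ * C⁻¹) * |F^[n] y - F^[n] y'|) * (1 / l) ^ (n - i) := by
    intro i hi
    have hi := Finset.mem_range.1 hi
    have e : ∀ w, F^[n - i] (F^[i] w) = F^[n] w := fun w => by
      rw [← Function.iterate_add_apply F (n - i) i, Nat.sub_add_cancel hi.le]
    have h1 := H.inv_deriv_lip hK0 hh (n - i) (F^[i] y) (F^[i] y')
    have h2 := H.contract (n - i) (F^[i] y) (F^[i] y')
    rw [e, e] at h1 h2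
    have hp1 : (1 / l) ^ (n - i) ≤ 1 := pow_le_one₀ (by positivity) (by
      rw [div_le_one hl]; exact H.hl.le)
    have h3 : |φ (F^[i] y) - φ (F^[i] y')| ≤ B' * (C⁻¹ * |F^[n] y - F^[n] y'|) := by
      refine (hB' _ _).trans (mul_le_mul_of_nonneg_left (h2.trans ?_) hB0')
      rw [one_div C]
      refine mul_le_mul_of_nonneg_right ?_ (abs_nonneg _)
      exact mul_le_of_le_one_right hC.le hp1
    have e2 : φ (F^[i] y) * (deriv F^[n - i] (F^[i] y))⁻¹ -
      φ (F^[i] y') * (deriv F^[n - i] (F^[i] y'))⁻¹ =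
      φ (F^[i] y) * ((deriv F^[n - i] (F^[i] y))⁻¹ - (deriv F^[n - i] (F^[i] y'))⁻¹) +
      (φ (F^[i] y) - φ (F^[i] y')) * (deriv F^[n - i] (F^[i] y'))⁻¹ := by ring
    rw [e2]
    refine (abs_add_le _ _).trans ?_
    rw [abs_mul, abs_mul]
    have a1 := mul_le_mul (hB (F^[i] y)) h1 (abs_nonneg _) hB0
    have a2 := mul_le_mul h3 (H.inv_deriv_le (n - i) (F^[i] y')) (abs_nonneg _) (by positivity)
    refine (add_le_add a1 a2).trans (le_of_eq ?_)
    ring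
  refine (Finset.abs_sum_le_sum_abs _ _).trans ((Finset.sum_le_sum hterm).trans ?_)
  rw [← Finset.mul_sum]
  refine (mul_le_mul_of_nonneg_left (H.pow_tail n) (by positivity)).trans (le_of_eq ?_)
  ring

/-- The inverse derivative of a `C²` expanding lift is Lipschitz. -/
lemma inv_deriv_lip_one (H : Lift F d C l Λ) (hF : ContDiff ℝ 2 F) :
    ∃ Kh, 0 ≤ Kh ∧ ∀ x y, |(deriv F x)⁻¹ - (deriv F y)⁻¹| ≤ Kh * |x - y| := by
  have hd1 : ContDiff ℝ 1 (deriv F) := ((contDiff_succ_iff_deriv (n := 1)).1 (by exact_mod_cast hF)).2.2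
  have hne : ∀ x, deriv F x ≠ 0 := fun x => by simpa using H.deriv_iter_ne 1 x
  have hinv : ContDiff ℝ 1 (fun x => (deriv F x)⁻¹) := hd1.inv hne
  have hper : ∀ x, (fun x => (deriv F x)⁻¹) (x + 1) = (fun x => (deriv F x)⁻¹) x := fun x => by
    have := H.deriv_iter_per 1 x 1
    simp only [Function.iterate_one, Int.cast_one] at this
    simp only [this]
  obtain ⟨B, hB1, hB⟩ := periodic_bound (hinv.continuous_deriv le_rfl) (periodic_deriv hper)
  refine ⟨B, by linarith, fun x y => ?_⟩
  have := convex_univ.norm_image_sub_le_of_norm_deriv_le (f := fun x => (deriv F x)⁻¹) (C := B)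
    (fun x _ => hinv.differentiable one_ne_zero x) (fun x _ => hB x) (mem_univ y) (mem_univ x)
  simpa using this

/-- The derivative of `S_n f` along an inverse branch of `F^n` is the transversality functional. -/
lemma hasDerivAt_birkhoff (H : Lift F d C l Λ) {f : ℝ → ℝ} (hf : Differentiable ℝ f) (n : ℕ)
    (y : ℝ) :
    HasDerivAt (fun y => ∑ i ∈ Finset.range n, f (F^[i] y))
      (RR F (deriv f) n y * deriv F^[n] y) y := by
  have h1 : HasDerivAt (fun y => ∑ i ∈ Finset.range n, f (F^[i] y))
      (∑ i ∈ Finset.range n, deriv f (F^[i] y) * deriv F^[i] y) y := by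
    refine HasDerivAt.fun_sum fun i _ => ?_
    exact HasDerivAt.comp y (hf _).hasDerivAt ((H.diff_iter i) y).hasDerivAt
  convert h1 using 1
  unfold RR
  rw [Finset.sum_mul]
  refine Finset.sum_congr rfl fun i hi => ?_
  have hi := Finset.mem_range.1 hi
  have := H.deriv_iter_add (n - i) i y
  rw [Nat.sub_add_cancel hi.le] at this
  rw [this]
  have := H.deriv_iter_ne (n - i) (F^[i] y)
  field_simp

end Lift

/-! ### Perturbations separating two branches -/

/-- A bump of height comparable to its width: slope one at `e`, flat away from `e`, with slope
bounded independently of the width. -/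
lemma exists_slope : ∃ B : ℝ, 1 ≤ B ∧ ∀ (e : Circle1) (ρ : ℝ), 0 < ρ → ρ ≤ 1 → ∃ φ, Sm φ ∧
    (∀ x, |deriv φ x| ≤ B) ∧ (∀ x : ℝ, (x : Circle1) = e → deriv φ x = 1) ∧
    (∀ x : ℝ, ρ ≤ dist (x : Circle1) e → deriv φ x = 0) := by
  obtain ⟨B, hB1, hB⟩ := exists_bump 1
  refine ⟨1 + B, by linarith, fun e ρ hρ hρ1 => ?_⟩
  obtain ⟨ψ, hψ, h0, h1, hone, hzero, hNB, -⟩ := hB {e} ρ hρ hρ1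
  obtain ⟨a, ha⟩ := exists_lift e
  have hpi := Real.pi_pos
  set S : ℝ → ℝ := fun x => Real.sin (2 * Real.pi * (x - a)) / (2 * Real.pi) with hS
  have hSd : ∀ x, HasDerivAt S (Real.cos (2 * Real.pi * (x - a))) x := fun x => by
    have h2 : HasDerivAt (fun x : ℝ => 2 * Real.pi * (x - a)) (2 * Real.pi) x := by
      simpa using ((hasDerivAt_id x).sub_const a).const_mul (2 * Real.pi)
    have h3 := (h2.sin).div_const (2 * Real.pi)
    have h4 : (2 * Real.pi) ≠ 0 := by positivity
    rwa [mul_div_cancel_right₀ _ h4] at h3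
  have hSper : ∀ x, S (x + 1) = S x := fun x => by
    simp only [hS]
    rw [show 2 * Real.pi * (x + 1 - a) = 2 * Real.pi * (x - a) + 2 * Real.pi by ring,
      Real.sin_add_two_pi]
  have hSm : Sm S := ⟨by simp only [hS]; fun_prop, hSper⟩
  have hSle : ∀ x : ℝ, |S x| ≤ dist (x : Circle1) e := fun x => by
    obtain ⟨b, hb, hxb⟩ := exists_lift_near x e
    obtain ⟨k, hk⟩ := coe_eq_iff.1 (hb.trans ha.symm)
    have h4 : S x = Real.sin (2 * Real.pi * (x - b)) / (2 * Real.pi) := by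
      simp only [hS]
      rw [hk, show 2 * Real.pi * (x - (a + k)) = 2 * Real.pi * (x - a) - k * (2 * Real.pi) by ring,
        Real.sin_sub_int_mul_two_pi]
    rw [h4, ← hxb, abs_div, abs_of_pos (by positivity : 0 < 2 * Real.pi), div_le_iff₀ (by positivity)]
    refine Real.abs_sin_le_abs.trans ?_
    rw [abs_mul, abs_of_pos (by positivity : 0 < 2 * Real.pi), mul_comm]
  have hder : ∀ x, deriv (fun x => S x * ψ x) x =
      Real.cos (2 * Real.pi * (x - a)) * ψ x + S x * deriv ψ x := fun x =>
    ((hSd x).mul (hψ.diff x).hasDerivAt).deriv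
  have hflat : ∀ x : ℝ, ρ ≤ dist (x : Circle1) e → ψ x = 0 ∧ deriv ψ x = 0 := fun x hx => by
    have hx0 : ψ x = 0 := hzero x (by simpa using hx)
    refine ⟨hx0, ?_⟩
    have : IsLocalMin ψ x := Filter.Eventually.of_forall fun y => by rw [hx0]; exact h0 y
    exact this.deriv_eq_zero
  refine ⟨fun x => S x * ψ x, hSm.mul hψ, fun x => ?_, fun x hx => ?_, fun x hx => ?_⟩
  · rw [hder]
    refine (abs_add_le _ _).trans (add_le_add ?_ ?_)
    · rw [abs_mul]
      refine mul_le_one₀ (Real.abs_cos_le_one _) (abs_nonneg _) ?_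
      rw [abs_of_nonneg (h0 x)]
      exact h1 x
    · by_cases hx : ρ ≤ dist (x : Circle1) e
      · rw [(hflat x hx).2]; simp; linarith
      · push Not at hx
        rw [abs_mul]
        have h5 := hNB.abs_deriv_le le_rfl x
        have h6 := mul_le_mul ((hSle x).trans hx.le) h5 (abs_nonneg _) hρ.le
        refine h6.trans (le_of_eq ?_)
        field_simp
  · rw [hder]
    have h7 : S x = 0 := by
      have := hSle x
      rw [hx, dist_self] at this
      exact abs_nonpos_iff.1 this
    obtain ⟨k, hk⟩ := coe_eq_iff.1 (hx.trans ha.symm)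
    rw [h7, hone x (by simp [hx]), hk,
      show 2 * Real.pi * (a + k - a) = k * (2 * Real.pi) by ring, Real.cos_int_mul_two_pi]
    ring
  · rw [hder, (hflat x hx).1, (hflat x hx).2]
    ring

lemma toC_continuous {g : ℝ → ℝ} (hg : Continuous g) (hp : ∀ x, g (x + 1) = g x) :
    Continuous (toC g) := by
  have h : Continuous (fun x : ℝ => toC g (x : Circle1)) := by
    simp_rw [toC_coe hp]; exact hg
  exact (QuotientAddGroup.isQuotientMap_mk (N := AddSubgroup.zmultiples (1 : ℝ))).continuous_iff.2 h

namespace Lift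
variable {F : ℝ → ℝ} {d : ℤ} {C l Λ : ℝ}

/-- Multipliers of periodic points are at least `l`, even if `C < 1`. -/
lemma multiplier_le (H : Lift F d C l Λ) {p : ℕ} (hp : 1 ≤ p) {x : ℝ}
    (hx : (cmap F)^[p] (x : Circle1) = x) : l ≤ |deriv F^[p] x| := by
  have hl := H.l0
  rw [H.iter_coe, coe_eq_iff] at hx
  obtain ⟨k, hk⟩ := hx
  have hpow : ∀ j, deriv F^[j * p] x = deriv F^[p] x ^ j := by
    intro j
    induction j with
    | zero => simp
    | succ j ih => rw [Nat.succ_mul, H.deriv_iter_add, hk, H.deriv_iter_per, ih, pow_succ]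
  by_contra hlt
  push Not at hlt
  have hlp : |deriv F^[p] x| < l ^ p := hlt.trans_le (le_self_pow₀ H.hl.le (by omega))
  have h0 : |deriv F^[p] x| / l ^ p < 1 := (div_lt_one (by positivity)).2 hlp
  obtain ⟨j, hj⟩ := exists_pow_lt_of_lt_one H.hC h0
  have h1 := H.low (j * p) x
  rw [hpow, abs_pow, mul_comm j p, pow_mul] at h1
  rw [div_pow, div_lt_iff₀ (by positivity)] at hj
  linarith

/-- Two distinct preimages of a point, the first of them not periodic, are separated by a slope
function at the first one. -/
lemma exact_pair_aux (H : Lift F d C l Λ) {B : ℝ} (hB : ∀ (e : Circle1) (ρ : ℝ), 0 < ρ → ρ ≤ 1 →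
    ∃ φ, Sm φ ∧ (∀ x, |deriv φ x| ≤ B) ∧ (∀ x : ℝ, (x : Circle1) = e → deriv φ x = 1) ∧
    (∀ x : ℝ, ρ ≤ dist (x : Circle1) e → deriv φ x = 0)) (M : ℕ) (a b : ℝ)
    (heq : (cmap F)^[M + 1] (a : Circle1) = (cmap F)^[M + 1] (b : Circle1))
    (hne : (cmap F)^[M] (a : Circle1) ≠ (cmap F)^[M] (b : Circle1))
    (hnp : ∀ k, 1 ≤ k → (cmap F)^[k] ((cmap F)^[M] (a : Circle1)) ≠ (cmap F)^[M] (a : Circle1)) :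
    ∃ φ, Sm φ ∧ (∀ x, |deriv φ x| ≤ B) ∧
      1 / Λ * (1 - 1 / l) ≤ |RR F (deriv φ) (M + 1) a - RR F (deriv φ) (M + 1) b| := by
  classical
  set T := cmap F with hT
  set e := T^[M] (a : Circle1) with he
  have hl := H.l0
  have hΛ := H.Λ0
  have h1l := H.one_sub_pos
  set Q : Finset Circle1 := (((Finset.range (M + 1)).image fun i => T^[i] (a : Circle1)) ∪
    ((Finset.range (M + 1)).image fun i => T^[i] (b : Circle1))).erase e with hQ
  obtain ⟨ρ, hρ0, hρ1, hρ⟩ : ∃ ρ : ℝ, 0 < ρ ∧ ρ ≤ 1 ∧ ∀ w ∈ Q, ρ ≤ dist w e := by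
    have : ∀ᶠ ρ : ℝ in 𝓝[>] 0, ∀ w ∈ Q, ρ ≤ dist w e := by
      rw [Filter.eventually_all_finset]
      intro w hw
      have hw' : 0 < dist w e := dist_pos.2 (Finset.ne_of_mem_erase hw)
      filter_upwards [Ioo_mem_nhdsGT hw'] with ρ hρ using hρ.2.le
    have h2 : ∀ᶠ ρ : ℝ in 𝓝[>] 0, 0 < ρ ∧ ρ < 1 := Ioo_mem_nhdsGT one_pos
    obtain ⟨ρ, h, h3⟩ := (this.and h2).exists
    exact ⟨ρ, h3.1, h3.2.le, h⟩
  obtain ⟨φ, hφ, hφB, hφ1, hφ0⟩ := hB e ρ hρ0 hρ1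
  refine ⟨φ, hφ, hφB, ?_⟩
  have hza : ∀ i ≤ M, T^[i] (a : Circle1) ≠ e → deriv φ (F^[i] a) = 0 := fun i hi h => by
    apply hφ0
    rw [← H.iter_coe]
    refine hρ _ (Finset.mem_erase.2 ⟨h, Finset.mem_union_left _ (Finset.mem_image.2 ⟨i, ?_, rfl⟩)⟩)
    exact Finset.mem_range.2 (by omega)
  have hzb : ∀ i ≤ M, T^[i] (b : Circle1) ≠ e → deriv φ (F^[i] b) = 0 := fun i hi h => by
    apply hφ0
    rw [← H.iter_coe]
    refine hρ _ (Finset.mem_erase.2 ⟨h, Finset.mem_union_right _ (Finset.mem_image.2 ⟨i, ?_, rfl⟩)⟩)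
    exact Finset.mem_range.2 (by omega)
  have hRa : RR F (deriv φ) (M + 1) a = (deriv F (F^[M] a))⁻¹ := by
    unfold RR
    rw [Finset.sum_eq_single M]
    · rw [hφ1 _ (by rw [← H.iter_coe]), one_mul, Nat.add_sub_cancel_left, Function.iterate_one]
    · intro i hi hiM
      have hi := Finset.mem_range.1 hi
      rw [hza i (by omega) ?_, zero_mul]
      intro h
      refine hnp (M - i) (by omega) ?_
      conv_lhs => rw [← h]
      rw [← Function.iterate_add_apply T (M - i) i, Nat.sub_add_cancel (by omega)]
    · simp
  have hDa : 1 / Λ ≤ |(deriv F (F^[M] a))⁻¹| := by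
    rw [abs_inv, one_div]
    exact inv_anti₀ (abs_pos.2 (by simpa using H.deriv_iter_ne 1 (F^[M] a))) (H.up _)
  have h1l1 : 1 - 1 / l ≤ 1 := by
    have : 0 < 1 / l := by positivity
    linarith
  by_cases hex : ∃ i ≤ M, T^[i] (b : Circle1) = e
  · obtain ⟨i, hiM, hi⟩ := hex
    have hilt : i < M := lt_of_le_of_ne hiM (by rintro rfl; exact hne hi.symm)
    have hRb : RR F (deriv φ) (M + 1) b = (deriv F^[M + 1 - i] (F^[i] b))⁻¹ := by
      unfold RR
      rw [Finset.sum_eq_single i]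
      · rw [hφ1 _ (by rw [← H.iter_coe]; exact hi), one_mul]
      · intro j hj hji
        have hj := Finset.mem_range.1 hj
        rw [hzb j (by omega) ?_, zero_mul]
        intro h
        rcases lt_or_gt_of_ne hji with h' | h'
        · refine hnp (i - j) (by omega) ?_
          conv_lhs => rw [← h]
          rw [← Function.iterate_add_apply T (i - j) j, Nat.sub_add_cancel h'.le, hi]
        · refine hnp (j - i) (by omega) ?_
          conv_lhs => rw [← hi]
          rw [← Function.iterate_add_apply T (j - i) i, Nat.sub_add_cancel h'.le, h]
      · intro h; exact absurd (Finset.mem_range.2 (by omega)) h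
    have hper : T^[M - i] ((F (F^[i] b) : ℝ) : Circle1) = ((F (F^[i] b) : ℝ) : Circle1) := by
      have e1 : ((F (F^[i] b) : ℝ) : Circle1) = T e := by
        rw [← Function.iterate_succ_apply' F i b, ← H.iter_coe, Function.iterate_succ_apply', hi]
      have e2 : T^[M - i] (T e) = T^[M + 1] (b : Circle1) := by
        rw [← hi, ← Function.iterate_succ_apply' T i, ← Function.iterate_add_apply T (M - i) (i + 1)]
        congr 1
        omega
      rw [e1, e2, ← heq, Function.iterate_succ_apply']
    have hmul := H.multiplier_le (by omega : 1 ≤ M - i) hper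
    have hD : deriv F (F^[i] b) = deriv F (F^[M] a) := by
      have : ((F^[i] b : ℝ) : Circle1) = ((F^[M] a : ℝ) : Circle1) := by
        rw [← H.iter_coe, ← H.iter_coe]; exact hi
      obtain ⟨k, hk⟩ := coe_eq_iff.1 this
      rw [hk]
      simpa using H.deriv_iter_per 1 (F^[M] a) k
    have hRb' : RR F (deriv φ) (M + 1) b =
        (deriv F (F^[M] a))⁻¹ * (deriv F^[M - i] (F (F^[i] b)))⁻¹ := by
      rw [hRb, show M + 1 - i = (M - i) + 1 by omega, H.deriv_iter_add, Function.iterate_one, hD,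
        mul_inv, mul_comm]
    rw [hRa, hRb', show ∀ u v : ℝ, u - u * v = u * (1 - v) by intros; ring, abs_mul]
    refine mul_le_mul hDa ?_ h1l.le (abs_nonneg _)
    have h3 : |(deriv F^[M - i] (F (F^[i] b)))⁻¹| ≤ 1 / l := by
      rw [abs_inv, one_div]
      exact inv_anti₀ hl hmul
    have := le_abs_self (deriv F^[M - i] (F (F^[i] b)))⁻¹
    exact le_trans (by linarith) (le_abs_self _)
  · push Not at hex
    have hRb : RR F (deriv φ) (M + 1) b = 0 := by
      unfold RR
      refine Finset.sum_eq_zero fun i hi => ?_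
      have hi := Finset.mem_range.1 hi
      rw [hzb i (by omega) (hex i (by omega)), zero_mul]
    rw [hRa, hRb, sub_zero]
    exact (mul_le_of_le_one_right (by positivity) h1l1).trans hDa

lemma exact_pair (H : Lift F d C l Λ) {B : ℝ} (hB : ∀ (e : Circle1) (ρ : ℝ), 0 < ρ → ρ ≤ 1 →
    ∃ φ, Sm φ ∧ (∀ x, |deriv φ x| ≤ B) ∧ (∀ x : ℝ, (x : Circle1) = e → deriv φ x = 1) ∧
    (∀ x : ℝ, ρ ≤ dist (x : Circle1) e → deriv φ x = 0)) (M : ℕ) (a b : ℝ)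
    (heq : (cmap F)^[M + 1] (a : Circle1) = (cmap F)^[M + 1] (b : Circle1))
    (hne : (cmap F)^[M] (a : Circle1) ≠ (cmap F)^[M] (b : Circle1)) :
    ∃ φ, Sm φ ∧ (∀ x, |deriv φ x| ≤ B) ∧
      1 / Λ * (1 - 1 / l) ≤ |RR F (deriv φ) (M + 1) a - RR F (deriv φ) (M + 1) b| := by
  by_cases h : ∀ k, 1 ≤ k → (cmap F)^[k] ((cmap F)^[M] (a : Circle1)) ≠ (cmap F)^[M] (a : Circle1)
  · exact H.exact_pair_aux hB M a b heq hne h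
  by_cases h' : ∀ k, 1 ≤ k → (cmap F)^[k] ((cmap F)^[M] (b : Circle1)) ≠ (cmap F)^[M] (b : Circle1)
  · obtain ⟨φ, h1, h2, h3⟩ := H.exact_pair_aux hB M b a heq.symm hne.symm h'
    exact ⟨φ, h1, h2, by rwa [abs_sub_comm]⟩
  -- two periodic points with the same image coincide
  push Not at h h'
  exfalso
  obtain ⟨k, hk, hka⟩ := h
  obtain ⟨m, hm, hmb⟩ := h'
  apply hne
  set T := cmap F
  have hfa : T^[m * k] (T^[M] (a : Circle1)) = T^[M] (a : Circle1) := by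
    rw [mul_comm]; exact (show Function.IsPeriodicPt T k _ from hka).mul_const m
  have hfb : T^[m * k] (T^[M] (b : Circle1)) = T^[M] (b : Circle1) :=
    (show Function.IsPeriodicPt T m _ from hmb).mul_const k
  obtain ⟨j, hj⟩ : ∃ j, m * k = j + 1 := ⟨m * k - 1, by have := Nat.mul_pos hm hk; omega⟩
  rw [← hfa, ← hfb, hj, Function.iterate_succ_apply, Function.iterate_succ_apply,
    ← Function.iterate_succ_apply' T M, ← Function.iterate_succ_apply' T M, heq]

lemma RR_continuous (H : Lift F d C l Λ) {φ : ℝ → ℝ} (hφ : Continuous φ) (n : ℕ) :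
    Continuous (RR F φ n) := by
  unfold RR
  refine continuous_finsetSum _ fun i _ => ?_
  have hi : Continuous F^[i] := (H.diff_iter i).continuous
  refine (hφ.comp hi).mul (Continuous.inv₀ ?_ fun x => H.deriv_iter_ne _ _)
  exact ((H.cd_iter (n - i)).continuous_deriv le_rfl).comp hi

set_option maxHeartbeats 800000 in
/-- A finite family of perturbations, one of which separates (to first order, uniformly) any two
sufficiently long backward orbits that end at nearby points through different branches. -/
lemma exists_c0 (H : Lift F d C l Λ) {d₀ : ℝ} (hd₀ : 0 < d₀) :
    ∃ (s : Finset (ℝ → ℝ)) (c₀ ρ₁ : ℝ) (N₀ : ℕ), 0 < c₀ ∧ 0 < ρ₁ ∧ (∀ ψ ∈ s, Sm ψ) ∧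
      ∀ n, N₀ ≤ n → ∀ a b : ℝ, dist ((cmap F)^[n] (a : Circle1)) ((cmap F)^[n] (b : Circle1)) ≤ ρ₁ →
        d₀ ≤ dist ((cmap F)^[n - 1] (a : Circle1)) ((cmap F)^[n - 1] (b : Circle1)) →
        ∃ ψ ∈ s, c₀ ≤ |RR F (deriv ψ) n a - RR F (deriv ψ) n b| := by
  classical
  obtain ⟨B, hB1, hB⟩ := exists_slope
  have hl := H.l0
  have hΛ := H.Λ0
  have h1l := H.one_sub_pos
  set c := 1 / Λ * (1 - 1 / l) with hc
  have hc0 : 0 < c := by positivity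
  obtain ⟨κ, δ, E, -⟩ := H.expSys
  have hTc : Continuous (cmap F) := E.cont
  obtain ⟨M, hM⟩ : ∃ M : ℕ, B * (C⁻¹ / (1 - 1 / l)) * (C⁻¹ * (1 / l) ^ (M + 1)) ≤ c / 8 := by
    have h1 : Tendsto (fun M : ℕ => B * (C⁻¹ / (1 - 1 / l)) * (C⁻¹ * (1 / l) ^ (M + 1))) atTop
        (𝓝 (B * (C⁻¹ / (1 - 1 / l)) * (C⁻¹ * 0))) := by
      refine ((tendsto_const_nhds).mul ?_).const_mul _
      exact (tendsto_pow_atTop_nhds_zero_of_lt_one (by positivity) (by linarith)).comp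
        (tendsto_add_atTop_nat 1)
    rw [mul_zero, mul_zero] at h1
    obtain ⟨M, hM⟩ := (h1.eventually_lt_const (u := c / 8) (by positivity)).exists
    exact ⟨M, hM.le⟩
  set ι := {φ : ℝ → ℝ // Sm φ ∧ ∀ x, |deriv φ x| ≤ B} with hι
  have hcont : ∀ φ : ι, Continuous (toC (RR F (deriv φ.1) (M + 1))) := fun φ =>
    toC_continuous (H.RR_continuous (φ.2.1.cd.continuous_deriv (by simp)) _)
      (fun x => by simpa using H.RR_per (periodic_deriv φ.2.1.per) (M + 1) x 1)
  have htoC : ∀ (φ : ι) (x : ℝ), toC (RR F (deriv φ.1) (M + 1)) (x : Circle1) =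
      RR F (deriv φ.1) (M + 1) x := fun φ x =>
    toC_coe (fun x => by simpa using H.RR_per (periodic_deriv φ.2.1.per) (M + 1) x 1) x
  set U : ι → Set (Circle1 × Circle1) := fun φ =>
    {p | c / 2 < |toC (RR F (deriv φ.1) (M + 1)) p.1 - toC (RR F (deriv φ.1) (M + 1)) p.2|} with hU
  have hfc : ∀ φ : ι, Continuous fun p : Circle1 × Circle1 =>
      |toC (RR F (deriv φ.1) (M + 1)) p.1 - toC (RR F (deriv φ.1) (M + 1)) p.2| := fun φ =>
    (((hcont φ).comp continuous_fst).sub ((hcont φ).comp continuous_snd)).abs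
  have hUo : ∀ φ, IsOpen (U φ) := fun φ => isOpen_lt continuous_const (hfc φ)
  have hTn : ∀ n : ℕ, Continuous fun p : Circle1 × Circle1 =>
      dist ((cmap F)^[n] p.1) ((cmap F)^[n] p.2) := fun n =>
    ((hTc.iterate n).comp continuous_fst).dist ((hTc.iterate n).comp continuous_snd)
  set Z : Set (Circle1 × Circle1) := {p | dist ((cmap F)^[M + 1] p.1) ((cmap F)^[M + 1] p.2) ≤ 0 ∧
    d₀ ≤ dist ((cmap F)^[M] p.1) ((cmap F)^[M] p.2)} with hZ
  have hZc : IsCompact Z := by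
    refine IsClosed.isCompact ?_
    exact (isClosed_le (hTn _) continuous_const).inter (isClosed_le continuous_const (hTn _))
  have hcov : Z ⊆ ⋃ φ, U φ := by
    rintro ⟨y, z⟩ ⟨h1, h2⟩
    obtain ⟨a, rfl⟩ := exists_lift y
    obtain ⟨b, rfl⟩ := exists_lift z
    have h3 : (cmap F)^[M] (a : Circle1) ≠ (cmap F)^[M] (b : Circle1) := fun h => by
      have h2' : d₀ ≤ dist ((cmap F)^[M] (a : Circle1)) ((cmap F)^[M] (b : Circle1)) := h2
      rw [h, dist_self] at h2'
      linarith
    obtain ⟨φ, hφ1, hφ2, hφ3⟩ := H.exact_pair hB M a b (dist_le_zero.1 h1) h3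
    refine mem_iUnion.2 ⟨⟨φ, hφ1, hφ2⟩, ?_⟩
    have e1 := htoC ⟨φ, hφ1, hφ2⟩ a
    have e2 := htoC ⟨φ, hφ1, hφ2⟩ b
    change c / 2 < |toC (RR F (deriv φ) (M + 1)) (a : Circle1) - toC (RR F (deriv φ) (M + 1)) (b : Circle1)|
    rw [e1, e2]
    linarith
  obtain ⟨t, ht⟩ := hZc.elim_finite_subcover U hUo hcov
  set W : Set (Circle1 × Circle1) := {p | d₀ ≤ dist ((cmap F)^[M] p.1) ((cmap F)^[M] p.2)} ∩
    ⋂ φ ∈ t, (U φ)ᶜ with hW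
  have hWc : IsCompact W := by
    refine IsClosed.isCompact ((isClosed_le continuous_const (hTn _)).inter ?_)
    exact isClosed_biInter fun φ _ => (hUo φ).isClosed_compl
  obtain ⟨ρ, hρ0, hρ⟩ := hWc.exists_forall_le' (hTn (M + 1)).continuousOn (a := 0) (by
    rintro p ⟨hp1, hp2⟩
    by_contra hcon
    push Not at hcon
    obtain ⟨φ, hφ, hpφ⟩ := mem_iUnion₂.1 (ht ⟨hcon, hp1⟩)
    exact mem_iInter₂.1 hp2 φ hφ hpφ)
  refine ⟨t.image Subtype.val, c / 4, ρ / 2, M + 1, by positivity, by positivity, ?_, ?_⟩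
  · intro ψ hψ
    obtain ⟨φ, -, rfl⟩ := Finset.mem_image.1 hψ
    exact φ.2.1
  intro n hn a b h1 h2
  obtain ⟨m, rfl⟩ : ∃ m, n = m + (M + 1) := ⟨n - (M + 1), by omega⟩
  have e1 : ∀ w : ℝ, (cmap F)^[m + (M + 1)] (w : Circle1) = (cmap F)^[M + 1] ((F^[m] w : ℝ) : Circle1) :=
    fun w => by rw [add_comm, Function.iterate_add_apply, H.iter_coe m]
  have e2 : ∀ w : ℝ, (cmap F)^[m + (M + 1) - 1] (w : Circle1) = (cmap F)^[M] ((F^[m] w : ℝ) : Circle1) :=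
    fun w => by
      rw [show m + (M + 1) - 1 = M + m by omega, Function.iterate_add_apply, H.iter_coe m]
  rw [e1, e1] at h1
  rw [e2, e2] at h2
  have hnW : (((F^[m] a : ℝ) : Circle1), ((F^[m] b : ℝ) : Circle1)) ∉ W := fun h => by
    have := hρ _ h
    exact absurd (this.trans h1) (by linarith)
  have : ∃ φ ∈ t, (((F^[m] a : ℝ) : Circle1), ((F^[m] b : ℝ) : Circle1)) ∈ U φ := by
    by_contra hcon
    push Not at hcon
    exact hnW ⟨h2, mem_iInter₂.2 hcon⟩
  obtain ⟨φ, hφt, hφ⟩ := this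
  refine ⟨φ.1, Finset.mem_image_of_mem _ hφt, ?_⟩
  have h3 : c / 2 < |RR F (deriv φ.1) (M + 1) (F^[m] a) - RR F (deriv φ.1) (M + 1) (F^[m] b)| := by
    rw [← htoC, ← htoC]; exact hφ
  have h4 := (H.RR_trunc φ.2.2 m (M + 1) a).trans hM
  have h5 := (H.RR_trunc φ.2.2 m (M + 1) b).trans hM
  have h6 := abs_sub_abs_le_abs_sub (RR F (deriv φ.1) (M + 1) (F^[m] a) -
    RR F (deriv φ.1) (M + 1) (F^[m] b)) ((RR F (deriv φ.1) (M + 1) (F^[m] a) -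
    RR F (deriv φ.1) (M + 1) (F^[m] b)) - (RR F (deriv φ.1) (m + (M + 1)) a -
    RR F (deriv φ.1) (m + (M + 1)) b))
  rw [sub_sub_cancel] at h6
  have h7 : |(RR F (deriv φ.1) (M + 1) (F^[m] a) - RR F (deriv φ.1) (M + 1) (F^[m] b)) -
      (RR F (deriv φ.1) (m + (M + 1)) a - RR F (deriv φ.1) (m + (M + 1)) b)| ≤ c / 8 + c / 8 := by
    rw [show (RR F (deriv φ.1) (M + 1) (F^[m] a) - RR F (deriv φ.1) (M + 1) (F^[m] b)) -
      (RR F (deriv φ.1) (m + (M + 1)) a - RR F (deriv φ.1) (m + (M + 1)) b) =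
      (RR F (deriv φ.1) (m + (M + 1)) b - RR F (deriv φ.1) (M + 1) (F^[m] b)) -
      (RR F (deriv φ.1) (m + (M + 1)) a - RR F (deriv φ.1) (M + 1) (F^[m] a)) by ring]
    exact (abs_sub _ _).trans (add_le_add h5 h4)
  linarith

end Lift

/-! ### Choosing parameters that avoid finitely many slabs -/

lemma card_le_of_close {A : Finset ℕ} {D : ℝ} (hD : 0 ≤ D)
    (h : ∀ i ∈ A, ∀ j ∈ A, |(i : ℝ) - j| ≤ D) : (A.card : ℝ) ≤ D + 1 := by
  rcases A.eq_empty_or_nonempty with rfl | hne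
  · simp; linarith
  have hsub : A ⊆ Finset.Icc (A.min' hne) (A.min' hne + ⌊D⌋₊) := by
    intro i hi
    have h1 := A.min'_le i hi
    have h2 := h i hi _ (A.min'_mem hne)
    refine Finset.mem_Icc.2 ⟨h1, ?_⟩
    have h3 : ((i - A.min' hne : ℕ) : ℝ) ≤ D := by
      rw [Nat.cast_sub h1]; exact (le_abs_self _).trans h2
    have := Nat.le_floor h3
    omega
  have h4 := Finset.card_le_card hsub
  rw [Nat.card_Icc, show A.min' hne + ⌊D⌋₊ + 1 - A.min' hne = ⌊D⌋₊ + 1 by omega] at h4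
  calc (A.card : ℝ) ≤ ((⌊D⌋₊ + 1 : ℕ) : ℝ) := by exact_mod_cast h4
    _ ≤ D + 1 := by push_cast; linarith [Nat.floor_le hD]

/-- Counting grid points: an affine functional with a coefficient of size at least `c` is at most
`e` in absolute value on a fraction at most `2 * e / c + 1 / L` of the grid of mesh `1/L`. -/
lemma card_slab_le {ι : Type*} [Fintype ι] [DecidableEq ι] (L : ℕ) (hL : 0 < L) (b : ℝ)
    (a : ι → ℝ) {k : ι} {c e : ℝ} (hc : 0 < c) (he : 0 ≤ e) (hk : c ≤ |a k|) :
    (((Finset.univ : Finset (ι → Fin L)).filter fun t =>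
      |b + ∑ i, a i * ((t i : ℕ) / (L : ℝ))| ≤ e).card : ℝ) ≤
      (2 * e / c + 1 / L) * Fintype.card (ι → Fin L) := by
  have hL' : (0 : ℝ) < L := by exact_mod_cast hL
  set bad := (Finset.univ : Finset (ι → Fin L)).filter fun t =>
      |b + ∑ i, a i * ((t i : ℕ) / (L : ℝ))| ≤ e with hbad
  let res : (ι → Fin L) → ({j // j ≠ k} → Fin L) := fun t j => t j.1
  have hfib : ∀ w ∈ (Finset.univ : Finset ({j // j ≠ k} → Fin L)),
      (bad.filter fun t => res t = w).card ≤ ⌊2 * e * L / c + 1⌋₊ := by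
    intro w _
    apply Nat.le_floor
    set fib := bad.filter fun t => res t = w with hfibd
    have hinj : Set.InjOn (fun t : ι → Fin L => (t k : ℕ)) (fib : Set (ι → Fin L)) := by
      intro t ht t' ht' h
      have h1 := (Finset.mem_filter.1 (Finset.mem_coe.1 ht)).2.trans
        (Finset.mem_filter.1 (Finset.mem_coe.1 ht')).2.symm
      funext j
      by_cases hj : j = k
      · rw [hj]; exact Fin.ext h
      · exact congrFun h1 ⟨j, hj⟩
    rw [← Finset.card_image_of_injOn hinj]
    refine card_le_of_close (by positivity) ?_
    intro i hi j hj
    obtain ⟨t, ht, rfl⟩ := Finset.mem_image.1 hi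
    obtain ⟨t', ht', rfl⟩ := Finset.mem_image.1 hj
    obtain ⟨ht1, ht2⟩ := Finset.mem_filter.1 ht
    obtain ⟨ht1', ht2'⟩ := Finset.mem_filter.1 ht'
    have hb1 := (Finset.mem_filter.1 ht1).2
    have hb2 := (Finset.mem_filter.1 ht1').2
    have hdiff : (b + ∑ i, a i * ((t i : ℕ) / (L : ℝ))) - (b + ∑ i, a i * ((t' i : ℕ) / (L : ℝ))) =
        a k * (((t k : ℕ) : ℝ) - (t' k : ℕ)) / L := by
      rw [add_sub_add_left_eq_sub, ← Finset.sum_sub_distrib, Finset.sum_eq_single k]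
      · ring
      · intro j _ hj
        have : t j = t' j := congrFun (ht2.trans ht2'.symm) ⟨j, hj⟩
        rw [this, sub_self]
      · simp
    have h3 : |a k * (((t k : ℕ) : ℝ) - (t' k : ℕ)) / L| ≤ 2 * e := by
      rw [← hdiff]
      exact (abs_sub _ _).trans (by linarith)
    rw [abs_div, abs_mul, abs_of_pos hL', div_le_iff₀ hL'] at h3
    rw [le_div_iff₀ hc]
    calc |((t k : ℕ) : ℝ) - (t' k : ℕ)| * c ≤ |((t k : ℕ) : ℝ) - (t' k : ℕ)| * |a k| :=
          mul_le_mul_of_nonneg_left hk (abs_nonneg _)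
      _ ≤ 2 * e * L := by linarith
  have h1 := Finset.card_le_mul_card_image_of_maps_to (s := bad) (f := res) (t := Finset.univ)
    (fun _ _ => Finset.mem_univ _) _ hfib
  have hcard : Fintype.card (ι → Fin L) = L * Fintype.card ({j // j ≠ k} → Fin L) := by
    rw [Fintype.card_congr (Equiv.funSplitAt k (Fin L)), Fintype.card_prod, Fintype.card_fin]
  rw [Finset.card_univ] at h1
  have h2 : (bad.card : ℝ) ≤ (2 * e * L / c + 1) * Fintype.card ({j // j ≠ k} → Fin L) := by
    have h3 : (bad.card : ℝ) ≤ (⌊2 * e * L / c + 1⌋₊ : ℝ) * Fintype.card ({j // j ≠ k} → Fin L) := by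
      exact_mod_cast h1
    exact h3.trans (mul_le_mul_of_nonneg_right (Nat.floor_le (by positivity)) (by positivity))
  refine h2.trans (le_of_eq ?_)
  rw [hcard]
  push_cast
  field_simp

/-- Parameter selection. Each object `o` carries an affine functional of the parameters with a
coefficient bounded below in terms of the class of `o`, and objects of the same class have nearby
functionals. If the classes are few, some parameter keeps all functionals away from zero. -/
lemma exists_avoid {O ι J : Type*} [Fintype J] (s : Finset ι) (cls : O → J)
    (b : O → ℝ) (a : O → ι → ℝ) (c e : J → ℝ) (hc : ∀ j, 0 < c j) (he : ∀ j, 0 ≤ e j)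
    (hcoef : ∀ o, ∃ k ∈ s, c (cls o) ≤ |a o k|)
    (hcls : ∀ o o', cls o = cls o' → ∀ t : ι → ℝ, (∀ k, 0 ≤ t k ∧ t k ≤ 1) →
      |(b o + ∑ k ∈ s, a o k * t k) - (b o' + ∑ k ∈ s, a o' k * t k)| ≤ e (cls o))
    (hsum : ∑ j, 4 * e j / c j < 1) :
    ∃ t : ι → ℝ, (∀ k, 0 ≤ t k ∧ t k ≤ 1) ∧
      ∀ o, e (cls o) < |b o + ∑ k ∈ s, a o k * t k| := by
  classical
  obtain ⟨L, hL0, hL⟩ : ∃ L : ℕ, 0 < L ∧ ∑ j, 4 * e j / c j + Fintype.card J * (1 / (L : ℝ)) < 1 := by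
    have h1 : Tendsto (fun L : ℕ => ∑ j, 4 * e j / c j + Fintype.card J * (1 / (L : ℝ))) atTop
        (𝓝 (∑ j, 4 * e j / c j + Fintype.card J * 0)) :=
      tendsto_const_nhds.add (tendsto_one_div_atTop_nhds_zero_nat.const_mul _)
    rw [mul_zero, add_zero] at h1
    obtain ⟨L, h2, h3⟩ := ((h1.eventually_lt_const (u := 1) hsum).and (eventually_gt_atTop 0)).exists
    exact ⟨L, h3, h2⟩
  have hL' : (0 : ℝ) < L := by exact_mod_cast hL0
  set R := (Finset.univ : Finset J).filter fun j => ∃ o, cls o = j with hR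
  have hrep : ∀ j : R, ∃ o, cls o = j := fun j => (Finset.mem_filter.1 j.2).2
  choose rp hrp using hrep
  set bad : R → Finset (s → Fin L) := fun j => Finset.univ.filter fun t =>
    |b (rp j) + ∑ i : s, a (rp j) i * ((t i : ℕ) / (L : ℝ))| ≤ 2 * e j with hbad
  have hcb : ∀ j : R, ((bad j).card : ℝ) ≤ (4 * e j / c j + 1 / L) * Fintype.card (s → Fin L) := by
    intro j
    obtain ⟨k, hks, hk⟩ := hcoef (rp j)
    rw [hrp] at hk
    have := card_slab_le (ι := s) L hL0 (b (rp j)) (fun i => a (rp j) i) (k := ⟨k, hks⟩) (hc j)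
      (e := 2 * e j) (by have := he j; positivity) hk
    refine this.trans (le_of_eq ?_)
    ring
  have hNe : Nonempty (s → Fin L) := ⟨fun _ => ⟨0, hL0⟩⟩
  have hcp : (0 : ℝ) < Fintype.card (s → Fin L) := by exact_mod_cast Fintype.card_pos
  have htot : ((Finset.univ.biUnion bad).card : ℝ) < (Finset.univ : Finset (s → Fin L)).card := by
    have h1 : ((Finset.univ.biUnion bad).card : ℝ) ≤ ∑ j : R, ((bad j).card : ℝ) := by
      exact_mod_cast Finset.card_biUnion_le
    have h2 : ∑ j : R, ((bad j).card : ℝ) ≤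
        ∑ j : R, (4 * e j / c j + 1 / L) * Fintype.card (s → Fin L) :=
      Finset.sum_le_sum fun j _ => hcb j
    have h3 : ∑ j : R, (4 * e j / c j + 1 / (L : ℝ)) ≤ ∑ j, (4 * e j / c j + 1 / (L : ℝ)) := by
      rw [Finset.sum_coe_sort R fun j => 4 * e j / c j + 1 / (L : ℝ)]
      refine Finset.sum_le_sum_of_subset_of_nonneg (Finset.subset_univ _) fun j _ _ => ?_
      have := hc j
      have := he j
      positivity
    rw [← Finset.sum_mul] at h2
    have h4 : ∑ j, (4 * e j / c j + 1 / (L : ℝ)) < 1 := by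
      rw [Finset.sum_add_distrib, Finset.sum_const, Finset.card_univ, nsmul_eq_mul]
      exact hL
    rw [Finset.card_univ]
    refine (h1.trans h2).trans_lt ?_
    exact mul_lt_of_lt_one_left hcp (h3.trans_lt h4)
  obtain ⟨t, -, ht⟩ := Finset.exists_mem_notMem_of_card_lt_card (by exact_mod_cast htot :
    (Finset.univ.biUnion bad).card < (Finset.univ : Finset (s → Fin L)).card)
  set u : ι → ℝ := fun k => if h : k ∈ s then ((t ⟨k, h⟩ : ℕ) : ℝ) / L else 0 with hu
  have hu01 : ∀ k, 0 ≤ u k ∧ u k ≤ 1 := by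
    intro k
    simp only [hu]
    split_ifs with h
    · refine ⟨by positivity, (div_le_one hL').2 ?_⟩
      exact_mod_cast (t ⟨k, h⟩).2.le
    · simp
  refine ⟨u, hu01, fun o => ?_⟩
  have hj : cls o ∈ R := Finset.mem_filter.2 ⟨Finset.mem_univ _, o, rfl⟩
  have hnb : t ∉ bad ⟨cls o, hj⟩ := fun h => ht (Finset.mem_biUnion.2 ⟨_, Finset.mem_univ _, h⟩)
  have h5 : 2 * e (cls o) < |b (rp ⟨cls o, hj⟩) + ∑ k ∈ s, a (rp ⟨cls o, hj⟩) k * u k| := by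
    simp only [hbad, Finset.mem_filter, Finset.mem_univ, true_and, not_le] at hnb
    refine hnb.trans_le (le_of_eq ?_)
    congr 2
    rw [← Finset.sum_coe_sort s]
    refine Finset.sum_congr rfl fun i _ => ?_
    simp [hu]
  have h6 := hcls o _ (hrp ⟨cls o, hj⟩).symm u hu01
  have h7 := abs_sub_abs_le_abs_sub (b (rp ⟨cls o, hj⟩) + ∑ k ∈ s, a (rp ⟨cls o, hj⟩) k * u k)
    (b o + ∑ k ∈ s, a o k * u k)
  rw [abs_sub_comm] at h6
  linarith

/-! ### Classes of orbits in a covered set -/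

lemma Cov.exists_cls {T : Circle1 → Circle1} {S : Finset Circle1} {n₁ : ℕ} {δ : ℝ} (hn₁ : 1 ≤ n₁) (J : ℕ) :
    ∃ cls : {x // Cov T S n₁ δ x} → (Fin J → S), ∀ x y, cls x = cls y → ∀ i < J * n₁,
      dist (T^[i] x.1) (T^[i] y.1) ≤ 2 * δ := by
  have h : ∀ x : {x // Cov T S n₁ δ x}, ∀ m : Fin J, ∃ p : S, ∀ i < n₁,
      dist (T^[m * n₁ + i] x.1) (T^[i] p.1) ≤ δ := fun x m => by
    obtain ⟨p, hp, h⟩ := x.2 (m * n₁)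
    exact ⟨⟨p, hp⟩, h⟩
  choose cls hcls using h
  refine ⟨cls, fun x y hxy i hi => ?_⟩
  have hq : i / n₁ < J := Nat.div_lt_of_lt_mul (by rwa [mul_comm] at hi)
  have h1 := hcls x ⟨i / n₁, hq⟩ (i % n₁) (Nat.mod_lt _ hn₁)
  have h2 := hcls y ⟨i / n₁, hq⟩ (i % n₁) (Nat.mod_lt _ hn₁)
  simp only [Nat.div_add_mod'] at h1 h2
  rw [← hxy] at h2
  calc dist (T^[i] x.1) (T^[i] y.1) ≤ _ := dist_triangle_right _ _ _
    _ ≤ 2 * δ := by linarith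

lemma Cov.iter {T : Circle1 → Circle1} {S : Finset Circle1} {n₁ : ℕ} {δ : ℝ} {x : Circle1}
    (h : Cov T S n₁ δ x) (k : ℕ) : Cov T S n₁ δ (T^[k] x) := fun m => by
  obtain ⟨p, hp, h1⟩ := h (m + k)
  refine ⟨p, hp, fun i hi => ?_⟩
  rw [← Function.iterate_add_apply T (m + i) k, show m + i + k = m + k + i by ring]
  exact h1 i hi

lemma isClosed_cov {T : Circle1 → Circle1} (hT : Continuous T) (S : Finset Circle1) (n₁ : ℕ) (δ : ℝ) :
    IsClosed {x | Cov T S n₁ δ x} := by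
  have : {x | Cov T S n₁ δ x} = ⋂ m : ℕ, ⋃ p ∈ S, ⋂ i : ℕ, ⋂ _ : i < n₁,
      {x | dist (T^[m + i] x) (T^[i] p) ≤ δ} := by
    ext x
    simp [Cov]
  rw [this]
  refine isClosed_iInter fun m => S.finite_toSet.isClosed_biUnion fun p _ => ?_
  refine isClosed_iInter fun i => isClosed_iInter fun _ => ?_
  exact isClosed_le ((hT.iterate _).dist continuous_const) continuous_const

/-! ### Generic transversality on a set of small complexity -/

lemma lip_real_of_deriv {g : ℝ → ℝ} {K : ℝ} (hd : Differentiable ℝ g) (hK : ∀ x, |deriv g x| ≤ K)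
    (x y : ℝ) : |g x - g y| ≤ K * |x - y| := by
  have := convex_univ.norm_image_sub_le_of_norm_deriv_le (f := g) (C := K)
    (fun x _ => hd x) (fun x _ => hK x) (mem_univ y) (mem_univ x)
  simpa using this

namespace Lift
variable {F : ℝ → ℝ} {d : ℤ} {C l Λ : ℝ}

lemma RR_class (H : Lift F d C l Λ) {κ δE : ℝ} (E : ExpSys (cmap F) Λ (1 / l) κ δE)
    (hΛδ : Λ * δE ≤ 1 / 2) {φ : ℝ → ℝ} (hφ : ∀ x, φ (x + 1) = φ x) {D : ℝ} (hD0 : 0 ≤ D)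
    (hD : ∀ n y y', |RR F φ n y - RR F φ n y'| ≤ D * |F^[n] y - F^[n] y'|) {n : ℕ} (hn : 1 ≤ n)
    {a a' : ℝ} (h : ∀ i < 2 * n, dist ((cmap F)^[i] (a : Circle1)) ((cmap F)^[i] (a' : Circle1)) ≤ δE) :
    |RR F φ n a - RR F φ n a'| ≤ D * (κ * (1 / l) ^ (n - 1)) := by
  obtain ⟨b, hb, hab⟩ := exists_lift_near a (a' : Circle1)
  have hR : RR F φ n b = RR F φ n a' := by
    obtain ⟨k, rfl⟩ := coe_eq_iff.1 hb
    exact H.RR_per hφ n a' k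
  rw [← hR]
  rw [← hb] at h hab
  have h0 := h 0 (by omega)
  simp only [Function.iterate_zero, id] at h0
  have h1 := H.bowen hΛδ (n := n) (by rw [hab]; exact h0) (fun i hi => h i (by omega)) n le_rfl
  refine (hD n a b).trans (mul_le_mul_of_nonneg_left ?_ hD0)
  rw [h1]
  have h2 := E.bowen (n := n - 1) (x := (cmap F)^[n] (a : Circle1)) (y := (cmap F)^[n] (b : Circle1))
    (fun i hi => by
      rw [← Function.iterate_add_apply (cmap F) i n, ← Function.iterate_add_apply (cmap F) i n]
      exact h (i + n) (by omega))
  refine h2.trans (mul_le_of_le_one_right ?_ ((dist_circle_le_half _ _).trans (by norm_num)))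
  have := E.κpos
  have := H.l0
  positivity

set_option maxHeartbeats 1600000 in
/-- A `C^N`-small perturbation of `f` makes the transversality functionals of any two orbits in the
covered set, ending close to each other through different branches, differ by a large multiple of
`l^{-n}`. -/
lemma exists_transverse (H : Lift F d C l Λ) (hF : ContDiff ℝ 2 F) {κ δE : ℝ}
    (E : ExpSys (cmap F) Λ (1 / l) κ δE) (hΛδ : Λ * δE ≤ 1 / 2) {f : Circle1 → ℝ}
    (hf : ContDiff ℝ 2 fun x : ℝ => f x) {d₀ : ℝ} (hd₀ : 0 < d₀) {S : Finset Circle1} {n₁ : ℕ}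
    {δ : ℝ} (hn₁ : 1 ≤ n₁) (hcard : (S.card : ℝ) ≤ Real.exp (Real.log l / 8 * n₁)) (hδ : 2 * δ ≤ δE)
    (N : ℕ) {ε : ℝ} (hε : 0 < ε) {A : ℝ} (hA : 0 ≤ A) :
    ∃ ψ, Sm ψ ∧ NB N ε ψ ∧ ∃ D, 0 ≤ D ∧ ∃ n, 1 ≤ n ∧
      (∀ m y y', |RR F (deriv fun x : ℝ => f x + ψ x) m y - RR F (deriv fun x : ℝ => f x + ψ x) m y'| ≤
        D * |F^[m] y - F^[m] y'|) ∧
      ∀ a b : ℝ, Cov (cmap F) S n₁ δ a → Cov (cmap F) S n₁ δ b →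
        dist ((cmap F)^[n] (a : Circle1)) ((cmap F)^[n] (b : Circle1)) ≤ (1 / l) ^ n →
        d₀ ≤ dist ((cmap F)^[n - 1] (a : Circle1)) ((cmap F)^[n - 1] (b : Circle1)) →
        (A + 2 * D) * (1 / l) ^ n <
          |RR F (deriv fun x : ℝ => f x + ψ x) n a - RR F (deriv fun x : ℝ => f x + ψ x) n b| := by
  classical
  set T := cmap F with hT
  set fr : ℝ → ℝ := fun x => f x with hfr
  have hl := H.l0
  have hlog : 0 < Real.log l := Real.log_pos H.hl
  have hκ := E.κpos
  obtain ⟨Kh, hKh0, hKh⟩ := H.inv_deriv_lip_one hF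
  have hfper : ∀ x, fr (x + 1) = fr x := fun x => by simp [hfr]
  have hfd : Differentiable ℝ fr := hf.differentiable (by norm_num)
  have hfd1 : ContDiff ℝ 1 (deriv fr) :=
    ((contDiff_succ_iff_deriv (n := 1)).1 (by exact_mod_cast hf)).2.2
  obtain ⟨B₁, hB₁1, hB₁⟩ := periodic_bound hfd1.continuous (periodic_deriv hfper)
  obtain ⟨B₂, hB₂1, hB₂⟩ := periodic_bound (hfd1.continuous_deriv le_rfl)
    (periodic_deriv (periodic_deriv hfper))
  obtain ⟨D, hD0, hD⟩ := H.RR_lip hKh0 hKh (B := B₁ + 1) (B' := B₂ + 1) (by linarith) (by linarith)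
  obtain ⟨s, c₀, ρ₁, N₀, hc₀, hρ₁, hsm, hsep⟩ := H.exists_c0 hd₀
  have hBs : ∀ ψ : ℝ → ℝ, ∃ B, 1 ≤ B ∧ (ψ ∈ s → NB (max N 2) B ψ) := fun ψ => by
    by_cases hψ : ψ ∈ s
    · obtain ⟨B, h1, h2⟩ := (hsm ψ hψ).exists_NB (max N 2)
      exact ⟨B, h1, fun _ => h2⟩
    · exact ⟨1, le_rfl, fun h => absurd h hψ⟩
  choose Bs hBs1 hBsN using hBs
  set ε' := min ε 1 with hε'
  have hε'0 : 0 < ε' := lt_min hε one_pos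
  have hsum0 : 0 ≤ ∑ ψ ∈ s, Bs ψ := Finset.sum_nonneg fun ψ _ => by linarith [hBs1 ψ]
  set ε₀ := ε' / (1 + ∑ ψ ∈ s, Bs ψ) with hε₀
  have hε₀0 : 0 < ε₀ := by positivity
  set pt : ((ℝ → ℝ) → ℝ) → ℝ → ℝ := fun t x => ∑ ψ ∈ s, (ε₀ * t ψ) * ψ x with hpt
  have hptS : ∀ t, Sm (pt t) := fun t => Sm.sum s fun ψ hψ => (hsm ψ hψ).const_mul _
  have hptN : ∀ t : (ℝ → ℝ) → ℝ, (∀ k, 0 ≤ t k ∧ t k ≤ 1) → NB (max N 2) ε' (pt t) := fun t ht => by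
    have h1 : NB (max N 2) (∑ ψ ∈ s, |ε₀ * t ψ| * Bs ψ) (pt t) :=
      NB.sum s (fun ψ hψ => (hsm ψ hψ).const_mul _) fun ψ hψ => (hBsN ψ hψ).const_mul _
    refine h1.mono ?_
    calc ∑ ψ ∈ s, |ε₀ * t ψ| * Bs ψ ≤ ∑ ψ ∈ s, ε₀ * Bs ψ := by
          refine Finset.sum_le_sum fun ψ _ => mul_le_mul_of_nonneg_right ?_ (by linarith [hBs1 ψ])
          rw [abs_of_nonneg (mul_nonneg hε₀0.le (ht ψ).1)]
          exact mul_le_of_le_one_right hε₀0.le (ht ψ).2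
      _ = ε' * ((∑ ψ ∈ s, Bs ψ) / (1 + ∑ ψ ∈ s, Bs ψ)) := by rw [← Finset.mul_sum, hε₀]; ring
      _ ≤ ε' * 1 := by
          refine mul_le_mul_of_nonneg_left ?_ hε'0.le
          rw [div_le_one (by linarith)]
          linarith
      _ = _ := mul_one _
  -- linearity of the functional in the parameters
  have hlin : ∀ (t : (ℝ → ℝ) → ℝ) (n : ℕ) (y : ℝ), RR F (deriv fun x => fr x + pt t x) n y =
      RR F (deriv fr) n y + ∑ ψ ∈ s, (ε₀ * t ψ) * RR F (deriv ψ) n y := by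
    intro t n y
    have h1 : (deriv fun x => fr x + pt t x) =
        fun x => deriv fr x + ∑ ψ ∈ s, (ε₀ * t ψ) * deriv ψ x := by
      funext x
      refine HasDerivAt.deriv ((hfd x).hasDerivAt.add (HasDerivAt.fun_sum fun ψ hψ => ?_))
      exact ((hsm ψ hψ).diff x).hasDerivAt.const_mul _
    rw [h1, RR_add_fun, RR_sum]
    congr 1
    refine Finset.sum_congr rfl fun ψ _ => ?_
    rw [RR_smul]
  have hper' : ∀ t, ∀ x, (deriv fun x => fr x + pt t x) (x + 1) = (deriv fun x => fr x + pt t x) x :=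
    fun t => periodic_deriv fun x => by rw [hfper, (hptS t).per]
  have hDt : ∀ t : (ℝ → ℝ) → ℝ, (∀ k, 0 ≤ t k ∧ t k ≤ 1) → ∀ m y y',
      |RR F (deriv fun x => fr x + pt t x) m y - RR F (deriv fun x => fr x + pt t x) m y'| ≤
        D * |F^[m] y - F^[m] y'| := by
    intro t ht
    have hN := hptN t ht
    have hε1 : ε' ≤ 1 := min_le_right _ _
    have hder : ∀ x, (deriv fun x => fr x + pt t x) x = deriv fr x + deriv (pt t) x := fun x =>
      ((hfd x).hasDerivAt.add ((hptS t).diff x).hasDerivAt).deriv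
    have hpd : ∀ x, |deriv (pt t) x| ≤ 1 := fun x =>
      (hN.abs_deriv_le (by omega) x).trans hε1
    have hpd2 : ∀ x, |deriv (deriv (pt t)) x| ≤ 1 := fun x => by
      have := hN 2 (by omega) x
      rw [iteratedDeriv_succ, iteratedDeriv_one] at this
      exact this.trans hε1
    have hpdd : Differentiable ℝ (deriv (pt t)) := by
      have : ContDiff ℝ 1 (deriv (pt t)) :=
        ((contDiff_succ_iff_deriv (n := 1)).1 (by
          have h2 : ContDiff ℝ (2 : ℕ) (pt t) := contDiff_infty.1 (hptS t).cd 2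
          rw [one_add_one_eq_two]
          exact_mod_cast h2)).2.2
      exact this.differentiable one_ne_zero
    refine hD _ (fun x => ?_) fun x y => ?_
    · rw [hder]
      exact (abs_add_le _ _).trans (add_le_add (hB₁ x) (hpd x))
    · rw [hder, hder, add_sub_add_comm, add_mul]
      refine (abs_add_le _ _).trans (add_le_add ?_ ?_)
      · exact lip_real_of_deriv (hfd1.differentiable one_ne_zero) hB₂ x y
      · exact lip_real_of_deriv hpdd hpd2 x y
  -- choice of the number of blocks
  set G := A + 2 * D + 2 * D * κ * l with hG
  have hG0 : 0 ≤ G := by positivity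
  set θ := Real.exp (-(Real.log l / 2)) with hθ
  have hθ1 : θ < 1 := by rw [hθ, Real.exp_lt_one_iff]; linarith
  obtain ⟨j, hj1, hjN, hjρ, hjc⟩ : ∃ j : ℕ, 1 ≤ j ∧ N₀ ≤ j ∧ (1 / l) ^ j ≤ ρ₁ ∧
      4 * G / (ε₀ * c₀) * θ ^ j < 1 := by
    have h1 : Tendsto (fun j : ℕ => 4 * G / (ε₀ * c₀) * θ ^ j) atTop (𝓝 (4 * G / (ε₀ * c₀) * 0)) :=
      (tendsto_pow_atTop_nhds_zero_of_lt_one (Real.exp_pos _).le hθ1).const_mul _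
    rw [mul_zero] at h1
    have h2 : Tendsto (fun j : ℕ => (1 / l) ^ j) atTop (𝓝 0) :=
      tendsto_pow_atTop_nhds_zero_of_lt_one (by positivity) (by linarith [H.one_sub_pos])
    obtain ⟨j, ⟨h3, h4⟩, h5, h6⟩ := (((h1.eventually_lt_const (u := 1) one_pos).and
      (h2.eventually_lt_const (u := ρ₁) hρ₁)).and
      ((eventually_ge_atTop 1).and (eventually_ge_atTop N₀))).exists
    exact ⟨j, h5, h6, h4.le, h3⟩
  set n := j * n₁ with hn
  have hjn : j ≤ n := Nat.le_mul_of_pos_right j hn₁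
  have hn1 : 1 ≤ n := hj1.trans hjn
  have hp01 : 0 ≤ 1 / l := by positivity
  have hp1 : 1 / l ≤ 1 := by linarith [H.one_sub_pos]
  obtain ⟨cls, hcls⟩ := Cov.exists_cls (T := T) (S := S) (n₁ := n₁) (δ := δ) hn₁ (2 * j)
  let O := {p : ℝ × ℝ // Cov T S n₁ δ p.1 ∧ Cov T S n₁ δ p.2 ∧
    dist (T^[n] (p.1 : Circle1)) (T^[n] (p.2 : Circle1)) ≤ (1 / l) ^ n ∧
    d₀ ≤ dist (T^[n - 1] (p.1 : Circle1)) (T^[n - 1] (p.2 : Circle1))}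
  have havoid := exists_avoid (O := O) (ι := ℝ → ℝ)
    (J := (Fin (2 * j) → S) × (Fin (2 * j) → S)) s
    (fun o => (cls ⟨_, o.2.1⟩, cls ⟨_, o.2.2.1⟩))
    (fun o => RR F (deriv fr) n o.1.1 - RR F (deriv fr) n o.1.2)
    (fun o ψ => ε₀ * (RR F (deriv ψ) n o.1.1 - RR F (deriv ψ) n o.1.2))
    (fun _ => ε₀ * c₀) (fun _ => G * (1 / l) ^ n) (fun _ => by positivity) (fun _ => by positivity)
    (fun o => by
      obtain ⟨ψ, hψ, h⟩ := hsep n (hjN.trans hjn) o.1.1 o.1.2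
        (o.2.2.2.1.trans ((pow_le_pow_of_le_one hp01 hp1 hjn).trans hjρ)) o.2.2.2.2
      refine ⟨ψ, hψ, ?_⟩
      rw [abs_mul, abs_of_pos hε₀0]
      exact mul_le_mul_of_nonneg_left h hε₀0.le)
  have hform : ∀ (t : (ℝ → ℝ) → ℝ) (a b : ℝ), RR F (deriv fr) n a - RR F (deriv fr) n b +
      ∑ ψ ∈ s, ε₀ * (RR F (deriv ψ) n a - RR F (deriv ψ) n b) * t ψ =
      RR F (deriv fun x => fr x + pt t x) n a - RR F (deriv fun x => fr x + pt t x) n b := by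
    intro t a b
    rw [hlin, hlin, add_sub_add_comm, ← Finset.sum_sub_distrib]
    congr 1
    exact Finset.sum_congr rfl fun ψ _ => by ring
  simp only [hform] at havoid
  have hc1 : ∀ o o' : O, (cls ⟨_, o.2.1⟩, cls ⟨_, o.2.2.1⟩) = (cls ⟨_, o'.2.1⟩, cls ⟨_, o'.2.2.1⟩) →
      ∀ t : (ℝ → ℝ) → ℝ, (∀ k, 0 ≤ t k ∧ t k ≤ 1) →
      |RR F (deriv fun x => fr x + pt t x) n o.1.1 - RR F (deriv fun x => fr x + pt t x) n o.1.2 -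
        (RR F (deriv fun x => fr x + pt t x) n o'.1.1 - RR F (deriv fun x => fr x + pt t x) n o'.1.2)|
      ≤ G * (1 / l) ^ n := by
    intro o o' h t ht
    have ha := H.RR_class E hΛδ (hper' t) hD0 (hDt t ht) hn1 (a := o.1.1) (a' := o'.1.1)
      (fun i hi => (hcls _ _ (Prod.ext_iff.1 h).1 i (by rw [mul_assoc]; exact hi)).trans hδ)
    have hb := H.RR_class E hΛδ (hper' t) hD0 (hDt t ht) hn1 (a := o.1.2) (a' := o'.1.2)
      (fun i hi => (hcls _ _ (Prod.ext_iff.1 h).2 i (by rw [mul_assoc]; exact hi)).trans hδ)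
    have e1 : (1 / l) ^ (n - 1) = l * (1 / l) ^ n := by
      obtain ⟨k, hk⟩ : ∃ k, n = k + 1 := ⟨n - 1, by omega⟩
      rw [hk, Nat.add_sub_cancel, pow_succ]
      field_simp
    rw [e1] at ha hb
    rw [sub_sub_sub_comm]
    refine (abs_sub _ _).trans ((add_le_add ha hb).trans ?_)
    have h5 : 0 ≤ (A + 2 * D) * (1 / l) ^ n := by positivity
    have h6 : G * (1 / l) ^ n = (A + 2 * D) * (1 / l) ^ n + 2 * (D * (κ * (l * (1 / l) ^ n))) := by
      rw [hG]; ring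
    linarith
  have hc2 : ∑ _q : (Fin (2 * j) → S) × (Fin (2 * j) → S), 4 * (G * (1 / l) ^ n) / (ε₀ * c₀) < 1 := by
    rw [Finset.sum_const, Finset.card_univ, nsmul_eq_mul]
    simp only [Fintype.card_prod, Fintype.card_fun, Fintype.card_coe, Fintype.card_fin]
    push_cast
    have h1 : (S.card : ℝ) ^ (2 * j) * (S.card : ℝ) ^ (2 * j) * (1 / l) ^ n ≤ θ ^ j := by
      have h2 : (S.card : ℝ) ^ (2 * j) ≤ Real.exp (Real.log l / 4 * n) := by
        refine (pow_le_pow_left₀ (by positivity) hcard _).trans (le_of_eq ?_)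
        rw [← Real.exp_nat_mul, hn]
        congr 1
        push_cast; ring
      have h3 : (1 / l) ^ n = Real.exp (-(Real.log l) * n) := by
        rw [one_div, mul_comm, Real.exp_nat_mul, Real.exp_neg, Real.exp_log hl]
      rw [h3]
      calc _ ≤ Real.exp (Real.log l / 4 * n) * Real.exp (Real.log l / 4 * n) *
            Real.exp (-(Real.log l) * n) := by gcongr
        _ = Real.exp (-(Real.log l / 2)) ^ n := by
            rw [← Real.exp_add, ← Real.exp_add, ← Real.exp_nat_mul]
            congr 1
            ring
        _ ≤ θ ^ j := pow_le_pow_of_le_one (Real.exp_pos _).le hθ1.le hjn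
    calc _ = 4 * G / (ε₀ * c₀) * ((S.card : ℝ) ^ (2 * j) * (S.card : ℝ) ^ (2 * j) * (1 / l) ^ n) := by ring
      _ ≤ 4 * G / (ε₀ * c₀) * θ ^ j := mul_le_mul_of_nonneg_left h1 (by positivity)
      _ < 1 := hjc
  obtain ⟨t, ht, hav⟩ := havoid hc1 hc2
  refine ⟨pt t, hptS t, ((hptN t ht).mono_left (le_max_left _ _)).mono (min_le_left _ _), D, hD0, n, hn1,
    hDt t ht, fun a b ha hb h1 h2 => ?_⟩
  refine lt_of_le_of_lt ?_ (hav ⟨(a, b), ha, hb, h1, h2⟩)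
  refine mul_le_mul_of_nonneg_right ?_ (by positivity)
  have : 0 ≤ 2 * D * κ * l := by positivity
  linarith

end Lift

/-! ### A coding by intervals whose endpoints avoid a set of small complexity -/

/-- A set of complexity smaller than the expansion rate contains no interval. -/
lemma ExpSys.exists_not_cov {T : Circle1 → Circle1} {Λ l κ δE δ : ℝ} {S : Finset Circle1} {n₁ : ℕ}
    (E : ExpSys T Λ (1 / l) κ δE) (hl : 1 < l) (hn₁ : 1 ≤ n₁)
    (hcard : (S.card : ℝ) ≤ Real.exp (Real.log l / 8 * n₁)) (hδ : 2 * δ ≤ δE)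
    {u v : ℝ} (huv : u < v) : ∃ a, u < a ∧ a < v ∧ ¬ Cov T S n₁ δ (a : Circle1) := by
  classical
  by_contra hcon
  push Not at hcon
  have hl0 : 0 < l := by linarith
  have hlog : 0 < Real.log l := Real.log_pos hl
  set w := min (v - u) (1 / 2) with hw
  have hw0 : 0 < w := lt_min (by linarith) (by norm_num)
  set θ := Real.exp (-(7 / 8 * Real.log l)) with hθ
  have hθ1 : θ < 1 := by rw [hθ, Real.exp_lt_one_iff]; linarith
  have hθ0 : 0 < θ := Real.exp_pos _
  have hκ := E.κpos
  have key : ∀ j : ℕ, 1 ≤ j → w ≤ 3 * (κ * l * δE) * θ ^ j := by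
    intro j hj
    obtain ⟨cls, hcls⟩ := Cov.exists_cls (T := T) (S := S) (δ := δ) hn₁ j
    set N := S.card ^ j with hN
    have hNcard : Fintype.card (Fin j → S) = N := by simp [hN]
    have hN2 : (0 : ℝ) < N + 2 := by positivity
    set a : Fin (N + 1) → ℝ := fun i => u + w * (((i : ℕ) : ℝ) + 1) / (N + 2) with ha
    have hau : ∀ i, u < a i ∧ a i < v := by
      intro i
      have h1 : ((i : ℕ) : ℝ) + 1 < N + 2 := by
        have : ((i : ℕ) : ℝ) < ((N + 1 : ℕ) : ℝ) := by exact_mod_cast i.2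
        push_cast at this
        linarith
      have h2 : w * (((i : ℕ) : ℝ) + 1) / (N + 2) < w := by
        rw [div_lt_iff₀ hN2]
        exact mul_lt_mul_of_pos_left h1 hw0
      have h3 : 0 < w * (((i : ℕ) : ℝ) + 1) / (N + 2) := by positivity
      have h4 : w ≤ v - u := min_le_left _ _
      constructor <;> simp only [ha] <;> linarith
    obtain ⟨i, i', hii, hc⟩ := Fintype.exists_ne_map_eq_of_card_lt
      (fun i : Fin (N + 1) => cls ⟨(a i : Circle1), hcon _ (hau i).1 (hau i).2⟩) (by simp [hNcard])
    have hd := hcls _ _ hc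
    simp only at hd
    have hm : 1 ≤ j * n₁ := Nat.one_le_iff_ne_zero.2 (Nat.mul_ne_zero (by omega) (by omega))
    have hb := E.bowen (n := j * n₁ - 1) (x := (a i : Circle1)) (y := (a i' : Circle1))
      fun k hk => (hd k (by omega)).trans hδ
    have hb2 : dist (a i : Circle1) (a i') ≤ κ * (1 / l) ^ (j * n₁ - 1) * δE :=
      hb.trans (mul_le_mul_of_nonneg_left ((hd _ (by omega)).trans hδ) (by positivity))
    have hai : a i - a i' = w * (((i : ℕ) : ℝ) - ((i' : ℕ) : ℝ)) / (N + 2) := by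
      simp only [ha]; ring
    have hlow : w / (N + 2) ≤ |a i - a i'| := by
      have h1 : (1 : ℝ) ≤ |((i : ℕ) : ℝ) - ((i' : ℕ) : ℝ)| := by
        have h : (1 : ℤ) ≤ |((i : ℕ) : ℤ) - ((i' : ℕ) : ℤ)| :=
          Int.one_le_abs (sub_ne_zero.2 fun h => hii (Fin.ext (by exact_mod_cast h)))
        exact_mod_cast h
      rw [hai, abs_div, abs_mul, abs_of_pos hw0, abs_of_pos hN2]
      gcongr
      nlinarith
    have hup : |a i - a i'| ≤ 1 / 2 := by
      have h1 := hau i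
      have h2 := hau i'
      rw [hai, abs_div, abs_mul, abs_of_pos hw0, abs_of_pos hN2, div_le_iff₀ hN2]
      have h3 : |((i : ℕ) : ℝ) - ((i' : ℕ) : ℝ)| ≤ N + 2 := by
        have e1 : ((i : ℕ) : ℝ) ≤ N := by exact_mod_cast Nat.lt_succ_iff.1 i.2
        have e2 : ((i' : ℕ) : ℝ) ≤ N := by exact_mod_cast Nat.lt_succ_iff.1 i'.2
        have e3 : (0 : ℝ) ≤ ((i : ℕ) : ℝ) := by positivity
        have e4 : (0 : ℝ) ≤ ((i' : ℕ) : ℝ) := by positivity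
        rw [abs_le]; constructor <;> linarith
      exact mul_le_mul (min_le_right _ _) h3 (abs_nonneg _) (by norm_num)
    rw [dist_coe_eq hup] at hb2
    have hfin : w ≤ κ * (1 / l) ^ (j * n₁ - 1) * δE * (N + 2) := by
      rw [← div_le_iff₀ hN2]
      exact hlow.trans hb2
    have hp : (1 / l) ^ (j * n₁ - 1) = l * (1 / l) ^ (j * n₁) := by
      obtain ⟨e, he⟩ : ∃ e, j * n₁ = e + 1 := ⟨_, (Nat.sub_add_cancel hm).symm⟩
      rw [he, pow_succ, Nat.add_sub_cancel]
      field_simp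
    set φ := Real.exp (Real.log l / 8) with hφ
    have hφ1 : 1 ≤ φ ^ (j * n₁) := one_le_pow₀ (Real.one_le_exp (by positivity))
    have hN3 : (N : ℝ) + 2 ≤ 3 * φ ^ (j * n₁) := by
      have : (N : ℝ) ≤ φ ^ (j * n₁) := by
        rw [hN]; push_cast
        calc (S.card : ℝ) ^ j ≤ (Real.exp (Real.log l / 8 * n₁)) ^ j := by gcongr
          _ = φ ^ (j * n₁) := by
            rw [hφ, ← Real.exp_nat_mul, ← Real.exp_nat_mul]
            congr 1; push_cast; ring
      linarith
    have hθφ : (1 / l) * φ = θ := by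
      have : 1 / l = Real.exp (-Real.log l) := by rw [Real.exp_neg, Real.exp_log hl0, one_div]
      rw [this, hφ, hθ, ← Real.exp_add]
      congr 1; ring
    have hδE : 0 ≤ δE := E.hδ.le
    calc w ≤ κ * (1 / l) ^ (j * n₁ - 1) * δE * (N + 2) := hfin
      _ ≤ κ * (1 / l) ^ (j * n₁ - 1) * δE * (3 * φ ^ (j * n₁)) :=
        mul_le_mul_of_nonneg_left hN3 (by positivity)
      _ = 3 * (κ * l * δE) * θ ^ (j * n₁) := by rw [hp, ← hθφ, mul_pow]; ring
      _ ≤ 3 * (κ * l * δE) * θ ^ j := by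
        refine mul_le_mul_of_nonneg_left ?_ (by positivity)
        exact pow_le_pow_of_le_one hθ0.le hθ1.le (Nat.le_mul_of_pos_right _ (by omega))
  have hlim : Tendsto (fun j : ℕ => 3 * (κ * l * δE) * θ ^ j) atTop (𝓝 (3 * (κ * l * δE) * 0)) :=
    (tendsto_pow_atTop_nhds_zero_of_lt_one hθ0.le hθ1).const_mul _
  rw [mul_zero] at hlim
  have := ge_of_tendsto hlim (eventually_atTop.2 ⟨1, key⟩)
  linarith

/-- An interval coding of the circle: `rp` is the representative in `[θ, θ + 1)` and `c` is
nondecreasing in it, points with the same letter are `m`-close, and points of `K` with different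
letters are `g`-separated. -/
structure Letters (K : Set Circle1) {q : ℕ} (c : Circle1 → Fin q) (rp : Circle1 → ℝ)
    (θ g m : ℝ) : Prop where
  hg : 0 < g
  coe : ∀ x, (rp x : Circle1) = x
  mem : ∀ x, θ ≤ rp x ∧ rp x < θ + 1
  mono : ∀ x y, rp x ≤ rp y → c x ≤ c y
  mesh : ∀ x y, c x = c y → |rp x - rp y| ≤ m
  sep : ∀ x ∈ K, ∀ y ∈ K, c x ≠ c y → g ≤ dist x y

lemma Letters.exists {K : Set Circle1} (hK : IsClosed K)
    (hInt : ∀ u v : ℝ, u < v → ∃ a, u < a ∧ a < v ∧ (a : Circle1) ∉ K) {m : ℝ} (hm : 0 < m) :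
    ∃ (q : ℕ) (c : Circle1 → Fin q) (rp : Circle1 → ℝ) (θ g : ℝ), Letters K c rp θ g m := by
  classical
  obtain ⟨θ, -, -, hθ⟩ := hInt 0 1 one_pos
  obtain ⟨J, hJ⟩ := exists_nat_gt (2 / m)
  have hJ0 : (0 : ℝ) < J := lt_trans (by positivity) hJ
  have hJ2 : 2 / (J : ℝ) < m := by
    rw [div_lt_iff₀ hm] at hJ
    rw [div_lt_iff₀ hJ0]; linarith
  have hpick : ∀ j : ℕ, ∃ a, θ + j / J < a ∧ a < θ + (j + 1) / J ∧ (a : Circle1) ∉ K := fun j =>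
    hInt _ _ (by gcongr; linarith)
  choose a ha1 ha2 ha3 using hpick
  set A : Finset ℝ := (Finset.range J).image a with hA
  set rp : Circle1 → ℝ := fun x => (AddCircle.equivIco 1 θ x : ℝ) with hrp
  have hcoe : ∀ x, (rp x : Circle1) = x := fun x => (AddCircle.equivIco 1 θ).symm_apply_apply x
  have hmem : ∀ x, θ ≤ rp x ∧ rp x < θ + 1 := fun x => (AddCircle.equivIco 1 θ x).2
  -- distance from the cut points to `K`
  have hgap : ∃ g > 0, ∀ b ∈ insert θ A, ∀ k ∈ K, g ≤ dist k (b : Circle1) := by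
    have h1 : ∀ b ∈ insert θ A, ∃ g > 0, ∀ k ∈ K, g ≤ dist k (b : Circle1) := by
      intro b hb
      have hbK : (b : Circle1) ∉ K := by
        rw [Finset.mem_insert] at hb
        rcases hb with rfl | hb
        · exact hθ
        · rw [hA, Finset.mem_image] at hb
          obtain ⟨j, -, rfl⟩ := hb
          exact ha3 j
      obtain ⟨g, hg, hball⟩ := Metric.isOpen_iff.1 hK.isOpen_compl _ hbK
      refine ⟨g, hg, fun k hk => ?_⟩
      by_contra hlt
      exact hball (Metric.mem_ball.2 (not_le.1 hlt)) hk
    choose! gf hgf0 hgf using h1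
    refine ⟨(insert θ A).inf' ⟨θ, Finset.mem_insert_self _ _⟩ gf, ?_, fun b hb k hk => ?_⟩
    · exact (Finset.lt_inf'_iff _).2 hgf0
    · exact (Finset.inf'_le _ hb).trans (hgf b hb k hk)
  obtain ⟨g, hg, hgK⟩ := hgap
  set c : Circle1 → Fin (A.card + 1) := fun x =>
    ⟨(A.filter (· ≤ rp x)).card, Nat.lt_succ_of_le (Finset.card_filter_le _ _)⟩ with hc
  have hsub : ∀ x y, rp x ≤ rp y → A.filter (· ≤ rp x) ⊆ A.filter (· ≤ rp y) := fun x y h b hb => by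
    rw [Finset.mem_filter] at hb ⊢
    exact ⟨hb.1, hb.2.trans h⟩
  -- letters differ exactly when a cut point lies between
  have hlt : ∀ x y, ∀ b ∈ A, rp x < b → b ≤ rp y → c x ≠ c y := by
    intro x y b hb h1 h2 he
    have h3 : (A.filter (· ≤ rp x)).card < (A.filter (· ≤ rp y)).card :=
      Finset.card_lt_card ((Finset.ssubset_iff_of_subset (hsub x y (h1.le.trans h2))).2
        ⟨b, Finset.mem_filter.2 ⟨hb, h2⟩, fun h => absurd (Finset.mem_filter.1 h).2 (not_le.2 h1)⟩)
    have h4 := congrArg Fin.val he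
    simp only [hc] at h4
    omega
  have hne : ∀ x y, rp x ≤ rp y → c x ≠ c y → ∃ b ∈ A, rp x < b ∧ b ≤ rp y := by
    intro x y hxy hcc
    by_contra hcon
    push Not at hcon
    refine hcc (Fin.ext (congrArg Finset.card (Finset.Subset.antisymm (hsub x y hxy) ?_)))
    intro b hb
    rw [Finset.mem_filter] at hb ⊢
    refine ⟨hb.1, ?_⟩
    by_contra h
    exact absurd hb.2 (not_le.2 (hcon b hb.1 (not_le.1 h)))
  have hmesh : ∀ x y, rp x ≤ rp y → c x = c y → rp y - rp x ≤ m := by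
    intro x y hxy hcc
    by_contra hcon
    push Not at hcon
    set j := ⌊(rp x - θ) * J⌋₊ with hj
    have hx0 : 0 ≤ (rp x - θ) * J := mul_nonneg (by linarith [(hmem x).1]) hJ0.le
    have hj1 : (j : ℝ) ≤ (rp x - θ) * J := Nat.floor_le hx0
    have hj2 : (rp x - θ) * J < j + 1 := Nat.lt_floor_add_one _
    have e1 : rp x < θ + ((j + 1 : ℕ) : ℝ) / J := by
      have : rp x - θ < ((j + 1 : ℕ) : ℝ) / J := by rw [lt_div_iff₀ hJ0]; push_cast; exact hj2
      linarith
    have e2 : θ + (((j + 1 : ℕ) : ℝ) + 1) / J ≤ rp y := by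
      have : (j : ℝ) / J ≤ rp x - θ := by rw [div_le_iff₀ hJ0]; exact hj1
      have h2 : (((j + 1 : ℕ) : ℝ) + 1) / J = (j : ℝ) / J + 2 / J := by push_cast; ring
      rw [h2]; linarith
    have e3 : j + 1 < J := by
      have h1 : θ + (((j + 1 : ℕ) : ℝ) + 1) / J < θ + 1 := e2.trans_lt (hmem y).2
      have h2 : (((j + 1 : ℕ) : ℝ) + 1) / J < 1 := by linarith
      rw [div_lt_one hJ0] at h2
      have h3 : ((j + 1 : ℕ) : ℝ) < J := by linarith
      exact_mod_cast h3
    exact hlt x y (a (j + 1)) (Finset.mem_image_of_mem _ (Finset.mem_range.2 e3))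
      (e1.trans (ha1 _)) ((ha2 _).le.trans e2) hcc
  have hsep : ∀ x ∈ K, ∀ y ∈ K, rp x ≤ rp y → c x ≠ c y → g ≤ dist x y := by
    intro x hx y hy hxy hcc
    by_contra hlt'
    push Not at hlt'
    obtain ⟨b, hb, hbd⟩ := exists_lift_near (rp x) y
    rw [hcoe] at hbd
    have hno : ∀ e ∈ insert θ A, ∀ e' : ℝ, (e' : Circle1) = e → |rp x - e'| ≤ |rp x - b| → False := by
      intro e he e' hee h
      have h1 := hgK e he x hx
      have h2 := dist_coe_le (rp x) e'
      rw [hcoe, hee] at h2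
      linarith
    have hθ1 : ((θ + 1 : ℝ) : Circle1) = θ := coe_eq_iff.2 ⟨1, by push_cast; ring⟩
    obtain ⟨hx1, hx2⟩ := hmem x
    have b1 : θ ≤ b := by
      by_contra h
      push Not at h
      refine hno θ (Finset.mem_insert_self _ _) θ rfl ?_
      rw [abs_of_nonneg (by linarith), abs_of_nonneg (by linarith)]; linarith
    have b2 : b < θ + 1 := by
      by_contra h
      push Not at h
      refine hno θ (Finset.mem_insert_self _ _) (θ + 1) hθ1 ?_
      rw [abs_of_nonpos (by linarith), abs_of_nonpos (by linarith)]; linarith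
    have hby : b = rp y := by
      obtain ⟨k, hk⟩ := coe_eq_iff.1 (hb.trans (hcoe y).symm)
      obtain ⟨hy1, hy2⟩ := hmem y
      have h1 : (k : ℝ) < 1 := by linarith
      have h2 : (-1 : ℝ) < k := by linarith
      have h3 : k < 1 := by exact_mod_cast h1
      have h4 : -1 < k := by exact_mod_cast h2
      have h5 : k = 0 := by omega
      rw [hk, h5]; simp
    obtain ⟨e, he, h1, h2⟩ := hne x y hxy hcc
    refine hno e (Finset.mem_insert_of_mem he) e rfl ?_
    rw [hby, abs_of_nonpos (by linarith), abs_of_nonpos (by linarith)]; linarith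
  refine ⟨A.card + 1, c, rp, θ, g, hg, hcoe, hmem, fun x y h => ?_, fun x y h => ?_, ?_⟩
  · exact Fin.mk_le_mk.2 (Finset.card_le_card (hsub x y h))
  · rcases le_total (rp x) (rp y) with h1 | h1
    · rw [abs_of_nonpos (by linarith)]; linarith [hmesh x y h1 h]
    · rw [abs_of_nonneg (by linarith)]; exact hmesh y x h1 h.symm
  · intro x hx y hy h
    rcases le_total (rp x) (rp y) with h1 | h1
    · exact hsep x hx y hy h1 h
    · rw [dist_comm]; exact hsep y hy x hx h1 h.symm

namespace Letters

variable {K : Set Circle1} {q : ℕ} {c : Circle1 → Fin q} {rp : Circle1 → ℝ} {θ g m : ℝ}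

lemma rp_eq (h : Letters K c rp θ g m) {x : Circle1} {b : ℝ} (hb : (b : Circle1) = x) (h1 : θ ≤ b)
    (h2 : b < θ + 1) : rp x = b := by
  obtain ⟨k, hk⟩ := coe_eq_iff.1 (hb.trans (h.coe x).symm)
  obtain ⟨hy1, hy2⟩ := h.mem x
  have h1 : (k : ℝ) < 1 := by linarith
  have h2 : (-1 : ℝ) < k := by linarith
  have h3 : k < 1 := by exact_mod_cast h1
  have h4 : -1 < k := by exact_mod_cast h2
  have h5 : k = 0 := by omega
  rw [hk, h5]; simp

/-- Points with the same letter on the interval between two points with that letter. -/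
lemma convex (h : Letters K c rp θ g m) {x y z : Circle1} (hxz : c x = c z) (h1 : rp x ≤ rp y)
    (h2 : rp y ≤ rp z) : c y = c x :=
  le_antisymm (hxz ▸ h.mono _ _ h2) (h.mono _ _ h1)

lemma dist_eq (h : Letters K c rp θ g m) (hm : m ≤ 1 / 2) {x y : Circle1} (hc : c x = c y) :
    dist x y = |rp x - rp y| := by
  rw [← dist_coe_eq ((h.mesh x y hc).trans hm), h.coe, h.coe]

/-- The points with a given word form an interval. -/
lemma word_convex {F : ℝ → ℝ} {d : ℤ} {C l Λ : ℝ} (h : Letters K c rp θ g m) (H : Lift F d C l Λ)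
    (hm : (Λ + 1) * m < 1) (k : ℕ) : ∀ x y z, word (cmap F) c k x = word (cmap F) c k z →
      rp x ≤ rp y → rp y ≤ rp z → word (cmap F) c k y = word (cmap F) c k x := by
  induction k with
  | zero => intro x y z _ _ _; exact Subsingleton.elim _ _
  | succ k ih =>
    intro x y z hw h1 h2
    rw [word_eq_iff] at hw ⊢
    have hc0 : c x = c z := hw 0 (by omega)
    have hy0 : c y = c x := h.convex hc0 h1 h2
    have hwT : word (cmap F) c k (cmap F x) = word (cmap F) c k (cmap F z) := by
      rw [word_eq_iff]
      intro i hi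
      have := hw (i + 1) (by omega)
      rwa [Function.iterate_succ_apply, Function.iterate_succ_apply] at this
    rcases Nat.eq_zero_or_pos k with rfl | hk
    · intro i hi
      obtain rfl : i = 0 := by omega
      exact hy0
    have hT : ∀ u, cmap F u = ((F (rp u) : ℝ) : Circle1) := fun u => by
      rw [← H.cmap_coe, h.coe]
    have hcT : c (cmap F x) = c (cmap F z) := by
      have := (word_eq_iff.1 hwT) 0 hk
      simpa using this
    obtain ⟨a, ha⟩ := coe_eq_iff.1 ((hT x).symm.trans (h.coe (cmap F x)).symm)
    obtain ⟨b, hb⟩ := coe_eq_iff.1 ((hT z).symm.trans (h.coe (cmap F z)).symm)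
    have hab : a = b := by
      have e1 := h.mesh _ _ hcT
      have e2 : |F (rp x) - F (rp z)| ≤ Λ * m := (H.lip _ _).trans
        (mul_le_mul_of_nonneg_left (h.mesh _ _ hc0) H.Λ0.le)
      rw [abs_le] at e1 e2
      have e3 : (a : ℝ) - b < 1 := by linarith
      have e4 : (-1 : ℝ) < a - b := by linarith
      have e5 : a - b < 1 := by exact_mod_cast e3
      have e6 : -1 < a - b := by exact_mod_cast e4
      omega
    subst hab
    have hmono : StrictMono F ∨ StrictAnti F := by
      have hinj : Function.Injective F := by simpa using H.inj_iter 1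
      exact H.cd.continuous.strictMono_of_inj hinj
    have hTx := h.mem (cmap F x)
    have hTz := h.mem (cmap F z)
    have hcy : ((F (rp y) - a : ℝ) : Circle1) = cmap F y := by
      rw [hT y, coe_eq_iff]
      exact ⟨-a, by push_cast; ring⟩
    have hgoal : word (cmap F) c k (cmap F y) = word (cmap F) c k (cmap F x) := by
      rcases hmono with hF | hF
      · have f1 := hF.monotone h1
        have f2 := hF.monotone h2
        have hr := h.rp_eq hcy (by linarith) (by linarith)
        exact ih _ _ _ hwT (by linarith) (by linarith)
      · have f1 := hF.antitone h1
        have f2 := hF.antitone h2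
        have hr := h.rp_eq hcy (by linarith) (by linarith)
        rw [ih _ _ _ hwT.symm (by linarith) (by linarith), hwT]
    intro i hi
    rcases i with _ | i
    · exact hy0
    · rw [Function.iterate_succ_apply, Function.iterate_succ_apply]
      exact (word_eq_iff.1 hgoal) i (by omega)

/-- Points with the same word of length `k + 1` are exponentially close. -/
lemma dist_le_of_word {T : Circle1 → Circle1} {Λ τ κ δE : ℝ} (h : Letters K c rp θ g m)
    (E : ExpSys T Λ τ κ δE) (hm : m ≤ 1 / 2) (hmδ : m ≤ δE) {k : ℕ} {x y : Circle1}
    (hw : word T c (k + 1) x = word T c (k + 1) y) : dist x y ≤ κ * τ ^ k * m := by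
  have h1 : ∀ i ≤ k, dist (T^[i] x) (T^[i] y) ≤ m := fun i hi => by
    have hc := word_eq_iff.1 hw i (by omega)
    rw [h.dist_eq hm hc]
    exact h.mesh _ _ hc
  refine (E.bowen k x y fun i hi => (h1 i hi).trans hmδ).trans ?_
  exact mul_le_mul_of_nonneg_left (h1 k le_rfl)
    (mul_nonneg E.κpos.le (pow_nonneg E.hτ0.le _))

end Letters

/-! ### Left special words of a calibrated set -/

lemma IsCal.back_iter {X : Type*} {T : X → X} {f u : X → ℝ} {β : ℝ} {M : Set X}
    (h : IsCal T f u β M) (n : ℕ) : ∀ x ∈ M, ∃ y ∈ M, T^[n] y = x := by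
  induction n with
  | zero => intro x hx; exact ⟨x, hx, rfl⟩
  | succ n ih =>
    intro x hx
    obtain ⟨y, hy, hyx⟩ := h.back x hx
    obtain ⟨z, hz, hzy⟩ := ih y hy
    exact ⟨z, hz, by rw [Function.iterate_succ_apply', hzy, hyx]⟩

namespace Lift
variable {F : ℝ → ℝ} {d : ℤ} {C l Λ : ℝ}

lemma birkhoff_coe (H : Lift F d C l Λ) (f : Circle1 → ℝ) (n : ℕ) (y : ℝ) :
    birkhoffSum (cmap F) f n (y : Circle1) = ∑ i ∈ Finset.range n, f (F^[i] y : ℝ) := by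
  unfold birkhoffSum
  exact Finset.sum_congr rfl fun i _ => by rw [H.iter_coe]

/-- Two calibrated branches over the interval `[X, X']`: the difference of the Birkhoff sums along
the two branches cannot increase faster than the Lipschitz constant of the sub-action allows, so
the derivatives compare at some intermediate point. -/
lemma branch_compare (H : Lift F d C l Λ) {f u : Circle1 → ℝ} {β L : ℝ} {M : Set Circle1}
    (hf : Differentiable ℝ fun x : ℝ => f x) (hL : 0 ≤ L) (hu : SubAct (cmap F) f u β L)
    (hM : IsCal (cmap F) f u β M) {n : ℕ} {P P' X X' : ℝ} {a a' : ℤ} (hP : (P : Circle1) ∈ M)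
    (hP' : (P' : Circle1) ∈ M) (hPX : F^[n] P = X + a) (hPX' : F^[n] P' = X' + a') (hX : X < X') :
    ∃ ξ Q Q', X < ξ ∧ ξ < X' ∧ F^[n] Q = ξ + a ∧ F^[n] Q' = ξ + a' ∧
      RR F (deriv fun x : ℝ => f x) n Q - RR F (deriv fun x : ℝ => f x) n Q' ≤
        2 * L / C * (1 / l) ^ n := by
  have hC := H.hC
  have hl := H.l0
  set G : ℝ → ℝ := Function.surjInv (H.surj_iter n) with hG
  have hFG : ∀ ξ, F^[n] (G ξ) = ξ := Function.surjInv_eq (H.surj_iter n)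
  have hGF : ∀ y ξ, F^[n] y = ξ → G ξ = y := fun y ξ h => H.inj_iter n ((hFG ξ).trans h.symm)
  have hGlip : ∀ s t, |G s - G t| ≤ 1 / C * (1 / l) ^ n * |s - t| := fun s t => by
    have := H.contract n (G s) (G t)
    rwa [hFG, hFG] at this
  have hGc : Continuous G := by
    refine (LipschitzWith.of_dist_le_mul (K := ⟨1 / C * (1 / l) ^ n, by positivity⟩) fun s t => ?_).continuous
    rw [Real.dist_eq, Real.dist_eq]
    exact hGlip s t
  have hGd : ∀ ξ, HasDerivAt G (deriv F^[n] (G ξ))⁻¹ ξ := fun ξ =>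
    HasDerivAt.of_local_left_inverse hGc.continuousAt (H.diff_iter n _).hasDerivAt
      (H.deriv_iter_ne n _) (Eventually.of_forall hFG)
  set Φ : ℝ → ℝ := fun y => ∑ i ∈ Finset.range n, f (F^[i] y : ℝ) with hΦ
  have hΦd : ∀ (b : ℤ) ξ, HasDerivAt (fun ξ : ℝ => Φ (G (ξ + b)))
      (RR F (deriv fun x : ℝ => f x) n (G (ξ + b))) ξ := by
    intro b ξ
    have h1 := H.hasDerivAt_birkhoff hf n (G (ξ + b))
    have h2 : HasDerivAt (fun ξ : ℝ => G (ξ + b)) (deriv F^[n] (G (ξ + b)))⁻¹ ξ :=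
      (hGd (ξ + b)).comp_add_const ξ b
    have h3 := HasDerivAt.comp ξ h1 h2
    rw [mul_assoc, mul_inv_cancel₀ (H.deriv_iter_ne n _), mul_one] at h3
    exact h3
  have hd : ∀ ξ, HasDerivAt (fun ξ : ℝ => Φ (G (ξ + a)) - Φ (G (ξ + a')))
      (RR F (deriv fun x : ℝ => f x) n (G (ξ + a)) - RR F (deriv fun x : ℝ => f x) n (G (ξ + a'))) ξ :=
    fun ξ => (hΦd a ξ).sub (hΦd a' ξ)
  obtain ⟨ξ, hξ, hslope⟩ := exists_hasDerivAt_eq_slope _ _ hX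
    (fun ξ _ => (hd ξ).continuousAt.continuousWithinAt) fun ξ _ => hd ξ
  refine ⟨ξ, G (ξ + a), G (ξ + a'), hξ.1, hξ.2, hFG _, hFG _, ?_⟩
  rw [hslope, div_le_iff₀ (by linarith)]
  -- the four Birkhoff sums
  have hcoe : ∀ (b : ℤ) (s : ℝ), ((s + b : ℝ) : Circle1) = s := fun b s => coe_eq_iff.2 ⟨b, rfl⟩
  have hcal : ∀ (p s : ℝ) (b : ℤ), (p : Circle1) ∈ M → F^[n] p = s + b →
      Φ (G (s + b)) = n * β + u (s : Circle1) - u (G (s + b) : ℝ) := by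
    intro p s b hp h
    have h1 := hM.sum_eq n hp
    rw [H.birkhoff_coe, H.iter_coe, h, hcoe] at h1
    rw [hGF p _ h]
    exact h1
  have hsub : ∀ (s : ℝ) (b : ℤ), Φ (G (s + b)) ≤ n * β + u (s : Circle1) - u (G (s + b) : ℝ) := by
    intro s b
    have h1 := hu.sum_le n (G (s + b) : ℝ)
    rw [H.birkhoff_coe, H.iter_coe, hFG, hcoe] at h1
    exact h1
  have hul : ∀ b : ℤ, |u (G (X + b) : ℝ) - u (G (X' + b) : ℝ)| ≤ L / C * (1 / l) ^ n * (X' - X) := by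
    intro b
    refine (hu.lip _ _).trans ?_
    have h1 := (dist_coe_le (G (X + b)) (G (X' + b))).trans (hGlip _ _)
    have h2 : |X + b - (X' + b)| = X' - X := by
      rw [abs_sub_comm, abs_of_pos (by linarith)]; ring
    rw [h2] at h1
    calc L * dist (G (X + b) : Circle1) (G (X' + b)) ≤ L * (1 / C * (1 / l) ^ n * (X' - X)) :=
          mul_le_mul_of_nonneg_left h1 hL
      _ = _ := by ring
  have e1 := hcal P X a hP hPX
  have e2 := hcal P' X' a' hP' hPX'
  have e3 := hsub X' a
  have e4 := hsub X a'
  have e5 := (abs_le.1 (hul a)).2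
  have e6 := (abs_le.1 (hul a')).1
  have e7 : 2 * L / C * (1 / l) ^ n * (X' - X) = 2 * (L / C * (1 / l) ^ n * (X' - X)) := by ring
  rw [e7]
  linarith

end Lift

/-- The point `x` carries a left special word of length `k`: some point with the same `k`-word has
a preimage in `M` whose letter differs from that of a preimage of `x` in `M`. -/
def Spec {X ι : Type*} (T : X → X) (c : X → ι) (M : Set X) (k : ℕ) (x : X) : Prop :=
  ∃ y p p', p ∈ M ∧ p' ∈ M ∧ T p = x ∧ T p' = y ∧ c p ≠ c p' ∧ word T c k x = word T c k y

lemma word_take {X ι : Type*} {T : X → X} {c : X → ι} {k k' : ℕ} (hk : k ≤ k') {x y : X}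
    (h : word T c k' x = word T c k' y) : word T c k x = word T c k y :=
  word_eq_iff.2 fun i hi => word_eq_iff.1 h i (by omega)

lemma exists_bin (B : ℝ) {ε : ℝ} (hε : 0 < ε) : ∃ (P : ℕ) (bin : ℝ → Fin P),
    ∀ s t, |s| ≤ B → |t| ≤ B → bin s = bin t → |s - t| ≤ ε := by
  set N := ⌊2 * B / ε⌋₊ with hN
  refine ⟨N + 1, fun s => ⟨min ⌊(s + B) / ε⌋₊ N, by omega⟩, fun s t hs ht hst => ?_⟩
  have key : ∀ s, |s| ≤ B → min ⌊(s + B) / ε⌋₊ N = ⌊(s + B) / ε⌋₊ := fun s hs => by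
    refine min_eq_left (Nat.floor_mono ?_)
    have := (abs_le.1 hs).2
    gcongr
    linarith
  have h := congrArg Fin.val hst
  simp only [key s hs, key t ht] at h
  have b1 : 0 ≤ (s + B) / ε := div_nonneg (by linarith [(abs_le.1 hs).1]) hε.le
  have b2 : 0 ≤ (t + B) / ε := div_nonneg (by linarith [(abs_le.1 ht).1]) hε.le
  have c1 := Nat.floor_le b1
  have c2 := Nat.lt_floor_add_one ((s + B) / ε)
  have c3 := Nat.floor_le b2
  have c4 := Nat.lt_floor_add_one ((t + B) / ε)
  rw [h] at c1 c2
  have d1 : |(s + B) / ε - (t + B) / ε| ≤ 1 := by rw [abs_le]; constructor <;> linarith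
  have d2 : (s + B) / ε - (t + B) / ε = (s - t) / ε := by ring
  rw [d2, abs_div, abs_of_pos hε, div_le_one hε] at d1
  exact d1

namespace Letters
variable {K : Set Circle1} {q : ℕ} {c : Circle1 → Fin q} {rp : Circle1 → ℝ} {θ g m : ℝ}

/-- Overlapping intervals of points with given words have comparable words. -/
lemma word_overlap {F : ℝ → ℝ} {d : ℤ} {C l Λ : ℝ} (h : Letters K c rp θ g m) (H : Lift F d C l Λ)
    (hm : (Λ + 1) * m < 1) {k k' : ℕ} (hk : k ≤ k') {x y x' y' : Circle1}
    (hw : word (cmap F) c k x = word (cmap F) c k y)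
    (hw' : word (cmap F) c k' x' = word (cmap F) c k' y')
    (h1 : rp x ≤ rp y') (h2 : rp x' ≤ rp y) :
    word (cmap F) c k x = word (cmap F) c k x' := by
  rcases le_total (rp x) (rp x') with h3 | h3
  · exact (h.word_convex H hm k x x' y hw h3 h2).symm
  · exact word_take hk (h.word_convex H hm k' x' x y' hw' h3 h1)

end Letters

set_option maxHeartbeats 1600000 in
/-- Left special words fall into boundedly many classes such that two of them in the same class are
comparable. The class of a word records the position of the word, the two preceding letters and
approximate values of the derivative functional on the two calibrated branches; by transversality
and calibration the order of the two branches is dictated by the values of the functional. -/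
theorem Letters.exists_cls {F : ℝ → ℝ} {d : ℤ} {C l Λ κ δE : ℝ} {K : Set Circle1} {q : ℕ}
    {c : Circle1 → Fin q} {rp : Circle1 → ℝ} {θ g m : ℝ} (h : Letters K c rp θ g m)
    (H : Lift F d C l Λ) (E : ExpSys (cmap F) Λ (1 / l) κ δE) (hm2 : m ≤ 1 / 2) (hmδ : m ≤ δE)
    (hm : (Λ + 1) * m < 1) {f : Circle1 → ℝ} (hf : ContDiff ℝ 1 fun x : ℝ => f x) {L D : ℝ}
    (hL : 0 ≤ L) (hD : 0 ≤ D) {n : ℕ} (hn : 1 ≤ n)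
    (hlip : ∀ y y', |RR F (deriv fun x : ℝ => f x) n y - RR F (deriv fun x : ℝ => f x) n y'| ≤
      D * |F^[n] y - F^[n] y'|)
    (htr : ∀ a b : ℝ, (a : Circle1) ∈ K → (b : Circle1) ∈ K →
      dist ((cmap F)^[n] (a : Circle1)) ((cmap F)^[n] (b : Circle1)) ≤ (1 / l) ^ n →
      g ≤ dist ((cmap F)^[n - 1] (a : Circle1)) ((cmap F)^[n - 1] (b : Circle1)) →
      (2 * L / C + 2 + 2 * D) * (1 / l) ^ n <
        |RR F (deriv fun x : ℝ => f x) n a - RR F (deriv fun x : ℝ => f x) n b|) :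
    ∃ P s₀ : ℕ, ∃ ν > 0, ∀ ψ, Sm ψ → NB 1 ν ψ → ∀ u β M,
      SubAct (cmap F) (fun x => f x + toC ψ x) u β L →
      IsCal (cmap F) (fun x => f x + toC ψ x) u β M → M ⊆ K →
      ∃ cls : ℕ → Circle1 → Fin P, ∀ k k' x x', s₀ ≤ k → k ≤ k' → Spec (cmap F) c M k x →
        Spec (cmap F) c M k' x' → cls k x = cls k' x' →
        word (cmap F) c k x = word (cmap F) c k x' := by
  classical
  have hl := H.l0
  have hC := H.hC
  set r : ℝ := (1 / l) ^ n with hr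
  have hr0 : 0 < r := by positivity
  set R : ℝ → ℝ := RR F (deriv fun x : ℝ => f x) n with hR
  have hfd : Differentiable ℝ fun x : ℝ => f x := hf.differentiable one_ne_zero
  have hfper : ∀ x : ℝ, f ((x + 1 : ℝ) : Circle1) = f x := fun x => by
    rw [coe_eq_iff.2 ⟨1, by push_cast; ring⟩]
  obtain ⟨B, hB1, hB⟩ := periodic_bound (hf.continuous_deriv le_rfl)
    (periodic_deriv (g := fun x : ℝ => f x) hfper)
  have hRB := H.RR_abs_le hB n
  set cc := C⁻¹ / (1 - 1 / l) with hcc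
  have hcc0 : 0 < cc := div_pos (inv_pos.2 hC) H.one_sub_pos
  obtain ⟨P₁, bin₁, hbin₁⟩ := exists_bin 1 (ε := r / 3) (by positivity)
  obtain ⟨P₂, bin₂, hbin₂⟩ := exists_bin (B * cc) hr0
  obtain ⟨k₀, hk₀⟩ : ∃ k₀ : ℕ, κ * (1 / l) ^ k₀ * m ≤ r / 3 := by
    have h1 : Tendsto (fun k : ℕ => κ * (1 / l) ^ k * m) atTop (𝓝 (κ * 0 * m)) :=
      ((tendsto_pow_atTop_nhds_zero_of_lt_one E.hτ0.le E.hτ1).const_mul κ).mul_const m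
    rw [mul_zero, zero_mul] at h1
    exact (h1.eventually_le_const (u := r / 3) (by positivity)).exists
  set Q := Fin P₁ × Fin q × Fin q × Fin P₂ × Fin P₂ with hQ
  refine ⟨Fintype.card Q, k₀ + 1, r / (2 * cc), by positivity, fun ψ hψ hψN u β M hu hM hMK => ?_⟩
  -- the order of two branches over nearby points
  have hsign : ∀ (P P' X X' : ℝ) (a a' : ℤ), (P : Circle1) ∈ M → (P' : Circle1) ∈ M →
      F^[n] P = X + a → F^[n] P' = X' + a' → X < X' → X' - X ≤ r →
      (2 * L / C + 2 + 2 * D) * r < |R P - R P'| → R P < R P' := by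
    intro P P' X X' a a' hP hP' hPX hPX' hX hXr htrans
    have hlift : (fun x : ℝ => f x + toC ψ (x : Circle1)) = fun x : ℝ => f x + ψ x := by
      funext x; rw [toC_coe hψ.per]
    obtain ⟨ξ, Q₁, Q₂, h1, h2, h3, h4, h5⟩ := H.branch_compare (f := fun x => f x + toC ψ x)
      (by rw [hlift]; exact hfd.add hψ.diff) hL hu hM hP hP' hPX hPX' hX
    have hder : (deriv fun x : ℝ => f x + toC ψ (x : Circle1)) =
        fun x => deriv (fun x : ℝ => f x) x + deriv ψ x := by
      rw [hlift]; funext x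
      exact ((hfd x).hasDerivAt.add (hψ.diff x).hasDerivAt).deriv
    rw [hder, Lift.RR_add_fun, Lift.RR_add_fun] at h5
    have b1 := abs_le.1 (H.RR_abs_le (hψN.abs_deriv_le le_rfl) n Q₁)
    have b2 := abs_le.1 (H.RR_abs_le (hψN.abs_deriv_le le_rfl) n Q₂)
    have b3 : r / (2 * cc) * cc = r / 2 := by field_simp
    rw [← hcc, b3] at b1 b2
    have e1 := hlip P Q₁
    have e2 := hlip Q₂ P'
    rw [hPX, h3] at e1
    rw [hPX', h4] at e2
    have f1 : |X + a - (ξ + a)| ≤ r := by rw [abs_le]; constructor <;> linarith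
    have f2 : |ξ + a' - (X' + a')| ≤ r := by rw [abs_le]; constructor <;> linarith
    have g1 := abs_le.1 (e1.trans (mul_le_mul_of_nonneg_left f1 hD))
    have g2 := abs_le.1 (e2.trans (mul_le_mul_of_nonneg_left f2 hD))
    have hle : R P - R P' ≤ (2 * L / C + 1 + 2 * D) * r := by
      have : (2 * L / C + 1 + 2 * D) * r = 2 * L / C * r + r + D * r + D * r := by ring
      rw [this]
      simp only [hR]
      linarith
    by_contra hge
    push Not at hge
    rw [abs_of_nonneg (by linarith)] at htrans
    have : (2 * L / C + 2 + 2 * D) * r = (2 * L / C + 1 + 2 * D) * r + r := by ring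
    linarith
  -- data attached to a special word
  have hdata : ∀ k x, Spec (cmap F) c M k x → ∃ (y : Circle1) (P P' : ℝ) (a a' : ℤ) (e e' : Fin q),
      (P : Circle1) ∈ M ∧ (P' : Circle1) ∈ M ∧ F^[n] P = rp x + a ∧ F^[n] P' = rp y + a' ∧
      c ((cmap F)^[n - 1] (P : Circle1)) = e ∧ c ((cmap F)^[n - 1] (P' : Circle1)) = e' ∧ e ≠ e' ∧
      word (cmap F) c k x = word (cmap F) c k y := by
    rintro k x ⟨y, p, p', hp, hp', hpx, hpy, hne, hw⟩
    have key : ∀ z w, z ∈ M → cmap F z = w → ∃ (P : ℝ) (a : ℤ), (P : Circle1) ∈ M ∧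
        F^[n] P = rp w + a ∧ (cmap F)^[n - 1] (P : Circle1) = z := by
      intro z w hz hzw
      obtain ⟨v, hv, hvz⟩ := hM.back_iter (n - 1) z hz
      obtain ⟨P, rfl⟩ := exists_lift v
      have h1 : (cmap F)^[n] (P : Circle1) = w := by
        obtain ⟨n', rfl⟩ : ∃ n', n = n' + 1 := ⟨_, (Nat.sub_add_cancel hn).symm⟩
        rw [Function.iterate_succ_apply']
        rw [Nat.add_sub_cancel] at hvz
        rw [hvz, hzw]
      rw [H.iter_coe, ← h.coe w, coe_eq_iff] at h1
      obtain ⟨a, ha⟩ := h1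
      exact ⟨P, a, hv, ha, hvz⟩
    obtain ⟨P, a, hP, hPX, hPz⟩ := key p x hp hpx
    obtain ⟨P', a', hP', hPX', hPz'⟩ := key p' y hp' hpy
    exact ⟨y, P, P', a, a', c p, c p', hP, hP', hPX, hPX', by rw [hPz], by rw [hPz'], hne, hw⟩
  haveI : Nonempty (Fin q) := ⟨c 0⟩
  choose! Y P P' a a' e e' hP hP' hPX hPX' he he' hee hw using hdata
  let cl : ℕ → Circle1 → Q := fun k x =>
    (bin₁ (rp x - θ), e k x, e' k x, bin₂ (R (P k x)), bin₂ (R (P' k x)))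
  refine ⟨fun k x => Fintype.equivFin Q (cl k x), fun k k' x x' hk hkk hx hx' hcl => ?_⟩
  have hcl' : cl k x = cl k' x' := (Fintype.equivFin Q).injective hcl
  have c1 : bin₁ (rp x - θ) = bin₁ (rp x' - θ) := congrArg (fun z : Q => z.1) hcl'
  have c2 : e k x = e k' x' := congrArg (fun z : Q => z.2.1) hcl'
  have c3 : e' k x = e' k' x' := congrArg (fun z : Q => z.2.2.1) hcl'
  have c4 : bin₂ (R (P k x)) = bin₂ (R (P k' x')) := congrArg (fun z : Q => z.2.2.2.1) hcl'
  have c5 : bin₂ (R (P' k x)) = bin₂ (R (P' k' x')) := congrArg (fun z : Q => z.2.2.2.2) hcl'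
  have hrpθ : ∀ x, |rp x - θ| ≤ 1 := fun x => by
    have := h.mem x
    rw [abs_le]; constructor <;> linarith
  have d1 : |rp x - rp x'| ≤ r / 3 := by
    have := hbin₁ _ _ (hrpθ x) (hrpθ x') c1
    rwa [sub_sub_sub_cancel_right] at this
  have hclose : ∀ k x y, k₀ + 1 ≤ k → word (cmap F) c k x = word (cmap F) c k y →
      |rp x - rp y| ≤ r / 3 := by
    intro k x y hk hw
    have h0 : c x = c y := word_eq_iff.1 hw 0 (by omega)
    rw [← h.dist_eq hm2 h0]
    exact (h.dist_le_of_word E hm2 hmδ (word_take hk hw)).trans hk₀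
  have d2 := hclose k x _ hk (hw k x hx)
  have d3 := hclose k' x' _ (hk.trans hkk) (hw k' x' hx')
  have d4 := hbin₂ _ _ (hRB _) (hRB _) c4
  have d5 := hbin₂ _ _ (hRB _) (hRB _) c5
  set y := Y k x with hy
  set y' := Y k' x' with hy'
  rw [abs_le] at d1 d2 d3 d4 d5
  -- transversality for all four cross pairs
  have hT : ∀ (p p' : ℝ) (z z' : Circle1) (b b' : ℤ), (p : Circle1) ∈ M → (p' : Circle1) ∈ M →
      F^[n] p = rp z + b → F^[n] p' = rp z' + b' → |rp z - rp z'| ≤ r →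
      c ((cmap F)^[n - 1] (p : Circle1)) ≠ c ((cmap F)^[n - 1] (p' : Circle1)) →
      (2 * L / C + 2 + 2 * D) * r < |R p - R p'| := by
    intro p p' z z' b b' hp hp' hpz hpz' hzz hcp
    refine htr p p' (hMK hp) (hMK hp') ?_ ?_
    · rw [H.iter_coe, H.iter_coe, hpz, hpz', coe_eq_iff.2 ⟨b, rfl⟩, coe_eq_iff.2 ⟨b', rfl⟩]
      exact (dist_coe_le _ _).trans hzz
    · exact h.sep _ (hMK (iter_mem hM.maps _ _ hp)) _ (hMK (iter_mem hM.maps _ _ hp')) hcp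
  have hne := hee k x hx
  have hcoef : 2 * r ≤ (2 * L / C + 2 + 2 * D) * r := by
    have : 0 ≤ 2 * L / C := by positivity
    exact mul_le_mul_of_nonneg_right (by linarith) hr0.le
  have t11 := hT _ _ x y _ _ (hP k x hx) (hP' k x hx) (hPX k x hx) (hPX' k x hx)
    (by rw [abs_le]; constructor <;> linarith) (by rw [he k x hx, he' k x hx]; exact hne)
  have t12 := hT _ _ x y' _ _ (hP k x hx) (hP' k' x' hx') (hPX k x hx) (hPX' k' x' hx')
    (by rw [abs_le]; constructor <;> linarith) (by rw [he k x hx, he' k' x' hx', ← c3]; exact hne)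
  have t21 := hT _ _ x' y _ _ (hP k' x' hx') (hP' k x hx) (hPX k' x' hx') (hPX' k x hx)
    (by rw [abs_le]; constructor <;> linarith) (by rw [he k' x' hx', he' k x hx, ← c2]; exact hne)
  rcases le_total (R (P k x)) (R (P' k x)) with hRR | hRR
  · have h11 : 2 * r < R (P' k x) - R (P k x) := by
      rw [abs_sub_comm, abs_of_nonneg (by linarith)] at t11
      linarith
    refine h.word_overlap H hm hkk (hw k x hx) (hw k' x' hx') ?_ ?_
    · by_contra hlt
      push Not at hlt
      have := hsign _ _ _ _ _ _ (hP' k' x' hx') (hP k x hx) (hPX' k' x' hx') (hPX k x hx) hlt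
        (by linarith) (by rw [abs_sub_comm]; exact t12)
      linarith
    · by_contra hlt
      push Not at hlt
      have := hsign _ _ _ _ _ _ (hP' k x hx) (hP k' x' hx') (hPX' k x hx) (hPX k' x' hx') hlt
        (by linarith) (by rw [abs_sub_comm]; exact t21)
      linarith
  · have h11 : 2 * r < R (P k x) - R (P' k x) := by
      rw [abs_of_nonneg (by linarith)] at t11
      linarith
    have hov : word (cmap F) c k y = word (cmap F) c k y' := by
      refine h.word_overlap H hm hkk (hw k x hx).symm (hw k' x' hx').symm ?_ ?_
      · by_contra hlt
        push Not at hlt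
        have := hsign _ _ _ _ _ _ (hP k' x' hx') (hP' k x hx) (hPX k' x' hx') (hPX' k x hx) hlt
          (by linarith) t21
        linarith
      · by_contra hlt
        push Not at hlt
        have := hsign _ _ _ _ _ _ (hP k x hx) (hP' k' x' hx') (hPX k x hx) (hPX' k' x' hx') hlt
          (by linarith) t12
        linarith
    have hcut := word_take hkk (hw k' x' hx')
    rw [hw k x hx, hov, hcut]

/-! ### Loops of words in a system with few left special words -/

section Combinatorics
variable {X : Type*} {q : ℕ}

lemma word_succ_cons {T : X → X} {c : X → Fin q} (k : ℕ) (x : X) :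
    word T c (k + 1) x = Fin.cons (c x) (word T c k (T x)) := by
  funext i
  refine Fin.cases ?_ (fun i => ?_) i
  · simp [word]
  · simp [word, Function.iterate_succ_apply]

lemma word_succ_snoc {T : X → X} {c : X → Fin q} (k : ℕ) (x : X) :
    word T c (k + 1) x = Fin.snoc (α := fun _ => Fin q) (word T c k x) (c (T^[k] x)) := by
  funext i
  refine Fin.lastCases ?_ (fun i => ?_) i
  · simp [word]
  · simp [word]

/-- Classes of left special words: two left special words of length at least `s₀` in the same class
are comparable. -/
def GoodCls (T : X → X) (c : X → Fin q) (M : Set X) (s₀ P : ℕ) (cls : ℕ → X → Fin P) : Prop :=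
  ∀ k k' x x', s₀ ≤ k → k ≤ k' → Spec T c M k x → Spec T c M k' x' → cls k x = cls k' x' →
    word T c k x = word T c k x'

lemma GoodCls.nwords_succ_le {T : X → X} {c : X → Fin q} {M : Set X} {s₀ P : ℕ}
    {cls : ℕ → X → Fin P} (h : GoodCls T c M s₀ P cls) (hmaps : ∀ x ∈ M, T x ∈ M) {k : ℕ}
    (hk : s₀ ≤ k) : nwords T c M (k + 1) ≤ nwords T c M k + P * q := by
  classical
  set A : Set (Fin (k + 1) → Fin q) := {w | ∃ p ∈ M, ¬ Spec T c M k (T p) ∧ word T c (k + 1) p = w}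
    with hA
  set B : Set (Fin (k + 1) → Fin q) := {w | ∃ p ∈ M, Spec T c M k (T p) ∧ word T c (k + 1) p = w}
    with hB
  have hcov : word T c (k + 1) '' M ⊆ A ∪ B := by
    rintro w ⟨p, hp, rfl⟩
    by_cases hs : Spec T c M k (T p)
    · exact Or.inr ⟨p, hp, hs, rfl⟩
    · exact Or.inl ⟨p, hp, hs, rfl⟩
  have hAc : A.ncard ≤ nwords T c M k := by
    refine Set.ncard_le_ncard_of_injOn (fun w => Fin.tail w) ?_ ?_ (Set.toFinite _)
    · rintro w ⟨p, hp, -, rfl⟩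
      refine ⟨T p, hmaps p hp, ?_⟩
      simp only [word_succ_cons, Fin.tail_cons]
    · rintro w ⟨p, hp, hs, rfl⟩ w' ⟨p', hp', hs', rfl⟩ he
      simp only [word_succ_cons, Fin.tail_cons] at he
      have hc : c p = c p' := by
        by_contra hne
        exact hs ⟨T p', p, p', hp, hp', rfl, rfl, hne, he⟩
      rw [word_succ_cons, word_succ_cons, hc, he]
  have hBc : B.ncard ≤ P * q := by
    rcases B.eq_empty_or_nonempty with hB0 | ⟨_, p₀, -⟩
    · rw [hB0, Set.ncard_empty]
      exact Nat.zero_le _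
    have hch : ∀ w : Fin (k + 1) → Fin q, ∃ z : X, w ∈ B →
        z ∈ M ∧ Spec T c M k (T z) ∧ word T c (k + 1) z = w := by
      intro w
      by_cases hw : w ∈ B
      · obtain ⟨p, hp, hs, hpw⟩ := hw
        exact ⟨p, fun _ => ⟨hp, hs, hpw⟩⟩
      · exact ⟨p₀, fun h => absurd h hw⟩
    choose z hz using hch
    have : B.ncard ≤ (Set.univ : Set (Fin P × Fin q)).ncard := by
      refine Set.ncard_le_ncard_of_injOn (fun w => (cls k (T (z w)), w 0)) (fun _ _ => mem_univ _)
        ?_ (Set.toFinite _)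
      intro w hw w' hw' he
      obtain ⟨h1, h2, h3⟩ := hz w hw
      obtain ⟨h1', h2', h3'⟩ := hz w' hw'
      have e1 : cls k (T (z w)) = cls k (T (z w')) := congrArg Prod.fst he
      have e2 : w 0 = w' 0 := congrArg Prod.snd he
      have e3 := h k k _ _ hk le_rfl h2 h2' e1
      rw [← h3, ← h3'] at e2 ⊢
      rw [word_succ_cons, word_succ_cons, Fin.cons_zero, Fin.cons_zero] at e2
      rw [word_succ_cons, word_succ_cons, e2, e3]
    simpa [Set.ncard_univ] using this
  calc nwords T c M (k + 1) ≤ (A ∪ B).ncard := Set.ncard_le_ncard hcov (Set.toFinite _)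
    _ ≤ A.ncard + B.ncard := Set.ncard_union_le _ _
    _ ≤ _ := add_le_add hAc hBc

lemma GoodCls.nwords_le {T : X → X} {c : X → Fin q} {M : Set X} {s₀ P : ℕ}
    {cls : ℕ → X → Fin P} (h : GoodCls T c M s₀ P cls) (hmaps : ∀ x ∈ M, T x ∈ M) (hq : 1 ≤ q)
    {k : ℕ} (hk : 1 ≤ k) : nwords T c M k ≤ (q ^ s₀ + P * q) * k := by
  have hsmall : ∀ k, nwords T c M k ≤ q ^ k := fun k => by
    have := Set.ncard_le_ncard (Set.subset_univ (word T c k '' M)) (Set.toFinite _)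
    simpa [Set.ncard_univ, nwords] using this
  have key : ∀ j, nwords T c M (s₀ + j) ≤ q ^ s₀ + j * (P * q) := by
    intro j
    induction j with
    | zero => simpa using hsmall s₀
    | succ j ih =>
      have := h.nwords_succ_le hmaps (k := s₀ + j) (by omega)
      rw [← add_assoc]
      calc _ ≤ _ := this
        _ ≤ q ^ s₀ + j * (P * q) + P * q := by omega
        _ = _ := by ring
  rcases le_total k s₀ with hks | hks
  · calc nwords T c M k ≤ q ^ k := hsmall k
      _ ≤ q ^ s₀ := Nat.pow_le_pow_right hq hks
      _ ≤ (q ^ s₀ + P * q) * 1 := by omega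
      _ ≤ _ := Nat.mul_le_mul_left _ hk
  · obtain ⟨j, rfl⟩ := Nat.exists_eq_add_of_le hks
    calc _ ≤ _ := key j
      _ ≤ q ^ s₀ * (s₀ + j) + (s₀ + j) * (P * q) := by
        refine add_le_add (Nat.le_mul_of_pos_right _ hk) (Nat.mul_le_mul_right _ (by omega))
      _ = _ := by ring

lemma exists_first_rep {B : Type*} {s : Set B} (hs : s.Finite) {u : ℕ → B} (hu : ∀ t, u t ∈ s) :
    ∃ i j, i < j ∧ j ≤ s.ncard ∧ u i = u j ∧ ∀ a b, a < j → b < j → u a = u b → a = b := by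
  classical
  have hex : ∃ j, ∃ i, i < j ∧ u i = u j := by
    by_contra hcon
    push Not at hcon
    have hinj : Function.Injective u := by
      intro a b hab
      rcases lt_trichotomy a b with h | h | h
      · exact absurd hab (hcon b a h)
      · exact h
      · exact absurd hab.symm (hcon a b h)
    exact Set.infinite_of_injective_forall_mem hinj hu hs
  obtain ⟨i, hij, he⟩ := Nat.find_spec hex
  set j := Nat.find hex with hj
  have hinj : ∀ a b, a < j → b < j → u a = u b → a = b := by
    intro a b ha hb hab
    rcases lt_trichotomy a b with h | h | h
    · exact absurd ⟨a, h, hab⟩ (Nat.find_min hex hb)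
    · exact h
    · exact absurd ⟨b, h, hab.symm⟩ (Nat.find_min hex ha)
  refine ⟨i, j, hij, ?_, he, hinj⟩
  have h1 : ((Finset.range j : Finset ℕ) : Set ℕ).ncard ≤ s.ncard :=
    Set.ncard_le_ncard_of_injOn u (fun a _ => hu a)
      (fun a ha b hb hab => hinj a b (by simpa using ha) (by simpa using hb) hab) hs
  rwa [Set.ncard_coe_finset, Finset.card_range] at h1

/-- Without periodic itineraries there are two short loops of `s`-words one of which avoids a word
of length `s + 1` of the other. -/
lemma exists_two_loops {T : X → X} {c : X → Fin q} {M : Set X} (hne : M.Nonempty)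
    (hmaps : ∀ x ∈ M, T x ∈ M)
    (hper : ∀ x ∈ M, ∀ n, 1 ≤ n → ∃ t, c (T^[t] (T^[n] x)) ≠ c (T^[t] x)) (s : ℕ) :
    ∃ x ∈ M, ∃ y ∈ M, ∃ n m, 1 ≤ n ∧ n ≤ nwords T c M s ∧ 1 ≤ m ∧ m ≤ nwords T c M s ∧
      word T c s (T^[n] x) = word T c s x ∧ word T c s (T^[m] y) = word T c s y ∧
      ∀ t < m, word T c (s + 1) (T^[t] y) ≠ word T c (s + 1) x := by
  classical
  have hrep : ∀ z ∈ M, ∃ i j, i < j ∧ j ≤ nwords T c M s ∧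
      word T c s (T^[i] z) = word T c s (T^[j] z) ∧
      ∀ a b, a < j → b < j → word T c s (T^[a] z) = word T c s (T^[b] z) → a = b := fun z hz =>
    exists_first_rep (Set.toFinite (word T c s '' M)) (u := fun t => word T c s (T^[t] z))
      fun t => ⟨_, iter_mem hmaps t z hz, rfl⟩
  obtain ⟨z, hz⟩ := hne
  obtain ⟨i, j, hij, hj, he, -⟩ := hrep z hz
  set n := j - i with hn
  set x₀ := T^[i] z with hx₀
  have hx₀M : x₀ ∈ M := iter_mem hmaps i z hz
  have hloop : word T c s (T^[n] x₀) = word T c s x₀ := by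
    rw [hx₀, ← Function.iterate_add_apply T n i z, hn, Nat.sub_add_cancel hij.le, he]
  have hex := hper x₀ hx₀M n (by omega)
  set t := Nat.find hex with ht
  have ht1 : c (T^[t] (T^[n] x₀)) ≠ c (T^[t] x₀) := Nat.find_spec hex
  have ht2 : ∀ t' < t, c (T^[t'] (T^[n] x₀)) = c (T^[t'] x₀) := fun t' h =>
    not_not.1 (Nat.find_min hex h)
  have hst : s ≤ t := by
    by_contra h
    exact ht1 (word_eq_iff.1 hloop t (by omega))
  obtain ⟨k, hk⟩ := Nat.exists_eq_add_of_le hst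
  set x := T^[k] x₀ with hx
  have hxM : x ∈ M := iter_mem hmaps k _ hx₀M
  have hsh : ∀ r, T^[r] (T^[n] x) = T^[k + r] (T^[n] x₀) := fun r => by
    rw [hx, ← Function.iterate_add_apply T n k x₀, ← Function.iterate_add_apply T r (n + k) x₀,
      ← Function.iterate_add_apply T (k + r) n x₀]
    congr 1; omega
  have hsh' : ∀ r, T^[r] x = T^[k + r] x₀ := fun r => by
    rw [hx, ← Function.iterate_add_apply T r k x₀]
    congr 1; omega
  have hxl : word T c s (T^[n] x) = word T c s x := by
    rw [word_eq_iff]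
    intro r hr
    rw [hsh, hsh']
    exact ht2 _ (by omega)
  have hxne : word T c (s + 1) (T^[n] x) ≠ word T c (s + 1) x := by
    intro h
    have := word_eq_iff.1 h s (by omega)
    rw [hsh, hsh', show k + s = t by omega] at this
    exact ht1 this
  have hw₀M : T^[n] x ∈ M := iter_mem hmaps n _ hxM
  obtain ⟨i', j', hij', hj', he', hinj⟩ := hrep _ hw₀M
  refine ⟨x, hxM, T^[i'] (T^[n] x), iter_mem hmaps i' _ hw₀M, n, j' - i', by omega, by omega,
    by omega, by omega, hxl, ?_, fun t' ht' heq => ?_⟩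
  · rw [← Function.iterate_add_apply T (j' - i') i' (T^[n] x), Nat.sub_add_cancel hij'.le, he']
  · rw [← Function.iterate_add_apply T t' i' (T^[n] x)] at heq
    have h1 : word T c s (T^[t' + i'] (T^[n] x)) = word T c s (T^[0] (T^[n] x)) :=
      (word_take (Nat.le_succ s) heq).trans hxl.symm
    have h2 := hinj _ _ (by omega) (by omega) h1
    rw [h2] at heq
    exact hxne heq

/-- Number of occurrences of the word `w` along the first `n` points of the orbit of `x`. -/
def cnt (T : X → X) (c : X → Fin q) (k : ℕ) (w : Fin k → Fin q) (n : ℕ) (x : X) : ℤ :=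
  ∑ t ∈ Finset.range n, if word T c k (T^[t] x) = w then 1 else 0

lemma cnt_snoc {T : X → X} {c : X → Fin q} (k : ℕ) (w : Fin k → Fin q) (n : ℕ) (x : X) :
    ∑ b, cnt T c (k + 1) (Fin.snoc (α := fun _ => Fin q) w b) n x = cnt T c k w n x := by
  unfold cnt
  rw [Finset.sum_comm]
  refine Finset.sum_congr rfl fun t _ => ?_
  rw [word_succ_snoc]
  simp only [Fin.snoc_inj]
  by_cases h : word T c k (T^[t] x) = w
  · simp [h]
  · simp [h]

lemma cnt_cons {T : X → X} {c : X → Fin q} (k : ℕ) (w : Fin k → Fin q) {n : ℕ} {x : X}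
    (hloop : word T c k (T^[n] x) = word T c k x) :
    ∑ a, cnt T c (k + 1) (Fin.cons a w) n x = cnt T c k w n x := by
  unfold cnt
  rw [Finset.sum_comm]
  have h1 : ∀ t, ∑ a, (if word T c (k + 1) (T^[t] x) = Fin.cons a w then (1 : ℤ) else 0) =
      if word T c k (T^[t + 1] x) = w then 1 else 0 := by
    intro t
    rw [word_succ_cons, Function.iterate_succ_apply']
    simp only [Fin.cons_inj]
    by_cases h : word T c k (T (T^[t] x)) = w
    · simp [h]
    · simp [h]
  rw [Finset.sum_congr rfl fun t _ => h1 t]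
  have h2 := Finset.sum_range_succ (fun t => if word T c k (T^[t] x) = w then (1 : ℤ) else 0) n
  have h3 := Finset.sum_range_succ' (fun t => if word T c k (T^[t] x) = w then (1 : ℤ) else 0) n
  rw [h3, hloop] at h2
  simp only [Function.iterate_zero, id] at h2
  exact add_right_cancel h2

lemma exists_of_cnt_ne {T : X → X} {c : X → Fin q} {M : Set X} (hmaps : ∀ x ∈ M, T x ∈ M) {k : ℕ}
    {w : Fin k → Fin q} {n : ℕ} {x : X} (hx : x ∈ M) (h : cnt T c k w n x ≠ 0) :
    ∃ p ∈ M, word T c k p = w := by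
  obtain ⟨t, -, ht⟩ := Finset.exists_ne_zero_of_sum_ne_zero h
  refine ⟨T^[t] x, iter_mem hmaps t x hx, ?_⟩
  by_contra hne
  exact ht (if_neg hne)

/-- A level at which two left special words branch. -/
def Ev (T : X → X) (c : X → Fin q) (M : Set X) (k : ℕ) : Prop :=
  ∃ x₁ x₂, Spec T c M k x₁ ∧ Spec T c M k x₂ ∧ word T c (k - 1) x₁ = word T c (k - 1) x₂ ∧
    word T c k x₁ ≠ word T c k x₂

lemma exists_other {ι : Type*} [Fintype ι] {u : ι → ℤ} (hsum : ∑ i, u i = 0) {i : ι}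
    (hi : u i ≠ 0) : ∃ j, j ≠ i ∧ u j ≠ 0 := by
  classical
  by_contra hcon
  push Not at hcon
  rw [Finset.sum_eq_single i (fun j _ hj => hcon j hj) (by simp)] at hsum
  exact hi hsum

/-- The weighted difference of the word counts of two loops can vanish at one level and not at the
next one only if two left special words branch there. -/
lemma ev_of_counts {T : X → X} {c : X → Fin q} {M : Set X} (hmaps : ∀ x ∈ M, T x ∈ M) {x y : X}
    (hx : x ∈ M) (hy : y ∈ M) {n m k : ℕ} (hk : 1 ≤ k)
    (hlx : word T c k (T^[n] x) = word T c k x) (hly : word T c k (T^[m] y) = word T c k y)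
    (h0 : ∀ w, (m : ℤ) * cnt T c k w n x - n * cnt T c k w m y = 0)
    (h1 : ∃ w, (m : ℤ) * cnt T c (k + 1) w n x - n * cnt T c (k + 1) w m y ≠ 0) : Ev T c M k := by
  obtain ⟨k, rfl⟩ : ∃ k', k = k' + 1 := ⟨_, (Nat.sub_add_cancel hk).symm⟩
  set z : (Fin (k + 1 + 1) → Fin q) → ℤ := fun w =>
    (m : ℤ) * cnt T c (k + 1 + 1) w n x - n * cnt T c (k + 1 + 1) w m y with hz
  have hpt : ∀ w, z w ≠ 0 → ∃ p ∈ M, word T c (k + 1 + 1) p = w := by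
    intro w hw
    by_cases hc : cnt T c (k + 1 + 1) w n x = 0
    · refine exists_of_cnt_ne hmaps hy (n := m) fun hc' => hw ?_
      simp [hz, hc, hc']
    · exact exists_of_cnt_ne hmaps hx hc
  have hs1 : ∀ w : Fin (k + 1) → Fin q, ∑ b, z (Fin.snoc (α := fun _ => Fin q) w b) = 0 := by
    intro w
    simp only [hz, Finset.sum_sub_distrib, ← Finset.mul_sum, cnt_snoc]
    exact h0 w
  have hs2 : ∀ w : Fin (k + 1) → Fin q, ∑ a, z (Fin.cons a w) = 0 := by
    intro w
    simp only [hz, Finset.sum_sub_distrib, ← Finset.mul_sum]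
    rw [cnt_cons _ _ hlx, cnt_cons _ _ hly]
    exact h0 w
  have hspec : ∀ (a : Fin q) (w : Fin (k + 1) → Fin q), z (Fin.cons a w) ≠ 0 →
      ∃ v, Spec T c M (k + 1) v ∧ word T c (k + 1) v = w := by
    intro a w hw
    obtain ⟨a', ha', hw'⟩ := exists_other (hs2 w) hw
    obtain ⟨p, hp, hpw⟩ := hpt _ hw
    obtain ⟨p', hp', hpw'⟩ := hpt _ hw'
    rw [word_succ_cons, Fin.cons_inj] at hpw hpw'
    refine ⟨T p, ⟨T p', p, p', hp, hp', rfl, rfl, ?_, hpw.2.trans hpw'.2.symm⟩, hpw.2⟩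
    rw [hpw.1, hpw'.1]
    exact ha'.symm
  obtain ⟨w, hw⟩ := h1
  obtain ⟨a, u, b, rfl⟩ : ∃ (a : Fin q) (u : Fin k → Fin q) (b : Fin q),
      w = Fin.cons a (Fin.snoc (α := fun _ => Fin q) u b) := by
    refine ⟨w 0, Fin.init (Fin.tail w), Fin.tail w (Fin.last _), ?_⟩
    rw [Fin.snoc_init_self, Fin.cons_self_tail]
  have hw2 := hw
  rw [Fin.cons_snoc_eq_snoc_cons] at hw2
  obtain ⟨b', hb', hw3⟩ := exists_other (u := fun b => z (Fin.snoc (α := fun _ => Fin q) (Fin.cons a u) b))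
    (hs1 _) hw2
  rw [← Fin.cons_snoc_eq_snoc_cons] at hw3
  obtain ⟨v, hv, hvw⟩ := hspec _ _ hw
  obtain ⟨v', hv', hvw'⟩ := hspec _ _ hw3
  refine ⟨v, v', hv, hv', ?_, ?_⟩
  · rw [word_succ_snoc, Fin.snoc_inj] at hvw hvw'
    exact hvw.1.trans hvw'.1.symm
  · rw [hvw, hvw']
    simp only [ne_eq, Fin.snoc_inj, true_and]
    exact hb'.symm

lemma exists_cnt_ne_down {T : X → X} {c : X → Fin q} {M : Set X} (hmaps : ∀ x ∈ M, T x ∈ M)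
    {x y : X} (hx : x ∈ M) (hy : y ∈ M) {n m k : ℕ} (hk : 1 ≤ k) (j : ℕ)
    (hlx : word T c (k + j) (T^[n] x) = word T c (k + j) x)
    (hly : word T c (k + j) (T^[m] y) = word T c (k + j) y)
    (hev : ∀ i ≤ j, ¬ Ev T c M (k + i))
    (h1 : ∃ w, (m : ℤ) * cnt T c (k + j + 1) w n x - n * cnt T c (k + j + 1) w m y ≠ 0) :
    ∃ w, (m : ℤ) * cnt T c k w n x - n * cnt T c k w m y ≠ 0 := by
  induction j with
  | zero =>
    by_contra hcon
    push Not at hcon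
    exact hev 0 le_rfl (ev_of_counts hmaps hx hy hk hlx hly hcon h1)
  | succ j ih =>
    refine ih (word_take (by omega) hlx) (word_take (by omega) hly)
      (fun i hi => hev i (by omega)) ?_
    by_contra hcon
    push Not at hcon
    exact hev (j + 1) le_rfl (ev_of_counts hmaps hx hy (by omega) hlx hly hcon h1)

lemma GoodCls.exists_no_ev {T : X → X} {c : X → Fin q} {M : Set X} {s₀ P : ℕ}
    {cls : ℕ → X → Fin P} (h : GoodCls T c M s₀ P cls) {s : ℕ → ℕ} (hs : StrictMono s)
    (hs0 : s₀ ≤ s 0) : ∃ i < P * P + 1, ∀ k, s i ≤ k → k < s (i + 1) → ¬ Ev T c M k := by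
  by_contra hcon
  push Not at hcon
  obtain ⟨_, _, _, x₀, _⟩ := hcon 0 (by omega)
  haveI : Nonempty X := ⟨x₀⟩
  choose! k hk1 hk2 x₁ x₂ hx₁ hx₂ hpre hne using hcon
  obtain ⟨i, j, hij, he⟩ := Fintype.exists_ne_map_eq_of_card_lt
    (fun i : Fin (P * P + 1) => (cls (k i) (x₁ i), cls (k i) (x₂ i))) (by simp)
  have key : ∀ i j : Fin (P * P + 1), i < j →
      (cls (k i) (x₁ i), cls (k i) (x₂ i)) = (cls (k j) (x₁ j), cls (k j) (x₂ j)) → False := by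
    intro i j hij he
    rw [Prod.mk.injEq] at he
    have hlt : k i < k j := (hk2 i i.2).trans_le ((hs.monotone (Nat.succ_le_of_lt hij)).trans (hk1 j j.2))
    have h0 : s₀ ≤ k i := hs0.trans ((hs.monotone (Nat.zero_le _)).trans (hk1 i i.2))
    have e1 := h _ _ _ _ h0 hlt.le (hx₁ i i.2) (hx₁ j j.2) he.1
    have e2 := h _ _ _ _ h0 hlt.le (hx₂ i i.2) (hx₂ j j.2) he.2
    have e3 := word_take (show k i ≤ k j - 1 by omega) (hpre j j.2)
    exact hne i i.2 (e1.trans (e3.trans e2.symm))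
  rcases lt_or_gt_of_ne hij with h1 | h1
  · exact key i j h1 he
  · exact key j i h1 he.symm

/-- In a system with few left special words and no periodic itinerary, at one of boundedly many
scales there are two loops of linear length whose word counts differ at a much lower level. -/
theorem GoodCls.exists_loops {T : X → X} {c : X → Fin q} {M : Set X} {s₀ P : ℕ}
    {cls : ℕ → X → Fin P} (h : GoodCls T c M s₀ P cls) (hne : M.Nonempty)
    (hmaps : ∀ x ∈ M, T x ∈ M)
    (hper : ∀ x ∈ M, ∀ n, 1 ≤ n → ∃ t, c (T^[t] (T^[n] x)) ≠ c (T^[t] x))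
    {s : ℕ → ℕ} (hs : StrictMono s) (hs0 : s₀ ≤ s 0) (hs1 : 1 ≤ s 0) :
    ∃ i < P * P + 1, ∃ x ∈ M, ∃ y ∈ M, ∃ n m, 1 ≤ n ∧ n ≤ (q ^ s₀ + P * q) * s (i + 1) ∧
      1 ≤ m ∧ m ≤ (q ^ s₀ + P * q) * s (i + 1) ∧
      word T c (s (i + 1) - 1) (T^[n] x) = word T c (s (i + 1) - 1) x ∧
      word T c (s (i + 1) - 1) (T^[m] y) = word T c (s (i + 1) - 1) y ∧
      ∃ w, (m : ℤ) * cnt T c (s i) w n x - n * cnt T c (s i) w m y ≠ 0 := by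
  obtain ⟨i, hi, hev⟩ := h.exists_no_ev hs hs0
  have hq : 1 ≤ q := by
    obtain ⟨x, -⟩ := hne
    exact Nat.one_le_iff_ne_zero.2 fun h0 => by subst h0; exact (c x).elim0
  have hsi : 1 ≤ s i := hs1.trans (hs.monotone (Nat.zero_le _))
  have hlt : s i < s (i + 1) := hs (Nat.lt_succ_self i)
  obtain ⟨j, hj⟩ := Nat.exists_eq_add_of_lt hlt
  obtain ⟨x, hx, y, hy, n, m, hn1, hn, hm1, hm, hlx, hly, hno⟩ :=
    exists_two_loops (c := c) hne hmaps hper (s i + j)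
  have hV := h.nwords_le hmaps hq (k := s i + j) (by omega)
  have hV' : (q ^ s₀ + P * q) * (s i + j) ≤ (q ^ s₀ + P * q) * s (i + 1) :=
    Nat.mul_le_mul_left _ (by omega)
  have hsub : s (i + 1) - 1 = s i + j := by omega
  refine ⟨i, hi, x, hx, y, hy, n, m, hn1, by omega, hm1, by omega, by rw [hsub]; exact hlx,
    by rw [hsub]; exact hly, ?_⟩
  refine exists_cnt_ne_down hmaps hx hy hsi j hlx hly (fun a ha => hev _ (by omega) (by omega)) ?_
  refine ⟨word T c (s i + j + 1) x, ?_⟩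
  have h1 : cnt T c (s i + j + 1) (word T c (s i + j + 1) x) m y = 0 := by
    unfold cnt
    exact Finset.sum_eq_zero fun t ht => if_neg (hno t (Finset.mem_range.1 ht))
  have h2 : 1 ≤ cnt T c (s i + j + 1) (word T c (s i + j + 1) x) n x := by
    unfold cnt
    have := Finset.single_le_sum (f := fun t => if word T c (s i + j + 1) (T^[t] x) =
      word T c (s i + j + 1) x then (1 : ℤ) else 0) (s := Finset.range n)
      (fun t _ => by split_ifs <;> norm_num) (Finset.mem_range.2 (show 0 < n by omega))
    simpa using this
  rw [h1, mul_zero, sub_zero]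
  have hm0 : (0 : ℤ) < m := by exact_mod_cast hm1
  positivity

end Combinatorics

/-! ### Creating a periodic orbit in the calibrated set -/

/-- A scale `s` at which the number of pairs of coded orbit segments of length linear in `s` is
beaten by the contraction `τ ^ s`. -/
lemma exists_scale {τ η a Y γ : ℝ} (hτ0 : 0 < τ) (hτ1 : τ < 1) {C₀ n₁ : ℕ} (hn₁ : 1 ≤ n₁)
    (hη : η * (4 * (C₀ + 1)) = -Real.log τ) (ha0 : 0 ≤ a) (ha : a ≤ Real.exp (η * n₁))
    (hY : 0 ≤ Y) (hγ : 0 < γ) (k : ℕ) : ∃ s > k, ∃ J : ℕ, (C₀ + 1) * s + 1 ≤ J * n₁ ∧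
      ((C₀ * s + 1 : ℝ) ^ 2 * (a ^ J) ^ 2) * (Y * s ^ 2 * τ ^ s) < γ := by
  have hlog : 0 < -Real.log τ := by linarith [Real.log_neg hτ0 hτ1]
  have hη0 : 0 < η := by
    by_contra h
    have : η * (4 * ((C₀ : ℝ) + 1)) ≤ 0 := mul_nonpos_of_nonpos_of_nonneg (not_lt.1 h) (by positivity)
    linarith
  set ρ := Real.exp (Real.log τ / 2) with hρ
  have hρ1 : ρ < 1 := Real.exp_lt_one_iff.2 (by linarith)
  set Q : ℝ := (C₀ + 1) ^ 2 * Real.exp (2 * η * (n₁ + 1)) * Y with hQ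
  have ht : Tendsto (fun s : ℕ => Q * ((s : ℝ) ^ 4 * ρ ^ s)) atTop (𝓝 0) := by
    have := (tendsto_pow_const_mul_const_pow_of_lt_one 4 (Real.exp_pos _).le hρ1).const_mul Q
    simpa using this
  obtain ⟨s, hs, hsk⟩ := ((ht.eventually_lt_const hγ).and (eventually_gt_atTop k)).exists
  have hs1 : (1 : ℝ) ≤ s := by exact_mod_cast (show 1 ≤ s by omega)
  set b := (C₀ + 1) * s + 1 with hb
  refine ⟨s, hsk, b / n₁ + 1, ?_, lt_of_le_of_lt ?_ hs⟩
  · have h1 := Nat.div_add_mod b n₁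
    have h2 := Nat.mod_lt b (show 0 < n₁ by omega)
    have h3 : (b / n₁ + 1) * n₁ = n₁ * (b / n₁) + n₁ := by ring
    omega
  · have hJ : ((b / n₁ + 1 : ℕ) : ℝ) * n₁ ≤ (C₀ + 1) * s + (n₁ + 1) := by
      have h1 := Nat.div_mul_le_self b n₁
      have h2 : (b / n₁ + 1) * n₁ ≤ (C₀ + 1) * s + (n₁ + 1) := by
        rw [add_mul, one_mul]; omega
      exact_mod_cast h2
    have h1 : (a ^ (b / n₁ + 1)) ^ 2 ≤
        Real.exp (2 * η * (n₁ + 1)) * Real.exp (-Real.log τ / 2 * s) := by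
      calc (a ^ (b / n₁ + 1)) ^ 2 ≤ (Real.exp (η * n₁) ^ (b / n₁ + 1)) ^ 2 := by gcongr
        _ = Real.exp (2 * η * (((b / n₁ + 1 : ℕ) : ℝ) * n₁)) := by
          rw [← Real.exp_nat_mul, ← Real.exp_nat_mul]
          congr 1; push_cast; ring
        _ ≤ Real.exp (2 * η * ((C₀ + 1) * s + (n₁ + 1))) := by gcongr
        _ = _ := by
          rw [← Real.exp_add]
          congr 1
          rw [← hη]; ring
    have h2 : τ ^ s = Real.exp (Real.log τ * s) := by
      rw [mul_comm, Real.exp_nat_mul, Real.exp_log hτ0]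
    have h3 : Real.exp (-Real.log τ / 2 * s) * τ ^ s = ρ ^ s := by
      rw [h2, hρ, ← Real.exp_add, ← Real.exp_nat_mul]
      congr 1; ring
    have h4 : (C₀ * s + 1 : ℝ) ≤ (C₀ + 1) * s := by linarith
    calc _ ≤ (((C₀ + 1) * s : ℝ) ^ 2 *
          (Real.exp (2 * η * (n₁ + 1)) * Real.exp (-Real.log τ / 2 * s))) * (Y * s ^ 2 * τ ^ s) := by
          gcongr
      _ = Q * (s ^ 4 * (Real.exp (-Real.log τ / 2 * s) * τ ^ s)) := by rw [hQ]; ring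
      _ = _ := by rw [h3]

/-- Smooth functions separating the points of `K` according to their words of length `k`. -/
lemma Letters.exists_word_bumps {T : Circle1 → Circle1} {Λ τ κ δE : ℝ} {K : Set Circle1} {q : ℕ}
    {c : Circle1 → Fin q} {rp : Circle1 → ℝ} {θ g m : ℝ} (h : Letters K c rp θ g m)
    (E : ExpSys T Λ τ κ δE) (hK : ∀ x ∈ K, T x ∈ K) (N k : ℕ) :
    ∃ B : ℝ, 0 < B ∧ ∃ φ : (Fin k → Fin q) → ℝ → ℝ, ∀ w, Sm (φ w) ∧ NB N B (φ w) ∧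
      ∀ x ∈ K, toC (φ w) x = if word T c k x = w then 1 else 0 := by
  classical
  obtain ⟨B, hB1, hB⟩ := exists_bump N
  have hΛ := E.hΛ
  have hg := h.hg
  set ρ := min 1 (g / Λ ^ k) with hρ
  have hρ0 : 0 < ρ := lt_min one_pos (by positivity)
  have hb := fun w : Fin k → Fin q => hB {x | x ∈ K ∧ word T c k x = w} ρ hρ0 (min_le_left _ _)
  choose φ h1 h2 h3 h4 h5 h6 h7 using hb
  refine ⟨B / ρ ^ N, by positivity, φ, fun w => ⟨h1 w, h6 w, fun x hx => ?_⟩⟩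
  obtain ⟨a, rfl⟩ := exists_lift x
  rw [toC_coe (h1 w).per]
  split_ifs with hw
  · exact h4 w a ⟨hx, hw⟩
  · refine h5 w a fun y hy => ?_
    have hne : ∃ i < k, c (T^[i] (a : Circle1)) ≠ c (T^[i] y) := by
      by_contra hcon
      push Not at hcon
      exact hw ((word_eq_iff.2 hcon).trans hy.2)
    obtain ⟨i, hi, hne⟩ := hne
    have h8 := h.sep _ (iter_mem hK i _ hx) _ (iter_mem hK i _ hy.1) hne
    refine (min_le_right _ _).trans ?_
    rw [div_le_iff₀ (by positivity), mul_comm]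
    calc g ≤ _ := h8
      _ ≤ Λ ^ i * dist (a : Circle1) y := E.lip_iter _ _ _
      _ ≤ _ := by gcongr

/-- The difference of two Birkhoff sums of `f`, weighted so that constants cancel. -/
def wd {X : Type*} (T : X → X) (f : X → ℝ) (n m : ℕ) (x y : X) : ℝ :=
  m * birkhoffSum T f n x - n * birkhoffSum T f m y

lemma wd_add_sum {X ι : Type*} (T : X → X) (f : X → ℝ) (s : Finset ι) (a : ι → ℝ) (φ : ι → X → ℝ)
    (n m : ℕ) (x y : X) : wd T (fun x => f x + ∑ k ∈ s, a k * φ k x) n m x y =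
      wd T f n m x y + ∑ k ∈ s, a k * wd T (φ k) n m x y := by
  have h : ∀ n x, birkhoffSum T (fun x => f x + ∑ k ∈ s, a k * φ k x) n x =
      birkhoffSum T f n x + ∑ k ∈ s, a k * birkhoffSum T (φ k) n x := by
    intro n x
    simp only [birkhoffSum, Finset.sum_add_distrib, Finset.mul_sum]
    rw [Finset.sum_comm]
  simp only [wd, h, mul_sub, Finset.sum_sub_distrib, mul_add, Finset.mul_sum]
  have h1 : ∀ k, (m : ℝ) * (a k * birkhoffSum T (φ k) n x) = a k * (m * birkhoffSum T (φ k) n x) :=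
    fun k => by ring
  have h2 : ∀ k, (n : ℝ) * (a k * birkhoffSum T (φ k) m y) = a k * (n * birkhoffSum T (φ k) m y) :=
    fun k => by ring
  simp only [h1, h2]
  ring

lemma wd_indicator {X : Type*} {q : ℕ} {T : X → X} {c : X → Fin q} {K : Set X}
    (hK : ∀ x ∈ K, T x ∈ K) {k : ℕ} {w : Fin k → Fin q} {φ : X → ℝ}
    (hφ : ∀ x ∈ K, φ x = if word T c k x = w then 1 else 0) (n m : ℕ) {x y : X} (hx : x ∈ K)
    (hy : y ∈ K) : wd T φ n m x y = ((m * cnt T c k w n x - n * cnt T c k w m y : ℤ) : ℝ) := by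
  have h : ∀ n x, x ∈ K → birkhoffSum T φ n x = (cnt T c k w n x : ℝ) := by
    intro n x hx
    rw [birkhoffSum, cnt]
    push_cast
    exact Finset.sum_congr rfl fun t _ => hφ _ (iter_mem hK t x hx)
  rw [wd, h n x hx, h m y hy]
  push_cast
  rfl

lemma wd_close {X : Type*} [MetricSpace X] {T : X → X} {f : X → ℝ} {K r R : ℝ} (hK : 0 ≤ K)
    (hf : Lip K f) {n m : ℕ} (hn : (n : ℝ) ≤ R) (hm : (m : ℝ) ≤ R) (hr : 0 ≤ r) {x y x' y' : X}
    (hx : ∀ t < n, dist (T^[t] x) (T^[t] x') ≤ r) (hy : ∀ t < m, dist (T^[t] y) (T^[t] y') ≤ r) :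
    |wd T f n m x y - wd T f n m x' y'| ≤ 2 * R ^ 2 * K * r := by
  have h : ∀ n : ℕ, (n : ℝ) ≤ R → ∀ x x', (∀ t < n, dist (T^[t] x) (T^[t] x') ≤ r) →
      |birkhoffSum T f n x - birkhoffSum T f n x'| ≤ R * (K * r) := by
    intro n hn x x' hx
    rw [birkhoffSum, birkhoffSum, ← Finset.sum_sub_distrib]
    calc _ ≤ ∑ t ∈ Finset.range n, |f (T^[t] x) - f (T^[t] x')| := Finset.abs_sum_le_sum_abs _ _
      _ ≤ ∑ t ∈ Finset.range n, K * r := Finset.sum_le_sum fun t ht =>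
        (hf _ _).trans (mul_le_mul_of_nonneg_left (hx t (Finset.mem_range.1 ht)) hK)
      _ = n * (K * r) := by simp
      _ ≤ _ := by gcongr
  have h1 := h n hn x x' hx
  have h2 := h m hm y y' hy
  have hR : 0 ≤ R := (Nat.cast_nonneg n).trans hn
  have e : wd T f n m x y - wd T f n m x' y' = m * (birkhoffSum T f n x - birkhoffSum T f n x') -
      n * (birkhoffSum T f m y - birkhoffSum T f m y') := by unfold wd; ring
  rw [e]
  calc _ ≤ |m * (birkhoffSum T f n x - birkhoffSum T f n x')| +
        |n * (birkhoffSum T f m y - birkhoffSum T f m y')| := abs_sub _ _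
    _ = m * |birkhoffSum T f n x - birkhoffSum T f n x'| +
        n * |birkhoffSum T f m y - birkhoffSum T f m y'| := by
      rw [abs_mul, abs_mul, Nat.abs_cast, Nat.abs_cast]
    _ ≤ R * (R * (K * r)) + R * (R * (K * r)) := by gcongr
    _ = _ := by ring

/-- On a calibrated set the weighted difference of two almost closed orbit segments is small. -/
lemma IsCal.wd_le {X : Type*} [MetricSpace X] {T : X → X} {f u : X → ℝ} {β L r R : ℝ} {M : Set X}
    (hc : IsCal T f u β M) (hu : SubAct T f u β L) (hL : 0 ≤ L) {n m : ℕ} (hn : (n : ℝ) ≤ R)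
    (hm : (m : ℝ) ≤ R) (hr : 0 ≤ r) {x y : X} (hx : x ∈ M) (hy : y ∈ M) (hxr : dist (T^[n] x) x ≤ r)
    (hyr : dist (T^[m] y) y ≤ r) : |wd T f n m x y| ≤ 2 * R * L * r := by
  have h1 := (hu.lip _ _).trans (mul_le_mul_of_nonneg_left hxr hL)
  have h2 := (hu.lip _ _).trans (mul_le_mul_of_nonneg_left hyr hL)
  have hR : 0 ≤ R := (Nat.cast_nonneg n).trans hn
  have e : wd T f n m x y = m * (u (T^[n] x) - u x) - n * (u (T^[m] y) - u y) := by
    rw [wd, hc.sum_eq n hx, hc.sum_eq m hy]; ring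
  rw [e]
  calc _ ≤ |m * (u (T^[n] x) - u x)| + |n * (u (T^[m] y) - u y)| := abs_sub _ _
    _ = m * |u (T^[n] x) - u x| + n * |u (T^[m] y) - u y| := by
      rw [abs_mul, abs_mul, Nat.abs_cast, Nat.abs_cast]
    _ ≤ R * (L * r) + R * (L * r) := by gcongr
    _ = _ := by ring

/-- If all letters along the orbits of `x` and `y` agree then `x = y`. -/
lemma Letters.eq_of_letters {T : Circle1 → Circle1} {Λ τ κ δE : ℝ} {K : Set Circle1} {q : ℕ}
    {c : Circle1 → Fin q} {rp : Circle1 → ℝ} {θ g m : ℝ} (h : Letters K c rp θ g m)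
    (E : ExpSys T Λ τ κ δE) (hm : m ≤ 1 / 2) (hmδ : m ≤ δE) {x y : Circle1}
    (hxy : ∀ t, c (T^[t] x) = c (T^[t] y)) : x = y := by
  have h1 : ∀ k : ℕ, dist x y ≤ κ * τ ^ k * m := fun k =>
    h.dist_le_of_word E hm hmδ (k := k) (word_eq_iff.2 fun i _ => hxy i)
  have h2 : Tendsto (fun k : ℕ => κ * τ ^ k * m) atTop (𝓝 (κ * 0 * m)) :=
    ((tendsto_pow_atTop_nhds_zero_of_lt_one E.hτ0.le E.hτ1).const_mul κ).mul_const m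
  have h3 := ge_of_tendsto' h2 h1
  simp only [mul_zero, zero_mul] at h3
  exact dist_le_zero.1 h3

set_option maxHeartbeats 1600000 in
/-- A small perturbation for which, at boundedly many scales `s i`, no two coded orbit segments of
length linear in `s (i + 1)` with different word statistics at level `s i` have almost the same
averages. -/
theorem Letters.exists_generic {T : Circle1 → Circle1} {Λ τ κ δE : ℝ} {K : Set Circle1} {q : ℕ}
    {c : Circle1 → Fin q} {rp : Circle1 → ℝ} {θ g m₀ : ℝ} (h : Letters K c rp θ g m₀)
    (E : ExpSys T Λ τ κ δE) (hK : ∀ x ∈ K, T x ∈ K) {C₀ n₁ : ℕ} (hn₁ : 1 ≤ n₁)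
    {S : Finset Circle1} {δ η : ℝ} (hδ : 2 * δ ≤ δE) (hη : η * (4 * (C₀ + 1)) = -Real.log τ)
    (hcard : (S.card : ℝ) ≤ Real.exp (η * n₁)) {f : Circle1 → ℝ} {Kf : ℝ} (hKf : 0 ≤ Kf)
    (hf : Lip Kf f) {N : ℕ} (hN : 1 ≤ N) {ε G : ℝ} (hε : 0 < ε) (hG : 0 ≤ G) (I s₀ : ℕ) :
    ∃ ψ, Sm ψ ∧ NB N ε ψ ∧ ∃ s : ℕ → ℕ, StrictMono s ∧ s₀ ≤ s 0 ∧ 1 ≤ s 0 ∧ ∀ i < I, ∀ x ∈ K,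
      ∀ y ∈ K, Cov T S n₁ δ x → Cov T S n₁ δ y → ∀ n ≤ C₀ * s (i + 1), ∀ m ≤ C₀ * s (i + 1),
      (∃ w, (m : ℤ) * cnt T c (s i) w n x - n * cnt T c (s i) w m y ≠ 0) →
      G * s (i + 1) ^ 2 * τ ^ s (i + 1) < |wd T (fun x => f x + toC ψ x) n m x y| := by
  classical
  have hκ := E.κpos
  have hδE := E.hδ
  have hτ0 := E.hτ0
  have hτ1 := E.hτ1
  choose B hB φ hφS hφN hφI using fun k => h.exists_word_bumps E hK N k
  set amp : ℕ → ℝ := fun k => ε / ((I + 1) * ((q : ℝ) ^ k * B k + 1)) with hamp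
  have hden : ∀ k, 0 < (q : ℝ) ^ k * B k + 1 := fun k => by
    have := hB k
    positivity
  have hamp0 : ∀ k, 0 < amp k := fun k => by
    have := hden k
    simp only [hamp]
    positivity
  set G' := G + 2 * C₀ ^ 2 * (Kf + ε) * (κ * δE) with hG'
  have hG'0 : 0 ≤ G' := by positivity
  choose nxt hnxt J hJ hlt using fun k => exists_scale (C₀ := C₀) hτ0 hτ1 hn₁ hη (Nat.cast_nonneg S.card)
    hcard (show 0 ≤ 4 * G' / amp k from div_nonneg (by positivity) (hamp0 k).le)
    (show (0 : ℝ) < 1 / (I + 1) by positivity) k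
  set s : ℕ → ℕ := fun n => nxt^[n] (max s₀ 1) with hs
  have hs0 : s 0 = max s₀ 1 := rfl
  have hsucc : ∀ i, s (i + 1) = nxt (s i) := fun i => Function.iterate_succ_apply' _ _ _
  have hmono : StrictMono s := strictMono_nat_of_lt_succ fun i => by
    rw [hsucc]
    exact hnxt _
  choose cl hcl using fun j => Cov.exists_cls (T := T) (S := S) (δ := δ) hn₁ j
  let ι := Σ i : Fin I, (Fin (s i) → Fin q)
  let O := Σ i : Fin I, {o : {x // Cov T S n₁ δ x} × {x // Cov T S n₁ δ x} ×
    Fin (C₀ * s (i + 1) + 1) × Fin (C₀ * s (i + 1) + 1) // o.1.1 ∈ K ∧ o.2.1.1 ∈ K ∧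
    ∃ w, ((o.2.2.2 : ℕ) : ℤ) * cnt T c (s i) w o.2.2.1 o.1.1 -
      (o.2.2.1 : ℕ) * cnt T c (s i) w o.2.2.2 o.2.1.1 ≠ 0}
  let Jt := Σ i : Fin I, (Fin (C₀ * s (i + 1) + 1) × Fin (C₀ * s (i + 1) + 1) ×
    (Fin (J (s i)) → S) × (Fin (J (s i)) → S))
  let cls : O → Jt := fun o => ⟨o.1, (o.2.1.2.2.1, o.2.1.2.2.2, cl _ o.2.1.1, cl _ o.2.1.2.1)⟩
  let b : O → ℝ := fun o => wd T f o.2.1.2.2.1 o.2.1.2.2.2 o.2.1.1.1 o.2.1.2.1.1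
  let a : O → ι → ℝ := fun o k => amp (s k.1) *
    wd T (toC (φ (s k.1) k.2)) o.2.1.2.2.1 o.2.1.2.2.2 o.2.1.1.1 o.2.1.2.1.1
  let e : Jt → ℝ := fun j => G' * (s (j.1 + 1) : ℝ) ^ 2 * τ ^ s (j.1 + 1)
  let ψ : (ι → ℝ) → ℝ → ℝ := fun t x => ∑ k, (t k * amp (s k.1)) * φ (s k.1) k.2 x
  have hψS : ∀ t, Sm (ψ t) := fun t => Sm.sum _ fun k _ => (hφS _ _).const_mul _
  have hψN : ∀ t : ι → ℝ, (∀ k, 0 ≤ t k ∧ t k ≤ 1) → NB N ε (ψ t) := by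
    intro t ht
    have h1 : NB N _ (ψ t) := NB.sum Finset.univ (fun k _ => (hφS _ _).const_mul _)
      fun k _ => (hφN (s k.1) k.2).const_mul (t k * amp (s k.1))
    refine h1.mono ?_
    calc ∑ k : ι, |t k * amp (s k.1)| * B (s k.1) ≤ ∑ k : ι, amp (s k.1) * B (s k.1) := by
          refine Finset.sum_le_sum fun k _ => mul_le_mul_of_nonneg_right ?_ (hB _).le
          rw [abs_of_nonneg (mul_nonneg (ht k).1 (hamp0 _).le)]
          exact mul_le_of_le_one_left (hamp0 _).le (ht k).2
      _ = ∑ i : Fin I, (q : ℝ) ^ s i * (amp (s i) * B (s i)) := by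
          rw [Fintype.sum_sigma]
          simp
      _ ≤ ∑ i : Fin I, ε / (I + 1) := by
          refine Finset.sum_le_sum fun i _ => ?_
          have h2 := hden (s i)
          have h3 : (q : ℝ) ^ s i * (amp (s i) * B (s i)) = ε / (I + 1) *
              (((q : ℝ) ^ s i * B (s i)) / ((q : ℝ) ^ s i * B (s i) + 1)) := by
            simp only [hamp]
            field_simp
          rw [h3]
          refine mul_le_of_le_one_right (by positivity) ?_
          rw [div_le_one h2]
          linarith
      _ = ε * (I / (I + 1)) := by
          simp only [Finset.sum_const, Finset.card_univ, Fintype.card_fin, nsmul_eq_mul]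
          ring
      _ ≤ ε := by
          refine mul_le_of_le_one_right hε.le ?_
          rw [div_le_one (by positivity)]
          linarith
  have hwd : ∀ (o : O) (t : ι → ℝ), b o + ∑ k, a o k * t k =
      wd T (fun x => f x + toC (ψ t) x) o.2.1.2.2.1 o.2.1.2.2.2 o.2.1.1.1 o.2.1.2.1.1 := by
    intro o t
    have h1 := wd_add_sum T f Finset.univ (fun k : ι => t k * amp (s k.1))
      (fun k => toC (φ (s k.1) k.2)) o.2.1.2.2.1 o.2.1.2.2.2 o.2.1.1.1 o.2.1.2.1.1
    refine Eq.trans ?_ h1.symm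
    simp only [b, a]
    congr 1
    exact Finset.sum_congr rfl fun k _ => by ring
  refine Exists.elim (exists_avoid (Finset.univ : Finset ι) cls b a (fun j => amp (s j.1)) e
    (fun j => hamp0 _) (fun j => by simp only [e]; positivity) ?_ ?_ ?_) ?_
  · rintro ⟨i, ⟨⟨x, y, n, m⟩, hx, hy, w, hw⟩⟩
    refine ⟨⟨i, w⟩, Finset.mem_univ _, ?_⟩
    simp only [a, cls]
    rw [wd_indicator hK (hφI (s i) w) n m hx hy, abs_mul, abs_of_pos (hamp0 _)]
    refine le_mul_of_one_le_right (hamp0 _).le ?_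
    rw [← Int.cast_abs]
    exact_mod_cast Int.one_le_abs hw
  · rintro ⟨i, ⟨⟨x, y, n, m⟩, hx, hy, hw⟩⟩ ⟨i', ⟨⟨x', y', n', m'⟩, hx', hy', hw'⟩⟩ hcc t ht
    obtain ⟨rfl, hcc⟩ := Sigma.mk.inj_iff.1 hcc
    have hcc := eq_of_heq hcc
    simp only [Prod.mk.injEq] at hcc
    obtain ⟨rfl, rfl, hcx, hcy⟩ := hcc
    rw [hwd, hwd]
    have hlip : Lip (Kf + ε) (fun x => f x + toC (ψ t) x) := hf.add ((hψS t).lip (hψN t ht) hN)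
    have hJi := hJ (s i)
    rw [← hsucc] at hJi
    have hclose : ∀ x x' : {x // Cov T S n₁ δ x}, cl (J (s i)) x = cl (J (s i)) x' →
        ∀ k < C₀ * s (i + 1) + 1, ∀ u < k,
        dist (T^[u] x.1) (T^[u] x'.1) ≤ κ * δE * τ ^ s (i + 1) := by
      intro x x' hxx k hk u hu
      have h0 := hcl _ x x' hxx
      have hexp : C₀ * s (i + 1) + s (i + 1) + 1 ≤ J (s i) * n₁ := by
        rw [← Nat.succ_mul]; exact hJi
      have h1 := E.bowen (s (i + 1)) (T^[u] x.1) (T^[u] x'.1) fun j hj => by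
        rw [← Function.iterate_add_apply T j u x.1, ← Function.iterate_add_apply T j u x'.1]
        exact (h0 _ (by omega)).trans hδ
      refine h1.trans ?_
      rw [← Function.iterate_add_apply T _ u x.1, ← Function.iterate_add_apply T _ u x'.1]
      calc _ ≤ κ * τ ^ s (i + 1) * δE := by
            gcongr
            exact (h0 _ (by omega)).trans hδ
        _ = _ := by ring
    have hnR : ((n : ℕ) : ℝ) ≤ C₀ * s (i + 1) := by exact_mod_cast Nat.lt_succ_iff.1 n.2
    have hmR : ((m : ℕ) : ℝ) ≤ C₀ * s (i + 1) := by exact_mod_cast Nat.lt_succ_iff.1 m.2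
    have h1 := wd_close (T := T) (r := κ * δE * τ ^ s (i + 1)) (by positivity) hlip hnR hmR
      (by positivity) (hclose x x' hcx n n.2) (hclose y y' hcy m m.2)
    refine h1.trans ?_
    have h2 : 0 ≤ G * (s (i + 1) : ℝ) ^ 2 * τ ^ s (i + 1) := by positivity
    simp only [e, cls, hG']
    have h3 : (G + 2 * C₀ ^ 2 * (Kf + ε) * (κ * δE)) * (s (i + 1) : ℝ) ^ 2 * τ ^ s (i + 1) =
        G * (s (i + 1) : ℝ) ^ 2 * τ ^ s (i + 1) +
        2 * (C₀ * s (i + 1) : ℝ) ^ 2 * (Kf + ε) * (κ * δE * τ ^ s (i + 1)) := by ring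
    rw [h3]
    linarith
  · have h1 : ∀ i : Fin I, ∑ j : (Fin (C₀ * s (i + 1) + 1) × Fin (C₀ * s (i + 1) + 1) ×
        (Fin (J (s i)) → S) × (Fin (J (s i)) → S)), 4 * e ⟨i, j⟩ / amp (s i) ≤ 1 / ((I : ℝ) + 1) := by
      intro i
      have h2 := hlt (s i)
      rw [← hsucc] at h2
      refine le_trans (le_of_eq ?_) h2.le
      simp only [e, Finset.sum_const, Finset.card_univ, Fintype.card_prod, Fintype.card_fin,
        Fintype.card_fun, Fintype.card_coe, nsmul_eq_mul]
      push_cast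
      ring
    rw [Fintype.sum_sigma]
    calc _ ≤ ∑ i : Fin I, 1 / ((I : ℝ) + 1) := Finset.sum_le_sum fun i _ => h1 i
      _ = I / (I + 1) := by
        simp only [Finset.sum_const, Finset.card_univ, Fintype.card_fin, nsmul_eq_mul]
        ring
      _ < 1 := by
        rw [div_lt_one (by positivity)]
        linarith
  · rintro t ⟨ht, hav⟩
    refine ⟨ψ t, hψS t, hψN t ht, s, hmono, by rw [hs0]; exact le_max_left _ _,
      by rw [hs0]; exact le_max_right _ _, fun i hi x hx y hy hcx hcy n hn m hm hw => ?_⟩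
    have h1 := hav ⟨⟨i, hi⟩, ⟨(⟨x, hcx⟩, ⟨y, hcy⟩, ⟨n, Nat.lt_succ_of_le hn⟩, ⟨m, Nat.lt_succ_of_le hm⟩), hx, hy, hw⟩⟩
    rw [hwd] at h1
    refine lt_of_le_of_lt ?_ h1
    simp only [e, cls]
    gcongr
    rw [hG']
    have : 0 ≤ 2 * (C₀ : ℝ) ^ 2 * (Kf + ε) * (κ * δE) := by positivity
    linarith

set_option maxHeartbeats 1600000 in
/-- A small perturbation after which every calibrated set inside `K` with few left special words
contains a periodic orbit. -/
theorem Letters.exists_periodic {T : Circle1 → Circle1} {Λ τ κ δE : ℝ} {K : Set Circle1} {q : ℕ}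
    {c : Circle1 → Fin q} {rp : Circle1 → ℝ} {θ g m₀ : ℝ} (h : Letters K c rp θ g m₀)
    (E : ExpSys T Λ τ κ δE) (hK : ∀ x ∈ K, T x ∈ K) (hm0 : 0 ≤ m₀) (hm2 : m₀ ≤ 1 / 2)
    (hmδ : m₀ ≤ δE) (P s₀ : ℕ) {f : Circle1 → ℝ} {Kf L : ℝ} (hKf : 0 ≤ Kf) (hf : Lip Kf f)
    (hL : 0 ≤ L) {N : ℕ} (hN : 1 ≤ N) {ε : ℝ} (hε : 0 < ε) :
    ∃ ψ, Sm ψ ∧ NB N ε ψ ∧ ∀ u β M, SubAct T (fun x => f x + toC ψ x) u β L →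
      IsCal T (fun x => f x + toC ψ x) u β M → M ⊆ K →
      ∀ cls : ℕ → Circle1 → Fin P, GoodCls T c M s₀ P cls → ∃ x ∈ M, ∃ n, 1 ≤ n ∧ T^[n] x = x := by
  have hκ := E.κpos
  have hτ0 := E.hτ0
  have hτ1 := E.hτ1
  set C₀ := q ^ s₀ + P * q with hC₀
  have hlog : 0 < -Real.log τ := by linarith [Real.log_neg hτ0 hτ1]
  set η := -Real.log τ / (4 * ((C₀ : ℝ) + 1)) with hη
  have hη' : η * (4 * ((C₀ : ℝ) + 1)) = -Real.log τ := div_mul_cancel₀ _ (by positivity)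
  obtain ⟨ψ₁, hS₁, hN₁, δ', hδ', n₁, hn₁, S, hcard, hconf⟩ := exists_confine E (δ := δE / 2)
    hKf hf N hL (half_pos hε) (show 0 < η by positivity) (half_pos E.hδ)
  have hlip₁ := hf.add (hS₁.lip hN₁ hN)
  set G := 2 * C₀ * L * (κ * m₀ / τ ^ 2) with hG
  obtain ⟨ψ₂, hS₂, hN₂, s, hmono, hs0, hs1, hgen⟩ := h.exists_generic E hK (C₀ := C₀) hn₁
    (show 2 * (δE / 2) ≤ δE by linarith) hη' hcard (by positivity) hlip₁ hN
    (show 0 < min (ε / 2) δ' from lt_min (half_pos hε) hδ') (show 0 ≤ G by positivity)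
    (P * P + 1) (max s₀ 2)
  have hsum : (fun x => f x + toC (fun x => ψ₁ x + ψ₂ x) x) =
      fun x => f x + toC ψ₁ x + toC ψ₂ x := by
    funext x
    simp only [toC]
    ring
  refine ⟨fun x => ψ₁ x + ψ₂ x, hS₁.add hS₂,
    (NB.add hS₁ hS₂ hN₁ hN₂).mono (by linarith [min_le_left (ε / 2) δ']), fun u β M hu hM hMK cls
      hcls => ?_⟩
  rw [hsum] at hu hM
  have hcov := hconf _ u β M (fun x => by
    rw [add_sub_cancel_left]
    exact (hN₂.abs_toC_le x).trans (min_le_right _ _)) hu hM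
  by_cases hper : ∀ x ∈ M, ∀ n, 1 ≤ n → ∃ t, c (T^[t] (T^[n] x)) ≠ c (T^[t] x)
  · exfalso
    obtain ⟨i, hi, x, hx, y, hy, n, m, hn1, hn, hm1, hm, hlx, hly, hw⟩ := hcls.exists_loops hM.ne
      hM.maps hper hmono ((le_max_left _ _).trans hs0) hs1
    have h1 := hgen i hi x (hMK hx) y (hMK hy) (hcov x hx) (hcov y hy) n hn m hm hw
    have hs2 : 2 ≤ s (i + 1) :=
      (le_max_right _ _).trans (hs0.trans (hmono.monotone (Nat.zero_le _)))
    obtain ⟨r, hr⟩ := Nat.exists_eq_add_of_le hs2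
    rw [show s (i + 1) - 1 = r + 1 by omega] at hlx hly
    have hdx := h.dist_le_of_word E hm2 hmδ hlx
    have hdy := h.dist_le_of_word E hm2 hmδ hly
    have h2 := hM.wd_le hu hL (R := C₀ * s (i + 1)) (r := κ * τ ^ r * m₀) (n := n) (m := m)
      (by exact_mod_cast hn) (by exact_mod_cast hm) (by positivity) hx hy hdx hdy
    have h3 : 2 * (C₀ * s (i + 1) : ℝ) * L * (κ * τ ^ r * m₀) = G * s (i + 1) * τ ^ s (i + 1) := by
      rw [hG]
      have h6 : τ ^ s (i + 1) = τ ^ 2 * τ ^ r := by rw [hr, pow_add]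
      rw [h6]
      field_simp
    have h4 : (1 : ℝ) ≤ s (i + 1) := by exact_mod_cast (show 1 ≤ s (i + 1) by omega)
    have h5 : G * s (i + 1) * τ ^ s (i + 1) ≤ G * s (i + 1) ^ 2 * τ ^ s (i + 1) := by
      have hG0 : 0 ≤ G := by positivity
      gcongr
      exact le_self_pow₀ h4 two_ne_zero
    linarith
  · push Not at hper
    obtain ⟨x, hx, n, hn, ht⟩ := hper
    exact ⟨x, hx, n, hn, h.eq_of_letters E hm2 hmδ ht⟩

/-! ### Assembly -/

/-- A periodic orbit in a calibrated set is locked by an arbitrarily small smooth perturbation. -/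
lemma IsCal.exists_lock {T : Circle1 → Circle1} {Λ τ κ δ : ℝ} (E : ExpSys T Λ τ κ δ)
    {f u : Circle1 → ℝ} {β K L : ℝ} (hK : 0 ≤ K) (hL : 0 ≤ L) (hf : Lip K f)
    (hu : SubAct T f u β L) {M : Set Circle1} (hM : IsCal T f u β M) {p : Circle1} (hpM : p ∈ M)
    {n₀ : ℕ} (hn₀ : 1 ≤ n₀) (hp₀ : T^[n₀] p = p) {N : ℕ} (hN : 1 ≤ N) {ε : ℝ} (hε : 0 < ε) :
    ∃ ψ, Sm ψ ∧ NB N ε ψ ∧ ∃ e > (0 : ℝ), ∀ h : Circle1 → ℝ, (∀ x, |h x| ≤ e) → Lip e h →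
      UniqMaxPeriodic (fun x => f x + toC ψ x + h x) T := by
  classical
  have hΛ := E.hΛ
  have hδ := E.hδ
  have hτ0 := E.hτ0
  have hper : p ∈ Function.periodicPts T := ⟨n₀, hn₀, hp₀⟩
  set n := Function.minimalPeriod T p with hn
  have hn1 : 1 ≤ n := Function.minimalPeriod_pos_of_mem_periodicPts hper
  have hp : T^[n] p = p := Function.isPeriodicPt_minimalPeriod T p
  obtain ⟨Δ, hΔ0, hΔ⟩ : ∃ Δ > (0 : ℝ), ∀ i < n, ∀ j < n, i ≠ j → Δ ≤ dist (T^[i] p) (T^[j] p) := by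
    have hpos : ∀ a ∈ (Finset.range n).offDiag, 0 < dist (T^[a.1] p) (T^[a.2] p) := by
      intro a ha
      rw [Finset.mem_offDiag, Finset.mem_range, Finset.mem_range] at ha
      exact dist_pos.2 fun he => ha.2.2
        (Function.iterate_injOn_Iio_minimalPeriod (mem_Iio.2 ha.1) (mem_Iio.2 ha.2.1) he)
    rcases (Finset.range n).offDiag.eq_empty_or_nonempty with h0 | h0
    · refine ⟨1, one_pos, fun i hi j hj hij => absurd ?_ (Finset.notMem_empty (i, j))⟩
      rw [← h0, Finset.mem_offDiag]
      exact ⟨Finset.mem_range.2 hi, Finset.mem_range.2 hj, hij⟩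
    · obtain ⟨a, ha, hmin⟩ := Finset.exists_min_image _ (fun a => dist (T^[a.1] p) (T^[a.2] p)) h0
      exact ⟨_, hpos a ha, fun i hi j hj hij => hmin (i, j)
        (Finset.mem_offDiag.2 ⟨Finset.mem_range.2 hi, Finset.mem_range.2 hj, hij⟩)⟩
  set θ := min δ (min 1 (Δ / (1 + Λ))) with hθ
  have hθ0 : 0 < θ := lt_min hδ (lt_min one_pos (by positivity))
  have hθ1 : θ ≤ 1 := (min_le_right _ _).trans (min_le_left _ _)
  have hθΔ : (1 + Λ) * θ ≤ Δ := by
    have h1 : θ ≤ Δ / (1 + Λ) := (min_le_right _ _).trans (min_le_right _ _)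
    rw [le_div_iff₀ (by positivity)] at h1
    linarith
  obtain ⟨B, hB1, hB⟩ := exists_bump N
  have hB0 : 0 < B := by linarith
  obtain ⟨b, hs, h0, h1, hA, hA', -, hNB⟩ := hB (Set.range fun i : ℕ => T^[i] p) θ hθ0 hθ1
  set k₀ := ε * θ ^ N / B with hk₀
  have hk₀0 : 0 < k₀ := by positivity
  obtain ⟨m', hm'⟩ : ∃ m' : ℕ, (K + L + L * Λ) * κ / (1 - τ) * (τ ^ m' * θ / τ) ≤ k₀ / 8 := by
    have ht : Tendsto (fun m : ℕ => (K + L + L * Λ) * κ / (1 - τ) * (τ ^ m * θ / τ)) atTop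
        (𝓝 ((K + L + L * Λ) * κ / (1 - τ) * (0 * θ / τ))) :=
      (((tendsto_pow_atTop_nhds_zero_of_lt_one hτ0.le E.hτ1).mul_const θ).div_const τ).const_mul _
    rw [zero_mul, zero_div, mul_zero] at ht
    exact (ht.eventually_le_const (u := k₀ / 8) (by positivity)).exists
  have hφc : Continuous (toC fun x => k₀ * (1 - b x)) :=
    ((hs.one_sub.const_mul _).lip (NB.const_mul hNB _) hN).continuous
  have hsum : n * β - birkhoffSum T f n p ≤ 0 := by
    rw [hM.sum_eq n hpM, hp]
    linarith
  obtain ⟨e, he, hlock⟩ := locking E (φ := toC fun x => k₀ * (1 - b x)) hK hL hf hu hn1 hp hΔ hθΔ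
    (min_le_left _ _) hθ0 hk₀0 hφc
    (fun x => mul_nonneg hk₀0.le (by linarith [h1 (rep x)]))
    (fun i => by
      have := hA (rep (T^[i] p)) (by rw [rep_coe]; exact ⟨i, rfl⟩)
      simp [toC, this])
    (fun x hx => by
      have := hA' (rep x) (by rw [rep_coe]; rintro _ ⟨i, rfl⟩; exact hx i)
      simp [toC, this]) hsum m' (by simpa using hm')
  refine ⟨fun x => -k₀ * (1 - b x), hs.one_sub.const_mul _, ?_, e, he, fun h hh hl => ?_⟩
  · refine (hNB.const_mul (-k₀)).mono (le_of_eq ?_)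
    rw [abs_neg, abs_of_pos hk₀0, hk₀]
    field_simp
  · convert hlock h hh hl using 2 with x
    simp only [toC]; ring

lemma exists_lip {f : Circle1 → ℝ} (hf : ContDiff ℝ 1 fun x : ℝ => f x) : ∃ K, 0 ≤ K ∧ Lip K f := by
  obtain ⟨K, hK1, hK⟩ := periodic_bound (g := deriv fun x : ℝ => f x) (hf.continuous_deriv le_rfl)
    (periodic_deriv fun x => by simp)
  exact ⟨K, by linarith, lip_of_deriv (hf.differentiable one_ne_zero) hK⟩

set_option maxHeartbeats 1600000 in
/-- The case of regularity at least two. -/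
theorem Lift.perturb_two {F : ℝ → ℝ} {d : ℤ} {C l Λ : ℝ} (H : Lift F d C l Λ)
    (hF : ContDiff ℝ 2 F) {f : Circle1 → ℝ} (hf : ContDiff ℝ 2 fun x : ℝ => f x) {N : ℕ}
    (hN : 1 ≤ N) {ε : ℝ} (hε : 0 < ε) :
    ∃ ψ, Sm ψ ∧ NB N ε ψ ∧ ∃ e > (0 : ℝ), ∀ h : Circle1 → ℝ, (∀ x, |h x| ≤ e) → Lip e h →
      UniqMaxPeriodic (fun x => f x + toC ψ x + h x) (cmap F) := by
  obtain ⟨κ, δE, E, hΛδ⟩ := H.expSys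
  have hC := H.hC
  have hΛ := E.hΛ
  have hδE := E.hδ
  have hκ := E.κpos
  have hlog : 0 < Real.log l := Real.log_pos H.hl
  obtain ⟨Kf, hKf0, hKf⟩ := exists_lip (hf.of_le (by norm_num))
  set ε₁ := min ε 1 / 4 with hε₁
  have hε₁0 : 0 < ε₁ := by
    have : 0 < min ε 1 := lt_min hε one_pos
    positivity
  have hε₁ε : 4 * ε₁ ≤ ε := by
    have := min_le_left ε 1
    rw [hε₁]; linarith
  have hε₁1 : 4 * ε₁ ≤ 1 := by
    have := min_le_right ε 1
    rw [hε₁]; linarith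
  set L := (Kf + 1) * κ / (1 - 1 / l) with hL
  have hL0 : 0 ≤ L := div_nonneg (by positivity) E.one_sub_pos.le
  -- confinement of the calibrated sets to a set of small entropy
  obtain ⟨ψ₁, hS₁, hN₁, δ', hδ', n₁, hn₁, S, hcard, hconf⟩ := exists_confine E (δ := δE / 2)
    hKf0 hKf N hL0 hε₁0 (show 0 < Real.log l / 8 by positivity) (half_pos hδE)
  have h2δ : 2 * (δE / 2) ≤ δE := by linarith
  set m := min (1 / 2) (min δE (1 / (2 * (Λ + 1)))) with hm
  have hm0 : 0 < m := lt_min (by norm_num) (lt_min hδE (by positivity))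
  have hm2 : m ≤ 1 / 2 := min_le_left _ _
  have hmδ : m ≤ δE := (min_le_right _ _).trans (min_le_left _ _)
  have hmΛ : (Λ + 1) * m < 1 := by
    have h1 : m ≤ 1 / (2 * (Λ + 1)) := (min_le_right _ _).trans (min_le_right _ _)
    rw [le_div_iff₀ (by positivity)] at h1
    linarith
  set Kc : Set Circle1 := {x | Cov (cmap F) S n₁ (δE / 2) x} with hKc
  have hKinv : ∀ x ∈ Kc, cmap F x ∈ Kc := fun x hx => Cov.iter hx 1
  obtain ⟨q, c, rp, θ, g, hlet⟩ := Letters.exists (K := Kc) (isClosed_cov E.cont S n₁ (δE / 2))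
    (fun u v huv => E.exists_not_cov H.hl hn₁ hcard h2δ huv) hm0
  -- transversality of the branches
  have hf₁ : (fun x : ℝ => f x + toC ψ₁ x) = fun x : ℝ => f x + ψ₁ x := by
    funext x
    rw [toC_coe hS₁.per]
  have hcd₁ : ContDiff ℝ 2 fun x : ℝ => f x + toC ψ₁ x := by
    rw [hf₁]
    exact hf.add (contDiff_infty.1 hS₁.cd 2)
  obtain ⟨ψ₂, hS₂, hN₂, D, hD, n, hn, hRlip, htr⟩ := H.exists_transverse hF E hΛδ
    (f := fun x => f x + toC ψ₁ x) hcd₁ hlet.hg hn₁ hcard h2δ N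
    (show 0 < min ε₁ (δ' / 2) from lt_min hε₁0 (half_pos hδ'))
    (show 0 ≤ 2 * L / C + 2 by positivity)
  set f₀ : Circle1 → ℝ := fun x => f x + toC ψ₁ x + toC ψ₂ x with hf₀
  have hf₀' : (fun x : ℝ => f₀ x) = fun x : ℝ => f x + toC ψ₁ x + ψ₂ x := by
    funext x
    simp only [hf₀]
    rw [toC_coe hS₂.per]
  have hcd₀ : ContDiff ℝ 1 fun x : ℝ => f₀ x := by
    rw [hf₀']
    exact (hcd₁.of_le (by norm_num)).add (contDiff_infty.1 hS₂.cd 1)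
  rw [← hf₀'] at hRlip htr
  obtain ⟨P, s₀, ν, hν, hcls⟩ := hlet.exists_cls H E hm2 hmδ hmΛ hcd₀ hL0 hD hn (hRlip n) htr
  -- a periodic orbit in the calibrated set
  have hlip₂ : Lip ε₁ (toC ψ₂) := (hS₂.lip hN₂ hN).mono (min_le_left _ _)
  have hlip₀ : Lip (Kf + ε₁ + ε₁) f₀ := (hKf.add (hS₁.lip hN₁ hN)).add hlip₂
  obtain ⟨ψ₃, hS₃, hN₃, hperiodic⟩ := hlet.exists_periodic E hKinv hm0.le hm2 hmδ P s₀
    (by positivity) hlip₀ hL0 hN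
    (show 0 < min ε₁ (min (δ' / 2) ν) from lt_min hε₁0 (lt_min (half_pos hδ') hν))
  have hlip₃ : Lip (Kf + 1) (fun x => f₀ x + toC ψ₃ x) :=
    (hlip₀.add ((hS₃.lip hN₃ hN).mono (min_le_left _ _))).mono (by linarith)
  obtain ⟨u, β, M, hu, hM⟩ := exists_isCal E (by positivity) hlip₃
  have hMK : M ⊆ Kc := fun x hx => hconf _ u β M (fun x => by
    have h1 := (hN₂.abs_toC_le x).trans (min_le_right _ _)
    have h2 := (hN₃.abs_toC_le x).trans ((min_le_right _ _).trans (min_le_left _ _))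
    have h3 : f₀ x + toC ψ₃ x - (f x + toC ψ₁ x) = toC ψ₂ x + toC ψ₃ x := by
      simp only [hf₀]; ring
    rw [h3]
    refine (abs_add_le _ _).trans ?_
    linarith) hu hM x hx
  obtain ⟨cls, hgood⟩ := hcls ψ₃ hS₃
    ((hN₃.mono_left hN).mono ((min_le_right _ _).trans (min_le_right _ _))) u β M hu hM hMK
  obtain ⟨p, hpM, n₀, hn₀, hp⟩ := hperiodic u β M hu hM hMK cls hgood
  obtain ⟨ψ₄, hS₄, hN₄, e, he, hlock⟩ := hM.exists_lock E (by positivity) hL0 hlip₃ hu hpM hn₀ hp hN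
    hε₁0
  refine ⟨fun x => ψ₁ x + ψ₂ x + ψ₃ x + ψ₄ x, ((hS₁.add hS₂).add hS₃).add hS₄, ?_, e, he,
    fun h hh hl => ?_⟩
  · refine (NB.add ((hS₁.add hS₂).add hS₃) hS₄ (NB.add (hS₁.add hS₂) hS₃
      (NB.add hS₁ hS₂ hN₁ (hN₂.mono (min_le_left _ _))) (hN₃.mono (min_le_left _ _))) hN₄).mono ?_
    linarith
  · convert hlock h hh hl using 2 with x
    simp only [hf₀, toC]; ring

/-- **Theorem B.** For `r ∈ {1,2,…,∞}` there is a residual subset `𝓔^r_*` of `𝓔^r`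
containing `𝓔^ω` such that for each `T ∈ 𝓔^r_*` there is an open dense subset `𝓓^r(T)` of
`𝓒^r` such that every `f ∈ 𝓓^r(T)` is uniquely maximized by a periodic measure. -/
theorem theoremB (r : ℕ∞) (hr : 1 ≤ r) :
    ∃ Estar : Set (ExpMap r),
      Estar ∈ residual (ExpMap r) ∧
      {F : ExpMap r | ∀ x : ℝ, AnalyticAt ℝ F.1 x} ⊆ Estar ∧
      ∀ F ∈ Estar, ∃ D : Set (CrFun r),
        IsOpen D ∧ Dense D ∧ ∀ f ∈ D, UniqMaxPeriodic f.1 (cmap F.1) := by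
  refine ⟨Set.univ, Filter.univ_mem, Set.subset_univ _, fun F _ => ?_⟩
  obtain ⟨d, C, l, Λ, H⟩ := F.2.lift hr
  refine dense_of_perturb hr fun f N hNr hN ε hε => ?_
  have hr' : (1 : WithTop ℕ∞) ≤ r := by exact_mod_cast hr
  rcases hr.eq_or_lt with h1 | h1
  · obtain ⟨κ, δ, E, -⟩ := H.expSys
    obtain ⟨K, hK, hf⟩ := exists_lip (f.2.of_le hr')
    have hN1 : N = 1 := by
      rw [← h1] at hNr
      have : N ≤ 1 := by exact_mod_cast hNr
      omega
    subst hN1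
    exact perturb_one E hK hf hε
  · have h2 : (2 : ℕ∞) ≤ r := by
      have := Order.add_one_le_of_lt h1
      rwa [one_add_one_eq_two] at this
    have h2' : (2 : WithTop ℕ∞) ≤ r := WithTop.coe_le_coe.2 h2
    exact H.perturb_two (F.2.1.of_le h2') (f.2.of_le h2') hN hε
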